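/- Let (c_k)_{k≥1} be a bounded sequence of real numbers with c_k ≥ 2 for all k ≥ 1, and set C_k = c_1 c_2 ⋯ c_k. Then the set W(c_k) = {A ∈ ℝ : A > 1 and ⌊A^{C_k}⌋ is a prime number for every k ≥ 1} has Hausdorff dimension equal to 1. -/

import Mathlib

/-!
The dimension is at most `1` because the set lies in `ℝ`. For the lower bound use the coordinate
`t = log A`: a prime `p` is the value at stage `m` exactly when `t` lies in
`[log p / C_m, log (p + 1) / C_m)`, and the nested intervals `II` form a tree in which the children
of `p` are the primes `q` with `p ^ c ≤ q < q + 1 ≤ (p + 1) ^ c`, `c = c_{m+1}`. As `c ≥ 2`, this is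
a window of at least square-root length, which is out of reach for each single `p`. But
`primes_l1` says that primes have the right density in almost all such windows, with an exceptional
set of relative size `exp (-v ^ (1/1000))` near `e^v`. Give the children of a `Good` prime mass
proportional to `log q / q` and discard the other primes. The mass lost (`killed`) sums to at most
half of the total, since the density of the mass at level `m` (`ww_dens`) grows only like
`exp (O(m²))` when `c` is bounded, while `v` grows at least like `2 ^ m`. The mass distribution
principle (`frostman`, `mass_holder`) then gives dimension at least `s` for each `s < 1` (`tree_dim`).

For `primes_l1`: Vinogradov's mean value theorem `vmvt` (from Linnik's lemma `linnik` and the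
recursion `JV_recursion`) bounds `∑ n^{-it}` (`exp_sum`) and hence `ζ` (`zeta1_bound`); with the
`3-4-1` inequality and Landau's method this gives a zero-free region `Re s ≥ 1 - L^{-0.98}`
(`zero_free`), so sums of `(Λ(n) - 1) n^{-it}` are tiny (`lam1_block`, `block_lam`). Vaughan's
identity (`vaughan_avg`) and Plancherel (`bilinear`, `cb_l1`) compare the averages of `Λ` at widths
`del` and `Del` in mean square, and the wide average is known (`avg_wide`).
-/

namespace PrimeRep

noncomputable section

set_option maxHeartbeats 3200000

open Finset Filter Topology Metric MeasureTheory Real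
open scoped FourierTransform ArithmeticFunction.vonMangoldt
open Complex (ofReal_pow mul_conj' I norm_real abs_im_le_norm norm_cpow_eq_rpow_re_of_pos norm_conj
  ofReal_cpow cpow_add ofReal_sub cpow_neg add_re ofReal_re norm_exp abs_re_le_norm normSq neg_re
  re_ofReal_mul mem_reProdIm continuous_ofReal real_smul)
open intervalIntegral (integral_congr integral_add_adjacent_intervals
  integral_eq_integral_of_support_subset integral_of_le integral_mono_on)
open Fintype (piFinset mem_piFinset card_piFinset)
open ArithmeticFunction (LSeriesSummable_vonMangoldt vonMangoldt_nonneg moebius abs_moebius_le_one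
  zeta natCoe_apply)
open Function (Injective)
open Set (mem_ofPred_eq)

/-- A continuous function is interval integrable between any two points. -/
lemma cii {E : Type*} [NormedAddCommGroup E] {f : ℝ → E} (hf : Continuous f) {a b : ℝ} :
  IntervalIntegrable f volume a b := hf.intervalIntegrable a b

/-! ### Additive energy and Vinogradov's mean value -/

/-- The additive energy of a family: the number of pairs `(u, u')` in `X` with `g u = g u'`. -/
def en {α G : Type*} [DecidableEq G] (X : Finset α) (g : α → G) : ℕ := ((X ×ˢ X).filter fun q => g q.1 = g q.2).card

/-- The vector of power sums `∑ x_i ^ j`, `1 ≤ j ≤ K`. -/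
def pw (K : ℕ) {ι : Type*} [Fintype ι] (x : ι → ℤ) : Fin K → ℤ := fun j => ∑ i, x i ^ (j.val + 1)

/-- Vinogradov's mean value over the set `A`. -/
def JV (K s : ℕ) (A : Finset ℤ) : ℕ := en (piFinset fun _ : Fin s => A) (pw K)

lemma en_char {α G : Type*} [DecidableEq G] [AddCommGroup G] [Fintype G] (X : Finset α) (g : α → G) :
  (Fintype.card G : ℝ) * en X g = ∑ ψ : AddChar G ℂ, ‖∑ u ∈ X, ψ (g u)‖ ^ 2 := by
  have h : ((Fintype.card G : ℝ) * en X g : ℂ) = ∑ ψ : AddChar G ℂ, ((‖∑ u ∈ X, ψ (g u)‖ ^ 2 : ℝ) : ℂ) := by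
    have h1 : ∀ ψ : AddChar G ℂ, ((‖∑ u ∈ X, ψ (g u)‖ ^ 2 : ℝ) : ℂ) = ∑ q ∈ X ×ˢ X, ψ (g q.1 - g q.2) := by
      intro ψ; rw [ofReal_pow, ← mul_conj', map_sum, sum_mul_sum, sum_product]
      refine sum_congr rfl fun u _ => sum_congr rfl fun v _ => ?_
      rw [sub_eq_add_neg, AddChar.map_add_eq_mul, AddChar.map_neg_eq_conj]
    simp_rw [h1]; rw [sum_comm]; simp_rw [AddChar.sum_apply_eq_ite, sub_eq_zero]
    rw [← sum_filter, sum_const, en]; push_cast; rw [nsmul_eq_mul, mul_comm]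
  exact_mod_cast h

lemma exists_modulus {α : Type*} (K : ℕ) (X : Finset α) (g : α → Fin K → ℤ) : ∃ Q : ℕ, Q ≠ 0 ∧ ∀ u ∈ X, ∀ v ∈ X,
  (fun j => (g u j : ZMod Q)) = (fun j => (g v j : ZMod Q)) → g u = g v := by
  set S : ℤ := ∑ u ∈ X, ∑ j, |g u j|; have hS0 : 0 ≤ S := by positivity
  have hb : ∀ u ∈ X, ∀ j, |g u j| ≤ S := by
    intro u hu j
    calc |g u j| ≤ ∑ j, |g u j| := single_le_sum (f := fun j => |g u j|) (fun _ _ => abs_nonneg _) (mem_univ j)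
      _ ≤ S := single_le_sum (f := fun u => ∑ j, |g u j|) (fun _ _ => by positivity) hu
  refine ⟨(2 * S + 1).toNat, by omega, fun u hu v hv h => ?_⟩; funext j; have h1 := congrFun h j
  rw [ZMod.intCast_eq_intCast_iff_dvd_sub] at h1; have h2 := hb u hu j; have h3 := hb v hv j
  rw [abs_le] at h2 h3; have h4 : ((2 * S + 1).toNat : ℤ) = 2 * S + 1 := by omega
  rw [h4] at h1
  have := Int.eq_zero_of_abs_lt_dvd h1 (by rw [abs_lt]; constructor <;> linarith [h2.1, h2.2, h3.1, h3.2])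
  linarith

lemma en_le_of_hom {α G H : Type*} [DecidableEq G] [DecidableEq H] (X : Finset α) (g : α → G)
  (φ : G → H) : en X g ≤ en X (φ ∘ g) := by
  apply card_le_card; intro q hq; simp only [mem_filter, Function.comp] at hq ⊢; exact ⟨hq.1, by rw [hq.2]⟩

lemma en_hom_le {α G H : Type*} [DecidableEq G] [DecidableEq H] (X : Finset α) (g : α → G)
  (φ : G → H) (h : ∀ u ∈ X, ∀ v ∈ X, φ (g u) = φ (g v) → g u = g v) :
  en X (φ ∘ g) ≤ en X g := by
  apply card_le_card; intro q hq; simp only [mem_filter, Function.comp, mem_product] at hq ⊢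
  exact ⟨hq.1, h _ hq.1.1 _ hq.1.2 hq.2⟩

/-- Reduction of an integer vector modulo `Q`. -/
def red (K Q : ℕ) (v : Fin K → ℤ) : Fin K → ZMod Q := fun j => (v j : ZMod Q)

lemma red_add (K Q : ℕ) (v w : Fin K → ℤ) : red K Q (v + w) = red K Q v + red K Q w := by funext j; simp [red]

/-- The moment curve `x ↦ (x, …, x^K)` modulo `Q`. -/
def mc (K Q : ℕ) (x : ℤ) : Fin K → ZMod Q := fun j => ((x ^ (j.val + 1) : ℤ) : ZMod Q)

lemma red_pw (K Q : ℕ) {ι : Type*} [Fintype ι] (x : ι → ℤ) : red K Q (pw K x) = ∑ i, mc K Q (x i) := by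
  funext j; simp [red, pw, mc]

lemma map_sum_char {G ι : Type*} [AddCommGroup G] (ψ : AddChar G ℂ) (S : Finset ι) (f : ι → G) :
  ψ (∑ i ∈ S, f i) = ∏ i ∈ S, ψ (f i) := by
  classical
  induction S using Finset.induction_on with
  | empty => simp
  | insert a S ha ih => rw [sum_insert ha, prod_insert ha, AddChar.map_add_eq_mul, ih]

lemma char_sum_pi {G : Type*} [AddCommGroup G] (ψ : AddChar G ℂ) {ι : Type*} [Fintype ι]
  [DecidableEq ι] (A : ι → Finset ℤ) (φ : ℤ → G) :
  ∑ x ∈ piFinset A, ψ (∑ i, φ (x i)) = ∏ i, ∑ a ∈ A i, ψ (φ a) := by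
  rw [prod_univ_sum]; exact sum_congr rfl fun x _ => by simpa using map_sum_char ψ univ fun i => φ (x i)

/-- The Hölder step: restricting the free variables to a single part of a partition. -/
lemma en_holder {β : Type*} (K s : ℕ) (U : Finset β) (g : β → Fin K → ℤ) (A : Finset ℤ)
  {R : Type*} [DecidableEq R] (I : Finset R) (c : ℤ → R) (hc : ∀ a ∈ A, c a ∈ I) (hs : 1 ≤ s) :
  en (U ×ˢ piFinset fun _ : Fin s => A) (fun q => g q.1 + pw K q.2) ≤ I.card ^ (2 * s - 1) * ∑ r ∈ I,
      en (U ×ˢ piFinset fun _ : Fin s => A.filter (c · = r)) (fun q => g q.1 + pw K q.2) := by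
  classical
  obtain ⟨Q, hQ, hinj⟩ := exists_modulus K (U ×ˢ piFinset fun _ : Fin s => A) (fun q => g q.1 + pw K q.2)
  have : NeZero Q := ⟨hQ⟩; set G := Fin K → ZMod Q
  have key : ∀ B : Finset ℤ, (Fintype.card G : ℝ) *
    en (U ×ˢ piFinset fun _ : Fin s => B) (red K Q ∘ fun q => g q.1 + pw K q.2) =
    ∑ ψ : AddChar G ℂ, ‖∑ u ∈ U, ψ (red K Q (g u))‖ ^ 2 * ‖∑ a ∈ B, ψ (mc K Q a)‖ ^ (2 * s) := by
    intro B; rw [en_char]; refine sum_congr rfl fun ψ _ => ?_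
    have : ∑ u ∈ U ×ˢ piFinset fun _ : Fin s => B, ψ ((red K Q ∘ fun q => g q.1 + pw K q.2) u) =
      (∑ u ∈ U, ψ (red K Q (g u))) * (∑ a ∈ B, ψ (mc K Q a)) ^ s := by
      have h1 := char_sum_pi ψ (fun _ : Fin s => B) (mc K Q)
      rw [prod_const, card_univ, Fintype.card_fin] at h1; rw [← h1, sum_mul_sum, sum_product]
      refine sum_congr rfl fun u _ => sum_congr rfl fun v _ => ?_; simp only [Function.comp]
      rw [red_add, red_pw, AddChar.map_add_eq_mul]
    rw [this, norm_mul, norm_pow, mul_pow, ← pow_mul, mul_comm s 2]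
  have hpos : (0 : ℝ) < Fintype.card G := mod_cast Fintype.card_pos
  have main : (Fintype.card G : ℝ) * en (U ×ˢ piFinset fun _ : Fin s => A) (red K Q ∘ fun q => g q.1 + pw K q.2) ≤
    Fintype.card G * ((I.card : ℝ) ^ (2 * s - 1) * ∑ r ∈ I,
      (en (U ×ˢ piFinset fun _ : Fin s => A.filter (c · = r)) (red K Q ∘ fun q => g q.1 + pw K q.2) : ℝ)) := by
    rw [mul_left_comm, mul_sum, key]; simp_rw [key]; rw [sum_comm, mul_sum]; refine sum_le_sum fun ψ _ => ?_
    rw [← mul_sum, mul_left_comm]; refine mul_le_mul_of_nonneg_left ?_ (by positivity)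
    have h2 : ∑ a ∈ A, ψ (mc K Q a) = ∑ r ∈ I, ∑ a ∈ A.filter (c · = r), ψ (mc K Q a) :=
      (sum_fiberwise_of_maps_to hc _).symm
    rw [h2]
    calc _ ≤ (∑ r ∈ I, ‖∑ a ∈ A.filter (c · = r), ψ (mc K Q a)‖) ^ (2 * s) := by gcongr; exact norm_sum_le _ _
      _ ≤ _ := by
        obtain ⟨n, hn⟩ : ∃ n, 2 * s = n + 1 := ⟨2 * s - 1, by omega⟩; rw [hn, Nat.add_sub_cancel]
        exact pow_sum_le_card_mul_sum_pow (fun _ _ => norm_nonneg _) n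
  have main2 := le_of_mul_le_mul_left main hpos
  have e1 := en_le_of_hom (U ×ˢ piFinset fun _ : Fin s => A) (fun q => g q.1 + pw K q.2) (red K Q)
  have e2 : ∀ r ∈ I, en (U ×ˢ piFinset fun _ : Fin s => A.filter (c · = r)) (red K Q ∘ fun q => g q.1 + pw K q.2) ≤
    en (U ×ˢ piFinset fun _ : Fin s => A.filter (c · = r)) (fun q => g q.1 + pw K q.2) := by
    intro r _; apply en_hom_le; intro u hu v hv h
    have hsub : (U ×ˢ piFinset fun _ : Fin s => A.filter (c · = r)) ⊆ (U ×ˢ piFinset fun _ : Fin s => A) :=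
      product_subset_product_right (Fintype.piFinset_subset _ _ fun _ => filter_subset _ _)
    exact hinj u (hsub hu) v (hsub hv) h
  have main3 : (en (U ×ˢ piFinset fun _ : Fin s => A) (red K Q ∘ fun q => g q.1 + pw K q.2)) ≤
    I.card ^ (2 * s - 1) * ∑ r ∈ I,
      en (U ×ˢ piFinset fun _ : Fin s => A.filter (c · = r)) (red K Q ∘ fun q => g q.1 + pw K q.2) := mod_cast main2
  calc _ ≤ _ := e1
    _ ≤ _ := main3
    _ ≤ _ := by gcongr with r hr; exact e2 r hr

/-! ### Linnik's lemma -/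

lemma esymm_eq_of_psum_eq {R : Type*} [CommRing R] {K : ℕ} (x y : Fin K → R)
  (hu : ∀ k : ℕ, 1 ≤ k → k ≤ K → IsUnit (k : R))
  (h : ∀ j : Fin K, ∑ i, x i ^ (j.val + 1) = ∑ i, y i ^ (j.val + 1)) (k : ℕ) (hk : k ≤ K) :
  MvPolynomial.aeval x (MvPolynomial.esymm (Fin K) R k) = MvPolynomial.aeval y (MvPolynomial.esymm (Fin K) R k) := by
  induction k using Nat.strong_induction_on with
  | _ k ih =>
  rcases Nat.eq_zero_or_pos k with rfl | hpos
  · simp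
  have hx := congrArg (MvPolynomial.aeval x) (MvPolynomial.mul_esymm_eq_sum (Fin K) R k)
  have hy := congrArg (MvPolynomial.aeval y) (MvPolynomial.mul_esymm_eq_sum (Fin K) R k)
  simp only [map_mul, map_sum, map_natCast, map_pow, map_neg, map_one] at hx hy
  apply (hu k hpos hk).mul_left_cancel; rw [hx, hy]; congr 1; refine sum_congr rfl fun a ha => ?_
  rw [mem_filter, HasAntidiagonal.mem_antidiagonal] at ha; rw [ih a.1 ha.2 (by omega)]; congr 1
  simp only [MvPolynomial.psum, map_sum, map_pow, MvPolynomial.aeval_X]; have := h ⟨a.2 - 1, by omega⟩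
  have e : a.2 - 1 + 1 = a.2 := by omega
  simpa only [e] using this

lemma prod_sub_eq_of_psum_eq {R : Type*} [CommRing R] {K : ℕ} (x y : Fin K → R)
  (hu : ∀ k : ℕ, 1 ≤ k → k ≤ K → IsUnit (k : R))
  (h : ∀ j : Fin K, ∑ i, x i ^ (j.val + 1) = ∑ i, y i ^ (j.val + 1)) (T : R) :
  ∏ i, (T - x i) = ∏ i, (T - y i) := by
  have key : ∀ z : Fin K → R, ∏ i, (T - z i) = ∑ j ∈ range (K + 1),
    (-1) ^ j * (MvPolynomial.aeval z (MvPolynomial.esymm (Fin K) R j) * T ^ (K - j)) := by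
    intro z; have h1 := congrArg (Polynomial.eval T) (Multiset.prod_X_sub_X_eq_sum_esymm (univ.val.map z))
    rw [Polynomial.eval_multiset_prod, Multiset.map_map, Multiset.map_map] at h1
    simp only [Function.comp_def, Polynomial.eval_sub, Polynomial.eval_X, Polynomial.eval_C,
      Multiset.card_map, card_val, card_univ, Fintype.card_fin,
      Polynomial.eval_finsetSum, Polynomial.eval_mul, Polynomial.eval_pow, Polynomial.eval_neg,
      Polynomial.eval_one] at h1
    rw [← prod_eq_multiset_prod] at h1; rw [h1]; refine sum_congr rfl fun j _ => ?_
    rw [MvPolynomial.aeval_esymm_eq_multiset_esymm]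
  rw [key, key]; refine sum_congr rfl fun j hj => ?_
  rw [esymm_eq_of_psum_eq x y hu h j (by simpa [Nat.lt_succ_iff] using hj)]

lemma linnik_fibre {p K : ℕ} (hp : p.Prime) (hK : K < p) (hK1 : 1 ≤ K) (u v : Fin K → ℤ)
  (hv : Injective fun i => (v i : ZMod p))
  (h : red K (p ^ K) (pw K u) = red K (p ^ K) (pw K v)) (i : Fin K) :
  ∃ j, (u i : ZMod (p ^ K)) = (v j : ZMod (p ^ K)) := by
  have hfact : Fact p.Prime := ⟨hp⟩
  have hunit : ∀ a : ℤ, (a : ZMod p) ≠ 0 → IsUnit (a : ZMod (p ^ K)) := by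
    intro a ha
    have h1 : IsCoprime a ((p ^ K : ℕ) : ℤ) := by
      push_cast; apply IsCoprime.pow_right
      rw [isCoprime_comm, (Nat.prime_iff_prime_int.1 hp).coprime_iff_not_dvd]
      rwa [← ZMod.intCast_zmod_eq_zero_iff_dvd] 
    obtain ⟨x, y, hxy⟩ := h1; have h2 := congrArg (Int.cast : ℤ → ZMod (p ^ K)) hxy
    rw [Int.cast_add, Int.cast_mul, Int.cast_mul, Int.cast_natCast, ZMod.natCast_self, mul_zero,
      add_zero, Int.cast_one, mul_comm] at h2
    exact IsUnit.of_mul_eq_one _ h2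
  have h0 := prod_sub_eq_of_psum_eq (fun i => (u i : ZMod (p ^ K))) (fun i => (v i : ZMod (p ^ K)))
    (by
      intro k hk1 hk2
      have := hunit k (by
        rw [Int.cast_natCast, Ne, ZMod.natCast_eq_zero_iff]
        exact fun hd => by have := Nat.le_of_dvd (by omega) hd; omega)
      simpa using this)
    (by
      intro j; have := congrFun h j; simpa [red, pw] using this) (u i)
  have h1 : ∏ j, ((u i : ZMod (p ^ K)) - (v j : ZMod (p ^ K))) = 0 := by
    rw [← h0]; exact prod_eq_zero (mem_univ i) (by simp)
  by_cases hex : ∃ j, (u i : ZMod p) = v j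
  · obtain ⟨j, hj⟩ := hex; refine ⟨j, ?_⟩; rw [← mul_prod_erase _ _ (mem_univ j)] at h1
    have h2 : IsUnit (∏ l ∈ univ.erase j, ((u i : ZMod (p ^ K)) - (v l : ZMod (p ^ K)))) := by
      rw [IsUnit.prod_iff]; intro l hl
      have := hunit (u i - v l) (by
        push_cast; rw [hj, sub_ne_zero]; intro he; exact (ne_of_mem_erase hl) (hv he.symm))
      simpa using this
    exact sub_eq_zero.1 (h2.mul_left_eq_zero.1 h1)
  · push Not at hex
    have h2 : IsUnit (∏ l, ((u i : ZMod (p ^ K)) - (v l : ZMod (p ^ K)))) := by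
      rw [IsUnit.prod_univ_iff]; intro l
      have := hunit (u i - v l) (by push_cast; rw [sub_ne_zero]; exact hex l); simpa using this
    rw [h1] at h2
    have : Nontrivial (ZMod (p ^ K)) := by
      have : Fact (1 < p ^ K) := ⟨Nat.one_lt_pow (by omega) hp.one_lt⟩
      infer_instance
    exact absurd h2 not_isUnit_zero

lemma linnik {p K : ℕ} (hp : p.Prime) (hK : K < p) (hK1 : 1 ≤ K) (A : Finset ℤ)
  (hA : ∀ a ∈ A, ∀ b ∈ A, (a : ZMod (p ^ K)) = b → a = b) (r : ℤ) (b : Fin K → ℤ) :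
  ((piFinset fun _ : Fin K => A).filter fun u => (Injective fun i => (u i : ZMod p)) ∧
    ∀ j : Fin K, ((p : ℤ) ^ (j.val + 1)) ∣ pw K (fun i => u i - r) j - b j).card ≤
    K ^ K * p ^ (K * (K - 1) / 2) := by
  classical
  have : NeZero p := ⟨hp.ne_zero⟩; have : NeZero (p ^ K) := ⟨pow_ne_zero _ hp.ne_zero⟩
  set S := ((piFinset fun _ : Fin K => A).filter fun u => (Injective fun i => (u i : ZMod p)) ∧
    ∀ j : Fin K, ((p : ℤ) ^ (j.val + 1)) ∣ pw K (fun i => u i - r) j - b j) with hS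
  set φ : (Fin K → ℤ) → (Fin K → ZMod (p ^ K)) := fun u => red K (p ^ K) (pw K fun i => u i - r)
  have h1 : S.card ≤ K ^ K * (S.image φ).card := by
    apply card_le_mul_card_image; intro z hz; obtain ⟨v, hv, rfl⟩ := mem_image.1 hz
    rw [hS, mem_filter, mem_piFinset] at hv
    have hsub : S.filter (fun u => φ u = φ v) ⊆ (univ : Finset (Fin K → Fin K)).image (fun τ => v ∘ τ) := by
      intro u hu; rw [mem_filter, hS, mem_filter, mem_piFinset] at hu
      have hex := linnik_fibre hp hK hK1 (fun i => u i - r) (fun i => v i - r)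
        (by
          intro i j hij; apply hv.2.1; simpa using hij) hu.2
      choose τ hτ using hex
      rw [mem_image]; refine ⟨τ, mem_univ _, ?_⟩; funext i; symm; apply hA _ (hu.1.1 i) _ (hv.1 _)
      have := hτ i; push_cast at this; simpa using this
    calc _ ≤ _ := card_le_card hsub
      _ ≤ (univ : Finset (Fin K → Fin K)).card := card_image_le
      _ = K ^ K := by simp
  refine h1.trans (Nat.mul_le_mul_left _ ?_)
  have h2 : S.image φ ⊆ piFinset fun j : Fin K => (range (p ^ (K - 1 - j.val))).image
    (fun q : ℕ => ((b j + p ^ (j.val + 1) * q : ℤ) : ZMod (p ^ K))) := by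
    intro z hz; obtain ⟨u, hu, rfl⟩ := mem_image.1 hz; rw [hS, mem_filter] at hu; rw [mem_piFinset]; intro j
    obtain ⟨q, hq⟩ := hu.2.2 j; rw [mem_image]
    have hpos : (0 : ℤ) < (p : ℤ) ^ (K - 1 - j.val) := by have := hp.pos; positivity
    refine ⟨(q % (p ^ (K - 1 - j.val))).toNat, ?_, ?_⟩
    · rw [mem_range]; have h3 := Int.emod_lt_of_pos q hpos; have h4 := Int.emod_nonneg q hpos.ne'
      zify
      rw [Int.toNat_of_nonneg h4]; exact h3
    · rw [Int.toNat_of_nonneg (Int.emod_nonneg q hpos.ne')]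
      show _ = ((pw K (fun i => u i - r) j : ℤ) : ZMod (p ^ K)); rw [ZMod.intCast_eq_intCast_iff_dvd_sub]
      refine ⟨q / (p ^ (K - 1 - j.val)), ?_⟩
      have h5 : (p : ℤ) ^ K = p ^ (j.val + 1) * p ^ (K - 1 - j.val) := by rw [← pow_add]; congr 1; have := j.2; omega
      have h6 := Int.mul_ediv_add_emod q ((p : ℤ) ^ (K - 1 - j.val)); push_cast; rw [h5]
      linear_combination hq - (p : ℤ) ^ (j.val + 1) * h6
  calc _ ≤ _ := card_le_card h2
    _ ≤ ∏ j : Fin K, p ^ (K - 1 - j.val) := by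
      rw [card_piFinset]; apply prod_le_prod' fun j _ => ?_; exact card_image_le.trans (by simp)
    _ = _ := by
      rw [Fin.prod_univ_eq_prod_range (fun j => p ^ (K - 1 - j)) K,
        prod_range_reflect (fun j => p ^ j) K, prod_pow_eq_pow_sum,
        sum_range_id]

/-! ### The recursion for Vinogradov's mean value -/

lemma en_le_of_inj {α β G H : Type*} [DecidableEq G] [DecidableEq H] (X : Finset α) (g : α → G)
  (Y : Finset β) (h : β → H) (f : α → β) (hf : ∀ x ∈ X, f x ∈ Y)
  (hi : ∀ x ∈ X, ∀ y ∈ X, f x = f y → x = y)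
  (hg : ∀ x ∈ X, ∀ y ∈ X, g x = g y → h (f x) = h (f y)) : en X g ≤ en Y h := by
  apply card_le_card_of_injOn (fun q => (f q.1, f q.2))
  · intro q hq; simp only [coe_filter, mem_product, mem_ofPred_eq] at hq ⊢
    exact ⟨⟨hf _ hq.1.1, hf _ hq.1.2⟩, hg _ hq.1.1 _ hq.1.2 hq.2⟩
  · intro q hq q' hq' h; simp only [coe_filter, mem_product, mem_ofPred_eq] at hq hq'
    simp only [Prod.mk.injEq] at h; exact Prod.ext (hi _ hq.1.1 _ hq'.1.1 h.1) (hi _ hq.1.2 _ hq'.1.2 h.2)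

lemma card_eq_sum_fibre {α G : Type*} [DecidableEq G] (X : Finset α) (g h : α → G) (T : Finset G)
  (hT : ∀ x ∈ X, g x ∈ T) : ((X ×ˢ X).filter fun q => g q.1 = h q.2).card =
    ∑ c ∈ T, (X.filter (g · = c)).card * (X.filter (h · = c)).card := by
  rw [card_eq_sum_card_fiberwise (f := fun q => g q.1) (t := T)]
  · refine sum_congr rfl fun c _ => ?_; rw [← card_product]; congr 1; ext q
    simp only [mem_filter, mem_product]; constructor
    · rintro ⟨⟨⟨h1, h2⟩, h3⟩, h4⟩; exact ⟨⟨h1, h4⟩, h2, by rw [← h3, h4]⟩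
    · rintro ⟨⟨h1, h4⟩, h2, h5⟩; exact ⟨⟨⟨h1, h2⟩, by rw [h4, h5]⟩, h4⟩
  · intro q hq; simp only [coe_filter, mem_product, mem_ofPred_eq] at hq; exact hT _ hq.1.1

lemma en_eq_sum {α G : Type*} [DecidableEq G] (X : Finset α) (g : α → G) (T : Finset G) (hT : ∀ x ∈ X, g x ∈ T) :
  en X g = ∑ c ∈ T, (X.filter (g · = c)).card ^ 2 := by
  simpa only [en, sq] using card_eq_sum_fibre X g g T hT

lemma en_split {α G : Type*} [DecidableEq G] (X : Finset α) (g : α → G) (P : α → Prop) [DecidablePred P] :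
  en X g ≤ 2 * en (X.filter P) g + 2 * en (X.filter (¬ P ·)) g := by
  have hT : ∀ x ∈ X, g x ∈ X.image g := fun x hx => mem_image_of_mem g hx
  rw [en_eq_sum X g _ hT, en_eq_sum (X.filter P) g (X.image g) fun x hx => hT x (mem_filter.1 hx).1,
    en_eq_sum (X.filter (¬ P ·)) g (X.image g) fun x hx => hT x (mem_filter.1 hx).1,
    mul_sum, mul_sum, ← sum_add_distrib]
  refine sum_le_sum fun c _ => ?_; have h := card_filter_add_card_filter_not (s := X.filter (g · = c)) P
  rw [filter_comm, filter_comm (g · = c) (¬ P ·)] at h; rw [← h]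
  nlinarith [sq_nonneg (((X.filter P).filter (g · = c)).card - (((X.filter (¬ P ·)).filter (g · = c)).card : ℤ))]

/-- A shifted count is at most the energy. -/
lemma en_shift {α G : Type*} [DecidableEq G] [AddCommGroup G] (X : Finset α) (g : α → G) (l : G) :
  ((X ×ˢ X).filter fun q => g q.1 = g q.2 + l).card ≤ en X g := by
  classical
  set T := X.image g ∪ X.image (fun x => g x + l)
  have h1 := card_eq_sum_fibre X g (fun x => g x + l) T fun x hx => mem_union_left _ (mem_image_of_mem g hx)
  have h2 := en_eq_sum X g T fun x hx => mem_union_left _ (mem_image_of_mem g hx)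
  have h3 := en_eq_sum X (fun x => g x + l) T fun x hx => mem_union_right _ (mem_image_of_mem (fun x => g x + l) hx)
  have h4 : en X (fun x => g x + l) = en X g := by simp [en]
  have h5 : 2 * ((X ×ˢ X).filter fun q => g q.1 = g q.2 + l).card ≤ 2 * en X g := by
    rw [h1, two_mul (en X g)]
    nth_rewrite 2 [← h4]
    rw [h2, h3, ← sum_add_distrib, mul_sum]; refine sum_le_sum fun c _ => ?_
    nlinarith [sq_nonneg ((X.filter (g · = c)).card - ((X.filter (g · + l = c)).card : ℤ))]
  omega

lemma en_prod_le {β α G : Type*} [DecidableEq G] [AddCommGroup G] (U : Finset β)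
  (W : Finset α) (g : β → G) (h : α → G) (S : Finset (β × β))
  (hS : ∀ u ∈ U, ∀ u' ∈ U, ∀ w ∈ W, ∀ w' ∈ W, g u + h w = g u' + h w' → (u, u') ∈ S) :
  en (U ×ˢ W) (fun q => g q.1 + h q.2) ≤ S.card * en W h := by
  classical
  rw [en, card_eq_sum_card_fiberwise (f := fun q => (q.1.1, q.2.1)) (t := S)]
  · rw [← smul_eq_mul]; refine sum_le_card_nsmul _ _ _ fun v _ => ?_
    refine le_trans ?_ (en_shift W h (g v.2 - g v.1)); apply card_le_card_of_injOn (fun q => (q.1.2, q.2.2))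
    · intro q hq; simp only [coe_filter, mem_product, mem_filter, mem_ofPred_eq] at hq ⊢
      obtain ⟨⟨⟨⟨h1, h2⟩, h3, h4⟩, h5⟩, rfl⟩ := hq; refine ⟨⟨h2, h4⟩, ?_⟩
      rw [← add_right_inj (g q.1.1), h5]; abel
    · intro q hq q' hq' hqq; simp only [coe_filter, mem_product, mem_filter, mem_ofPred_eq] at hq hq'
      have e1 := hq.2; have e2 := hq'.2; rw [← e2] at e1; simp only [Prod.mk.injEq] at hqq e1
      exact Prod.ext (Prod.ext e1.1 hqq.1) (Prod.ext e1.2 hqq.2)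
  · intro q hq; simp only [coe_filter, mem_product, mem_ofPred_eq] at hq
    exact hS _ hq.1.1.1 _ hq.1.2.1 _ hq.1.1.2 _ hq.1.2.2 hq.2

lemma pw_shift (K : ℕ) {ι : Type*} [Fintype ι] (x y : ι → ℤ) (r : ℤ) (h : pw K x = pw K y) :
  pw K (fun i => x i - r) = pw K (fun i => y i - r) := by
  funext j
  have key : ∀ z : ι → ℤ, pw K (fun i => z i - r) j = ∑ k ∈ range (j.val + 1 + 1),
    (∑ i, z i ^ k) * ((-r) ^ (j.val + 1 - k) * ((j.val + 1).choose k)) := by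
    intro z; simp only [pw, sub_eq_add_neg, add_pow]; rw [sum_comm]; refine sum_congr rfl fun k _ => ?_
    rw [sum_mul]; exact sum_congr rfl fun i _ => by ring
  rw [key, key]; refine sum_congr rfl fun k hk => ?_; congr 1
  rcases Nat.eq_zero_or_pos k with rfl | hpos
  · simp
  · have hk' : k < j.val + 1 + 1 := mem_range.1 hk; have := congrFun h ⟨k - 1, by have := j.2; omega⟩
    have e : k - 1 + 1 = k := by omega
    simpa only [pw, e] using this

lemma pw_sumElim (K : ℕ) {ι κ : Type*} [Fintype ι] [Fintype κ] (u : ι → ℤ) (w : κ → ℤ) :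
  pw K (Sum.elim u w) = pw K u + pw K w := by
  funext j; simp [pw]

lemma pw_shift_add (K : ℕ) {ι κ : Type*} [Fintype ι] [Fintype κ] (u u' : ι → ℤ) (w w' : κ → ℤ)
  (r : ℤ) (h : pw K u + pw K w = pw K u' + pw K w') :
  pw K (fun i => u i - r) + pw K (fun i => w i - r) = pw K (fun i => u' i - r) + pw K (fun i => w' i - r) := by
  rw [← pw_sumElim, ← pw_sumElim] at h; have := pw_shift K _ _ r h
  have e : ∀ (a : ι → ℤ) (b : κ → ℤ), (fun i => Sum.elim a b i - r) =
    Sum.elim (fun i => a i - r) (fun i => b i - r) := by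
    intro a b; funext i; cases i <;> rfl
  rwa [e, e, pw_sumElim, pw_sumElim] at this

/-- The residue class of `r` modulo `p` in `[1, P]` is, up to an affine map, a subset of
`[1, P / p + 1]`, and the mean value is affine invariant. -/
lemma JV_residue (K s P p : ℕ) (hp : 0 < p) (r : ZMod p) :
  JV K s ((Icc (1 : ℤ) P).filter (fun a => (a : ZMod p) = r)) ≤ JV K s (Icc (1 : ℤ) (P / p + 1 : ℕ)) := by
  have : NeZero p := ⟨hp.ne'⟩
  have hdiv : ∀ a : ℤ, (a : ZMod p) = r → (p : ℤ) ∣ a - r.val := by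
    intro a ha; rw [← ZMod.intCast_eq_intCast_iff_dvd_sub]; simp [ha]
  have hp' : (0 : ℤ) < p := mod_cast hp
  apply en_le_of_inj _ _ _ _ (fun (x : Fin s → ℤ) (i : Fin s) => (x i - (r.val : ℤ)) / (p : ℤ) + 1)
  · intro x hx; rw [mem_piFinset] at hx ⊢; intro i; have h1 := hx i; rw [mem_filter, mem_Icc] at h1
    rw [mem_Icc]; obtain ⟨q, hq⟩ := hdiv _ h1.2; have hv : (r.val : ℤ) < p := mod_cast r.val_lt
    rw [hq, Int.mul_ediv_cancel_left _ hp'.ne']; constructor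
    · by_contra hneg; push Not at hneg; have : q ≤ -1 := by linarith
      nlinarith [h1.1.1]
    · push_cast
      have : q ≤ P / p := by
        rw [Int.le_ediv_iff_mul_le hp']; have : (0 : ℤ) ≤ r.val := by positivity
        linarith [h1.1.2]
      linarith
  · intro x hx y hy hxy; funext i; rw [mem_piFinset] at hx hy; have h1 := congrFun hxy i
    obtain ⟨q, hq⟩ := hdiv _ (mem_filter.1 (hx i)).2; obtain ⟨q', hq'⟩ := hdiv _ (mem_filter.1 (hy i)).2
    simp only [hq, hq', Int.mul_ediv_cancel_left _ hp'.ne'] at h1; have : q = q' := by linarith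
    subst this; linarith
  · intro x hx y hy hxy; rw [mem_piFinset] at hx hy
    choose q hq using fun i => hdiv _ (mem_filter.1 (hx i)).2
    choose q' hq' using fun i => hdiv _ (mem_filter.1 (hy i)).2
    have h1 := pw_shift K x y r.val hxy; simp only [hq, hq'] at h1
    simp only [hq, hq', Int.mul_ediv_cancel_left _ hp'.ne']
    have h2 : pw K q = pw K q' := by
      funext j; have := congrFun h1 j; simp only [pw, mul_pow, ← mul_sum] at this
      exact mul_left_cancel₀ (pow_ne_zero _ hp'.ne') this
    have := pw_shift K q q' (-1) h2; simpa using this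

lemma JV_add_le (K s t : ℕ) (A : Finset ℤ) : JV K (t + s) A ≤ A.card ^ (2 * t) * JV K s A := by
  have h1 : JV K (t + s) A ≤ en ((piFinset fun _ : Fin t => A) ×ˢ
    (piFinset fun _ : Fin s => A)) (fun q => pw K q.1 + pw K q.2) := by
    apply en_le_of_inj _ _ _ _ (Fin.appendEquiv t s).symm
    · intro x hx; rw [mem_piFinset] at hx; simp [mem_product, mem_piFinset, hx, Fin.appendEquiv]
    · intro x _ y _ h; exact (Fin.appendEquiv t s).symm.injective h
    · intro x _ y _ h
      have e : ∀ z : Fin (t + s) → ℤ, pw K ((Fin.appendEquiv t s).symm z).1 +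
        pw K ((Fin.appendEquiv t s).symm z).2 = pw K z := by
        intro z; funext j; simp [pw, Fin.appendEquiv, Fin.sum_univ_add]
      rw [e, e, h]
  refine h1.trans ((en_prod_le _ _ _ _ ((piFinset fun _ : Fin t => A) ×ˢ (piFinset fun _ : Fin t => A)) ?_).trans ?_)
  · intro u hu u' hu' _ _ _ _ _; exact mem_product.2 ⟨hu, hu'⟩
  · rw [card_product, card_piFinset]; simp only [prod_const, card_univ, Fintype.card_fin]
    rw [two_mul, pow_add]; exact le_rfl

lemma en_ill (K m : ℕ) (A : Finset ℤ) {R : Type*} [DecidableEq R] [Fintype R] [Nonempty R]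
  (c : ℤ → R) (Ill : Finset (Fin m → R)) :
  en ((piFinset fun _ : Fin m => A).filter fun x => (fun i => c (x i)) ∈ Ill) (pw K) ≤
    Ill.card ^ 2 * ∑ r : R, JV K m (A.filter (c · = r)) := by
  classical
  set X := (piFinset fun _ : Fin m => A); set XI := X.filter fun x => (fun i => c (x i)) ∈ Ill
  obtain ⟨Q, hQ, hinj⟩ := exists_modulus K X (pw K); have : NeZero Q := ⟨hQ⟩; set G := Fin K → ZMod Q
  have hpos : (0 : ℝ) < Fintype.card G := mod_cast Fintype.card_pos
  have e1 := en_le_of_hom XI (pw K) (red K Q)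
  have e2 : ∀ r : R, en (piFinset fun _ : Fin m => A.filter (c · = r)) (red K Q ∘ pw K) ≤
    JV K m (A.filter (c · = r)) := by
    intro r; apply en_hom_le; intro u hu v hv h
    have hsub : (piFinset fun _ : Fin m => A.filter (c · = r)) ⊆ X :=
      Fintype.piFinset_subset _ _ fun _ => filter_subset _ _
    exact hinj u (hsub hu) v (hsub hv) h
  have main : (Fintype.card G : ℝ) * en XI (red K Q ∘ pw K) ≤ Fintype.card G * ((Ill.card : ℝ) ^ 2 * ∑ r : R,
    (en (piFinset fun _ : Fin m => A.filter (c · = r)) (red K Q ∘ pw K) : ℝ)) := by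
    rw [mul_left_comm, mul_sum]; simp_rw [en_char]; rw [sum_comm, mul_sum]; refine sum_le_sum fun ψ _ => ?_
    set F : R → ℂ := fun r => ∑ a ∈ A.filter (c · = r), ψ (mc K Q a)
    have hr : ∀ r : R, ∑ x ∈ piFinset fun _ : Fin m => A.filter (c · = r), ψ ((red K Q ∘ pw K) x) = F r ^ m := by
      intro r; have h1 := char_sum_pi ψ (fun _ : Fin m => A.filter (c · = r)) (mc K Q)
      rw [prod_const, card_univ, Fintype.card_fin] at h1; rw [← h1]
      exact sum_congr rfl fun x _ => by simp only [Function.comp]; rw [red_pw]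
    have hI : ∑ x ∈ XI, ψ ((red K Q ∘ pw K) x) = ∑ ρ ∈ Ill, ∏ i, F (ρ i) := by
      rw [← sum_fiberwise_of_maps_to (s := XI) (t := Ill) (g := fun x i => c (x i)) (fun x hx => (mem_filter.1 hx).2)]
      refine sum_congr rfl fun ρ hρ => ?_
      have h1 := char_sum_pi ψ (fun i : Fin m => A.filter (c · = ρ i)) (mc K Q); rw [← h1]
      refine sum_congr ?_ fun x _ => by simp only [Function.comp]; rw [red_pw]
      ext x; simp only [XI, X, mem_filter, mem_piFinset]; constructor
      · rintro ⟨⟨h1, h2⟩, h3⟩ i; exact ⟨h1 i, congrFun h3 i⟩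
      · intro h; have h3 : (fun i => c (x i)) = ρ := funext fun i => (h i).2
        exact ⟨⟨fun i => (h i).1, h3 ▸ hρ⟩, h3⟩
    simp_rw [hr]; rw [hI]
    rcases Ill.eq_empty_or_nonempty with he | _
    · simp [he]
    rcases Nat.eq_zero_or_pos m with hm | hm
    · subst hm; have h1 : ‖∑ ρ ∈ Ill, ∏ i, F (ρ i)‖ = Ill.card := by simp
      rw [h1]; simp only [pow_zero, norm_one, one_pow, sum_const, card_univ, nsmul_eq_mul, mul_one]
      have : (1 : ℝ) ≤ Fintype.card R := mod_cast Fintype.card_pos; nlinarith [sq_nonneg (Ill.card : ℝ)]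
    obtain ⟨r0, hr0⟩ := Finite.exists_max (fun r => ‖F r‖)
    have h2 : ‖∑ ρ ∈ Ill, ∏ i, F (ρ i)‖ ≤ Ill.card * ‖F r0‖ ^ m := by
      refine (norm_sum_le _ _).trans ?_; rw [← nsmul_eq_mul]; refine sum_le_card_nsmul _ _ _ fun ρ _ => ?_
      rw [norm_prod]
      calc _ ≤ ∏ _i : Fin m, ‖F r0‖ := Finset.prod_le_prod (fun _ _ => norm_nonneg _)
            fun i _ => hr0 _
        _ = _ := by simp
    calc _ ≤ (Ill.card * ‖F r0‖ ^ m) ^ 2 := by gcongr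
      _ = (Ill.card : ℝ) ^ 2 * ‖F r0 ^ m‖ ^ 2 := by rw [mul_pow, norm_pow]
      _ ≤ _ := by
        gcongr; exact single_le_sum (f := fun r => ‖F r ^ m‖ ^ 2) (fun _ _ => by positivity) (mem_univ r0)
  have main2 := le_of_mul_le_mul_left main hpos
  have main3 : en XI (red K Q ∘ pw K) ≤ Ill.card ^ 2 * ∑ r : R,
    en (piFinset fun _ : Fin m => A.filter (c · = r)) (red K Q ∘ pw K) := by
    exact_mod_cast main2
  calc _ ≤ _ := e1
    _ ≤ _ := main3
    _ ≤ _ := by gcongr with r hr; exact e2 r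

/-- There are few tuples of residues taking fewer than `K` values. -/
lemma card_ill (K m : ℕ) {R : Type*} [DecidableEq R] [Fintype R] [Nonempty R] :
  ((univ : Finset (Fin m → R)).filter fun ρ => (univ.image ρ).card < K).card ≤ Fintype.card R ^ K * K ^ m := by
  classical
  have hsub : ((univ : Finset (Fin m → R)).filter fun ρ => (univ.image ρ).card < K) ⊆
    (univ : Finset ((Fin K → R) × (Fin m → Fin K))).image (fun q => q.1 ∘ q.2) := by
    intro ρ hρ; rw [mem_filter] at hρ
    have : Fintype.card (univ.image ρ : Finset R) ≤ Fintype.card (Fin K) := by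
      rw [Fintype.card_coe, Fintype.card_fin]; exact hρ.2.le
    obtain ⟨e⟩ := Function.Embedding.nonempty_of_card_le this; rw [mem_image]
    refine ⟨(Function.extend e Subtype.val fun _ => Classical.arbitrary R,
      fun i => e ⟨ρ i, mem_image_of_mem ρ (mem_univ i)⟩), mem_univ _, ?_⟩
    funext i; simp only [Function.comp]; rw [e.injective.extend_apply]
  calc _ ≤ _ := card_le_card hsub
    _ ≤ _ := card_image_le
    _ = _ := by simp

/-- Tuples with `K` distinct residues somewhere are controlled by those whose first `K`
residues are distinct. -/
lemma en_good (K s : ℕ) (A : Finset ℤ) {R : Type*} [DecidableEq R] (c : ℤ → R) :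
  en ((piFinset fun _ : Fin (K + s) => A).filter
    fun x => ¬ (univ.image fun i => c (x i)).card < K) (pw K) ≤
  ((K + s) ^ K) ^ 2 * en ((piFinset fun _ : Fin (K + s) => A).filter
    fun x => Injective fun i : Fin K => c (x (Fin.castAdd s i))) (pw K) := by
  classical
  set X := (piFinset fun _ : Fin (K + s) => A)
  set X0 := X.filter fun x => Injective fun i : Fin K => c (x (Fin.castAdd s i)) with hX0
  set E := (univ : Finset ((Fin K → Fin (K + s)) × (Fin K → Fin (K + s))))
  set Y : ((Fin K → Fin (K + s)) × (Fin K → Fin (K + s))) → Finset ((Fin (K + s) → ℤ) × (Fin (K + s) → ℤ)) := fun e =>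
    (X ×ˢ X).filter fun q => ((Injective fun i => c (q.1 (e.1 i))) ∧
      (Injective fun i => c (q.2 (e.2 i)))) ∧ pw K q.1 = pw K q.2
  have hex : ∀ x : Fin (K + s) → ℤ, ¬ (univ.image fun i => c (x i)).card < K →
    ∃ e : Fin K → Fin (K + s), Injective fun i => c (x (e i)) := by
    intro x hx; push Not at hx
    have : Fintype.card (Fin K) ≤ Fintype.card (univ.image fun i => c (x i) : Finset R) := by simpa using hx
    obtain ⟨e⟩ := Function.Embedding.nonempty_of_card_le this
    have h1 : ∀ i, ∃ j, c (x j) = (e i).1 := fun i => by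
      have := (e i).2; rw [mem_image] at this; obtain ⟨j, _, hj⟩ := this; exact ⟨j, hj⟩
    choose f hf using h1
    refine ⟨f, fun i j hij => ?_⟩; simp only [hf] at hij; exact e.injective (Subtype.ext hij)
  have hY : ∀ e ∈ E, (Y e).card ≤ en X0 (pw K) := by
    intro e _
    rcases (Y e).eq_empty_or_nonempty with h0 | ⟨q0, hq0⟩
    · rw [h0]; simp
    have hq1 := (mem_filter.1 hq0).2.1; have i1 : Injective e.1 := fun i j h => hq1.1 (by simp only [h])
    have i2 : Injective e.2 := fun i j h => hq1.2 (by simp only [h])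
    obtain ⟨σ, hσ⟩ := Equiv.Perm.exists_extending_pair (Fin.castAdd s) e.1 (Fin.castAdd_injective K s) i1
    obtain ⟨τ, hτ⟩ := Equiv.Perm.exists_extending_pair (Fin.castAdd s) e.2 (Fin.castAdd_injective K s) i2
    have hpw : ∀ (σ : Equiv.Perm (Fin (K + s))) (x : Fin (K + s) → ℤ), pw K (x ∘ σ) = pw K x := by
      intro σ x; funext j; exact Equiv.sum_comp σ (fun i => x i ^ (j.val + 1))
    apply card_le_card_of_injOn (fun q => (q.1 ∘ σ, q.2 ∘ τ))
    · intro q hq; have hq := mem_filter.1 hq; simp only [mem_product, X, mem_piFinset] at hq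
      simp only [coe_filter, mem_product, mem_ofPred_eq, hX0, mem_filter, X, mem_piFinset, Function.comp, hσ, hτ]
      refine ⟨⟨⟨fun i => hq.1.1 _, hq.2.1.1⟩, ⟨fun i => hq.1.2 _, hq.2.1.2⟩⟩, ?_⟩; have := hq.2.2
      rw [← hpw σ, ← hpw τ q.2] at this; exact this
    · intro q _ q' _ h; simp only [Prod.mk.injEq] at h
      exact Prod.ext (σ.surjective.injective_comp_right h.1) (τ.surjective.injective_comp_right h.2)
  have hsub : ((X.filter fun x => ¬ (univ.image fun i => c (x i)).card < K) ×ˢ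
    (X.filter fun x => ¬ (univ.image fun i => c (x i)).card < K)).filter
      (fun q => pw K q.1 = pw K q.2) ⊆ E.biUnion Y := by
    intro q hq; simp only [mem_filter, mem_product] at hq; obtain ⟨e, he⟩ := hex q.1 hq.1.1.2
    obtain ⟨e', he'⟩ := hex q.2 hq.1.2.2; rw [mem_biUnion]; refine ⟨(e, e'), mem_univ _, ?_⟩
    simp only [Y, mem_filter, mem_product]; exact ⟨⟨hq.1.1.1, hq.1.2.1⟩, ⟨he, he'⟩, hq.2⟩
  calc _ ≤ _ := card_le_card hsub
    _ ≤ _ := card_biUnion_le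
    _ ≤ _ := sum_le_card_nsmul _ _ _ hY
    _ = _ := by
      rw [smul_eq_mul]; congr 1; simp [E, card_univ, sq]

lemma JV_recursion (K s P p : ℕ) (hp : p.Prime) (hK : K < p) (hK1 : 1 ≤ K) (hs : K ^ 2 ≤ s)
  (hP : P ≤ p ^ K) (hpP : p ≤ P) :
  JV K (K + s) (Icc (1 : ℤ) P) ≤ 4 * (4 * (K + s)) ^ (3 * (K + s)) *
    p ^ (2 * s + K * (K - 1) / 2) * P ^ K * JV K s (Icc (1 : ℤ) (P / p + 1 : ℕ)) := by
  classical
  have hfact : Fact p.Prime := ⟨hp⟩; have hs1 : 1 ≤ s := le_trans (Nat.one_le_pow _ _ hK1) hs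
  set A := Icc (1 : ℤ) P with hA; set J := JV K s (Icc (1 : ℤ) (P / p + 1 : ℕ))
  set c : ℤ → ZMod p := fun a => (a : ZMod p) with hc; set X := (piFinset fun _ : Fin (K + s) => A) with hX
  have hAcard : A.card = P := by simp [hA]
  -- tuples with fewer than `K` residues
  set Ill := (univ : Finset (Fin (K + s) → ZMod p)).filter fun ρ => (univ.image ρ).card < K
   
  have ill : en (X.filter fun x => (univ.image fun i => c (x i)).card < K) (pw K) ≤
    (p ^ K * K ^ (K + s)) ^ 2 * (p * ((P / p + 1) ^ (2 * K) * J)) := by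
    have h1 := en_ill K (K + s) A c Ill
    have e : (X.filter fun x => (fun i => c (x i)) ∈ Ill) =
      X.filter fun x => (univ.image fun i => c (x i)).card < K := by
      ext x; simp [Ill]
    rw [e] at h1; refine h1.trans (Nat.mul_le_mul ?_ ?_)
    · have := card_ill K (K + s) (R := ZMod p); rw [ZMod.card] at this; exact Nat.pow_le_pow_left this 2
    · have h2 : ∀ r : ZMod p, JV K (K + s) (A.filter (c · = r)) ≤ (P / p + 1) ^ (2 * K) * J := by
        intro r; refine (JV_residue K (K + s) P p hp.pos r).trans ((JV_add_le K s K _).trans ?_)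
        have hcard : (Icc (1 : ℤ) ((P / p + 1 : ℕ) : ℤ)).card = P / p + 1 := by
          generalize P / p + 1 = w
          simp
        rw [hcard]
      refine (sum_le_card_nsmul _ _ _ fun r _ => h2 r).trans ?_; simp [card_univ, ZMod.card]
  -- tuples whose first `K` residues are distinct
  set U := (piFinset fun _ : Fin K => A).filter fun u => Injective fun i => c (u i) with hU
  have good0 : en (X.filter fun x => Injective fun i : Fin K => c (x (Fin.castAdd s i)))
    (pw K) ≤ en (U ×ˢ piFinset fun _ : Fin s => A) (fun q => pw K q.1 + pw K q.2) := by
    apply en_le_of_inj _ _ _ _ (Fin.appendEquiv K s).symm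
    · intro x hx; rw [mem_filter, hX, mem_piFinset] at hx
      simp only [Fin.appendEquiv, Equiv.coe_fn_symm_mk, mem_product, hU, mem_filter, mem_piFinset]
      exact ⟨⟨fun i => hx.1 _, hx.2⟩, fun i => hx.1 _⟩
    · intro x _ y _ h; exact (Fin.appendEquiv K s).symm.injective h
    · intro x _ y _ h
      have e : ∀ z : Fin (K + s) → ℤ, pw K ((Fin.appendEquiv K s).symm z).1 +
        pw K ((Fin.appendEquiv K s).symm z).2 = pw K z := by
        intro z; funext j; simp [pw, Fin.appendEquiv, Fin.sum_univ_add]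
      rw [e, e, h]
  have good1 : ∀ r : ZMod p, en (U ×ˢ piFinset fun _ : Fin s => A.filter (c · = r))
    (fun q => pw K q.1 + pw K q.2) ≤ (P ^ K * (K ^ K * p ^ (K * (K - 1) / 2))) * J := by
    intro r
    set S := (U ×ˢ U).filter fun q => ∀ j : Fin K, ((p : ℤ) ^ (j.val + 1)) ∣
      pw K (fun i => q.1 i - r.val) j - pw K (fun i => q.2 i - r.val) j with hS
    have h1 := en_prod_le U (piFinset fun _ : Fin s => A.filter (c · = r)) (pw K) (pw K) S
      (by
        intro u hu u' hu' w hw w' hw' h; rw [hS, mem_filter, mem_product]; refine ⟨⟨hu, hu'⟩, fun j => ?_⟩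
        have h2 := congrFun (pw_shift_add K u u' w w' r.val h) j; simp only [Pi.add_apply] at h2
        have h3 : ∀ z ∈ (piFinset fun _ : Fin s => A.filter (c · = r)),
          ((p : ℤ) ^ (j.val + 1)) ∣ pw K (fun i => z i - r.val) j := by
          intro z hz; rw [mem_piFinset] at hz; refine dvd_sum fun i _ => pow_dvd_pow_of_dvd ?_ _
          have := (mem_filter.1 (hz i)).2; rw [← ZMod.intCast_eq_intCast_iff_dvd_sub]
          simpa [hc] using this.symm
        have h4 : pw K (fun i => u i - (r.val : ℤ)) j - pw K (fun i => u' i - (r.val : ℤ)) j =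
          pw K (fun i => w' i - (r.val : ℤ)) j - pw K (fun i => w i - (r.val : ℤ)) j := by linarith
        rw [h4]; exact dvd_sub (h3 w' hw') (h3 w hw))
    refine h1.trans (Nat.mul_le_mul ?_ (JV_residue K s P p hp.pos r))
    have h2 : S.card ≤ ∑ u' ∈ (piFinset fun _ : Fin K => A), (S.filter fun q => q.2 = u').card := by
      rw [← card_eq_sum_card_fiberwise]; intro q hq; have := (mem_product.1 (mem_filter.1 hq).1).2
      exact (mem_filter.1 this).1
    refine h2.trans ((sum_le_card_nsmul _ _ (K ^ K * p ^ (K * (K - 1) / 2))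
      fun u' _ => ?_).trans ?_)
    · refine le_trans ?_ (linnik hp hK hK1 A ?_ r.val (pw K fun i => u' i - r.val))
      · apply card_le_card_of_injOn (fun q => q.1)
        · intro q hq; have hq := mem_filter.1 hq; have hq1 := mem_filter.1 hq.1
          have hq2 := mem_filter.1 (mem_product.1 hq1.1).1; rw [mem_coe, mem_filter]
          refine ⟨hq2.1, hq2.2, ?_⟩; have := hq1.2; rw [hq.2] at this; exact this
        · intro q hq q' hq' h; have hq := (mem_filter.1 hq).2; have hq' := (mem_filter.1 hq').2
          exact Prod.ext h (hq.trans hq'.symm)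
      · intro a ha b hb hab; rw [ZMod.intCast_eq_intCast_iff_dvd_sub] at hab; rw [hA, mem_Icc] at ha hb
        have hP' : (P : ℤ) ≤ (p ^ K : ℕ) := mod_cast hP
        have := Int.eq_zero_of_abs_lt_dvd hab (by rw [abs_lt]; constructor <;> linarith); linarith
    · rw [card_piFinset]; simp [hAcard]
  have good2 := en_holder K s U (pw K) A (univ : Finset (ZMod p)) c (fun _ _ => mem_univ _) hs1
  have good3 : en (U ×ˢ piFinset fun _ : Fin s => A) (fun q => pw K q.1 + pw K q.2) ≤
    p ^ (2 * s) * (P ^ K * (K ^ K * p ^ (K * (K - 1) / 2)) * J) := by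
    refine good2.trans ?_
    refine (Nat.mul_le_mul_left _ (sum_le_card_nsmul _ _ _ fun r _ => good1 r)).trans ?_
    rw [card_univ, ZMod.card, smul_eq_mul, ← mul_assoc, ← pow_succ]; have : 2 * s - 1 + 1 = 2 * s := by omega
    rw [this]
  have split := en_split X (pw K) fun x => (univ.image fun i => c (x i)).card < K
  have good := (en_good K s A c).trans (Nat.mul_le_mul_left _ (good0.trans good3))
  -- the bookkeeping
  set m := K + s; set e := K * (K - 1) / 2
  have hQ : p * (P / p + 1) ≤ 2 * P := by
    have := Nat.mul_div_le P p; rw [mul_add]; omega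
  have i1 : (p ^ K * K ^ m) ^ 2 * (p * ((P / p + 1) ^ (2 * K) * J)) ≤
    (4 * m) ^ (3 * m) * p ^ (2 * s + e) * P ^ K * J := by
    have a1 : (p * (P / p + 1)) ^ (2 * K) ≤ (2 * P) ^ (2 * K) := Nat.pow_le_pow_left hQ _
    have a2 : P ^ K ≤ p ^ (K * K) := by
      calc P ^ K ≤ (p ^ K) ^ K := Nat.pow_le_pow_left hP _
        _ = _ := by rw [pow_mul]
    have a3 : p * p ^ (K * K) ≤ p ^ (2 * s + e) := by rw [← pow_succ']; exact Nat.pow_le_pow_right hp.pos (by nlinarith)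
    have a4 : K ^ (2 * m) * 2 ^ (2 * K) ≤ (4 * m) ^ (3 * m) := by
      calc K ^ (2 * m) * 2 ^ (2 * K) ≤ (4 * m) ^ (2 * m) * (4 * m) ^ m := by
            rw [pow_mul 2 2 K]; refine Nat.mul_le_mul (Nat.pow_le_pow_left (by omega) _) ?_
            calc (2 ^ 2) ^ K ≤ (4 * m) ^ K := Nat.pow_le_pow_left (by omega) _
              _ ≤ (4 * m) ^ m := Nat.pow_le_pow_right (by omega) (by omega)
        _ = _ := by rw [← pow_add]; congr 1; omega
    calc (p ^ K * K ^ m) ^ 2 * (p * ((P / p + 1) ^ (2 * K) * J))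
        = K ^ (2 * m) * ((p * (P / p + 1)) ^ (2 * K)) * p * J := by rw [mul_pow p]; ring
      _ ≤ K ^ (2 * m) * (2 * P) ^ (2 * K) * p * J := by gcongr
      _ = (K ^ (2 * m) * 2 ^ (2 * K)) * (p * P ^ K) * P ^ K * J := by rw [mul_pow]; ring
      _ ≤ (4 * m) ^ (3 * m) * (p * p ^ (K * K)) * P ^ K * J := by gcongr
      _ ≤ _ := by gcongr
  have i2 : (m ^ K) ^ 2 * (p ^ (2 * s) * (P ^ K * (K ^ K * p ^ e) * J)) ≤
    (4 * m) ^ (3 * m) * p ^ (2 * s + e) * P ^ K * J := by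
    have a4 : (m ^ K) ^ 2 * K ^ K ≤ (4 * m) ^ (3 * m) := by
      calc (m ^ K) ^ 2 * K ^ K ≤ ((4 * m) ^ m) ^ 2 * (4 * m) ^ m := by
            have : ∀ b, b ≤ 4 * m → b ^ K ≤ (4 * m) ^ m := fun b hb =>
              (Nat.pow_le_pow_left hb _).trans (Nat.pow_le_pow_right (by omega) (by omega))
            exact Nat.mul_le_mul (Nat.pow_le_pow_left (this _ (by omega)) _) (this _ (by omega))
        _ = _ := by rw [← pow_mul, ← pow_add]; congr 1; omega
    calc (m ^ K) ^ 2 * (p ^ (2 * s) * (P ^ K * (K ^ K * p ^ e) * J))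
        = ((m ^ K) ^ 2 * K ^ K) * p ^ (2 * s + e) * P ^ K * J := by rw [pow_add]; ring
      _ ≤ _ := by gcongr
  calc JV K m A ≤ _ := split
    _ ≤ 2 * ((4 * m) ^ (3 * m) * p ^ (2 * s + e) * P ^ K * J) +
      2 * ((4 * m) ^ (3 * m) * p ^ (2 * s + e) * P ^ K * J) := by
      gcongr
      · exact ill.trans i1
      · exact good.trans i2
    _ = _ := by ring

lemma JV_trivial (K s P : ℕ) : JV K s (Icc (1 : ℤ) P) ≤ P ^ (2 * s) := by
  unfold JV en; refine (card_filter_le _ _).trans ?_; rw [card_product, card_piFinset]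
  simp [two_mul, pow_add]

lemma JV_step (K s P : ℕ) (hK : 2 ≤ K) (hs : K ^ 2 ≤ s) (B δ : ℝ) (hδ0 : 0 ≤ δ) (hδ : δ ≤ K * (K + 1) / 2) (hB : 0 ≤ B)
  (ih : ∀ P : ℕ, 1 ≤ P → (JV K s (Icc (1 : ℤ) P) : ℝ) ≤ B * (P : ℝ) ^ (2 * s - K * (K + 1) / 2 + δ : ℝ))
  (hP : (2 * K) ^ K ≤ P) :
  (JV K (K + s) (Icc (1 : ℤ) P) : ℝ) ≤ (4 * (4 * (K + s : ℕ)) ^ (3 * (K + s)) * 2 ^ (2 * s) * 4 ^ (K ^ 2)) * B *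
    (P : ℝ) ^ (2 * (K + s : ℕ) - K * (K + 1) / 2 + δ * (1 - 1 / K) : ℝ) := by
  have hK2 : (2 : ℝ) ≤ K := mod_cast hK; have hPr : ((2 * K : ℝ)) ^ K ≤ P := mod_cast hP
  have hP1 : (1 : ℝ) ≤ P := le_trans (one_le_pow₀ (by linarith)) hPr; have hP0 : (0 : ℝ) < P := by linarith
  set q : ℝ := (P : ℝ) ^ (1 / K : ℝ) with hq
  have hqK : q ^ K = P := by
    rw [hq, ← rpow_natCast, ← rpow_mul hP0.le]; field_simp; simp
  have hq0 : 0 ≤ q := rpow_nonneg hP0.le _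
  have hq2 : 2 * K ≤ q := by
    by_contra h; push Not at h; have := pow_lt_pow_left₀ h hq0 (n := K) (by omega); linarith
  have hqn : ⌈q⌉₊ ≠ 0 := by
    have : 0 < ⌈q⌉₊ := Nat.ceil_pos.2 (by linarith); omega
  obtain ⟨p, hp, hp1, hp2⟩ := Nat.exists_prime_lt_and_le_two_mul _ hqn
  have hqp : q < p := lt_of_le_of_lt (Nat.le_ceil q) (mod_cast hp1)
  have hpq : (p : ℝ) ≤ 4 * q := by
    have h1 : (p : ℝ) ≤ 2 * ⌈q⌉₊ := mod_cast hp2; have h2 := Nat.ceil_lt_add_one hq0; linarith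
  have hp0 : (0 : ℝ) < p := by linarith
  have hKp : K < p := by
    have : (K : ℝ) < p := by linarith
    exact_mod_cast this
  have hPp : P ≤ p ^ K := by
    have : (P : ℝ) ≤ p ^ K := by rw [← hqK]; gcongr
    exact_mod_cast this
  have hpP : p ≤ P := by
    have : (p : ℝ) ≤ P := by
      rw [← hqK]; have h3 : q ^ 2 ≤ q ^ K := pow_le_pow_right₀ (by linarith) hK; nlinarith
    exact_mod_cast this
  have hrec := JV_recursion K s P p hp hKp (by omega) hs hPp hpP
  have hih := ih (P / p + 1) (Nat.le_add_left 1 _); set e : ℝ := 2 * s - K * (K + 1) / 2 + δ with he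
  have he0 : 0 ≤ e := by
    have : (K : ℝ) ^ 2 ≤ s := mod_cast hs; nlinarith
  have he2 : e ≤ (2 * s : ℕ) := by push_cast; linarith
  have hdiv : ((P / p + 1 : ℕ) : ℝ) ≤ 2 * (P / p : ℝ) := by
    have h1 : ((P / p : ℕ) : ℝ) ≤ P / p := Nat.cast_div_le
    have h2 : (1 : ℝ) ≤ P / p := by rw [le_div_iff₀ hp0]; simpa using hpP
    push_cast; linarith
  have h1 : ((P / p + 1 : ℕ) : ℝ) ^ e ≤ 2 ^ (2 * s) * ((P : ℝ) ^ e * (p : ℝ) ^ (-e)) := by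
    calc ((P / p + 1 : ℕ) : ℝ) ^ e ≤ (2 * (P / p : ℝ)) ^ e := rpow_le_rpow (by positivity) hdiv he0
      _ = 2 ^ e * ((P : ℝ) ^ e * (p : ℝ) ^ (-e)) := by
        rw [mul_rpow (by norm_num) (by positivity), div_rpow hP0.le hp0.le, rpow_neg hp0.le, div_eq_mul_inv]
      _ ≤ _ := by
        gcongr; rw [← rpow_natCast]; exact rpow_le_rpow_of_exponent_le (by norm_num) he2
  have hkk : ((K * (K - 1) / 2 : ℕ) : ℝ) = K * (K - 1) / 2 := by
    rw [Nat.cast_div (Nat.even_mul_pred_self K).two_dvd (by norm_num)]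
    push_cast [Nat.cast_sub (show 1 ≤ K by omega)]; ring
  have h2 : (p : ℝ) ^ (2 * s + K * (K - 1) / 2) * (p : ℝ) ^ (-e) = (p : ℝ) ^ (K ^ 2 - δ : ℝ) := by
    rw [← rpow_natCast, ← rpow_add hp0]; congr 1; rw [Nat.cast_add, hkk, he]; push_cast; ring
  have hKδ : (0 : ℝ) ≤ K ^ 2 - δ := by nlinarith
  have h3 : (p : ℝ) ^ (K ^ 2 - δ : ℝ) ≤ 4 ^ (K ^ 2) * (P : ℝ) ^ (K - δ / K : ℝ) := by
    calc (p : ℝ) ^ (K ^ 2 - δ : ℝ) ≤ (4 * q) ^ (K ^ 2 - δ : ℝ) := rpow_le_rpow hp0.le hpq hKδ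
      _ = 4 ^ (K ^ 2 - δ : ℝ) * (P : ℝ) ^ (K - δ / K : ℝ) := by
        rw [mul_rpow (by norm_num) hq0, hq, ← rpow_mul hP0.le]; congr 2; field_simp
      _ ≤ _ := by
        refine mul_le_mul_of_nonneg_right ?_ (by positivity); rw [← rpow_natCast 4 (K ^ 2)]
        exact rpow_le_rpow_of_exponent_le (by norm_num) (by push_cast; linarith)
  have h4 : (P : ℝ) ^ (K - δ / K : ℝ) * ((P : ℝ) ^ K * (P : ℝ) ^ e) =
    (P : ℝ) ^ (2 * (K + s : ℕ) - K * (K + 1) / 2 + δ * (1 - 1 / K) : ℝ) := by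
    rw [← rpow_natCast, ← rpow_add hP0, ← rpow_add hP0]; congr 1; rw [he]; push_cast; field_simp; ring
  calc (JV K (K + s) (Icc (1 : ℤ) P) : ℝ)
      ≤ 4 * (4 * (K + s : ℕ)) ^ (3 * (K + s)) * p ^ (2 * s + K * (K - 1) / 2) * P ^ K *
        JV K s (Icc (1 : ℤ) (P / p + 1 : ℕ)) := mod_cast hrec
    _ ≤ 4 * (4 * (K + s : ℕ)) ^ (3 * (K + s)) * p ^ (2 * s + K * (K - 1) / 2) * P ^ K *
      (B * (2 ^ (2 * s) * ((P : ℝ) ^ e * (p : ℝ) ^ (-e)))) := by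
      gcongr; exact hih.trans (by gcongr)
    _ = (4 * (4 * (K + s : ℕ)) ^ (3 * (K + s)) * 2 ^ (2 * s)) * B * ((P : ℝ) ^ K * (P : ℝ) ^ e) *
      ((p : ℝ) ^ (2 * s + K * (K - 1) / 2) * (p : ℝ) ^ (-e)) := by ring
    _ ≤ (4 * (4 * (K + s : ℕ)) ^ (3 * (K + s)) * 2 ^ (2 * s)) * B * ((P : ℝ) ^ K * (P : ℝ) ^ e) *
      (4 ^ (K ^ 2) * (P : ℝ) ^ (K - δ / K : ℝ)) := by
      rw [h2]; gcongr
    _ = _ := by rw [← h4]; ring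

lemma JV_iter (K : ℕ) (hK : 2 ≤ K) (E : ℝ) (hE1 : 1 ≤ E) (hE2 : ((2 * K : ℝ) ^ K) ^ (K ^ 2) ≤ E)
  (hE : ∀ s : ℕ, s ≤ K ^ 3 + K ^ 2 → (4 * (4 * (K + s : ℕ)) ^ (3 * (K + s)) * 2 ^ (2 * s) * 4 ^ (K ^ 2) : ℝ) ≤ E)
  (l : ℕ) (hl : l ≤ K ^ 2) :
  ∀ P : ℕ, 1 ≤ P → (JV K (K ^ 2 + l * K) (Icc (1 : ℤ) P) : ℝ) ≤
    E ^ l * (P : ℝ) ^ (2 * (K ^ 2 + l * K : ℕ) - K * (K + 1) / 2 + (K * (K + 1) / 2) * (1 - 1 / K) ^ l : ℝ) := by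
  have hK0 : (0 : ℝ) < K := by positivity
  have hK2 : (2 : ℝ) ≤ K := mod_cast hK
  have hr0 : (0 : ℝ) ≤ 1 - 1 / K := by rw [sub_nonneg, div_le_one hK0]; linarith
  have hr1 : (1 - 1 / K : ℝ) ≤ 1 := by
    have : (0 : ℝ) ≤ 1 / K := by positivity
    linarith
  induction l with
  | zero =>
    intro P hP; have := JV_trivial K (K ^ 2) P
    have h2 : (2 * (K ^ 2 + 0 * K : ℕ) - K * (K + 1) / 2 +
      (K * (K + 1) / 2) * (1 - 1 / K) ^ 0 : ℝ) = ((2 * K ^ 2 : ℕ) : ℝ) := by push_cast; ring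
    rw [h2, rpow_natCast]; simp only [zero_mul, add_zero, pow_zero, one_mul]; exact_mod_cast this
  | succ l ih =>
    have ih := ih (by omega); intro P hP; have hP1 : (1 : ℝ) ≤ P := mod_cast hP
    have hδ0 : (0 : ℝ) ≤ (K * (K + 1) / 2) * (1 - 1 / K) ^ l := by positivity
    have hδ1 : (K * (K + 1) / 2) * (1 - 1 / K : ℝ) ^ l ≤ K * (K + 1) / 2 :=
      mul_le_of_le_one_right (by positivity) (pow_le_one₀ hr0 hr1)
    have hsl : K ^ 2 + (l + 1) * K = K + (K ^ 2 + l * K) := by ring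
    rw [hsl]
    by_cases hPK : (2 * K) ^ K ≤ P
    · have h1 := JV_step K (K ^ 2 + l * K) P hK (by omega) (E ^ l) _ hδ0 hδ1 (by positivity) ih hPK
      refine h1.trans ?_; rw [mul_assoc ((K : ℝ) * (K + 1) / 2), ← pow_succ]
      refine mul_le_mul_of_nonneg_right ?_ (by positivity); rw [pow_succ' E]
      refine mul_le_mul_of_nonneg_right ?_ (by positivity); apply hE
      have : l * K ≤ K ^ 2 * K := by gcongr; omega
      nlinarith
    · have h1 := JV_trivial K (K + (K ^ 2 + l * K)) P
      have h2 : (JV K (K + (K ^ 2 + l * K)) (Icc (1 : ℤ) P) : ℝ) ≤ (P : ℝ) ^ (2 * (K + (K ^ 2 + l * K))) := mod_cast h1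
      refine h2.trans ?_; set m := K + (K ^ 2 + l * K)
      have h3 : (P : ℝ) ^ (2 * m) ≤ (P : ℝ) ^ (K ^ 2) * (P : ℝ) ^ (2 * m - K * (K + 1) / 2 +
        (K * (K + 1) / 2) * (1 - 1 / K) ^ (l + 1) : ℝ) := by
        rw [← rpow_natCast, ← rpow_natCast, ← rpow_add (by linarith)]; apply rpow_le_rpow_of_exponent_le hP1
        have : (0 : ℝ) ≤ (K * (K + 1) / 2) * (1 - 1 / K) ^ (l + 1) := by positivity
        push_cast; nlinarith
      refine h3.trans ?_; gcongr
      have h4 : (P : ℝ) ≤ (2 * K) ^ K := by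
        have : P ≤ (2 * K) ^ K := by omega
        exact_mod_cast this
      calc (P : ℝ) ^ (K ^ 2) ≤ ((2 * K) ^ K) ^ (K ^ 2) := by gcongr
        _ ≤ E := hE2
        _ ≤ E ^ (l + 1) := by
          rw [pow_succ']; exact le_mul_of_one_le_right (by linarith) (one_le_pow₀ hE1)

/-- Vinogradov's mean value theorem, with crude constants. -/
lemma vmvt (K : ℕ) (hK : 100 ≤ K) (P : ℕ) (hP : 1 ≤ P) : (JV K (K ^ 3 + K ^ 2) (Icc (1 : ℤ) P) : ℝ) ≤ exp (K ^ 10) *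
  (P : ℝ) ^ (2 * (K ^ 3 + K ^ 2 : ℕ) - K * (K + 1) / 2 + 1 / 10 : ℝ) := by
  have hK0 : (100 : ℝ) ≤ K := mod_cast hK; have hP1 : (1 : ℝ) ≤ P := mod_cast hP
  have hexp : ∀ (x : ℝ) (n : ℕ), 0 ≤ x → x ^ n ≤ exp (n * x) := by
    intro x n hx; rw [exp_nat_mul]; gcongr; linarith [add_one_le_exp x]
  have hE := JV_iter K (by omega) (exp (K ^ 8)) (one_le_exp (by positivity)) (by
    rw [← pow_mul]; refine (hexp _ _ (by positivity)).trans (exp_le_exp.2 ?_); push_cast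
    calc (K * K ^ 2 * (2 * K) : ℝ) = K ^ 4 * 2 := by ring
      _ ≤ K ^ 4 * K ^ 4 := by
        gcongr
        calc (2 : ℝ) ≤ K ^ 1 := by simp; linarith
          _ ≤ K ^ 4 := pow_le_pow_right₀ (by linarith) (by norm_num)
      _ = _ := by ring) (by
    intro s hs; have hs' : (s : ℝ) ≤ K ^ 3 + K ^ 2 := mod_cast hs
    have hK3 : (K : ℝ) ^ 2 * 100 ≤ K ^ 3 := by
      calc (K : ℝ) ^ 2 * 100 ≤ K ^ 2 * K := by gcongr
        _ = _ := by ring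
    have hK33 : (K : ℝ) * 100 ≤ K ^ 2 := by nlinarith
    set m := K + s; have hm : (m : ℝ) ≤ 2 * K ^ 3 := by simp only [m]; push_cast; nlinarith
    have h4 : (4 : ℝ) ≤ exp 4 := by linarith [add_one_le_exp (4 : ℝ)]
    have h2 : (2 : ℝ) ≤ exp 2 := by linarith [add_one_le_exp (2 : ℝ)]
    have e1 := hexp (4 * m) (3 * m) (by positivity); have e2 := hexp 2 (2 * s) (by positivity)
    have e3 := hexp 4 (K ^ 2) (by positivity)
    calc _ ≤ exp 4 * exp ((3 * m : ℕ) * (4 * m)) * exp ((2 * s : ℕ) * 2) * exp ((K ^ 2 : ℕ) * 4) := by gcongr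
      _ = exp (4 + (3 * m : ℕ) * (4 * m) + (2 * s : ℕ) * 2 + (K ^ 2 : ℕ) * 4) := by simp only [exp_add]
      _ ≤ _ := by
        apply exp_le_exp.2; push_cast; have i1 : (m : ℝ) * m ≤ (2 * K ^ 3) * (2 * K ^ 3) := by gcongr
        have i2 : (K : ℝ) ^ 6 * 100 ≤ K ^ 6 * K := by gcongr
        have i4 : (K : ℝ) ^ 6 * K * K = K ^ 8 := by ring
        have i5 : (K : ℝ) ^ 3 * 100 ≤ K ^ 3 * K ^ 3 := by
          gcongr; nlinarith
        have i6 : (K : ℝ) ^ 6 * 100 * 100 ≤ K ^ 8 := by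
          calc (K : ℝ) ^ 6 * 100 * 100 ≤ K ^ 6 * K * K := by gcongr
            _ = _ := i4
        nlinarith) (K ^ 2) le_rfl P hP
  have e : K ^ 2 + K ^ 2 * K = K ^ 3 + K ^ 2 := by ring
  rw [e] at hE; refine hE.trans ?_
  have e2 : exp (K ^ 8 : ℝ) ^ (K ^ 2) = exp (K ^ 10) := by rw [← exp_nat_mul]; congr 1; push_cast; ring
  rw [e2]; gcongr
  · -- `(1 - 1/K)^(K²) ≤ exp (-K)`
    have h1 : (1 - 1 / K : ℝ) ^ (K ^ 2) ≤ exp (-K) := by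
      calc (1 - 1 / K : ℝ) ^ (K ^ 2) ≤ exp (-(1 / K)) ^ (K ^ 2) := by
            gcongr
            · rw [sub_nonneg, div_le_one (by linarith)]; linarith
            · linarith [add_one_le_exp (-(1 / K : ℝ))]
        _ = exp (-K) := by rw [← exp_nat_mul]; congr 1; push_cast; field_simp
    have h2 : (K : ℝ) ^ 4 / 24 ≤ exp K := by
      have := pow_div_factorial_le_exp (K : ℝ) (by linarith) 4; simpa [Nat.factorial] using this
    rw [exp_neg] at h1
    have h3 : (K : ℝ) * (K + 1) / 2 * (exp K)⁻¹ ≤ 1 / 10 := by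
      rw [← div_eq_mul_inv, div_le_iff₀ (exp_pos _)]
      have : (K : ℝ) ^ 2 * 10000 ≤ K ^ 2 * (K * K) := by gcongr; nlinarith
      nlinarith
    exact (mul_le_mul_of_nonneg_left h1 (by positivity)).trans h3

/-! ### Weyl sums -/

/-- `e^{ix}` for real `x`. -/
def ee (x : ℝ) : ℂ := Complex.exp (x * I)

lemma ee_add (x y : ℝ) : ee (x + y) = ee x * ee y := by simp [ee, add_mul, Complex.exp_add]

lemma ee_zero : ee 0 = 1 := by simp [ee]

lemma norm_ee (x : ℝ) : ‖ee x‖ = 1 := by simp [ee, Complex.norm_exp_ofReal_mul_I]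

lemma conj_ee (x : ℝ) : (starRingEnd ℂ) (ee x) = ee (-x) := by simp [ee, ← Complex.exp_conj]

lemma ee_sum {ι : Type*} (S : Finset ι) (f : ι → ℝ) : ee (∑ i ∈ S, f i) = ∏ i ∈ S, ee (f i) := by
  simp [ee, sum_mul, Complex.exp_sum]

/-- The Dirichlet kernel. -/
def dk (H : ℕ) (θ : ℝ) : ℂ := ∑ h ∈ Icc (-(H : ℤ)) H, ee (h * θ)

lemma norm_dk_le (H : ℕ) (θ : ℝ) : ‖dk H θ‖ ≤ 2 * H + 1 := by
  refine (norm_sum_le _ _).trans ?_; simp only [norm_ee, sum_const, nsmul_eq_mul, mul_one, Int.card_Icc]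
  have : ((H : ℤ) + 1 - -(H : ℤ)).toNat = 2 * H + 1 := by omega
  rw [this]; push_cast; exact le_rfl

lemma dk_mul (H : ℕ) (θ : ℝ) : dk H θ * (ee θ - 1) = ee ((H + 1) * θ) - ee (-H * θ) := by
  have h1 : dk H θ = ∑ i ∈ range (2 * H + 1), ee ((i - H) * θ) := by
    unfold dk; refine sum_bij' (fun h _ => (h + H).toNat) (fun i _ => (i : ℤ) - H) ?_ ?_ ?_ ?_ ?_
    · intro h hh; simp only [mem_Icc] at hh; simp only [mem_range]; omega
    · intro i hi; simp only [mem_range] at hi; simp only [mem_Icc]; omega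
    · intro h hh; simp only [mem_Icc] at hh; omega
    · intro i hi; simp
    · intro h hh; simp only [mem_Icc] at hh
      have : (((h + H).toNat : ℤ) : ℝ) = ((h + H : ℤ) : ℝ) := by rw [Int.toNat_of_nonneg (by omega)]
      rw [Int.cast_natCast] at this; rw [this]; push_cast; ring_nf
  rw [h1, sum_mul]
  have h2 : ∀ i ∈ range (2 * H + 1), ee ((i - H) * θ) * (ee θ - 1) = ee (((i + 1 : ℕ) - H) * θ) - ee ((i - H) * θ) := by
    intro i _; rw [mul_sub, mul_one, ← ee_add]; congr 2; push_cast; ring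
  rw [sum_congr rfl h2, sum_range_sub (fun i : ℕ => ee ((i - H) * θ))]; push_cast; ring_nf

lemma norm_dk_le' (H : ℕ) (θ : ℝ) (h0 : θ ≠ 0) (h1 : |θ| ≤ 1) : ‖dk H θ‖ ≤ 4 / |θ| := by
  have h2 : |θ| / 2 ≤ ‖ee θ - 1‖ := by
    have : ‖ee θ - 1‖ = ‖Complex.exp (I * θ) - 1‖ := by rw [ee, mul_comm]
    rw [this, Complex.norm_exp_I_mul_ofReal_sub_one, norm_mul, norm_eq_abs, norm_eq_abs]
    have h3 := mul_abs_le_abs_sin (x := θ / 2) (by rw [abs_div, abs_two]; linarith [pi_gt_three])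
    have h4 : (1 / 2 : ℝ) ≤ 2 / π := by rw [div_le_div_iff₀ (by norm_num) pi_pos]; linarith [pi_le_four]
    rw [abs_div, abs_two] at h3; have := mul_le_mul_of_nonneg_right h4 (show 0 ≤ |θ| / 2 by positivity)
    rw [abs_two]; linarith
  have h3 : ‖dk H θ‖ * ‖ee θ - 1‖ ≤ 2 := by
    rw [← norm_mul, dk_mul]; refine (norm_sub_le _ _).trans ?_; rw [norm_ee, norm_ee]; norm_num
  have h5 : 0 < |θ| := abs_pos.2 h0; rw [le_div_iff₀ h5]; nlinarith [norm_nonneg (dk H θ)]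

lemma sum_inv_dist (N N' n : ℕ) (hn : n ∈ Ioc N N') :
  ∑ m ∈ (Ioc N N').erase n, 1 / |(n : ℝ) - m| ≤ 2 * (1 + log ((N' - N : ℕ) : ℝ)) := by
  rw [mem_Ioc] at hn; set M := N' - N
  have hh : ∑ d ∈ Icc 1 M, (1 : ℝ) / d ≤ 1 + log M := by
    have := harmonic_le_one_add_log M; rw [harmonic_eq_sum_Icc] at this; push_cast at this; simpa using this
  have hsplit : (Ioc N N').erase n = Ioo N n ∪ Ioc n N' := by
    ext m; simp only [mem_erase, mem_Ioc, mem_union, mem_Ioo]; omega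
  rw [hsplit, sum_union (by rw [disjoint_left]; intro m; simp only [mem_Ioo, mem_Ioc]; omega)]
  have a1 : ∑ m ∈ Ioo N n, 1 / |(n : ℝ) - m| ≤ ∑ d ∈ Icc 1 M, (1 : ℝ) / d := by
    have : ∑ m ∈ Ioo N n, 1 / |(n : ℝ) - m| = ∑ d ∈ (Ioo N n).image (fun m => n - m), (1 : ℝ) / d := by
      rw [sum_image (by intro a ha b hb; simp only [coe_Ioo, Set.mem_Ioo] at ha hb; simp only; omega)]
      refine sum_congr rfl fun m hm => ?_; rw [mem_Ioo] at hm; rw [Nat.cast_sub hm.2.le, abs_of_nonneg]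
      have : (m : ℝ) ≤ n := mod_cast hm.2.le; linarith
    rw [this]; refine sum_le_sum_of_subset_of_nonneg ?_ (fun _ _ _ => by positivity); intro d hd
    rw [mem_image] at hd; obtain ⟨m, hm, rfl⟩ := hd; rw [mem_Ioo] at hm; rw [mem_Icc]; omega
  have a2 : ∑ m ∈ Ioc n N', 1 / |(n : ℝ) - m| ≤ ∑ d ∈ Icc 1 M, (1 : ℝ) / d := by
    have : ∑ m ∈ Ioc n N', 1 / |(n : ℝ) - m| = ∑ d ∈ (Ioc n N').image (fun m => m - n), (1 : ℝ) / d := by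
      rw [sum_image (by intro a ha b hb; simp only [coe_Ioc, Set.mem_Ioc] at ha hb; simp only; omega)]
      refine sum_congr rfl fun m hm => ?_; rw [mem_Ioc] at hm
      rw [Nat.cast_sub hm.1.le, abs_sub_comm, abs_of_nonneg]; have : (n : ℝ) ≤ m := mod_cast hm.1.le; linarith
    rw [this]; refine sum_le_sum_of_subset_of_nonneg ?_ (fun _ _ _ => by positivity); intro d hd
    rw [mem_image] at hd; obtain ⟨m, hm, rfl⟩ := hd; rw [mem_Ioc] at hm; rw [mem_Icc]; omega
  linarith

/-- The square mean over a box of frequencies. -/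
lemma box_sq (K : ℕ) (H : Fin K → ℕ) (j₀ : Fin K) (N N' : ℕ) (β : ℕ → Fin K → ℝ) (ω : ℝ) (hω : 0 < ω)
  (h1 : ∀ n ∈ Ioc N N', ∀ m ∈ Ioc N N', |β n j₀ - β m j₀| ≤ 1)
  (h2 : ∀ n ∈ Ioc N N', ∀ m ∈ Ioc N N', ω * |(n : ℝ) - m| ≤ |β n j₀ - β m j₀|) :
  ∑ l ∈ piFinset (fun j => Icc (-(H j : ℤ)) (H j)), ‖∑ n ∈ Ioc N N', ee (∑ j, l j * β n j)‖ ^ 2 ≤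
  (∏ j, (2 * (H j : ℝ) + 1)) * ((N' - N : ℕ) : ℝ) * (1 + 8 / ω * (1 + log ((N' - N : ℕ) : ℝ)) / (2 * H j₀ + 1)) := by
  classical
  set S := Ioc N N' with hS; set Bx := piFinset (fun j => Icc (-(H j : ℤ)) (H j))
  set Q : ℝ := ∏ j, (2 * (H j : ℝ) + 1) with hQ; have hQ0 : 0 ≤ Q := prod_nonneg fun j _ => by positivity
  have hprod : ∀ n m, ∑ l ∈ Bx, ee (∑ j, (l j : ℝ) * (β n j - β m j)) = ∏ j, dk (H j) (β n j - β m j) := by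
    intro n m; unfold dk; rw [prod_univ_sum]; refine sum_congr rfl fun l _ => ?_; rw [ee_sum]
  have hC : (∑ l ∈ Bx, ((‖∑ n ∈ S, ee (∑ j, l j * β n j)‖ ^ 2 : ℝ) : ℂ)) =
    ∑ n ∈ S, ∑ m ∈ S, ∏ j, dk (H j) (β n j - β m j) := by
    have : ∀ l ∈ Bx, ((‖∑ n ∈ S, ee (∑ j, l j * β n j)‖ ^ 2 : ℝ) : ℂ) =
      ∑ n ∈ S, ∑ m ∈ S, ee (∑ j, (l j : ℝ) * (β n j - β m j)) := by
      intro l _; rw [ofReal_pow, ← mul_conj', map_sum, sum_mul_sum]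
      refine sum_congr rfl fun n _ => sum_congr rfl fun m _ => ?_; rw [conj_ee, ← ee_add]; congr 1
      rw [← sub_eq_add_neg, ← sum_sub_distrib]; exact sum_congr rfl fun j _ => by ring
    rw [sum_congr rfl this, sum_comm]; refine sum_congr rfl fun n _ => ?_; rw [sum_comm]
    exact sum_congr rfl fun m _ => hprod n m
  have hb : ∀ n ∈ S, ∀ m ∈ S, ‖∏ j, dk (H j) (β n j - β m j)‖ ≤
    Q * (‖dk (H j₀) (β n j₀ - β m j₀)‖ / (2 * H j₀ + 1)) := by
    intro n _ m _
    rw [norm_prod, hQ, ← mul_prod_erase univ _ (mem_univ j₀),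
      ← mul_prod_erase univ (fun j => 2 * (H j : ℝ) + 1) (mem_univ j₀)]
    have h3 : ∏ j ∈ univ.erase j₀, ‖dk (H j) (β n j - β m j)‖ ≤ ∏ j ∈ univ.erase j₀, (2 * (H j : ℝ) + 1) :=
      Finset.prod_le_prod (fun _ _ => norm_nonneg _) fun j _ => norm_dk_le _ _
    calc _ ≤ ‖dk (H j₀) (β n j₀ - β m j₀)‖ * ∏ j ∈ univ.erase j₀, (2 * (H j : ℝ) + 1) := by gcongr
      _ = _ := by field_simp
  have hrow : ∀ n ∈ S, ∑ m ∈ S, ‖dk (H j₀) (β n j₀ - β m j₀)‖ / (2 * H j₀ + 1) ≤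
    1 + 8 / ω * (1 + log ((N' - N : ℕ) : ℝ)) / (2 * H j₀ + 1) := by
    intro n hn; rw [← add_sum_erase S _ hn, ← sum_div]; gcongr
    · rw [div_le_one (by positivity)]; exact norm_dk_le _ _
    · calc ∑ m ∈ S.erase n, ‖dk (H j₀) (β n j₀ - β m j₀)‖
          ≤ ∑ m ∈ S.erase n, 4 / ω * (1 / |(n : ℝ) - m|) := by
            refine sum_le_sum fun m hm => ?_; rw [mem_erase] at hm
            have hnm : 0 < |(n : ℝ) - m| := by rw [abs_pos, sub_ne_zero]; exact_mod_cast hm.1.symm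
            have h5 := h2 n hn m hm.2; have h6 : 0 < |β n j₀ - β m j₀| := lt_of_lt_of_le (by positivity) h5
            refine (norm_dk_le' _ _ (abs_pos.1 h6) (h1 n hn m hm.2)).trans ?_; rw [div_mul_div_comm, mul_one]
            gcongr
        _ ≤ 4 / ω * (2 * (1 + log ((N' - N : ℕ) : ℝ))) := by
          rw [← mul_sum]; gcongr; exact sum_inv_dist N N' n hn
        _ = _ := by ring
  have hre : ∑ l ∈ Bx, ‖∑ n ∈ S, ee (∑ j, l j * β n j)‖ ^ 2 = ‖∑ n ∈ S, ∑ m ∈ S, ∏ j, dk (H j) (β n j - β m j)‖ := by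
    rw [← hC, ← Complex.ofReal_sum, norm_real, norm_of_nonneg]; exact sum_nonneg fun _ _ => by positivity
  rw [hre]
  calc _ ≤ ∑ n ∈ S, ∑ m ∈ S, Q * (‖dk (H j₀) (β n j₀ - β m j₀)‖ / (2 * H j₀ + 1)) :=
        (norm_sum_le _ _).trans (sum_le_sum fun n hn => (norm_sum_le _ _).trans (sum_le_sum fun m hm => hb n hn m hm))
    _ ≤ ∑ n ∈ S, Q * (1 + 8 / ω * (1 + log ((N' - N : ℕ) : ℝ)) / (2 * H j₀ + 1)) := by
      refine sum_le_sum fun n hn => ?_; rw [← mul_sum]; exact mul_le_mul_of_nonneg_left (hrow n hn) hQ0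
    _ = _ := by rw [sum_const, nsmul_eq_mul, hS, Nat.card_Ioc]; ring

/-- The character `exp(i ∑ b_j a^{j+1})` of a polynomial phase. -/
local notation "ep(" K "," b "," a ")" => ee (∑ j : Fin K, b j * (a : ℝ) ^ (Fin.val j + 1))

/-- Moments of Weyl sums in terms of Vinogradov's mean value. -/
lemma moment_le (K s Y : ℕ) (N N' : ℕ) (β : ℕ → Fin K → ℝ) : ∑ n ∈ Ioc N N',
  ‖∑ a ∈ Icc (1 : ℤ) Y, ep(K, β n, a)‖ ^ (2 * s) ≤
  JV K s (Icc (1 : ℤ) Y) * ∑ l ∈ piFinset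
    (fun j : Fin K => Icc (-((s * Y ^ (j.val + 1) : ℕ) : ℤ)) (s * Y ^ (j.val + 1) : ℕ)),
    ‖∑ n ∈ Ioc N N', ee (∑ j, l j * β n j)‖ := by
  classical
  set A := Icc (1 : ℤ) Y with hA; set X := piFinset fun _ : Fin s => A with hX; set S := Ioc N N'
  set Bx := piFinset (fun j : Fin K => Icc (-((s * Y ^ (j.val + 1) : ℕ) : ℤ)) (s * Y ^ (j.val + 1) : ℕ))
    with hBx
  have hpow : ∀ n, (∑ a ∈ A, ep(K, β n, a)) ^ s =
    ∑ x ∈ X, ee (∑ j, β n j * (pw K x j : ℝ)) := by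
    intro n; have := prod_univ_sum (fun _ : Fin s => A) (fun _ a => ep(K, β n, a))
    rw [prod_const, card_univ, Fintype.card_fin] at this; rw [this]; refine sum_congr rfl fun x _ => ?_
    rw [← ee_sum, sum_comm]; congr 1; refine sum_congr rfl fun j _ => ?_; rw [← mul_sum]; simp [pw]
  have hsq : ∀ n, ((‖∑ a ∈ A, ep(K, β n, a)‖ ^ (2 * s) : ℝ) : ℂ) =
    ∑ q ∈ X ×ˢ X, ee (∑ j, ((pw K q.1 j - pw K q.2 j : ℤ) : ℝ) * β n j) := by
    intro n
    rw [mul_comm 2 s, pow_mul, ← norm_pow, hpow, ofReal_pow, ← mul_conj', map_sum, sum_mul_sum, sum_product]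
    refine sum_congr rfl fun x _ => sum_congr rfl fun y _ => ?_; rw [conj_ee, ← ee_add]; congr 1
    rw [← sub_eq_add_neg, ← sum_sub_distrib]; exact sum_congr rfl fun j _ => by push_cast; ring
  set Φ : (Fin K → ℤ) → ℝ := fun l => ‖∑ n ∈ S, ee (∑ j, l j * β n j)‖
  have h1 : ∑ n ∈ S, ‖∑ a ∈ A, ep(K, β n, a)‖ ^ (2 * s) ≤
    ∑ q ∈ X ×ˢ X, Φ (pw K q.1 - pw K q.2) := by
    have h2 : (∑ n ∈ S, ‖∑ a ∈ A, ep(K, β n, a)‖ ^ (2 * s)) =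
      ‖∑ q ∈ X ×ˢ X, ∑ n ∈ S, ee (∑ j, ((pw K q.1 j - pw K q.2 j : ℤ) : ℝ) * β n j)‖ := by
      rw [sum_comm, ← sum_congr rfl fun n _ => hsq n, ← Complex.ofReal_sum, norm_real, norm_of_nonneg]
      exact sum_nonneg fun _ _ => by positivity
    rw [h2]; exact norm_sum_le _ _
  refine h1.trans ?_
  have hmap : ∀ q ∈ X ×ˢ X, pw K q.1 - pw K q.2 ∈ Bx := by
    intro q hq; rw [mem_product, hX, mem_piFinset, mem_piFinset] at hq; rw [hBx, mem_piFinset]; intro j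
    have hb : ∀ x : Fin s → ℤ, (∀ i, x i ∈ A) → 0 ≤ pw K x j ∧ pw K x j ≤ s * (Y : ℤ) ^ (j.val + 1) := by
      intro x hx; simp only [hA, mem_Icc] at hx; constructor
      · exact sum_nonneg fun i _ => pow_nonneg (by linarith [(hx i).1]) _
      · refine (sum_le_card_nsmul univ _ ((Y : ℤ) ^ (j.val + 1)) fun i _ =>
          pow_le_pow_left₀ (by linarith [(hx i).1]) (hx i).2 _).trans ?_
        simp
    have b1 := hb _ hq.1; have b2 := hb _ hq.2; rw [mem_Icc]; simp only [Pi.sub_apply]; push_cast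
    constructor <;> linarith
  rw [← sum_fiberwise_of_maps_to hmap, mul_sum]; refine sum_le_sum fun l hl => ?_
  rw [sum_congr rfl (g := fun _ => Φ l) (fun q hq => by rw [(mem_filter.1 hq).2]), sum_const, nsmul_eq_mul]
  have h3 := en_shift X (pw K) l
  have h4 : ((X ×ˢ X).filter fun q => pw K q.1 - pw K q.2 = l).card ≤ JV K s A := by
    refine le_trans (le_of_eq ?_) h3; congr 1; refine filter_congr fun q _ => ?_
    rw [sub_eq_iff_eq_add, add_comm]
  have h5 : (((X ×ˢ X).filter fun q => pw K q.1 - pw K q.2 = l).card : ℝ) ≤ JV K s A := by exact_mod_cast h4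
  exact mul_le_mul_of_nonneg_right h5 (norm_nonneg _)

lemma sum_shift_sub (g : ℕ → ℂ) (hg : ∀ n, ‖g n‖ ≤ 1) (N N' : ℕ) (h : N ≤ N') (a : ℕ) :
  ‖∑ n ∈ Ioc N N', g n - ∑ n ∈ Ioc N N', g (n + a)‖ ≤ 2 * a := by
  induction a with
  | zero => simp
  | succ a ih =>
    have h1 : ∑ n ∈ Ioc N N', g (n + (a + 1)) - ∑ n ∈ Ioc N N', g (n + a) = g (N' + 1 + a) - g (N + 1 + a) := by
      rw [← sum_sub_distrib]; have := sum_Ico_sub (fun n => g (n + a)) (show N + 1 ≤ N' + 1 by omega)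
      rw [← this]; refine sum_congr ?_ fun n _ => ?_
      · ext n; simp only [mem_Ioc, mem_Ico]; omega
      · congr 2; ring
    have h2 : ∑ n ∈ Ioc N N', g n - ∑ n ∈ Ioc N N', g (n + (a + 1)) =
      (∑ n ∈ Ioc N N', g n - ∑ n ∈ Ioc N N', g (n + a)) - (g (N' + 1 + a) - g (N + 1 + a)) := by rw [← h1]; ring
    rw [h2]; refine (norm_sub_le _ _).trans ?_; have h3 := norm_sub_le (g (N' + 1 + a)) (g (N + 1 + a))
    have := hg (N' + 1 + a); have := hg (N + 1 + a); push_cast; linarith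

lemma shift_avg (g : ℕ → ℂ) (hg : ∀ n, ‖g n‖ ≤ 1) (N N' : ℕ) (h : N ≤ N') (Y : ℕ) : Y * ‖∑ n ∈ Ioc N N', g n‖ ≤
  2 * Y * Y + ∑ n ∈ Ioc N N', ‖∑ a ∈ Icc 1 Y, g (n + a)‖ := by
  set S := ∑ n ∈ Ioc N N', g n
  have h1 : (Y : ℂ) * S = ∑ a ∈ Icc 1 Y, (S - ∑ n ∈ Ioc N N', g (n + a)) +
    ∑ n ∈ Ioc N N', ∑ a ∈ Icc 1 Y, g (n + a) := by
    rw [sum_comm (s := Ioc N N'), ← sum_add_distrib]; simp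
  have h2 : (Y : ℝ) * ‖S‖ = ‖(Y : ℂ) * S‖ := by simp
  rw [h2, h1]; refine (norm_add_le _ _).trans (add_le_add ?_ (norm_sum_le _ _))
  refine (norm_sum_le _ _).trans ?_
  calc _ ≤ ∑ a ∈ Icc 1 Y, (2 * Y : ℝ) := sum_le_sum fun a ha => by
        refine (sum_shift_sub g hg N N' h a).trans ?_; have : (a : ℝ) ≤ Y := mod_cast (mem_Icc.1 ha).2
        linarith
    _ = _ := by simp; ring

lemma norm_ee_sub (x y : ℝ) : ‖ee x - ee y‖ ≤ |x - y| := by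
  have h : ee x - ee y = ee y * (ee (x - y) - 1) := by rw [mul_sub, mul_one, ← ee_add]; congr 2; ring
  rw [h, norm_mul, norm_ee, one_mul, ee, mul_comm, Complex.norm_exp_I_mul_ofReal_sub_one, norm_mul]
  have := abs_sin_le_abs (x := (x - y) / 2); rw [abs_div, abs_two] at this; simp only [norm_eq_abs, abs_two]
  linarith

/-- Taylor coefficients of `-t log (n + a)` in `a`. -/
def bt (t : ℝ) (n j : ℕ) : ℝ := -t * (-1) ^ j / ((j + 1) * (n : ℝ) ^ (j + 1))

lemma taylor_phase (t : ℝ) (ht : 0 ≤ t) (K N Y n a : ℕ) (hN : 1 ≤ N) (hY : 2 * Y ≤ N) (hn : N ≤ n) (ha : a ≤ Y) :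
  ‖ee (-t * log ((n + a : ℕ) : ℝ)) - ee (-t * log n) * ep(K, bt t n, a)‖ ≤
    2 * t * ((Y : ℝ) / N) ^ (K + 1) := by
  have hn0 : (0 : ℝ) < n := mod_cast (by omega : 0 < n); have hN0 : (0 : ℝ) < N := mod_cast (by omega : 0 < N)
  have hY2 : (2 : ℝ) * Y ≤ N := mod_cast hY; have hnN : (N : ℝ) ≤ n := mod_cast hn
  have haY : (a : ℝ) ≤ Y := mod_cast ha; set x : ℝ := a / n with hx; have hx0 : 0 ≤ x := by positivity
  have hxY : x ≤ Y / N := by rw [hx]; gcongr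
  have hx1 : x ≤ 1 / 2 := by
    refine hxY.trans ?_; rw [div_le_iff₀ hN0]; linarith
  have hlog : log ((n + a : ℕ) : ℝ) = log n + log (1 + x) := by
    rw [← log_mul (by positivity) (by positivity)]; congr 1; rw [hx]; push_cast; field_simp
  have h1 := abs_log_sub_add_sum_range_le (x := -x) (by rw [abs_neg, abs_of_nonneg hx0]; linarith) K
  rw [abs_neg, abs_of_nonneg hx0, sub_neg_eq_add] at h1
  have h2 : ∑ j : Fin K, bt t n j * (a : ℝ) ^ (j.val + 1) = t * ∑ i ∈ range K, (-x) ^ (i + 1) / (i + 1) := by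
    rw [sum_range, mul_sum]; refine sum_congr rfl fun j _ => ?_; rw [bt, hx, neg_pow (a / n : ℝ), div_pow]
    field_simp; ring
  rw [← ee_add]; refine (norm_ee_sub _ _).trans ?_
  have h3 : -t * log ((n + a : ℕ) : ℝ) - (-t * log n + ∑ j : Fin K, bt t n j * (a : ℝ) ^ (j.val + 1)) =
    -t * (∑ i ∈ range K, (-x) ^ (i + 1) / (i + 1) + log (1 + x)) := by
    rw [hlog, h2]; ring
  rw [h3, abs_mul, abs_neg, abs_of_nonneg ht]
  have h4 : x ^ (K + 1) / (1 - x) ≤ 2 * ((Y : ℝ) / N) ^ (K + 1) := by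
    rw [div_le_iff₀ (by linarith)]; have : x ^ (K + 1) ≤ ((Y : ℝ) / N) ^ (K + 1) := by gcongr
    have h5 : 0 ≤ ((Y : ℝ) / N) ^ (K + 1) := by positivity
    nlinarith
  calc _ ≤ t * (2 * ((Y : ℝ) / N) ^ (K + 1)) := by gcongr; exact h1.trans h4
    _ = _ := by ring

lemma weyl_reduce (t : ℝ) (ht : 0 ≤ t) (K N N' Y : ℕ) (hN : 1 ≤ N) (hY : 2 * Y ≤ N) (hNN : N ≤ N') (hN2 : N' ≤ 2 * N) :
  Y * ‖∑ n ∈ Ioc N N', ee (-t * log n)‖ ≤ 2 * Y * Y + N * (Y * (2 * t * ((Y : ℝ) / N) ^ (K + 1))) + ∑ n ∈ Ioc N N',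
    ‖∑ a ∈ Icc (1 : ℤ) Y, ep(K, bt t n, a)‖ := by
  refine (shift_avg (fun n => ee (-t * log n)) (fun n => (norm_ee _).le) N N' hNN Y).trans ?_; rw [add_assoc]
  refine add_le_add le_rfl ?_
  have hconv : ∀ n, ∑ a ∈ Icc (1 : ℤ) Y, ep(K, bt t n, a) =
    ∑ a ∈ Icc 1 Y, ep(K, bt t n, a) := by
    intro n; refine sum_bij' (fun a _ => a.toNat) (fun a _ => (a : ℤ)) ?_ ?_ ?_ ?_ ?_
    · intro a ha; rw [mem_Icc] at ha ⊢; omega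
    · intro a ha; rw [mem_Icc] at ha ⊢; omega
    · intro a ha; rw [mem_Icc] at ha; omega
    · intro a ha; simp
    · intro a ha; rw [mem_Icc] at ha; have : ((a.toNat : ℤ) : ℝ) = a := by rw [Int.toNat_of_nonneg (by omega)]
      rw [Int.cast_natCast] at this; rw [this]
  set E : ℝ := 2 * t * ((Y : ℝ) / N) ^ (K + 1)
  have hone : ∀ n ∈ Ioc N N', ‖∑ a ∈ Icc 1 Y, ee (-t * log ((n + a : ℕ) : ℝ))‖ ≤ Y * E + ‖∑ a ∈ Icc (1 : ℤ) Y,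
    ep(K, bt t n, a)‖ := by
    intro n hn; rw [mem_Ioc] at hn; rw [hconv]; set F := ∑ a ∈ Icc 1 Y, ep(K, bt t n, a) with hF
    have h1 : ∑ a ∈ Icc 1 Y, ee (-t * log ((n + a : ℕ) : ℝ)) = ∑ a ∈ Icc 1 Y, (ee (-t * log ((n + a : ℕ) : ℝ)) -
      ee (-t * log n) * ep(K, bt t n, a)) + ee (-t * log n) * F := by
      rw [sum_sub_distrib, hF, mul_sum]; ring
    rw [h1]; refine (norm_add_le _ _).trans (add_le_add ?_ ?_)
    · refine (norm_sum_le _ _).trans ?_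
      refine (sum_le_card_nsmul _ _ E fun a ha => taylor_phase t ht K N Y n a hN hY hn.1.le (mem_Icc.1 ha).2).trans ?_
      simp
    · rw [norm_mul, norm_ee, one_mul]
  refine (sum_le_sum hone).trans ?_; rw [sum_add_distrib, sum_const, nsmul_eq_mul, Nat.card_Ioc]; gcongr
  omega

lemma bt_spacing (t : ℝ) (ht : 0 ≤ t) (j n m : ℕ) (hn : 0 < n) (hnm : n ≤ m) :
  t / (m : ℝ) ^ (j + 2) * (m - n) ≤ |bt t n j - bt t m j| := by
  have hn0 : (0 : ℝ) < n := mod_cast hn; have hnm' : (n : ℝ) ≤ m := mod_cast hnm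
  have hm0 : (0 : ℝ) < m := by linarith
  have h1 : |bt t n j - bt t m j| = t / (j + 1) * |1 / (n : ℝ) ^ (j + 1) - 1 / (m : ℝ) ^ (j + 1)| := by
    have : bt t n j - bt t m j = (-(-1) ^ j) * (t / (j + 1)) * (1 / (n : ℝ) ^ (j + 1) - 1 / (m : ℝ) ^ (j + 1)) := by
      unfold bt; field_simp; ring
    rw [this, abs_mul, abs_mul, abs_neg, abs_pow, abs_neg, abs_one, one_pow, one_mul,
      abs_of_nonneg (show 0 ≤ t / ((j : ℝ) + 1) by positivity)]
  rw [h1]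
  -- Bernoulli's inequality for `(m / n) ^ (j + 1)`
  have h2 := one_add_mul_le_pow (a := (m : ℝ) / n - 1) (by
    have : (0 : ℝ) ≤ m / n := by positivity
    linarith) (j + 1)
  rw [add_sub_cancel] at h2
  have h3 : ((j : ℝ) + 1) * (m - n) / (m : ℝ) ^ (j + 2) ≤ 1 / (n : ℝ) ^ (j + 1) - 1 / (m : ℝ) ^ (j + 1) := by
    have e1 : 1 / (n : ℝ) ^ (j + 1) - 1 / (m : ℝ) ^ (j + 1) = (((m : ℝ) / n) ^ (j + 1) - 1) / (m : ℝ) ^ (j + 1) := by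
      rw [div_pow]; field_simp
    rw [e1, div_le_div_iff₀ (by positivity) (by positivity)]
    have h4 : ((j : ℝ) + 1) * (m - n) ≤ (((m : ℝ) / n) ^ (j + 1) - 1) * m := by
      have h5 : ((j : ℝ) + 1) * (m / n - 1) ≤ ((m : ℝ) / n) ^ (j + 1) - 1 := by push_cast at h2; linarith
      have h6 : ((j : ℝ) + 1) * (m - n) ≤ ((j : ℝ) + 1) * (m / n - 1) * m := by
        have : (m : ℝ) - n ≤ (m / n - 1) * m := by
          rw [sub_mul, one_mul, div_mul_eq_mul_div, le_sub_iff_add_le, le_div_iff₀ hn0]; nlinarith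
        nlinarith
      nlinarith
    calc ((j : ℝ) + 1) * (m - n) * (m : ℝ) ^ (j + 1)
        ≤ (((m : ℝ) / n) ^ (j + 1) - 1) * m * (m : ℝ) ^ (j + 1) := by gcongr
      _ = _ := by ring
  calc t / (m : ℝ) ^ (j + 2) * (m - n) = t / (j + 1) * (((j : ℝ) + 1) * (m - n) / (m : ℝ) ^ (j + 2)) := by field_simp
    _ ≤ _ := by gcongr; exact h3.trans (le_abs_self _)

lemma bt_abs (t : ℝ) (ht : 0 ≤ t) (j N n : ℕ) (hN : 0 < N) (hn : N ≤ n) (h : t ≤ (N : ℝ) ^ (j + 1))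
  (hj : 1 ≤ j) : |bt t n j| ≤ 1 / 2 := by
  have hN0 : (0 : ℝ) < N := mod_cast hN; have hn0 : (N : ℝ) ≤ n := mod_cast hn
  have hj1 : (1 : ℝ) ≤ j := mod_cast hj
  have : |bt t n j| = t / ((j + 1) * (n : ℝ) ^ (j + 1)) := by
    unfold bt
    rw [abs_div, abs_mul, abs_neg, abs_pow, abs_neg, abs_one, one_pow, mul_one, abs_of_nonneg ht, abs_of_nonneg]
    positivity
  have hn1 : (0 : ℝ) < n := by linarith
  rw [this, div_le_div_iff₀ (by positivity) (by norm_num)]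
  have h2 : (N : ℝ) ^ (j + 1) ≤ (n : ℝ) ^ (j + 1) := by gcongr
  nlinarith

lemma sum_fin_succ_two (K : ℕ) : 2 * ∑ j : Fin K, (j.val + 1) = K * (K + 1) := by
  rw [Fin.sum_univ_eq_sum_range (fun j => j + 1)]
  induction K with
  | zero => simp
  | succ K ih => rw [sum_range_succ, mul_add, ih]; ring

/-- The `2s`-th moment bound; here `a = N ^ (1 / 100)`. -/
lemma weyl_moment (K N N' Y : ℕ) (t a : ℝ) (j₀ : Fin K) (hK : 100 ≤ K) (hj : 1 ≤ j₀.val)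
  (ha : 1 ≤ a) (haN : a ^ 100 = N) (hN' : N' ≤ 2 * N) (hNN : N ≤ N')
  (hY1 : 1 ≤ Y) (hYa : (Y : ℝ) ≤ a ^ 90) (hYb : a ^ 90 ≤ 2 * Y)
  (ht : 0 < t) (ht1 : a ^ (100 * (j₀.val + 1)) ≤ t * a ^ 110) (ht2 : t ≤ (N : ℝ) ^ (j₀.val + 1)) :
  (∑ n ∈ Ioc N N', ‖∑ a ∈ Icc (1 : ℤ) Y,
    ep(K, bt t n, a)‖) ^ (2 * (K ^ 3 + K ^ 2)) * a ^ 25 ≤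
    (N * Y : ℝ) ^ (2 * (K ^ 3 + K ^ 2)) * exp (2 * K ^ 10) := by
  have ha0 : 0 < a := by linarith
  have hN1 : (1 : ℝ) ≤ N := by rw [← haN]; exact one_le_pow₀ ha
  have hNn : 1 ≤ N := mod_cast hN1; have hY1r : (1 : ℝ) ≤ Y := mod_cast hY1
  have hKr : (100 : ℝ) ≤ K := mod_cast hK; set s := K ^ 3 + K ^ 2 with hs
  have hs1 : 1 ≤ s := by rw [hs]; have := Nat.one_le_pow 2 K (by omega); omega
  have hs1r : (1 : ℝ) ≤ s := mod_cast hs1; set S := Ioc N N' with hS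
  have hcard : ((S.card : ℕ) : ℝ) ≤ N := by rw [hS, Nat.card_Ioc]; exact_mod_cast (by omega : N' - N ≤ N)
  set f : ℕ → ℝ := fun n => ‖∑ a ∈ Icc (1 : ℤ) Y, ep(K, bt t n, a)‖; set W := ∑ n ∈ S, f n with hW
  set H : Fin K → ℕ := fun j => s * Y ^ (j.val + 1) with hH
  set Bx := piFinset (fun j : Fin K => Icc (-((H j : ℕ) : ℤ)) (H j : ℕ)) with hBx
  set T := ∑ l ∈ Bx, ‖∑ n ∈ S, ee (∑ j, l j * bt t n j)‖; set ℓ := 1 + log N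
  have hℓ1 : 1 ≤ ℓ := by have := log_nonneg hN1; linarith
  -- Hölder
  have h1 : W ^ (2 * s) ≤ (N : ℝ) ^ (2 * s - 1) * ∑ n ∈ S, f n ^ (2 * s) := by
    have h := pow_sum_div_card_le_sum_pow (s := S) (f := f) (fun _ _ => norm_nonneg _) (2 * s - 1)
    rw [show 2 * s - 1 + 1 = 2 * s by omega] at h
    rcases eq_empty_or_nonempty S with he | hne
    · simp [hW, he, show s ≠ 0 by omega]
    · have hc : (0 : ℝ) < (S.card : ℝ) ^ (2 * s - 1) := by
        have : 0 < S.card := card_pos.2 hne; positivity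
      rw [div_le_iff₀ hc] at h; refine h.trans ?_; rw [mul_comm]; gcongr
  have h2 : ∑ n ∈ S, f n ^ (2 * s) ≤ JV K s (Icc (1 : ℤ) Y) * T := moment_le K s Y N N' (fun n j => bt t n j)
  set Q : ℝ := ∏ j, (2 * (H j : ℝ) + 1) with hQ; have hQ0 : 0 ≤ Q := prod_nonneg fun j _ => by positivity
  -- the box
  have h3 : T ^ 2 ≤ Q ^ 2 * (a ^ 65 * 2 ^ (K + 3) * ℓ) ^ 2 := by
    have c1 : T ^ 2 ≤ Bx.card * ∑ l ∈ Bx, ‖∑ n ∈ S, ee (∑ j, l j * bt t n j)‖ ^ 2 := sq_sum_le_card_mul_sum_sq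
    have c2 : (Bx.card : ℝ) = Q := by
      rw [hBx, card_piFinset, hQ]; push_cast; refine prod_congr rfl fun j _ => ?_; rw [Int.card_Icc]
      have : ((H j : ℤ) + 1 - -(H j : ℤ)).toNat = 2 * H j + 1 := by omega
      rw [this]; push_cast; rfl
    set ω := t / (2 * N : ℝ) ^ (j₀.val + 2) with hωd; have hω : 0 < ω := by positivity
    have c3 := box_sq K H j₀ N N' (fun n j => bt t n j) ω hω
      (by
        intro n hn m hm; rw [mem_Ioc] at hn hm; have b1 := bt_abs t ht.le j₀ N n hNn hn.1.le ht2 hj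
        have b2 := bt_abs t ht.le j₀ N m hNn hm.1.le ht2 hj; exact (abs_sub _ _).trans (by linarith))
      (by
        intro n hn m hm; rw [mem_Ioc] at hn hm
        have key : ∀ n m : ℕ, N < n → n ≤ m → m ≤ N' →
          ω * |(n : ℝ) - m| ≤ |bt t n j₀ - bt t m j₀| := by
          intro n m hn hnm hm; rw [hωd]; refine le_trans ?_ (bt_spacing t ht.le j₀ n m (by omega) hnm)
          have : (n : ℝ) ≤ m := mod_cast hnm; have hm2 : (m : ℝ) ≤ 2 * N := mod_cast hm.trans hN'
          have hm0 : (0 : ℝ) < m := mod_cast (by omega : 0 < m)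
          rw [abs_sub_comm, abs_of_nonneg (by linarith)]; gcongr
        rcases le_total n m with h | h
        · exact key n m hn.1 h hm.2
        · rw [abs_sub_comm, abs_sub_comm (bt t n j₀)]; exact key m n hm.1 h hn.2)
    have c4 : log ((N' - N : ℕ) : ℝ) ≤ log N := by
      rcases Nat.eq_zero_or_pos (N' - N) with h | h
      · rw [h]; simpa using log_nonneg hN1
      · apply log_le_log (mod_cast h); exact_mod_cast (by omega : N' - N ≤ N)
    -- the loss from small gaps
    have c5 : 8 / ω / (2 * H j₀ + 1) ≤ a ^ 30 * 2 ^ (2 * K + 5) := by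
      set j := j₀.val
      have d1 : (a ^ 90) ^ (j + 1) ≤ 2 ^ (j + 1) * (Y : ℝ) ^ (j + 1) := by rw [← mul_pow]; gcongr
      have d2 : (Y : ℝ) ^ (j + 1) ≤ 2 * H j₀ + 1 := by
        simp only [hH]; push_cast; have : 0 ≤ (Y : ℝ) ^ (j + 1) := by positivity
        nlinarith
      rw [hωd, div_div_eq_mul_div, div_div, div_le_iff₀ (by positivity)]
      have d3 : (2 : ℝ) ^ (j + 2) * 2 ^ (j + 1) * 8 ≤ 2 ^ (2 * K + 5) := by
        rw [← pow_add, show (8 : ℝ) = 2 ^ 3 by norm_num, ← pow_add]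
        exact pow_le_pow_right₀ (by norm_num) (by omega)
      have d4 : a ^ (100 * (j + 2)) * (a ^ (100 * (j + 1))) ≤
        a ^ 30 * (t * a ^ 110) * (a ^ 90) ^ (j + 1) * a ^ (100 * j - 10) := by
        have e1 : a ^ (100 * (j + 2)) * (a ^ (100 * (j + 1))) ≤
          a ^ 30 * a ^ (100 * (j + 1)) * (a ^ 90) ^ (j + 1) * a ^ (100 * j - 10) := by
          rw [← pow_mul, ← pow_add, ← pow_add, ← pow_add, ← pow_add]; exact pow_le_pow_right₀ ha (by omega)
        refine e1.trans ?_; gcongr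
      have d5 : a ^ (100 * (j + 2)) ≤ a ^ 30 * t * (a ^ 90) ^ (j + 1) := by
        have e2 : a ^ 110 * a ^ (100 * j - 10) = a ^ (100 * (j + 1)) := by rw [← pow_add]; congr 1; omega
        have e3 : a ^ 30 * (t * a ^ 110) * (a ^ 90) ^ (j + 1) * a ^ (100 * j - 10) =
          (a ^ 30 * t * (a ^ 90) ^ (j + 1)) * a ^ (100 * (j + 1)) := by rw [← e2]; ring
        rw [e3] at d4; exact le_of_mul_le_mul_right d4 (by positivity)
      calc 8 * (2 * N : ℝ) ^ (j + 2) = 8 * 2 ^ (j + 2) * a ^ (100 * (j + 2)) := by rw [← haN, mul_pow, ← pow_mul]; ring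
        _ ≤ 8 * 2 ^ (j + 2) * (a ^ 30 * t * (2 ^ (j + 1) * (Y : ℝ) ^ (j + 1))) := by gcongr; exact d5.trans (by gcongr)
        _ = a ^ 30 * (2 ^ (j + 2) * 2 ^ (j + 1) * 8) * (t * (Y : ℝ) ^ (j + 1)) := by ring
        _ ≤ _ := by gcongr
    calc T ^ 2 ≤ Q * (Q * ((N' - N : ℕ) : ℝ) * (1 + 8 / ω *
          (1 + log ((N' - N : ℕ) : ℝ)) / (2 * H j₀ + 1))) := by
          rw [c2] at c1; exact c1.trans (mul_le_mul_of_nonneg_left c3 hQ0)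
      _ ≤ Q * (Q * N * (a ^ 30 * 2 ^ (2 * K + 6) * ℓ)) := by
        gcongr
        · exact_mod_cast (by omega : N' - N ≤ N)
        · have e : 8 / ω * (1 + log ((N' - N : ℕ) : ℝ)) / (2 * H j₀ + 1) =
            8 / ω / (2 * H j₀ + 1) *
            (1 + log ((N' - N : ℕ) : ℝ)) := by ring
          rw [e]
          have e2 : 8 / ω / (2 * H j₀ + 1) *
            (1 + log ((N' - N : ℕ) : ℝ)) ≤ a ^ 30 * 2 ^ (2 * K + 5) * ℓ := by
            gcongr; linarith
          have e3 : 1 ≤ a ^ 30 * 2 ^ (2 * K + 5) * ℓ := by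
            have := one_le_pow₀ ha (n := 30)
            have := one_le_pow₀ (show (1 : ℝ) ≤ 2 by norm_num) (n := 2 * K + 5)
            exact one_le_mul_of_one_le_of_one_le (one_le_mul_of_one_le_of_one_le ‹_› ‹_›) hℓ1
          calc _ ≤ a ^ 30 * 2 ^ (2 * K + 5) * ℓ + a ^ 30 * 2 ^ (2 * K + 5) * ℓ := by linarith
            _ = _ := by ring
      _ = Q ^ 2 * (a ^ 65 * 2 ^ (K + 3)) ^ 2 * ℓ := by rw [← haN]; ring
      _ ≤ Q ^ 2 * (a ^ 65 * 2 ^ (K + 3)) ^ 2 * ℓ ^ 2 := by gcongr; nlinarith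
      _ = _ := by ring
  have h4 : T ≤ Q * (a ^ 65 * 2 ^ (K + 3) * ℓ) := by
    rw [← mul_pow] at h3; exact le_of_sq_le_sq h3 (by positivity)
  -- the volume of the box
  set G := ∑ j : Fin K, (j.val + 1)
  have hG2 : (G : ℝ) = K * (K + 1) / 2 := by
    have := sum_fin_succ_two K; have h : (2 : ℝ) * G = K * (K + 1) := mod_cast this; linarith
  have h5 : Q ≤ (3 * s : ℝ) ^ K * (Y : ℝ) ^ G := by
    calc Q ≤ ∏ j : Fin K, ((3 * s : ℝ) * (Y : ℝ) ^ (j.val + 1)) := by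
          refine Finset.prod_le_prod (fun _ _ => by positivity) fun j _ => ?_
          have : (1 : ℝ) ≤ (Y : ℝ) ^ (j.val + 1) := one_le_pow₀ hY1r; simp only [hH]; push_cast; nlinarith
      _ = _ := by
        rw [prod_mul_distrib, prod_const, card_univ, Fintype.card_fin, prod_pow_eq_pow_sum]
  have h6 : (JV K s (Icc (1 : ℤ) Y) : ℝ) * (Y : ℝ) ^ G ≤ exp (K ^ 10) * (Y : ℝ) ^ (2 * s) * a ^ 9 := by
    have v := vmvt K hK Y hY1; have hY0 : (0 : ℝ) < Y := by linarith
    calc _ ≤ exp (K ^ 10) * (Y : ℝ) ^ (2 * (s : ℕ) - K * (K + 1) / 2 + 1 / 10 : ℝ) * (Y : ℝ) ^ G := by gcongr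
      _ = exp (K ^ 10) * ((Y : ℝ) ^ (2 * s) * (Y : ℝ) ^ (1 / 10 : ℝ)) := by
        rw [mul_assoc, ← rpow_natCast (Y : ℝ) G, ← rpow_add hY0, ← rpow_natCast (Y : ℝ) (2 * s), ← rpow_add hY0, hG2]
        congr 2; push_cast; ring
      _ ≤ exp (K ^ 10) * ((Y : ℝ) ^ (2 * s) * a ^ 9) := by
        gcongr
        calc (Y : ℝ) ^ (1 / 10 : ℝ) ≤ (a ^ 90) ^ (1 / 10 : ℝ) := rpow_le_rpow hY0.le hYa (by norm_num)
          _ = a ^ 9 := by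
            rw [← rpow_natCast, ← rpow_natCast, ← rpow_mul ha0.le]; norm_num
      _ = _ := by ring
  have hℓa : ℓ ≤ exp 5 * a := by
    have e1 : log N = 100 * log a := by rw [← haN, log_pow]; norm_num
    have e2 := log_le_sub_one_of_pos ha0
    have e3 : (101 : ℝ) ≤ exp 5 := by
      have : exp 5 = exp 1 ^ 5 := by rw [← exp_nat_mul]; norm_num
      rw [this]; have h := exp_one_gt_d9
      calc (101 : ℝ) ≤ 2.7 ^ 5 := by norm_num
        _ ≤ _ := by gcongr; linarith
    nlinarith
  have h7 : (3 * s : ℝ) ^ K * 2 ^ (K + 3) * exp 5 ≤ exp (K ^ 10) := by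
    have p1 : (3 * s : ℝ) ^ K ≤ exp (K * (3 * s)) := by
      rw [exp_nat_mul]; gcongr; linarith [add_one_le_exp (3 * s : ℝ)]
    have p2 : (2 : ℝ) ^ (K + 3) ≤ exp (K + 3) := by
      have : exp (K + 3) = exp 1 ^ (K + 3) := by rw [← exp_nat_mul]; push_cast; ring_nf
      rw [this]; gcongr; linarith [exp_one_gt_d9]
    calc _ ≤ exp (K * (3 * s)) * exp (K + 3) * exp 5 := by gcongr
      _ = exp (K * (3 * s) + (K + 3) + 5) := by simp only [exp_add]
      _ ≤ _ := by
        apply exp_le_exp.2; simp only [hs]; push_cast; have q1 : (K : ℝ) ^ 4 * 100 ≤ K ^ 4 * K := by gcongr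
        have q2 : (K : ℝ) ^ 4 * K * 1 ≤ K ^ 4 * K * K ^ 5 := by gcongr; exact one_le_pow₀ (by linarith)
        have q3 : (K : ℝ) ^ 3 * 1 ≤ K ^ 3 * K := by gcongr; linarith
        have q4 : (1 : ℝ) ≤ (K : ℝ) ^ 3 := one_le_pow₀ (by linarith)
        have q5 : (K : ℝ) * 1 ≤ K * K ^ 3 := by gcongr
        nlinarith
  calc W ^ (2 * s) * a ^ 25
      ≤ ((N : ℝ) ^ (2 * s - 1) * (JV K s (Icc (1 : ℤ) Y) *
          ((3 * s : ℝ) ^ K * (Y : ℝ) ^ G * (a ^ 65 * 2 ^ (K + 3) * (exp 5 * a))))) * a ^ 25 := by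
        gcongr; refine h1.trans ?_; gcongr; refine h2.trans ?_; gcongr; refine h4.trans ?_; gcongr
    _ = (N : ℝ) ^ (2 * s - 1) * (JV K s (Icc (1 : ℤ) Y) * (Y : ℝ) ^ G) *
      ((3 * s : ℝ) ^ K * 2 ^ (K + 3) * exp 5) * a ^ 91 := by ring
    _ ≤ (N : ℝ) ^ (2 * s - 1) * (exp (K ^ 10) * (Y : ℝ) ^ (2 * s) * a ^ 9) * exp (K ^ 10) * a ^ 91 := by gcongr
    _ = ((N : ℝ) ^ (2 * s - 1) * a ^ 100) * (Y : ℝ) ^ (2 * s) * (exp (K ^ 10) * exp (K ^ 10)) := by ring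
    _ = _ := by
      rw [haN, ← pow_succ, show 2 * s - 1 + 1 = 2 * s by omega, mul_pow, ← exp_add]; congr 2; ring

lemma ev_rpow (C a b : ℝ) (hab : a < b) : ∀ᶠ L : ℝ in atTop, C * L ^ a ≤ L ^ b := by
  have h := (tendsto_rpow_atTop (sub_pos.2 hab)).eventually_ge_atTop C
  filter_upwards [h, eventually_gt_atTop 0] with L hL hL0
  calc C * L ^ a ≤ L ^ (b - a) * L ^ a := by gcongr
    _ = L ^ b := by rw [← rpow_add hL0]; congr 1; ring

/-! ### Sums of `n^{-it}` -/

/-- The bound for `∑ n^{-it}` over a dyadic block, for `t` between powers of `N`; `a = N ^ (1/100)`. -/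
lemma exp_core (K J N N' : ℕ) (t a : ℝ) (hK : K = 10 * J + 100) (hJ : 2 ≤ J)
  (ha : 2 ≤ a) (haN : a ^ 100 = N) (hN' : N' ≤ 2 * N) (hNN : N ≤ N')
  (ht : 0 < t) (ht1 : a ^ (100 * J) ≤ t * a ^ 110) (ht2 : t ≤ (N : ℝ) ^ J)
  (hNK : 16 * (K : ℝ) ^ 10 ≤ log N) :
  ‖∑ n ∈ Ioc N N', ee (-t * log n)‖ ≤ 2 * a ^ 90 + 2 + N * exp (-(log N / (32 * K ^ 3))) := by
  have ha0 : 0 < a := by linarith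
  have hN1 : (1 : ℝ) ≤ N := by rw [← haN]; exact one_le_pow₀ (by linarith)
  have hNn : 1 ≤ N := mod_cast hN1; set Y := ⌊a ^ 90⌋₊ with hY
  have hYa : (Y : ℝ) ≤ a ^ 90 := Nat.floor_le (by positivity)
  have ha90 : (1 : ℝ) ≤ a ^ 90 := one_le_pow₀ (by linarith)
  have hY1 : 1 ≤ Y := by rw [hY]; exact Nat.one_le_floor_iff _ |>.mpr ha90
  have hY1r : (1 : ℝ) ≤ Y := mod_cast hY1
  have hYb : a ^ 90 ≤ 2 * Y := by
    have := Nat.lt_floor_add_one (a ^ 90); linarith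
  have hYN : 2 * Y ≤ N := by
    have : (2 : ℝ) * Y ≤ N := by
      rw [← haN]
      calc 2 * (Y : ℝ) ≤ a * a ^ 90 := by gcongr
        _ = a ^ 91 := by ring
        _ ≤ a ^ 100 := pow_le_pow_right₀ (by linarith) (by norm_num)
    exact_mod_cast this
  have hj1 : (J - 1) + 1 = J := by omega
  have hm := weyl_moment K N N' Y t a ⟨J - 1, by omega⟩ (by omega) (by simp only; omega) (by linarith) haN hN' hNN hY1
    hYa hYb ht (by simp only [hj1]; exact ht1) (by simp only [hj1]; exact ht2)
  have hr := weyl_reduce t ht.le K N N' Y hNn hYN hNN hN'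
  set W := ∑ n ∈ Ioc N N', ‖∑ a ∈ Icc (1 : ℤ) Y, ep(K, bt t n, a)‖; set s := K ^ 3 + K ^ 2 with hs
  have hK1 : 1 ≤ K := by omega
  have hs1 : 1 ≤ s := by rw [hs]; have := Nat.one_le_pow 2 K (by omega); omega
  have hs2 : (s : ℝ) ≤ 2 * K ^ 3 := by
    have : s ≤ 2 * K ^ 3 := by
      have : K ^ 2 ≤ K ^ 3 := Nat.pow_le_pow_right hK1 (by norm_num); omega
    exact_mod_cast this
  have hlog : log N = 100 * log a := by rw [← haN, log_pow]; norm_num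
  have hlog0 : 0 ≤ log N := log_nonneg hN1
  -- the `2s`-th root
  have hWb : W ≤ N * Y * exp (-(log N / (16 * s))) := by
    have h1 : W ^ (2 * s) ≤ (N * Y * exp (-(log N / (16 * s)))) ^ (2 * s) := by
      have e1 : a ^ 25 = exp (log N / 4) := by
        rw [hlog, ← exp_log ha0, ← exp_nat_mul, log_exp]; congr 1; push_cast; ring
      have e2 : (exp (-(log N / (16 * s)))) ^ (2 * s) = exp (-(log N / 8)) := by
        rw [← exp_nat_mul]; congr 1; push_cast; field_simp; ring
      rw [e1] at hm; rw [mul_pow, e2]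
      have h3 : W ^ (2 * s) ≤ (N * Y : ℝ) ^ (2 * s) * exp (2 * K ^ 10) / exp (log N / 4) := by
        rw [le_div_iff₀ (exp_pos _)]; exact hm
      refine h3.trans ?_; rw [mul_div_assoc, ← exp_sub]; gcongr; linarith
    exact le_of_pow_le_pow_left₀ (by omega) (by positivity) h1
  have hYpos : (0 : ℝ) < Y := by linarith
  have hE : (N : ℝ) * (Y * (2 * t * ((Y : ℝ) / N) ^ (K + 1))) ≤ Y * 2 := by
    have h1 : (Y : ℝ) / N ≤ 1 / a ^ 10 := by
      rw [← haN, div_le_div_iff₀ (by positivity) (by positivity)]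
      calc (Y : ℝ) * a ^ 10 ≤ a ^ 90 * a ^ 10 := by gcongr
        _ = _ := by ring
    have h2 : (N : ℝ) * t * ((Y : ℝ) / N) ^ (K + 1) ≤ 1 := by
      calc (N : ℝ) * t * ((Y : ℝ) / N) ^ (K + 1) ≤ N * (N : ℝ) ^ J * (1 / a ^ 10) ^ (K + 1) := by gcongr
        _ = a ^ (100 * J + 100) / a ^ (10 * (K + 1)) := by
          rw [← haN, div_pow, one_pow, ← pow_mul, ← pow_mul, ← pow_add]; ring
        _ ≤ 1 := by
          rw [div_le_one (by positivity)]; exact pow_le_pow_right₀ (by linarith) (by omega)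
    nlinarith
  have h5 : Y * ‖∑ n ∈ Ioc N N', ee (-t * log n)‖ ≤ Y * (2 * a ^ 90 + 2 + N * exp (-(log N / (32 * K ^ 3)))) := by
    refine hr.trans ?_
    have h6 : exp (-(log N / (16 * s))) ≤ exp (-(log N / (32 * K ^ 3))) := by
      apply exp_le_exp.2; apply neg_le_neg; have h16 : (16 : ℝ) * s ≤ 32 * K ^ 3 := by linarith
      exact div_le_div_of_nonneg_left hlog0 (by positivity) h16
    have h7 : W ≤ N * Y * exp (-(log N / (32 * K ^ 3))) := hWb.trans (by gcongr)
    have h8 : (Y : ℝ) * Y ≤ Y * a ^ 90 := by gcongr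
    linarith
  exact le_of_mul_le_mul_left h5 hYpos

lemma ee_log (t x : ℝ) (hx : 0 < x) : ee (-t * log x) = (x : ℂ) ^ (-(t * I)) := by
  rw [ee, Complex.cpow_def_of_ne_zero (mod_cast hx.ne'), ← Complex.ofReal_log hx.le]; congr 1; push_cast; ring

lemma int_osc (t : ℝ) (ht : 0 < t) (a b : ℝ) (ha : 0 < a) (hab : a ≤ b) :
  ‖∫ x in a..b, ee (-t * log x)‖ ≤ (a + b) / t := by
  have h1 : ∫ x in a..b, ee (-t * log x) = ∫ x in a..b, (x : ℂ) ^ (-(t * I)) := by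
    apply integral_congr; intro x hx; rw [Set.uIcc_of_le hab] at hx; exact ee_log t x (lt_of_lt_of_le ha hx.1)
  have hb : 0 < b := by linarith
  rw [h1, integral_cpow (Or.inl (by simp))]; rw [norm_div]
  have h2 : t ≤ ‖-(t * I) + 1‖ := by
    have := abs_im_le_norm (-(t * I) + 1); simp at this; exact (le_abs_self t).trans this
  have h3 : ‖(b : ℂ) ^ (-(t * I) + 1)‖ = b := by rw [norm_cpow_eq_rpow_re_of_pos hb]; simp
  have h4 : ‖(a : ℂ) ^ (-(t * I) + 1)‖ = a := by rw [norm_cpow_eq_rpow_re_of_pos ha]; simp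
  have h5 := norm_sub_le ((b : ℂ) ^ (-(t * I) + 1)) ((a : ℂ) ^ (-(t * I) + 1))
  rw [h3, h4, add_comm b a] at h5; gcongr

lemma cont_ee_log (t : ℝ) {s : Set ℝ} (hs : ∀ x ∈ s, 0 < x) : ContinuousOn (fun x : ℝ => ee (-t * log x)) s := by
  unfold ee; have : ContinuousOn log s := continuousOn_log.mono (fun x hx => by simpa using (hs x hx).ne')
  fun_prop

/-- Comparison of sum and integral unit interval by unit interval. -/
lemma sum_sub_int (φ : ℝ → ℂ) (N N' : ℕ) (h : N ≤ N') (M : ℝ) (hc : ContinuousOn φ (Set.Icc (N : ℝ) N'))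
  (hM : ∀ x ∈ Set.Icc (N : ℝ) N', ∀ y ∈ Set.Icc (N : ℝ) N', |x - y| ≤ 1 → ‖φ x - φ y‖ ≤ M) :
  ‖∑ n ∈ Ioc N N', φ n - ∫ x in (N : ℝ)..N', φ x‖ ≤ (N' - N) * M := by
  induction N', h using Nat.le_induction with
  | base => simp
  | succ k hk ih =>
    have hk' : (N : ℝ) ≤ k := mod_cast hk
    have hsub : Set.Icc (N : ℝ) k ⊆ Set.Icc (N : ℝ) ((k + 1 : ℕ) : ℝ) := by
      apply Set.Icc_subset_Icc_right; push_cast; linarith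
    have ih' := ih (hc.mono hsub) (fun x hx y hy => hM x (hsub hx) y (hsub hy))
    have hi1 : IntervalIntegrable φ volume (N : ℝ) k := by
      apply ContinuousOn.intervalIntegrable; rw [Set.uIcc_of_le hk']; exact hc.mono hsub
    have hsub2 : Set.Icc (k : ℝ) ((k + 1 : ℕ) : ℝ) ⊆ Set.Icc (N : ℝ) ((k + 1 : ℕ) : ℝ) := Set.Icc_subset_Icc_left hk'
    have hkk : (k : ℝ) ≤ ((k + 1 : ℕ) : ℝ) := by push_cast; linarith
    have hi2 : IntervalIntegrable φ volume (k : ℝ) ((k + 1 : ℕ) : ℝ) := by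
      apply ContinuousOn.intervalIntegrable; rw [Set.uIcc_of_le hkk]; exact hc.mono hsub2
    rw [← insert_Ioc_right_eq_Ioc_add_one hk, sum_insert (by simp),
      ← integral_add_adjacent_intervals hi1 hi2]
    have hd : ‖φ ((k + 1 : ℕ) : ℝ) - ∫ x in (k : ℝ)..((k + 1 : ℕ) : ℝ), φ x‖ ≤ M := by
      have e : φ ((k + 1 : ℕ) : ℝ) - ∫ x in (k : ℝ)..((k + 1 : ℕ) : ℝ), φ x =
        ∫ x in (k : ℝ)..((k + 1 : ℕ) : ℝ), (φ ((k + 1 : ℕ) : ℝ) - φ x) := by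
        rw [intervalIntegral.integral_sub (by simp) hi2]; simp
      rw [e]; refine (intervalIntegral.norm_integral_le_of_norm_le_const (C := M) ?_).trans (by simp)
      intro x hx; rw [Set.uIoc_of_le hkk] at hx; refine hM _ (hsub2 (by simp)) x (hsub2 ⟨hx.1.le, hx.2⟩) ?_
      obtain ⟨h1, h2⟩ := hx; push_cast at h2 ⊢; rw [abs_le]; constructor <;> linarith
    calc _ = ‖(∑ n ∈ Ioc N k, φ n - ∫ x in (N : ℝ)..k, φ x) +
          (φ ((k + 1 : ℕ) : ℝ) - ∫ x in (k : ℝ)..((k + 1 : ℕ) : ℝ), φ x)‖ := by congr 1; ring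
      _ ≤ _ := norm_add_le _ _
      _ ≤ (k - N) * M + M := by linarith
      _ = _ := by push_cast; ring

lemma abs_log_sub_le {N x y : ℝ} (hN : 0 < N) (hx : N ≤ x) (hy : N ≤ y) :
  |log x - log y| ≤ |x - y| / N := by
  wlog h : y ≤ x generalizing x y
  · rw [abs_sub_comm, abs_sub_comm x y]; exact this hy hx (by linarith)
  have hy0 : 0 < y := by linarith
  have hx0 : 0 < x := by linarith
  rw [abs_of_nonneg (sub_nonneg.2 (log_le_log hy0 h)), abs_of_nonneg (by linarith), ← log_div hx0.ne' hy0.ne']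
  have h1 := log_le_sub_one_of_pos (div_pos hx0 hy0)
  calc log (x / y) ≤ x / y - 1 := h1
    _ = (x - y) / y := by field_simp
    _ ≤ (x - y) / N := by apply div_le_div_of_nonneg_left (by linarith) hN hy

/-- The exponential sum estimate for `n^{-it}`, positive `t`. -/
lemma exp_sum_pos : ∀ᶠ L : ℝ in atTop, ∀ N N' : ℕ, exp (L ^ (19 / 20 : ℝ)) ≤ N → N ≤ N' →
  N' ≤ 2 * N → ∀ t : ℝ, 0 ≤ t → t ≤ exp L →
  ‖∑ n ∈ Ioc N N', ee (-t * log n) - ∫ x in (N : ℝ)..N', ee (-t * log x)‖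
    ≤ N * exp (-L ^ (1 / 2 : ℝ)) := by
  have E1 := ev_rpow (16 * 20 ^ 10) (1 / 2) (19 / 20) (by norm_num)
  have E2 := ev_rpow (2 * 32 * 8000) (1 / 2 + 3 / 20) (19 / 20) (by norm_num)
  have E3 := ev_rpow (20) (1 / 2) (19 / 20) (by norm_num); have E4 := ev_rpow 12 0 (1 / 20) (by norm_num)
  have E5 := ev_rpow 10 0 (1 / 2) (by norm_num)
  filter_upwards [E1, E2, E3, E4, E5, eventually_gt_atTop 1] with L E1 E2 E3 E4 E5 hL1
  intro N N' hN hNN hN' t ht0 ht; have hL0 : 0 < L := by linarith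
  set q := L ^ (1 / 2 : ℝ) with hq; set ℓ := L ^ (19 / 20 : ℝ) with hl; set κ := L ^ (1 / 20 : ℝ) with hκ
  rw [rpow_zero, mul_one] at E4 E5; have hNpos : (0 : ℝ) < N := lt_of_lt_of_le (exp_pos _) hN
  have hlog : ℓ ≤ log N := by rwa [le_log_iff_exp_le hNpos]
  set a := exp (log N / 100) with ha
  have hpow : ∀ k : ℕ, a ^ k = exp (k * log N / 100) := by intro k; rw [ha, ← exp_nat_mul]; congr 1; ring
  have haN : a ^ 100 = N := by
    rw [hpow]; push_cast; rw [mul_div_assoc, mul_div_cancel₀ _ (by norm_num)]; exact exp_log hNpos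
  have ha2 : 2 ≤ a := by
    have := add_one_le_exp (log N / 100); linarith
  have ha90 : a ^ 90 ≤ N * exp (-2 * q) := by
    rw [hpow]
    nth_rw 2 [← exp_log hNpos]
    rw [← exp_add]; apply exp_le_exp.2; push_cast; linarith
  have hsave : 8 * exp (-2 * q) ≤ exp (-q) := by
    have h1 : 8 ≤ exp q := by have := add_one_le_exp q; linarith
    have h2 : exp (-q) = exp q * exp (-2 * q) := by rw [← exp_add]; congr 1; ring
    rw [h2]; gcongr
  have hNN' : (N : ℝ) ≤ N' := mod_cast hNN; have hN'r : (N' : ℝ) ≤ 2 * N := mod_cast hN'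
  rcases lt_or_ge t (a ^ 90) with hc | hc
  · have h := sum_sub_int (fun x => ee (-t * log x)) N N' hNN (t / N)
      (cont_ee_log t (fun x hx => lt_of_lt_of_le hNpos hx.1)) (by
        intro x hx y hy hxy; refine (norm_ee_sub _ _).trans ?_
        rw [← mul_sub, abs_mul, abs_neg, abs_of_nonneg ht0]; have := abs_log_sub_le hNpos hx.1 hy.1
        have h2 : |x - y| / N ≤ 1 / N := by gcongr
        calc t * |log x - log y| ≤ t * (1 / N) := by gcongr; linarith
          _ = t / N := by ring)
    refine h.trans ?_
    calc ((N' : ℝ) - N) * (t / N) ≤ N * (t / N) := by gcongr; linarith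
      _ = t := by field_simp
      _ ≤ N * exp (-2 * q) := by linarith
      _ ≤ N * exp (-q) := by
        gcongr; have := exp_pos (-2 * q); linarith
  · have ht1 : 1 ≤ t := le_trans (one_le_pow₀ (by linarith)) hc; have htp : 0 < t := by linarith
    set J := max 2 ⌈log t / log N⌉₊ with hJ; have hJ2 : 2 ≤ J := le_max_left _ _
    have hlogt : 0 ≤ log t := log_nonneg ht1; have hlogtL : log t ≤ L := by rwa [log_le_iff_le_exp htp]
    have hlp : 0 < log N := by linarith
    have hJle : (J : ℝ) ≤ κ + 2 := by
      have h1 : log t / log N ≤ κ := by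
        rw [div_le_iff₀ hlp]
        calc log t ≤ L := hlogtL
          _ = κ * ℓ := by rw [hκ, hl, ← rpow_add hL0]; norm_num
          _ ≤ _ := by gcongr
      have h2 := Nat.ceil_lt_add_one (div_nonneg hlogt hlp.le); rw [hJ]; push_cast
      exact max_le (by linarith) (by linarith)
    have ht2 : t ≤ (N : ℝ) ^ J := by
      have h1 : log t / log N ≤ J := (Nat.le_ceil _).trans (mod_cast le_max_right _ _)
      rw [div_le_iff₀ hlp, ← log_pow] at h1; exact (log_le_log_iff htp (by positivity)).1 h1
    have ht3 : a ^ (100 * J) ≤ t * a ^ 110 := by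
      rcases le_or_gt ⌈log t / log N⌉₊ 2 with h | h
      · have : J = 2 := by rw [hJ]; omega
        rw [this]
        calc a ^ (100 * 2) = a ^ 90 * a ^ 110 := by rw [← pow_add]
          _ ≤ _ := by gcongr
      · have hJe : J = ⌈log t / log N⌉₊ := by rw [hJ]; omega
        have h2 := Nat.ceil_lt_add_one (div_nonneg hlogt hlp.le); rw [← hJe] at h2
        have h3 : ((J - 1 : ℕ) : ℝ) ≤ log t / log N := by rw [Nat.cast_sub (by omega)]; push_cast; linarith
        rw [le_div_iff₀ hlp, ← log_pow] at h3; have h4 := (log_le_log_iff (by positivity) htp).1 h3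
        rw [← haN, ← pow_mul] at h4
        calc a ^ (100 * J) = a ^ (100 * (J - 1)) * a ^ 100 := by rw [← pow_add]; congr 1; omega
          _ ≤ t * a ^ 110 := by
            gcongr
            · linarith
            · norm_num
    have hK : ((10 * J + 100 : ℕ) : ℝ) ≤ 20 * κ := by push_cast; linarith
    have hK10 : 16 * ((10 * J + 100 : ℕ) : ℝ) ^ 10 ≤ log N := by
      calc 16 * ((10 * J + 100 : ℕ) : ℝ) ^ 10 ≤ 16 * (20 * κ) ^ 10 := by gcongr
        _ = (16 * 20 ^ 10) * q := by
          rw [mul_pow, hκ, hq, ← rpow_natCast (L ^ (1 / 20 : ℝ)) 10, ← rpow_mul hL0.le]; norm_num; ring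
        _ ≤ _ := by linarith
    have hm := exp_core _ J N N' t a rfl hJ2 ha2 haN hN' hNN htp ht3 ht2 hK10
    have hexp : exp (-(log N / (32 * ((10 * J + 100 : ℕ) : ℝ) ^ 3))) ≤ exp (-2 * q) := by
      apply exp_le_exp.2; rw [neg_mul]; apply neg_le_neg; rw [le_div_iff₀ (by positivity)]
      calc 2 * q * (32 * ((10 * J + 100 : ℕ) : ℝ) ^ 3) ≤ 2 * q * (32 * (20 * κ) ^ 3) := by gcongr
        _ = (2 * 32 * 8000) * L ^ (1 / 2 + 3 / 20 : ℝ) := by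
          rw [mul_pow, hκ, hq, ← rpow_natCast (L ^ (1 / 20 : ℝ)) 3, ← rpow_mul hL0.le, rpow_add hL0]; norm_num
          ring
        _ ≤ _ := by linarith
    have hInt := int_osc t htp N N' hNpos hNN'
    have hint2 : ((N : ℝ) + N') / t ≤ 3 * a ^ 90 := by
      rw [div_le_iff₀ htp]
      calc (N : ℝ) + N' ≤ 3 * a ^ 100 := by linarith
        _ ≤ 3 * (a ^ 90 * a ^ 90) := by
          rw [← pow_add]; gcongr
          · linarith
          · norm_num
        _ ≤ _ := by rw [← mul_assoc]; gcongr
    have h90 : 1 ≤ a ^ 90 := one_le_pow₀ (by linarith); refine (norm_sub_le _ _).trans ?_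
    have : (N : ℝ) * (8 * exp (-2 * q)) ≤ N * exp (-q) := by gcongr
    have h9 : (N : ℝ) * exp (-(log N / (32 * ((10 * J + 100 : ℕ) : ℝ) ^ 3))) ≤ N * exp (-2 * q) := by gcongr
    linarith

lemma exp_sum : ∀ᶠ L : ℝ in atTop, ∀ N N' : ℕ, exp (L ^ (19 / 20 : ℝ)) ≤ N → N ≤ N' →
  N' ≤ 2 * N → ∀ t : ℝ, |t| ≤ exp L →
  ‖∑ n ∈ Ioc N N', ee (-t * log n) - ∫ x in (N : ℝ)..N', ee (-t * log x)‖
    ≤ N * exp (-L ^ (1 / 2 : ℝ)) := by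
  filter_upwards [exp_sum_pos] with L h; intro N N' h1 h2 h3 t ht
  rcases le_or_gt 0 t with h0 | h0
  · exact h N N' h1 h2 h3 t h0 (by rwa [abs_of_nonneg h0] at ht)
  · have h4 := h N N' h1 h2 h3 (-t) (by linarith) (by rwa [abs_of_neg h0] at ht)
    rw [← norm_conj, map_sub, map_sum, ← intervalIntegral.intervalIntegral_conj] at h4
    simpa [conj_ee] using h4

lemma abel_lip (e φ : ℝ → ℂ) (N N' : ℕ) (M E : ℝ) (hM : 0 ≤ M) (hN : N ≤ N')
  (hec : ContinuousOn e (Set.Icc (N : ℝ) N')) (he : ∀ x, ‖e x‖ ≤ 1)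
  (hφ : ∀ x ∈ Set.Icc (N : ℝ) N', ∀ y ∈ Set.Icc (N : ℝ) N', ‖φ x - φ y‖ ≤ M * |x - y|)
  (hE : ∀ k, N ≤ k → k ≤ N' → ‖∑ n ∈ Ioc N k, e n - ∫ x in (N : ℝ)..k, e x‖ ≤ E) :
  ‖∑ n ∈ Ioc N N', φ n * e n - ∫ x in (N : ℝ)..N', φ x * e x‖ ≤ ‖φ N'‖ * E + (N' - N) * (M * E + M) := by
  have hφc : ContinuousOn φ (Set.Icc (N : ℝ) N') := by
    have : LipschitzOnWith M.toNNReal φ (Set.Icc (N : ℝ) N') := by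
      apply LipschitzOnWith.of_dist_le_mul; intro x hx y hy; rw [dist_eq_norm, dist_eq, coe_toNNReal _ hM]
      exact hφ x hx y hy
    exact this.continuousOn
  have key : ∀ k, N ≤ k → k ≤ N' → ‖(∑ n ∈ Ioc N k, φ n * e n - ∫ x in (N : ℝ)..k, φ x * e x) -
    φ k * (∑ n ∈ Ioc N k, e n - ∫ x in (N : ℝ)..k, e x)‖ ≤ (k - N) * (M * E + M) := by
    intro k hk
    induction k, hk using Nat.le_induction with
    | base => intro _; simp
    | succ k hk ih =>
      intro hkN; have ih' := ih (by omega); have hk' : (N : ℝ) ≤ k := mod_cast hk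
      have hkN' : ((k + 1 : ℕ) : ℝ) ≤ N' := mod_cast hkN
      have hkk : (k : ℝ) ≤ ((k + 1 : ℕ) : ℝ) := by push_cast; linarith
      have s1 : Set.Icc (N : ℝ) k ⊆ Set.Icc (N : ℝ) N' := Set.Icc_subset_Icc_right (by linarith)
      have s2 : Set.Icc (k : ℝ) ((k + 1 : ℕ) : ℝ) ⊆ Set.Icc (N : ℝ) N' := Set.Icc_subset_Icc hk' hkN'
      have ii : ∀ f : ℝ → ℂ, ContinuousOn f (Set.Icc (N : ℝ) N') → IntervalIntegrable f volume (N : ℝ) k ∧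
        IntervalIntegrable f volume (k : ℝ) ((k + 1 : ℕ) : ℝ) := by
        intro f hf; constructor
        · apply ContinuousOn.intervalIntegrable; rw [Set.uIcc_of_le hk']; exact hf.mono s1
        · apply ContinuousOn.intervalIntegrable; rw [Set.uIcc_of_le hkk]; exact hf.mono s2
      obtain ⟨i1, i2⟩ := ii e hec; obtain ⟨i3, i4⟩ := ii (fun x => φ x * e x) (hφc.mul hec)
      rw [← insert_Ioc_right_eq_Ioc_add_one hk, sum_insert (by simp), sum_insert (by simp),
        ← integral_add_adjacent_intervals i1 i2,
        ← integral_add_adjacent_intervals i3 i4]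
      have hd : ‖∫ x in (k : ℝ)..((k + 1 : ℕ) : ℝ), (φ ((k + 1 : ℕ) : ℝ) * e x - φ x * e x)‖ ≤ M := by
        refine (intervalIntegral.norm_integral_le_of_norm_le_const (C := M) ?_).trans (by simp); intro x hx
        rw [Set.uIoc_of_le hkk] at hx; rw [← sub_mul, norm_mul]
        have h1 := hφ _ (s2 (Set.right_mem_Icc.2 hkk)) x (s2 ⟨hx.1.le, hx.2⟩)
        have h2 : |((k + 1 : ℕ) : ℝ) - x| ≤ 1 := by
          obtain ⟨h1, h2⟩ := hx; push_cast at h2 ⊢; rw [abs_le]; constructor <;> linarith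
        calc ‖φ ((k + 1 : ℕ) : ℝ) - φ x‖ * ‖e x‖ ≤ (M * 1) * 1 := by
              gcongr
              · exact h1.trans (by gcongr)
              · exact he x
          _ = M := by ring
      have hd2 : ‖(φ k - φ ((k + 1 : ℕ) : ℝ)) * (∑ n ∈ Ioc N k, e n - ∫ x in (N : ℝ)..k, e x)‖ ≤ M * E := by
        rw [norm_mul]; have h1 := hφ k (s2 (Set.left_mem_Icc.2 hkk)) _ (s2 (Set.right_mem_Icc.2 hkk))
        have h2 : |(k : ℝ) - ((k + 1 : ℕ) : ℝ)| = 1 := by push_cast; simp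
        rw [h2, mul_one] at h1; exact mul_le_mul h1 (hE k hk (by omega)) (norm_nonneg _) hM
      rw [intervalIntegral.integral_sub (i2.const_mul _) i4, intervalIntegral.integral_const_mul] at hd
      have := (norm_add₃_le (a := (∑ n ∈ Ioc N k, φ n * e n - ∫ x in (N : ℝ)..k, φ x * e x) -
        φ k * (∑ n ∈ Ioc N k, e n - ∫ x in (N : ℝ)..k, e x))
        (b := (φ k - φ ((k + 1 : ℕ) : ℝ)) * (∑ n ∈ Ioc N k, e n - ∫ x in (N : ℝ)..k, e x))
        (c := φ ((k + 1 : ℕ) : ℝ) * (∫ x in (k : ℝ)..((k + 1 : ℕ) : ℝ), e x) -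
          ∫ x in (k : ℝ)..((k + 1 : ℕ) : ℝ), φ x * e x))
      refine le_trans (le_of_eq ?_) (this.trans ?_)
      · congr 1; ring
      · push_cast at *; linarith
  have h1 := key N' hN le_rfl; have h2 := hE N' hN le_rfl
  have h3 := norm_add_le ((∑ n ∈ Ioc N N', φ n * e n - ∫ x in (N : ℝ)..N', φ x * e x) -
    φ N' * (∑ n ∈ Ioc N N', e n - ∫ x in (N : ℝ)..N', e x))
    (φ N' * (∑ n ∈ Ioc N N', e n - ∫ x in (N : ℝ)..N', e x))
  rw [sub_add_cancel, norm_mul] at h3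
  have h4 : ‖φ N'‖ * ‖∑ n ∈ Ioc N N', e n - ∫ x in (N : ℝ)..N', e x‖ ≤ ‖φ N'‖ * E := by gcongr
  linarith

lemma exp_lip : ∀ᶠ L : ℝ in atTop, ∀ N N' : ℕ, exp (L ^ (19 / 20 : ℝ)) ≤ N → N ≤ N' →
  N' ≤ 2 * N → ∀ t : ℝ, |t| ≤ exp L → ∀ (φ : ℝ → ℂ) (M : ℝ), 0 ≤ M →
  (∀ x ∈ Set.Icc (N : ℝ) N', ∀ y ∈ Set.Icc (N : ℝ) N', ‖φ x - φ y‖ ≤ M * |x - y|) →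
  ‖∑ n ∈ Ioc N N', φ n * ee (-t * log n) - ∫ x in (N : ℝ)..N', φ x * ee (-t * log x)‖
    ≤ (‖φ N'‖ + M * N) * N * exp (-L ^ (1 / 2 : ℝ)) + M * N := by
  filter_upwards [exp_sum] with L h; intro N N' h1 h2 h3 t ht φ M hM hφ
  have hNpos : (0 : ℝ) < N := lt_of_lt_of_le (exp_pos _) h1
  have h5 := abel_lip (fun x => ee (-t * log x)) φ N N' M (N * exp (-L ^ (1 / 2 : ℝ))) hM h2
    (cont_ee_log t (fun x hx => lt_of_lt_of_le hNpos hx.1)) (fun x => (norm_ee _).le) hφ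
    (fun k hk hk' => h N k h1 hk (by omega) t ht)
  refine h5.trans ?_
  have hN' : (N' : ℝ) - N ≤ N := by
    have : (N' : ℝ) ≤ 2 * N := mod_cast h3; linarith
  calc ‖φ N'‖ * (N * exp (-L ^ (1 / 2 : ℝ))) + (N' - N) * (M * (N * exp (-L ^ (1 / 2 : ℝ))) + M)
      ≤ ‖φ N'‖ * (N * exp (-L ^ (1 / 2 : ℝ))) + N * (M * (N * exp (-L ^ (1 / 2 : ℝ))) + M) := by gcongr
    _ = _ := by ring

lemma cpow_split (s : ℂ) (x : ℝ) (hx : 0 < x) : (x : ℂ) ^ (-s) = ((x ^ (-s.re) : ℝ) : ℂ) * ee (-s.im * log x) := by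
  rw [ee_log _ _ hx, ofReal_cpow hx.le, ← cpow_add _ _ (mod_cast hx.ne')]; congr 1; apply Complex.ext <;> simp

lemma rpow_lip (σ : ℝ) (hσ : 0 ≤ σ) {N x y : ℝ} (hN : 0 < N) (hx : N ≤ x) (hy : N ≤ y) :
  |x ^ (-σ) - y ^ (-σ)| ≤ σ * N ^ (-σ - 1) * |x - y| := by
  have := Convex.norm_image_sub_le_of_norm_hasDerivWithin_le (s := Set.Ici N)
    (f := fun x : ℝ => x ^ (-σ)) (f' := fun x => (-σ) * x ^ (-σ - 1)) (C := σ * N ^ (-σ - 1))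
    (fun z hz => by
      have hz0 : 0 < z := lt_of_lt_of_le hN hz
      exact (hasDerivAt_rpow_const (Or.inl hz0.ne')).hasDerivWithinAt)
    (fun z hz => by
      have hz0 : 0 < z := lt_of_lt_of_le hN hz
      rw [norm_mul, norm_neg, norm_of_nonneg hσ, norm_of_nonneg (by positivity)]
      apply mul_le_mul_of_nonneg_left _ hσ; exact rpow_le_rpow_of_nonpos hN hz (by linarith))
    (convex_Ici N) hy hx
  simpa [norm_eq_abs] using this

lemma cpow_lip (s : ℂ) (hσ : 0 ≤ s.re) {N x y : ℝ} (hN : 0 < N) (hx : N ≤ x) (hy : N ≤ y) :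
  ‖(x : ℂ) ^ (-s) - (y : ℂ) ^ (-s)‖ ≤ ‖s‖ * N ^ (-s.re - 1) * |x - y| := by
  have := Convex.norm_image_sub_le_of_norm_hasDerivWithin_le (s := Set.Ici N)
    (f := fun x : ℝ => (x : ℂ) ^ (-s)) (f' := fun x => (-s) * (x : ℂ) ^ (-s - 1))
    (C := ‖s‖ * N ^ (-s.re - 1))
    (fun z hz => by
      have hz0 : 0 < z := lt_of_lt_of_le hN hz
      rcases eq_or_ne s 0 with rfl | hs
      · simpa using hasDerivWithinAt_const _ _ _
      have := (hasDerivAt_ofReal_cpow_const' hz0.ne' (r := -s - 1) (by simpa using hs))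
      have h2 := this.const_mul (-s); simp only [sub_add_cancel] at h2
      have h3 : (fun x : ℝ => (x : ℂ) ^ (-s)) = fun x : ℝ => -s * ((x : ℂ) ^ (-s) / -s) := by ext x; field_simp
      rw [h3]; exact h2.hasDerivWithinAt)
    (fun z hz => by
      have hz0 : 0 < z := lt_of_lt_of_le hN hz; rw [norm_mul, norm_neg, norm_cpow_eq_rpow_re_of_pos hz0]
      apply mul_le_mul_of_nonneg_left _ (norm_nonneg _)
      simpa using rpow_le_rpow_of_nonpos hN hz (by linarith : -s.re - 1 ≤ 0))
    (convex_Ici N) hy hx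
  simpa [norm_eq_abs] using this

/-! ### Bounds for zeta near the line one -/

/-- Partial sums of the series for `ζ(s) - 1 - 1/(s-1)`. -/
def SZ (k : ℕ) (s : ℂ) : ℂ := ∑ n ∈ Ioc 1 k, (n : ℂ) ^ (-s) - ∫ x in (1 : ℝ)..k, (x : ℂ) ^ (-s)

lemma cont_cpow_neg (s : ℂ) {S : Set ℝ} (hS : ∀ x ∈ S, 0 < x) : ContinuousOn (fun x : ℝ => (x : ℂ) ^ (-s)) S := by
  intro x hx; apply ContinuousAt.continuousWithinAt
  exact Complex.continuousAt_ofReal_cpow_const x (-s) (Or.inr (hS x hx).ne')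

lemma SZ_sub (s : ℂ) (N k : ℕ) (hN : 1 ≤ N) (hk : N ≤ k) :
  SZ k s - SZ N s = ∑ n ∈ Ioc N k, ((n : ℝ) : ℂ) ^ (-s) - ∫ x in (N : ℝ)..k, (x : ℂ) ^ (-s) := by
  have h1 : (1 : ℝ) ≤ N := mod_cast hN; have h2 : (N : ℝ) ≤ k := mod_cast hk
  have i1 : IntervalIntegrable (fun x : ℝ => (x : ℂ) ^ (-s)) volume 1 N := by
    apply ContinuousOn.intervalIntegrable; rw [Set.uIcc_of_le h1]
    exact cont_cpow_neg s (fun x hx => by linarith [hx.1])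
  have i2 : IntervalIntegrable (fun x : ℝ => (x : ℂ) ^ (-s)) volume N k := by
    apply ContinuousOn.intervalIntegrable; rw [Set.uIcc_of_le h2]
    exact cont_cpow_neg s (fun x hx => by linarith [hx.1])
  rw [SZ, SZ, ← integral_add_adjacent_intervals i1 i2, ← Ioc_union_Ioc_eq_Ioc hN hk, sum_union]
  · push_cast; ring
  · rw [disjoint_left]; intro a ha hb; simp only [mem_Ioc] at ha hb; omega

lemma SZ_diff_le (s : ℂ) (hs : 0 ≤ s.re) (N k : ℕ) (hN : 1 ≤ N) (hk : N ≤ k) :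
  ‖SZ k s - SZ N s‖ ≤ (k - N) * (‖s‖ * (N : ℝ) ^ (-s.re - 1)) := by
  have h1 : (1 : ℝ) ≤ N := mod_cast hN; rw [SZ_sub s N k hN hk]
  have := sum_sub_int (fun x => (x : ℂ) ^ (-s)) N k hk (‖s‖ * (N : ℝ) ^ (-s.re - 1))
    (cont_cpow_neg s (fun x hx => by linarith [hx.1])) (by
      intro x hx y hy hxy; refine (cpow_lip s hs (by linarith) hx.1 hy.1).trans ?_
      exact mul_le_of_le_one_right (by positivity) hxy)
  exact this

/-- Trivial bound for the initial segment. -/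
lemma SZ_triv (s : ℂ) (hs : 0 ≤ s.re) (A : ℝ) (k N : ℕ) (hk : 1 ≤ k) (hkN : k ≤ N)
  (hA : ∀ x : ℝ, 1 ≤ x → x ≤ N → x ^ (-s.re) ≤ A / x) :
  ‖SZ k s‖ ≤ 2 * A * (1 + log k) := by
  have h1A : 0 ≤ A := by
    have := hA 1 le_rfl (mod_cast hk.trans hkN); simp at this; linarith
  have key : ∀ k : ℕ, 1 ≤ k → k ≤ N → ‖SZ k s‖ ≤ 2 * A * (harmonic (k - 1) : ℚ) := by
    intro k hk
    induction k, hk using Nat.le_induction with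
    | base => intro _; simp [SZ]
    | succ k hk ih =>
      intro hkN; have ih' := ih (by omega); have h1 : (1 : ℝ) ≤ k := mod_cast hk
      have hkk : (k : ℝ) ≤ ((k + 1 : ℕ) : ℝ) := by push_cast; linarith
      have e : SZ (k + 1) s = SZ k s + (SZ (k + 1) s - SZ k s) := by ring
      have hA' := hA k h1 (mod_cast (by omega : k ≤ N))
      have hb : ‖SZ (k + 1) s - SZ k s‖ ≤ 2 * (A / k) := by
        rw [SZ_sub s k (k + 1) hk (by omega)]; refine (norm_sub_le _ _).trans ?_
        have b1 : ‖∑ n ∈ Ioc k (k + 1), ((n : ℝ) : ℂ) ^ (-s)‖ ≤ A / k := by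
          rw [Nat.Ioc_succ_singleton, sum_singleton, norm_cpow_eq_rpow_re_of_pos (by positivity)]
          refine le_trans ?_ hA'
          simpa using rpow_le_rpow_of_nonpos (by linarith) hkk (by linarith : -s.re ≤ 0)
        have b2 : ‖∫ x in (k : ℝ)..((k + 1 : ℕ) : ℝ), (x : ℂ) ^ (-s)‖ ≤ A / k := by
          refine (intervalIntegral.norm_integral_le_of_norm_le_const (C := A / k) ?_).trans (by simp)
          intro x hx; rw [Set.uIoc_of_le hkk] at hx; rw [norm_cpow_eq_rpow_re_of_pos (by linarith [hx.1])]
          refine le_trans ?_ hA'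
          simpa using rpow_le_rpow_of_nonpos (by linarith) hx.1.le (by linarith : -s.re ≤ 0)
        linarith
      have hh : ((harmonic (k + 1 - 1) : ℚ) : ℝ) = (harmonic (k - 1) : ℚ) + 1 / k := by
        obtain ⟨m, rfl⟩ : ∃ m, k = m + 1 := ⟨k - 1, by omega⟩; simp [harmonic_succ]
      rw [e, hh]; refine (norm_add_le _ _).trans ?_
      have : 2 * A * ((harmonic (k - 1) : ℚ) + 1 / (k : ℝ)) = 2 * A * (harmonic (k - 1) : ℚ) + 2 * (A / k) := by ring
      rw [this]; linarith
  refine (key k hk hkN).trans ?_; gcongr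
  have h2 : ((harmonic (k - 1) : ℚ) : ℝ) ≤ (harmonic k : ℚ) := by
    have : harmonic (k - 1) ≤ harmonic k := by
      obtain ⟨m, rfl⟩ : ∃ m, k = m + 1 := ⟨k - 1, by omega⟩; simp only [harmonic_succ, Nat.add_sub_cancel]
      have : (0 : ℚ) ≤ ((m + 1 : ℕ) : ℚ)⁻¹ := by positivity
      linarith
    exact_mod_cast this
  exact h2.trans (harmonic_le_one_add_log k)

/-- Comparison of very long ranges with the integral. -/
lemma SZ_tail (s : ℂ) (hs : 1 / 2 ≤ s.re) (N k : ℕ) (hN : 1 ≤ N) (hk : N ≤ k) :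
  ‖SZ k s - SZ N s‖ ≤ 3 * ‖s‖ * ((N : ℝ) ^ (-(1/2) : ℝ)) * 2 := by
  have key : ‖SZ k s - SZ N s‖ ≤ 6 * ‖s‖ * ((N : ℝ) ^ (-(1/2) : ℝ) - (k : ℝ) ^ (-(1/2) : ℝ)) := by
    induction k, hk using Nat.le_induction with
    | base => simp
    | succ k hk ih =>
      have h1 : (1 : ℝ) ≤ k := mod_cast hN.trans hk
      have h2 := SZ_diff_le s (by linarith) k (k + 1) (by omega) (by omega)
      have e : SZ (k + 1) s - SZ N s = (SZ k s - SZ N s) + (SZ (k + 1) s - SZ k s) := by ring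
      rw [e]; refine (norm_add_le _ _).trans ?_
      have h3 : (k : ℝ) ^ (-s.re - 1) ≤ 6 * ((k : ℝ) ^ (-(1/2) : ℝ) - ((k + 1 : ℕ) : ℝ) ^ (-(1/2) : ℝ)) := by
        have ha : (k : ℝ) ^ (-s.re - 1) ≤ (k : ℝ) ^ (-1 - (1/2) : ℝ) := by
          apply rpow_le_rpow_of_exponent_le h1; linarith
        have hb : (k : ℝ) ^ (-1 - (1/2) : ℝ) = (√k)⁻¹ / k := by
          rw [sub_eq_add_neg, rpow_add (by linarith), rpow_neg_one, rpow_neg (by linarith), sqrt_eq_rpow]; ring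
        have hc : ∀ x : ℝ, 0 ≤ x → x ^ (-(1/2) : ℝ) = (√x)⁻¹ := by intro x hx; rw [rpow_neg hx, sqrt_eq_rpow]
        rw [hc _ (by linarith), hc _ (by positivity)]; refine ha.trans ?_; rw [hb]; set u := √(k : ℝ) with hu
        set v := √((k + 1 : ℕ) : ℝ) with hv; have hu2 : u ^ 2 = k := sq_sqrt (by linarith)
        have hv2 : v ^ 2 = k + 1 := by rw [hv, sq_sqrt (by positivity)]; push_cast; ring
        have hu1 : 1 ≤ u := by rw [hu]; exact one_le_sqrt.2 h1
        have huv : u ≤ v := sqrt_le_sqrt (by push_cast; linarith); have hv1 : v ≤ 3/2 * u := by nlinarith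
        rw [← hu2]
        have : u⁻¹ - v⁻¹ = 1 / (u * v * (u + v)) := by
          have h7 : v ^ 2 - u ^ 2 = 1 := by linarith
          rw [inv_sub_inv (by positivity) (by positivity), div_eq_div_iff (by positivity) (by positivity)]
          linear_combination (u * v) * h7
        rw [this, inv_eq_one_div, div_div, ← mul_div_assoc, div_le_div_iff₀ (by positivity) (by positivity)]
        have h6 : u * v * (u + v) ≤ u * (3/2*u) * (u + 3/2*u) := by gcongr
        have : 0 < u ^ 3 := by positivity
        nlinarith
      have h4 : (((k + 1 : ℕ) : ℝ) - k) * (‖s‖ * (k : ℝ) ^ (-s.re - 1)) ≤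
        ‖s‖ * (6 * ((k : ℝ) ^ (-(1/2) : ℝ) - ((k + 1 : ℕ) : ℝ) ^ (-(1/2) : ℝ))) := by
        have : ((k + 1 : ℕ) : ℝ) - k = 1 := by push_cast; ring
        rw [this, one_mul]; gcongr
      linarith
  have : 0 ≤ 6 * ‖s‖ * (k : ℝ) ^ (-(1/2) : ℝ) := by positivity
  linarith

lemma SZ_bound : ∀ᶠ L : ℝ in atTop, ∀ s : ℂ, 1 - L ^ (-(19 / 20) : ℝ) ≤ s.re → s.re ≤ 2 →
  |s.im| ≤ exp L → ∀ k : ℕ, 1 ≤ k → ‖SZ k s‖ ≤ 2 * L := by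
  have E0 := ev_rpow 100 (-(19/20)) 0 (by norm_num); have E1 := ev_rpow 100 (1/20) (1/2) (by norm_num)
  have E2 := ev_rpow 100 (19/20) 1 (by norm_num); have E3 := ev_rpow 100 0 (1/20) (by norm_num)
  have E4 : ∀ᶠ L : ℝ in atTop, L ≤ exp (L ^ (1/2 : ℝ) / 10) := by
    have := (tendsto_exp_div_pow_atTop 2).comp ((tendsto_rpow_atTop (show (0:ℝ) < 1/2 by norm_num)).atTop_div_const (show (0:ℝ) < 10 by norm_num))
    filter_upwards [this.eventually_ge_atTop 100, eventually_gt_atTop 0] with L h h0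
    simp only [Function.comp] at h; have hp : 0 < L ^ (1/2 : ℝ) := by positivity
    rw [le_div_iff₀ (by positivity)] at h
    have h2 : (L ^ (1/2 : ℝ)) ^ 2 = L := by rw [← rpow_natCast, ← rpow_mul h0.le]; norm_num
    rw [div_pow, h2] at h; linarith
  filter_upwards [exp_lip, E0, E1, E2, E3, E4, eventually_ge_atTop 100] with L hexp E0 E1 E2 E3 E4 hL1
  intro s hs1 hs2 hst k hk; have hL0 : 0 < L := by linarith
  rw [rpow_zero] at E0 E3; rw [rpow_one] at E2; rw [mul_one] at E3; set ℓ := L ^ (19 / 20 : ℝ) with hℓ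
  set d := L ^ (-(19 / 20) : ℝ) with hd; set q := L ^ (1 / 2 : ℝ) with hq; set κ := L ^ (1 / 20 : ℝ) with hκ
  have hdℓ : d * ℓ = 1 := by rw [hd, hℓ, ← rpow_add hL0]; norm_num
  have hdL : d * L = κ := by
    calc d * L = L ^ (-(19 / 20) : ℝ) * L ^ (1 : ℝ) := by rw [rpow_one]
      _ = κ := by rw [hκ, ← rpow_add hL0]; norm_num
  have hd0 : 0 < d := by positivity
  have hℓ1 : 100 ≤ ℓ := by nlinarith
  have hσ : 1 / 2 ≤ s.re := by linarith
  set N₀ := ⌈exp ℓ⌉₊; have hN₀l : exp ℓ ≤ N₀ := Nat.le_ceil _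
  have hN₀p : (0 : ℝ) < N₀ := lt_of_lt_of_le (exp_pos _) hN₀l; have hN₀1 : 1 ≤ N₀ := mod_cast hN₀p
  have hN₀u : log N₀ ≤ ℓ + 1 := by
    rw [log_le_iff_le_exp hN₀p, exp_add]; have h1 := Nat.ceil_lt_add_one (exp_pos ℓ).le
    have h2 := add_one_le_exp ℓ; have h3 := add_one_le_exp 1; nlinarith
  have hrpow : ∀ x : ℝ, 1 ≤ x → ∀ B : ℝ, d * log x ≤ B → x ^ (-s.re) ≤ exp B / x := by
    intro x hx B hB; have hx0 : 0 < x := by linarith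
    have hlx : 0 ≤ log x := log_nonneg hx; rw [le_div_iff₀ hx0]
    nth_rw 2 [← exp_log hx0]
    rw [rpow_def_of_pos hx0, ← exp_add]; apply exp_le_exp.2; nlinarith
  -- initial segment
  have init : ∀ k : ℕ, 1 ≤ k → k ≤ N₀ → ‖SZ k s‖ ≤ L := by
    intro k hk hkN
    have h := SZ_triv s (by linarith) (exp 2) k N₀ hk hkN (by
      intro x hx hxN; apply hrpow x hx; have : log x ≤ ℓ + 1 := (log_le_log (by linarith) hxN).trans hN₀u
      nlinarith)
    refine h.trans ?_; have h1 : log k ≤ ℓ + 1 := (log_le_log (mod_cast hk) (mod_cast hkN)).trans hN₀u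
    have h2 : exp 2 ≤ 8 := by
      have := exp_one_lt_d9; have e : exp 2 = exp 1 * exp 1 := by rw [← exp_add]; norm_num
      have := exp_pos 1; rw [e]; nlinarith
    calc 2 * exp 2 * (1 + log k) ≤ 2 * 8 * (1 + (ℓ + 1)) := by gcongr
      _ ≤ L := by nlinarith
  -- a dyadic block
  have block : ∀ N k : ℕ, N₀ ≤ N → (N : ℝ) ≤ exp (4 * L) → N ≤ k → k ≤ 2 * N → ‖SZ k s - SZ N s‖ ≤ 1 / (100 * L) := by
    intro N k hN hNu hNk hk2; have hN1 : 1 ≤ N := by omega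
    have hNp : (0 : ℝ) < N := mod_cast hN1; have hNe : exp ℓ ≤ N := hN₀l.trans (mod_cast hN)
    rw [SZ_sub s N k hN1 hNk]
    have h := hexp N k hNe hNk hk2 s.im hst (fun x => ((x ^ (-s.re) : ℝ) : ℂ))
      (s.re * (N : ℝ) ^ (-s.re - 1)) (by positivity) (by
        intro x hx y hy; rw [← ofReal_sub, norm_real]; exact rpow_lip s.re (by linarith) hNp hx.1 hy.1)
    have e1 : ∑ n ∈ Ioc N k, ((n : ℝ) : ℂ) ^ (-s) =
      ∑ n ∈ Ioc N k, (((n : ℝ) ^ (-s.re) : ℝ) : ℂ) * ee (-s.im * log n) := by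
      apply sum_congr rfl; intro n hn; rw [mem_Ioc] at hn; exact cpow_split s n (mod_cast (by omega : 0 < n))
    have e2 : ∫ x in (N : ℝ)..k, (x : ℂ) ^ (-s) = ∫ x in (N : ℝ)..k, ((x ^ (-s.re) : ℝ) : ℂ) * ee (-s.im * log x) := by
      apply integral_congr; intro x hx; rw [Set.uIcc_of_le (mod_cast hNk)] at hx
      exact cpow_split s x (by linarith [hx.1])
    rw [e1, e2]; refine h.trans ?_
    have hb : (N : ℝ) ^ (-s.re) ≤ exp (4 * κ) / N := by
      apply hrpow N (mod_cast hN1); have : log N ≤ 4 * L := by rwa [log_le_iff_le_exp hNp]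
      nlinarith
    have hb2 : (N : ℝ) ^ (-s.re - 1) * N = (N : ℝ) ^ (-s.re) := by
      nth_rw 2 [← rpow_one (N : ℝ)]
      rw [← rpow_add hNp]; ring_nf
    have hk3 : ‖(((k : ℝ) ^ (-s.re) : ℝ) : ℂ)‖ ≤ (N : ℝ) ^ (-s.re) := by
      rw [norm_real, norm_of_nonneg (by positivity)]
      exact rpow_le_rpow_of_nonpos hNp (mod_cast hNk) (by linarith)
    set E := exp (-q) with hE; set T := (N : ℝ) ^ (-s.re)
    have f1 : s.re * (N : ℝ) ^ (-s.re - 1) * N ≤ 2 * T := by rw [mul_assoc, hb2]; gcongr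
    have f2 : T * N ≤ exp (4 * κ) := by rwa [le_div_iff₀ hNp] at hb
    have f3 : T ≤ exp (4 * κ) * E := by
      refine hb.trans ?_; rw [div_eq_mul_inv, hE, exp_neg]; gcongr; refine (exp_le_exp.2 ?_).trans hNe
      have : q ≤ ℓ := by rw [hq, hℓ]; apply rpow_le_rpow_of_exponent_le <;> linarith
      exact this
    have f4 : exp (4 * κ) * E ≤ 1 / (500 * L ^ 2) := by
      have : exp (4 * κ) * E ≤ exp (-(q / 10) * 9) := by rw [hE, ← exp_add]; apply exp_le_exp.2; linarith
      refine this.trans ?_; rw [mul_comm, mul_neg, exp_neg, one_div]; gcongr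
      have e9 : exp (9 * (q / 10)) = (exp (q / 10)) ^ 9 := by rw [← exp_nat_mul]; norm_num
      rw [e9]
      calc 500 * L ^ 2 ≤ L ^ 2 * L ^ 2 := by gcongr; nlinarith
        _ = L ^ 4 := by ring
        _ ≤ L ^ 9 := pow_le_pow_right₀ (by linarith) (by norm_num)
        _ ≤ _ := by gcongr
    calc _ ≤ (T + 2 * T) * N * E + 2 * T := by gcongr
      _ = 3 * (T * N) * E + 2 * T := by ring
      _ ≤ 3 * exp (4 * κ) * E + 2 * (exp (4 * κ) * E) := by gcongr
      _ = 5 * (exp (4 * κ) * E) := by ring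
      _ ≤ 5 * (1 / (500 * L ^ 2)) := by gcongr
      _ = 1 / (100 * L) * (1 / L) := by field_simp; norm_num
      _ ≤ 1 / (100 * L) * 1 := by
        gcongr; rw [div_le_one hL0]; linarith
      _ = _ := by ring
  have dy : ∀ j : ℕ, (N₀ * 2 ^ j : ℝ) ≤ exp (4 * L) → ∀ k : ℕ, 1 ≤ k → k ≤ N₀ * 2 ^ (j + 1) →
    ‖SZ k s‖ ≤ L + (j + 1) * (1 / (100 * L)) := by
    intro j
    induction j with
    | zero =>
      intro hj k hk hk2
      rcases le_total k N₀ with h | h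
      · have := init k hk h; have : 0 ≤ ((0 : ℕ) + 1) * (1 / (100 * L)) := by positivity
        push_cast at *; linarith
      · have h1 := block N₀ k le_rfl (by simpa using hj) h (by simpa [mul_comm] using hk2)
        have h2 := init N₀ hN₀1 le_rfl; have := norm_add_le (SZ k s - SZ N₀ s) (SZ N₀ s)
        rw [sub_add_cancel] at this; simp only [Nat.cast_zero, zero_add, one_mul]; linarith
    | succ j ih =>
      intro hj k hk hk2
      have hj' : (N₀ * 2 ^ j : ℝ) ≤ exp (4 * L) := by
        refine le_trans ?_ hj; gcongr
        · norm_num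
        · omega
      rcases le_total k (N₀ * 2 ^ (j + 1)) with h | h
      · have := ih hj' k hk h; have : 0 ≤ 1 / (100 * L) := by positivity
        push_cast at *; linarith
      · have hp : 1 ≤ 2 ^ (j + 1) := Nat.one_le_two_pow
        have h1 := block (N₀ * 2 ^ (j + 1)) k (by nlinarith) (by push_cast; exact hj) h
          (by rw [pow_succ] at hk2; linarith)
        have h2 := ih hj' (N₀ * 2 ^ (j + 1)) (by nlinarith) le_rfl
        have := norm_add_le (SZ k s - SZ (N₀ * 2 ^ (j + 1)) s) (SZ (N₀ * 2 ^ (j + 1)) s)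
        rw [sub_add_cancel] at this; push_cast; linarith
  set j := ⌊3 * L⌋₊; have hjl : (j : ℝ) ≤ 3 * L := Nat.floor_le (by linarith)
  have hjg : 3 * L < j + 1 := Nat.lt_floor_add_one _
  have h2pow : (2 : ℝ) ^ j ≤ exp (3 * L) := by
    calc (2 : ℝ) ^ j ≤ (exp 1) ^ j := by gcongr; have := add_one_le_exp 1; linarith
      _ = exp j := by rw [← exp_nat_mul]; simp
      _ ≤ _ := exp_le_exp.2 hjl
  have hN₀L : (N₀ : ℝ) ≤ exp L := by rw [← log_le_iff_le_exp hN₀p]; nlinarith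
  have hj4 : (N₀ * 2 ^ j : ℝ) ≤ exp (4 * L) := by
    calc (N₀ * 2 ^ j : ℝ) ≤ exp L * exp (3 * L) := by gcongr
      _ = _ := by rw [← exp_add]; ring_nf
  have hdy := dy j hj4
  have hdyb : L + ((j : ℝ) + 1) * (1 / (100 * L)) ≤ L + 1 := by
    have : ((j : ℝ) + 1) * (1 / (100 * L)) ≤ (100 * L) * (1 / (100 * L)) := by gcongr; linarith
    have h2 : (100 * L) * (1 / (100 * L)) = 1 := by field_simp
    linarith
  rcases le_total k (N₀ * 2 ^ (j + 1)) with h | h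
  · have := hdy k hk h; linarith
  · set N := N₀ * 2 ^ (j + 1) with hN
    have hN1 : 1 ≤ N := by have : 1 ≤ 2 ^ (j + 1) := Nat.one_le_two_pow
                           nlinarith
    have h1 := hdy N hN1 le_rfl; have h2 := SZ_tail s hσ N k hN1 h
    have hsn : ‖s‖ ≤ 2 * exp L := by
      have := Complex.norm_le_abs_re_add_abs_im s; rw [abs_of_nonneg (by linarith)] at this
      have := add_one_le_exp L; linarith
    have hNbig : exp (2 * L) ≤ N := by
      have h5 : (2 : ℝ) ^ (j + 1) ≥ exp (2 * L) := by
        have : (2 : ℝ) = exp (log 2) := (exp_log (by norm_num)).symm; rw [this, ← exp_nat_mul]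
        apply exp_le_exp.2; have := log_two_gt_d9; push_cast; nlinarith
      have : (1 : ℝ) ≤ N₀ := mod_cast hN₀1; rw [hN]; push_cast; nlinarith [exp_pos (2 * L)]
    have hNr : (N : ℝ) ^ (-(1/2) : ℝ) ≤ exp (-L) := by
      calc (N : ℝ) ^ (-(1/2) : ℝ) ≤ (exp (2 * L)) ^ (-(1/2) : ℝ) :=
            rpow_le_rpow_of_nonpos (exp_pos _) hNbig (by norm_num)
        _ = exp (-L) := by rw [← exp_mul]; ring_nf
    have h3 : 3 * ‖s‖ * ((N : ℝ) ^ (-(1/2) : ℝ)) * 2 ≤ 12 := by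
      calc 3 * ‖s‖ * ((N : ℝ) ^ (-(1/2) : ℝ)) * 2 ≤ 3 * (2 * exp L) * exp (-L) * 2 := by gcongr
        _ = 12 * (exp L * exp (-L)) := by ring
        _ = 12 := by rw [← exp_add]; simp
    have := norm_add_le (SZ k s - SZ N s) (SZ N s); rw [sub_add_cancel] at this; linarith

/-- The terms of the series `(s-1) ∑ₙ (n^{-s} - ∫_{n-1}^n x^{-s} dx)`; entire in `s`. -/
def zw (m : ℕ) (s : ℂ) : ℂ := (s - 1) * ((m : ℂ) + 2) ^ (-s) + ((m : ℂ) + 2) ^ (1 - s) - ((m : ℂ) + 1) ^ (1 - s)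

/-- `(s-1)ζ(s)` as an explicit series in the half-plane `Re s > 1/2`. -/
def zeta1 (s : ℂ) : ℂ := s + ∑' m, zw m s

/-- The half-plane `Re s > 1/2`. -/
def HP : Set ℂ := {s | 1 / 2 < s.re}

lemma isOpen_HP : IsOpen HP := isOpen_lt continuous_const Complex.continuous_re

lemma sum_zw (s : ℂ) (k : ℕ) : ∑ m ∈ range k, zw m s = (s - 1) * SZ (k + 1) s := by
  induction k with
  | zero => simp [SZ]
  | succ k ih =>
    rw [sum_range_succ, ih]; have h := SZ_sub s (k + 1) (k + 1 + 1) (by omega) (by omega)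
    rw [Nat.Ioc_succ_singleton, sum_singleton] at h
    have h2 : SZ (k + 1 + 1) s = SZ (k + 1) s + (SZ (k + 1 + 1) s - SZ (k + 1) s) := by ring
    rw [h2, h, mul_add]; congr 1
    rcases eq_or_ne s 1 with rfl | hs
    · simp [zw]
    · rw [integral_cpow]
      · have h1 : (1 : ℂ) - s ≠ 0 := sub_ne_zero.2 hs.symm; have e : -s + 1 = 1 - s := by ring
        rw [zw, e]; push_cast; have e2 : ((k : ℂ) + 1 + 1) = k + 2 := by ring
        rw [e2]; field_simp; ring
      · right; refine ⟨fun h => hs (by simpa using h), ?_⟩; rw [Set.uIcc_of_le (by push_cast; linarith)]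
        intro h; have := h.1; push_cast at this; have : (0 : ℝ) ≤ k := by positivity
        linarith

lemma norm_zw_le (m : ℕ) (s : ℂ) (hs : 1 / 2 < s.re) :
  ‖zw m s‖ ≤ ‖s - 1‖ * ‖s‖ * ((m + 1 : ℕ) : ℝ) ^ (-(3 / 2) : ℝ) := by
  have h1 := sum_zw s (m + 1); rw [sum_range_succ, sum_zw] at h1
  have h2 : zw m s = (s - 1) * (SZ (m + 1 + 1) s - SZ (m + 1) s) := by linear_combination h1
  rw [h2, norm_mul, mul_assoc]; gcongr
  refine (SZ_diff_le s (by linarith) (m + 1) (m + 1 + 1) (by omega) (by omega)).trans ?_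
  have : ((m + 1 + 1 : ℕ) : ℝ) - ((m + 1 : ℕ) : ℝ) = 1 := by push_cast; ring
  rw [this, one_mul]; gcongr
  · push_cast; linarith [(by positivity : (0 : ℝ) ≤ m)]
  · linarith

lemma summable_32 : Summable (fun m : ℕ => ((m + 1 : ℕ) : ℝ) ^ (-(3 / 2) : ℝ)) := by
  have h := (summable_nat_rpow (p := (-(3 / 2) : ℝ))).2 (by norm_num)
  exact h.comp_injective (add_left_injective 1)

lemma summable_zw (s : ℂ) (hs : 1 / 2 < s.re) : Summable (fun m => zw m s) :=
  Summable.of_norm_bounded (summable_32.mul_left _) (fun m => norm_zw_le m s hs)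

lemma zeta1_tendsto (s : ℂ) (hs : 1 / 2 < s.re) :
  Tendsto (fun k : ℕ => s + (s - 1) * SZ (k + 1) s) atTop (𝓝 (zeta1 s)) := by
  have h := (summable_zw s hs).hasSum.tendsto_sum_nat; simp_rw [sum_zw] at h; exact h.const_add s

lemma zeta1_one : zeta1 1 = 1 := by simp [zeta1, zw]

lemma differentiable_zw (m : ℕ) : Differentiable ℂ (zw m) := by
  unfold zw
  have h2 : ((m : ℂ) + 2) ≠ 0 := by
    have : ((m : ℂ) + 2) = ((m + 2 : ℕ) : ℂ) := by push_cast; ring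
    rw [this]; exact Nat.cast_ne_zero.2 (by omega)
  have h1 : ((m : ℂ) + 1) ≠ 0 := Nat.cast_add_one_ne_zero m; intro s
  have a1 : DifferentiableAt ℂ (fun s : ℂ => ((m : ℂ) + 2) ^ (-s)) s := (differentiableAt_id.neg).const_cpow (Or.inl h2)
  have a2 : DifferentiableAt ℂ (fun s : ℂ => ((m : ℂ) + 2) ^ (1 - s)) s :=
    (by fun_prop : DifferentiableAt ℂ (fun s : ℂ => 1 - s) s).const_cpow (Or.inl h2)
  have a3 : DifferentiableAt ℂ (fun s : ℂ => ((m : ℂ) + 1) ^ (1 - s)) s :=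
    (by fun_prop : DifferentiableAt ℂ (fun s : ℂ => 1 - s) s).const_cpow (Or.inl h1)
  exact (((differentiableAt_id.sub_const 1).mul a1).add a2).sub a3

lemma differentiableOn_zeta1 : DifferentiableOn ℂ zeta1 HP := by
  intro s hs; set R := ‖s‖ + 1; have hU : IsOpen (HP ∩ Metric.ball 0 R) := isOpen_HP.inter Metric.isOpen_ball
  have hsU : s ∈ HP ∩ Metric.ball 0 R := ⟨hs, by simp [R]⟩
  have h := Complex.differentiableOn_tsum_of_summable_norm (F := fun m => zw m) (U := HP ∩ Metric.ball 0 R)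
    (summable_32.mul_left ((R + 1) * R))
    (fun m => (differentiable_zw m).differentiableOn) hU (fun m z hz => by
      refine (norm_zw_le m z hz.1).trans ?_
      have h1 : ‖z‖ ≤ R := by have := hz.2; rw [mem_ball_zero_iff] at this; exact this.le
      have h2 : ‖z - 1‖ ≤ R + 1 := (norm_sub_le _ _).trans (by simpa using h1); have : 0 ≤ R := by positivity
      gcongr)
  have h3 := (h s hsU).differentiableAt (hU.mem_nhds hsU)
  exact (differentiableAt_id.add h3).differentiableWithinAt

lemma zeta1_eq (s : ℂ) (hs : 1 < s.re) : zeta1 s = (s - 1) * riemannZeta s := by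
  have h1 := zeta1_tendsto s (by linarith); simp_rw [← sum_zw] at h1
  have hsum : Summable (fun n : ℕ => 1 / ((n : ℂ) + 1) ^ s) := by
    have := (summable_nat_add_iff 1).2 (Complex.summable_one_div_nat_cpow.2 hs); simpa using this
  have h2 := hsum.hasSum.tendsto_sum_nat; rw [← zeta_eq_tsum_one_div_nat_add_one_cpow hs] at h2
  have h2' := (tendsto_add_atTop_iff_nat 1).2 h2
  have h3 : Tendsto (fun k : ℕ => ((k : ℂ) + 1) ^ (1 - s)) atTop (𝓝 0) := by
    rw [tendsto_zero_iff_norm_tendsto_zero]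
    have e : ∀ k : ℕ, ‖((k : ℂ) + 1) ^ (1 - s)‖ = ((k : ℝ) + 1) ^ (-(s.re - 1)) := by
      intro k; have : ((k : ℂ) + 1) = (((k : ℝ) + 1 : ℝ) : ℂ) := by push_cast; ring
      rw [this, norm_cpow_eq_rpow_re_of_pos (by positivity)]; congr 1; simp
    simp_rw [e]
    exact (tendsto_rpow_neg_atTop (by linarith)).comp (tendsto_atTop_add_const_right _ _ tendsto_natCast_atTop_atTop)
  have e : ∀ k : ℕ, s + ∑ m ∈ range k, zw m s =
    (s - 1) * (∑ n ∈ range (k + 1), 1 / ((n : ℂ) + 1) ^ s) + ((k : ℂ) + 1) ^ (1 - s) := by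
    intro k
    induction k with
    | zero => simp
    | succ k ih =>
      rw [sum_range_succ, ← add_assoc, ih, sum_range_succ _ (k + 1), zw, cpow_neg]; push_cast
      have e2 : ((k : ℂ) + 1 + 1) = k + 2 := by ring
      rw [e2]; ring
  simp_rw [e] at h1; have h4 := (h2'.const_mul (s - 1)).add h3; rw [add_zero] at h4
  exact tendsto_nhds_unique h1 h4

lemma zeta1_ne_zero (s : ℂ) (hs : 1 ≤ s.re) : zeta1 s ≠ 0 := by
  rcases eq_or_ne s 1 with rfl | h1
  · simp [zeta1_one]
  rcases hs.lt_or_eq with h | h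
  · rw [zeta1_eq s h]; exact mul_ne_zero (sub_ne_zero.2 h1) (riemannZeta_ne_zero_of_one_le_re hs)
  · have hc1 : ContinuousAt zeta1 s :=
      (differentiableOn_zeta1.differentiableAt (isOpen_HP.mem_nhds (by simp only [HP, mem_ofPred_eq]; linarith))).continuousAt
    have hc2 : ContinuousAt (fun z => (z - 1) * riemannZeta z) s :=
      (by fun_prop : ContinuousAt (fun z : ℂ => z - 1) s).mul (differentiableAt_riemannZeta h1).continuousAt
    have ht : Tendsto (fun n : ℕ => s + (1 / ((n : ℂ) + 1))) atTop (𝓝 s) := by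
      simpa using (tendsto_one_div_add_atTop_nhds_zero_nat (𝕜 := ℂ)).const_add s
    have e : ∀ n : ℕ, zeta1 (s + (1 / ((n : ℂ) + 1))) =
      (s + (1 / ((n : ℂ) + 1)) - 1) * riemannZeta (s + (1 / ((n : ℂ) + 1))) := by
      intro n; apply zeta1_eq
      have : (1 / ((n : ℂ) + 1)) = ((1 / ((n : ℝ) + 1) : ℝ) : ℂ) := by push_cast; ring
      rw [this, add_re, ofReal_re, ← h]; have : 0 < 1 / ((n : ℝ) + 1) := by positivity
      linarith
    have l1 := hc1.tendsto.comp ht; have l2 := hc2.tendsto.comp ht; simp only [Function.comp_def] at l1 l2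
    simp_rw [e] at l1; rw [tendsto_nhds_unique l1 l2]
    exact mul_ne_zero (sub_ne_zero.2 h1) (riemannZeta_ne_zero_of_one_le_re hs)

lemma zeta1_bound : ∀ᶠ L : ℝ in atTop, ∀ s : ℂ, 1 - L ^ (-(19 / 20) : ℝ) ≤ s.re → s.re ≤ 2 →
  |s.im| ≤ exp L → ‖zeta1 s‖ ≤ ‖s‖ + ‖s - 1‖ * (2 * L) := by
  have E0 := ev_rpow 100 (-(19/20)) 0 (by norm_num); filter_upwards [SZ_bound, E0] with L h E0
  rw [rpow_zero] at E0; intro s h1 h2 h3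
  refine le_of_tendsto' (zeta1_tendsto s (by linarith)).norm (fun k => ?_); refine (norm_add_le _ _).trans ?_
  rw [norm_mul]; gcongr; exact h s h1 h2 h3 (k + 1) (by omega)

/-! ### The zero-free region -/

/-- A zero-free function on a disc, bounded by `e^M |f(0)|`, has small logarithmic derivative. -/
lemma logDeriv_bound (f : ℂ → ℂ) (r M : ℝ) (hr : 0 < r) (hM : 0 < M)
  (hf : DifferentiableOn ℂ f (ball 0 r)) (h0 : ∀ z ∈ ball (0 : ℂ) r, f z ≠ 0)
  (hb : ∀ z ∈ ball (0 : ℂ) r, ‖f z‖ ≤ exp M * ‖f 0‖) (w : ℂ) (hw : ‖w‖ ≤ r / 2) :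
  ‖logDeriv f w‖ ≤ 24 * M / r := by
  have hd : DifferentiableOn ℂ (logDeriv f) (ball 0 r) := (hf.deriv isOpen_ball).div hf h0
  obtain ⟨g, hg0, hg⟩ := hd.isExactOn_ball.with_val_at 0 0
  have h00 : (0 : ℂ) ∈ ball (0 : ℂ) r := mem_ball_self hr
  have hgd : DifferentiableOn ℂ g (ball 0 r) := fun z hz => (hg z hz).differentiableAt.differentiableWithinAt
  -- `f = f(0) e^g`
  have hfe : ∀ z ∈ ball (0 : ℂ) r, f z = f 0 * Complex.exp (g z) := by
    have hconst : ∀ z ∈ ball (0 : ℂ) r, f z * Complex.exp (-g z) = f 0 * Complex.exp (-g 0) := by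
      intro z hz
      refine (convex_ball (0 : ℂ) r).is_const_of_fderivWithin_eq_zero (𝕜 := ℂ)
        (f := fun z => f z * Complex.exp (-g z)) ?_ ?_ hz h00
      · exact hf.mul (hgd.neg.cexp)
      · intro x hx; have hfx := (hf.differentiableAt (isOpen_ball.mem_nhds hx)).hasDerivAt
        have hx2 := hfx.mul ((hg x hx).neg.cexp)
        have hz2 : deriv f x * Complex.exp (-g x) + f x * (Complex.exp (-g x) * -logDeriv f x) = 0 := by
          rw [logDeriv_apply]; field_simp [h0 x hx]; ring
        have hz3 := hx2.congr_deriv hz2; rw [fderivWithin_of_mem_nhds (isOpen_ball.mem_nhds hx)]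
        have hz4 : HasDerivAt (fun z => f z * Complex.exp (-g z)) 0 x := hz3
        have h5 := hz4.hasFDerivAt.fderiv; rw [h5]; ext; simp
    intro z hz; have := hconst z hz; rw [hg0, neg_zero, Complex.exp_zero, mul_one, Complex.exp_neg] at this
    rw [← this, mul_assoc, inv_mul_cancel₀ (Complex.exp_ne_zero _), mul_one]
  have hRe : Set.MapsTo g (ball 0 r) {z | z.re ≤ M} := by
    intro z hz; have h1 := hb z hz; rw [hfe z hz, norm_mul, mul_comm, norm_exp] at h1
    have h2 := le_of_mul_le_mul_right h1 (norm_pos_iff.2 (h0 0 h00)); exact exp_le_exp.1 h2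
  have hdg : deriv g w = logDeriv f w := (hg w (by rw [mem_ball_zero_iff]; linarith)).deriv; rw [← hdg]
  have hsub : closedBall w (r / 4) ⊆ ball 0 r := by
    intro z hz; rw [mem_closedBall, dist_eq_norm] at hz; rw [mem_ball_zero_iff]
    calc ‖z‖ = ‖(z - w) + w‖ := by ring_nf
      _ ≤ ‖z - w‖ + ‖w‖ := norm_add_le _ _
      _ < r := by linarith
  have := Complex.norm_deriv_le_of_forall_mem_sphere_norm_le (c := w) (R := r / 4) (C := 6 * M) (f := g)
    (by positivity) (by
      apply DifferentiableOn.diffContOnCl; rw [closure_ball _ (by positivity)]; exact hgd.mono hsub) (by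
      intro z hz; have hzb := hsub (sphere_subset_closedBall hz)
      have hzn : ‖z‖ ≤ 3 / 4 * r := by
        rw [mem_sphere, dist_eq_norm] at hz
        calc ‖z‖ = ‖(z - w) + w‖ := by ring_nf
          _ ≤ ‖z - w‖ + ‖w‖ := norm_add_le _ _
          _ ≤ _ := by linarith
      refine (Complex.borelCaratheodory_zero hM hgd hRe hr hzb hg0).trans ?_; rw [div_le_iff₀ (by linarith)]
      have := norm_nonneg z; nlinarith)
  refine this.trans (le_of_eq ?_); field_simp; norm_num

/-- Division by a Blaschke factor. -/
lemma blaschke (f : ℂ → ℂ) (hf : DifferentiableOn ℂ f (ball 0 2)) (hf0 : f 0 ≠ 0) (M : ℝ)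
  (hb : ∀ z ∈ closedBall (0 : ℂ) 1, ‖f z‖ ≤ exp M * ‖f 0‖)
  (ρ : ℂ) (hρ : ‖ρ‖ ≤ 1 / 2) (hfρ : f ρ = 0) :
  ∃ g : ℂ → ℂ, DifferentiableOn ℂ g (ball 0 2) ∧ g 0 ≠ 0 ∧
    (∀ z ∈ closedBall (0 : ℂ) 1, ‖g z‖ ≤ exp (M - log 2) * ‖g 0‖) ∧
    (∀ z, ‖z‖ ≤ 1 / 2 → g z = 0 → f z = 0) ∧
    logDeriv f 0 = logDeriv g 0 - 1 / ρ + (starRingEnd ℂ) ρ := by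
  have hρ0 : ρ ≠ 0 := by rintro rfl; exact hf0 hfρ
  have hρb : ρ ∈ ball (0 : ℂ) 2 := by rw [mem_ball_zero_iff]; linarith
  set g : ℂ → ℂ := fun z => dslope f ρ z * (1 - (starRingEnd ℂ) ρ * z) with hg
  have hds : DifferentiableOn ℂ (dslope f ρ) (ball 0 2) :=
    (Complex.differentiableOn_dslope (isOpen_ball.mem_nhds hρb)).2 hf
  have hgd : DifferentiableOn ℂ g (ball 0 2) := hds.mul (by fun_prop)
  have hrel : ∀ z, g z * (z - ρ) = f z * (1 - (starRingEnd ℂ) ρ * z) := by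
    intro z; have h := sub_smul_dslope f ρ z; rw [hfρ, sub_zero, smul_eq_mul] at h; rw [hg, ← h]; ring
  have hg0' : g 0 * (-ρ) = f 0 := by simpa using hrel 0
  have hg0 : g 0 ≠ 0 := by rintro h; rw [h, zero_mul] at hg0'; exact hf0 hg0'.symm
  have hfn : ‖f 0‖ ≤ ‖g 0‖ / 2 := by
    rw [← hg0', norm_mul, norm_neg]; have := norm_nonneg (g 0); nlinarith
  refine ⟨g, hgd, hg0, ?_, ?_, ?_⟩
  · have hfr : ∀ z ∈ sphere (0 : ℂ) 1, ‖g z‖ ≤ exp (M - log 2) * ‖g 0‖ := by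
      intro z hz; have hz1 : ‖z‖ = 1 := by simpa using hz
      have hr : ‖g z‖ * ‖z - ρ‖ = ‖f z‖ * ‖1 - (starRingEnd ℂ) ρ * z‖ := by rw [← norm_mul, ← norm_mul, hrel z]
      have he : ‖1 - (starRingEnd ℂ) ρ * z‖ = ‖z - ρ‖ := by
        have hzz : (starRingEnd ℂ) z * z = 1 := by rw [mul_comm, Complex.mul_conj, Complex.normSq_eq_norm_sq, hz1]; simp
        have e1 : 1 - (starRingEnd ℂ) ρ * z = (starRingEnd ℂ) (z - ρ) * z := by rw [map_sub, sub_mul, hzz]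
        rw [e1, norm_mul, hz1, mul_one, norm_conj]
      rw [he] at hr
      have hne : 0 < ‖z - ρ‖ := by
        have := norm_sub_norm_le z ρ; rw [hz1] at this; linarith
      have h2 := mul_right_cancel₀ hne.ne' hr; rw [h2]; refine (hb z (sphere_subset_closedBall hz)).trans ?_
      rw [exp_sub, exp_log (by norm_num)]; have := exp_pos M
      calc exp M * ‖f 0‖ ≤ exp M * (‖g 0‖ / 2) := by gcongr
        _ = _ := by ring
    intro z hz
    refine Complex.norm_le_of_forall_mem_frontier_norm_le (U := ball (0 : ℂ) 1) isBounded_ball ?_ ?_ ?_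
    · apply DifferentiableOn.diffContOnCl; rw [closure_ball _ (by norm_num)]
      exact hgd.mono (closedBall_subset_ball (by norm_num))
    · rw [frontier_ball _ (by norm_num)]; exact hfr
    · rw [closure_ball _ (by norm_num)]; exact hz
  · intro z hz hgz; have h := hrel z; rw [hgz, zero_mul] at h
    rcases mul_eq_zero.1 h.symm with h | h
    · exact h
    · exfalso
      have h1 : (starRingEnd ℂ) ρ * z = 1 := by linear_combination -h
      have h2 := congrArg norm h1; rw [norm_mul, norm_conj, norm_one] at h2; have := norm_nonneg z; nlinarith
  · have hfun : (fun z => g z * (z - ρ)) = fun z => f z * (1 - (starRingEnd ℂ) ρ * z) := funext hrel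
    have h00 : (0 : ℂ) ∈ ball (0 : ℂ) 2 := mem_ball_self (by norm_num)
    have l1 := logDeriv_mul (f := g) (g := fun z => z - ρ) 0 hg0 (by simpa using hρ0)
      (hgd.differentiableAt (isOpen_ball.mem_nhds h00)) (by fun_prop)
    have l2 := logDeriv_mul (f := f) (g := fun z => 1 - (starRingEnd ℂ) ρ * z) 0 hf0 (by simp)
      (hf.differentiableAt (isOpen_ball.mem_nhds h00)) (by fun_prop)
    rw [hfun, l2] at l1
    have d1 : logDeriv (fun z : ℂ => z - ρ) 0 = -1 / ρ := by rw [logDeriv_apply]; simp [neg_div, div_neg]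
    have d2 : logDeriv (fun z : ℂ => 1 - (starRingEnd ℂ) ρ * z) 0 = - (starRingEnd ℂ) ρ := by
      rw [logDeriv_apply]
      have : HasDerivAt (fun z : ℂ => 1 - (starRingEnd ℂ) ρ * z) (0 - (starRingEnd ℂ) ρ * 1) 0 :=
        (hasDerivAt_const _ _).sub ((hasDerivAt_id _).const_mul _)
      rw [this.deriv]; simp
    rw [d1, d2] at l1
    linear_combination l1

lemma landau_aux (n : ℕ) : ∀ (f : ℂ → ℂ) (M : ℝ), DifferentiableOn ℂ f (ball 0 2) → f 0 ≠ 0 →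
  (∀ z ∈ closedBall (0 : ℂ) 1, ‖f z‖ ≤ exp M * ‖f 0‖) →
  (∀ z, ‖z‖ ≤ 1 / 2 → f z = 0 → z.re ≤ 0) → M ≤ n * log 2 →
  -(logDeriv f 0).re ≤ 48 * (M + 1) := by
  have posM : ∀ (f : ℂ → ℂ) (M : ℝ), f 0 ≠ 0 → (∀ z ∈ closedBall (0 : ℂ) 1, ‖f z‖ ≤ exp M * ‖f 0‖) → 0 ≤ M := by
    intro f M h0 hb; have h1 := hb 0 (mem_closedBall_self (by norm_num))
    have h2 : 0 < ‖f 0‖ := norm_pos_iff.2 h0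
    have h3 : 1 ≤ exp M := by
      by_contra hh; push Not at hh; nlinarith
    exact one_le_exp_iff.1 h3
  have base : ∀ (f : ℂ → ℂ) (M : ℝ), DifferentiableOn ℂ f (ball 0 2) → f 0 ≠ 0 →
    (∀ z ∈ closedBall (0 : ℂ) 1, ‖f z‖ ≤ exp M * ‖f 0‖) → (∀ z, ‖z‖ ≤ 1 / 2 → f z ≠ 0) →
    -(logDeriv f 0).re ≤ 48 * (M + 1) := by
    intro f M hf h0 hb hex; have hp := posM f M h0 hb
    have := logDeriv_bound f (1/2) (M + 1) (by norm_num) (by linarith) (hf.mono (ball_subset_ball (by norm_num)))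
      (fun z hz => hex z (by rw [mem_ball_zero_iff] at hz; exact hz.le))
      (fun z hz => (hb z ((ball_subset_closedBall.trans (closedBall_subset_closedBall (by norm_num))) hz)).trans
        (by gcongr; linarith)) 0 (by rw [norm_zero]; norm_num)
    have h3 := abs_re_le_norm (logDeriv f 0); have h4 := neg_abs_le (logDeriv f 0).re
    have : 24 * (M + 1) / (1 / 2) = 48 * (M + 1) := by ring
    linarith
  have l2 := log_two_gt_d9
  induction n with
  | zero =>
    intro f M hf h0 hb hz hM
    by_cases hex : ∃ ρ, ‖ρ‖ ≤ 1 / 2 ∧ f ρ = 0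
    · obtain ⟨ρ, hρ, hfρ⟩ := hex; obtain ⟨g, _, hg0, hgb, _, _⟩ := blaschke f hf h0 M hb ρ hρ hfρ
      have := posM g _ hg0 hgb; simp at hM; linarith
    · push Not at hex; exact base f M hf h0 hb hex
  | succ n ih =>
    intro f M hf h0 hb hz hM
    by_cases hex : ∃ ρ, ‖ρ‖ ≤ 1 / 2 ∧ f ρ = 0
    · obtain ⟨ρ, hρ, hfρ⟩ := hex; obtain ⟨g, hgd, hg0, hgb, hgz, hgl⟩ := blaschke f hf h0 M hb ρ hρ hfρ
      have h5 := ih g _ hgd hg0 hgb (fun z hz' hgz' => hz z hz' (hgz z hz' hgz')) (by push_cast at hM; linarith)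
      have hre := hz ρ hρ hfρ; have hρ0 : ρ ≠ 0 := by rintro rfl; exact h0 hfρ
      have hpos : 0 < normSq ρ := Complex.normSq_pos.2 hρ0
      have hns : normSq ρ ≤ 1 := by rw [Complex.normSq_eq_norm_sq]; nlinarith [norm_nonneg ρ]
      rw [hgl]; simp only [add_re, Complex.sub_re, Complex.conj_re, one_div, Complex.inv_re]
      have : ρ.re / normSq ρ ≤ ρ.re := by rw [div_le_iff₀ hpos]; nlinarith
      linarith
    · push Not at hex; exact base f M hf h0 hb hex

lemma landau (f : ℂ → ℂ) (M : ℝ) (hf : DifferentiableOn ℂ f (ball 0 2)) (h0 : f 0 ≠ 0)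
  (hb : ∀ z ∈ closedBall (0 : ℂ) 1, ‖f z‖ ≤ exp M * ‖f 0‖)
  (hz : ∀ z, ‖z‖ ≤ 1 / 2 → f z = 0 → z.re ≤ 0) :
  -(logDeriv f 0).re ≤ 48 * (M + 1) := by
  have l2 := log_two_gt_d9; refine landau_aux ⌈M / log 2⌉₊ f M hf h0 hb hz ?_
  rw [← div_le_iff₀ (by linarith)]; exact Nat.le_ceil _

lemma landau_zero (f : ℂ → ℂ) (M : ℝ) (hf : DifferentiableOn ℂ f (ball 0 2)) (h0 : f 0 ≠ 0)
  (hb : ∀ z ∈ closedBall (0 : ℂ) 1, ‖f z‖ ≤ exp M * ‖f 0‖)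
  (hz : ∀ z, ‖z‖ ≤ 1 / 2 → f z = 0 → z.re ≤ 0) (η : ℝ) (hη : 0 < η) (hη2 : η ≤ 1 / 2)
  (hfη : f (-(η : ℂ)) = 0) :
  -(logDeriv f 0).re ≤ 48 * (M + 1) - 1 / η + η := by
  obtain ⟨g, hgd, hg0, hgb, hgz, hgl⟩ := blaschke f hf h0 M hb (-(η : ℂ))
    (by rw [norm_neg, norm_real, norm_of_nonneg hη.le]; exact hη2) hfη
  have h5 := landau g _ hgd hg0 hgb (fun z hz' hgz' => hz z hz' (hgz z hz' hgz')); rw [hgl]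
  have e : (1 / -(η : ℂ)) = ((-(1 / η) : ℝ) : ℂ) := by push_cast; rw [div_neg]
  rw [e]; simp only [add_re, Complex.sub_re, Complex.conj_re, ofReal_re, neg_re]; have l2 := log_two_gt_d9
  linarith

lemma zeta1_diffAt (s : ℂ) (hs : 1 / 2 < s.re) : DifferentiableAt ℂ zeta1 s :=
  differentiableOn_zeta1.differentiableAt (isOpen_HP.mem_nhds hs)

/-- The relation `ζ'/ζ = ζ₁'/ζ₁ - 1/(s-1)` where `ζ₁ = (s-1)ζ`, and `-ζ'/ζ = ∑ Λ(n) n^{-s}`. -/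
lemma LSeries_vonMangoldt_eq' (s : ℂ) (hs : 1 < s.re) :
  LSeries (fun n => (Λ n : ℂ)) s = -logDeriv zeta1 s + 1 / (s - 1) := by
  have h := ArithmeticFunction.LSeries_vonMangoldt_eq_deriv_riemannZeta_div hs
  have hs1 : s ≠ 1 := by rintro rfl; simp at hs
  have hs1' : s - 1 ≠ 0 := sub_ne_zero.2 hs1
  have hev : zeta1 =ᶠ[𝓝 s] fun z => (z - 1) * riemannZeta z := by
    filter_upwards [(isOpen_lt continuous_const Complex.continuous_re).mem_nhds hs] with z hz
    exact zeta1_eq z hz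
  have hz := riemannZeta_ne_zero_of_one_le_re hs.le
  have h2 : logDeriv zeta1 s = 1 / (s - 1) + deriv riemannZeta s / riemannZeta s := by
    rw [logDeriv_apply, hev.deriv_eq, hev.eq_of_nhds]
    have := logDeriv_mul (f := fun z : ℂ => z - 1) (g := riemannZeta) s hs1' hz (by fun_prop)
      (differentiableAt_riemannZeta hs1)
    rw [logDeriv_apply, logDeriv_apply, logDeriv_apply] at this; rw [this]; simp
  rw [h2]; refine h.trans ?_; ring

/-- The `3-4-1` inequality for `-ζ'/ζ`. -/
lemma three_four_one (σ t : ℝ) (hσ : 1 < σ) :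
  0 ≤ 3 * (LSeries (fun n => (Λ n : ℂ)) (σ : ℂ)).re
    + 4 * (LSeries (fun n => (Λ n : ℂ)) (σ + t * I)).re
    + (LSeries (fun n => (Λ n : ℂ)) (σ + (2 * t : ℝ) * I)).re := by
  have key : ∀ u : ℝ, HasSum (fun n : ℕ => Λ n * (n : ℝ) ^ (-σ) * cos (u * log n))
    (LSeries (fun n => (Λ n : ℂ)) (σ + u * I)).re := by
    intro u; have h1 := LSeriesSummable_vonMangoldt (s := σ + u * I) (by simpa using hσ)
    have h2 := Complex.hasSum_re h1.hasSum
    change HasSum _ (∑' b, LSeries.term (fun n => (Λ n : ℂ)) (σ + u * I) b).re; convert h2 using 1; funext n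
    rcases Nat.eq_zero_or_pos n with rfl | hn
    · simp
    rw [LSeries.term_of_ne_zero (by omega), div_eq_mul_inv, ← cpow_neg]
    have hc := cpow_split (σ + u * I) n (mod_cast hn); simp only [Complex.ofReal_natCast] at hc
    rw [hc, re_ofReal_mul, re_ofReal_mul, ee, Complex.exp_ofReal_mul_I_re]; simp; ring
  have h0 := key 0; have h1 := key t; have h2 := key (2 * t)
  have hs := ((h0.mul_left 3).add (h1.mul_left 4)).add h2; have e0 : (σ : ℂ) = σ + (0 : ℝ) * I := by simp
  rw [e0]; refine (hs.nonneg ?_).trans (le_of_eq ?_)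
  · intro n; have hc : cos (2 * t * log n) = 2 * cos (t * log n) ^ 2 - 1 := by rw [mul_assoc, cos_two_mul]
    rw [hc]; simp only [zero_mul, cos_zero, mul_one]
    have : 0 ≤ 2 * (Λ n * (n : ℝ) ^ (-σ)) * (1 + cos (t * log n)) ^ 2 := by positivity
    nlinarith
  · simp

lemma norm_zeta_ge (s : ℂ) (hs : 1 < s.re) : 1 ≤ ‖riemannZeta s‖ * ‖riemannZeta s.re‖ := by
  have h1 := ArithmeticFunction.LSeries_zeta_mul_Lseries_moebius hs
  rw [ArithmeticFunction.LSeries_zeta_eq_riemannZeta hs] at h1; have h2 := congrArg norm h1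
  rw [norm_mul, norm_one] at h2; rw [← h2]; refine mul_le_mul_of_nonneg_left ?_ (norm_nonneg _)
  have hs' : 1 < ((s.re : ℂ)).re := by simpa using hs
  have hS := LSeriesSummable_one_iff.2 hs'
  have hterm : ∀ n, ‖LSeries.term (fun n => ((moebius n : ℤ) : ℂ)) s n‖ ≤ ‖LSeries.term 1 (s.re : ℂ) n‖ := by
    intro n; rw [LSeries.norm_term_eq, LSeries.norm_term_eq]; split_ifs with h
    · rfl
    · simp only [ofReal_re, Pi.one_apply, norm_one]; gcongr; rw [Complex.norm_intCast]
      exact_mod_cast abs_moebius_le_one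
  have hre : ∀ n, LSeries.term 1 (s.re : ℂ) n = ((‖LSeries.term 1 (s.re : ℂ) n‖ : ℝ) : ℂ) := by
    intro n; rw [LSeries.norm_term_eq]; split_ifs with h
    · simp [h]
    · rw [LSeries.term_of_ne_zero h]; simp; exact_mod_cast (ofReal_cpow (Nat.cast_nonneg n) s.re).symm
  have e : riemannZeta s.re = ((∑' n, ‖LSeries.term 1 (s.re : ℂ) n‖ : ℝ) : ℂ) := by
    rw [← LSeries_one_eq_riemannZeta hs', LSeries, tsum_congr hre, Complex.ofReal_tsum]
  rw [e, norm_real, norm_of_nonneg (tsum_nonneg fun _ => norm_nonneg _)]; have hSn := hS.norm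
  have hsm : Summable (fun n => ‖LSeries.term (fun n => ((moebius n : ℤ) : ℂ)) s n‖) :=
    Summable.of_nonneg_of_le (fun _ => norm_nonneg _) hterm hSn
  exact (norm_tsum_le_tsum_norm hsm).trans (hsm.tsum_le_tsum hterm hSn)

/-- Compactness: `ζ₁` and its logarithmic derivative near the segment `[1,2] × [-4,4]`. -/
lemma zeta1_compact : ∃ ε > 0, ε ≤ 1 / 4 ∧ ∃ K : ℝ, 1 ≤ K ∧ ∀ s : ℂ, 1 - ε ≤ s.re → s.re ≤ 2 → |s.im| ≤ 4 →
  zeta1 s ≠ 0 ∧ ‖zeta1 s‖ ≤ K ∧ ‖logDeriv zeta1 s‖ ≤ K ∧ ‖dslope zeta1 1 s‖ ≤ K := by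
  have hcont : ContinuousOn zeta1 HP := differentiableOn_zeta1.continuousOn
  have hZ : IsOpen (HP ∩ zeta1 ⁻¹' {0}ᶜ) := hcont.isOpen_inter_preimage isOpen_HP isOpen_compl_singleton
  have hbox : ∀ a : ℝ, IsCompact ((Set.Icc a 2) ×ℂ (Set.Icc (-4) 4)) := fun a => isCompact_Icc.reProdIm isCompact_Icc
  have hsub : ((Set.Icc (1 : ℝ) 2) ×ℂ (Set.Icc (-4) 4)) ⊆ HP ∩ zeta1 ⁻¹' {0}ᶜ := by
    intro s hs; rw [mem_reProdIm] at hs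
    exact ⟨by change 1 / 2 < s.re; linarith [hs.1.1], zeta1_ne_zero s hs.1.1⟩
  obtain ⟨δ, hδ, hthick⟩ := (hbox 1).exists_thickening_subset_open hZ hsub; set ε := min (δ / 2) (1 / 4)
  have hε0 : 0 < ε := by positivity
  have hsub2 : ((Set.Icc (1 - ε) 2) ×ℂ (Set.Icc (-4) 4)) ⊆ HP ∩ zeta1 ⁻¹' {0}ᶜ := by
    intro s hs; rw [mem_reProdIm] at hs
    rcases le_total 1 s.re with h | h
    · exact hsub (by rw [mem_reProdIm]; exact ⟨⟨h, hs.1.2⟩, hs.2⟩)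
    · apply hthick; rw [mem_thickening_iff]
      refine ⟨⟨1, s.im⟩, by rw [mem_reProdIm]; exact ⟨⟨le_refl _, by norm_num⟩, hs.2⟩, ?_⟩
      rw [Complex.dist_of_im_eq (by rfl)]; rw [dist_eq, abs_sub_comm, abs_of_nonneg (by simpa using h)]
      have := hs.1.1; have := min_le_left (δ / 2) (1 / 4); simp only; linarith
  have hc1 := hcont.mono (hsub2.trans Set.inter_subset_left)
  have hc2 : ContinuousOn (logDeriv zeta1) ((Set.Icc (1 - ε) 2) ×ℂ (Set.Icc (-4) 4)) := by
    refine ContinuousOn.div ?_ hc1 (fun s hs => (hsub2 hs).2)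
    exact (differentiableOn_zeta1.deriv isOpen_HP).continuousOn.mono (hsub2.trans Set.inter_subset_left)
  have hc3 : ContinuousOn (dslope zeta1 1) ((Set.Icc (1 - ε) 2) ×ℂ (Set.Icc (-4) 4)) := by
    have := (Complex.differentiableOn_dslope (c := (1 : ℂ)) (isOpen_HP.mem_nhds (by change (1 : ℝ) / 2 < (1 : ℂ).re; norm_num))).2 differentiableOn_zeta1
    exact this.continuousOn.mono (hsub2.trans Set.inter_subset_left)
  obtain ⟨K1, hK1⟩ := (hbox (1 - ε)).exists_bound_of_continuousOn hc1
  obtain ⟨K2, hK2⟩ := (hbox (1 - ε)).exists_bound_of_continuousOn hc2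
  obtain ⟨K3, hK3⟩ := (hbox (1 - ε)).exists_bound_of_continuousOn hc3
  refine ⟨ε, hε0, min_le_right _ _, max 1 (max K1 (max K2 K3)), le_max_left _ _, ?_⟩; intro s h1 h2 h3
  have hm : s ∈ ((Set.Icc (1 - ε) 2) ×ℂ (Set.Icc (-4 : ℝ) 4)) := by rw [mem_reProdIm]; exact ⟨⟨h1, h2⟩, abs_le.1 h3⟩
  exact ⟨(hsub2 hm).2, (hK1 s hm).trans (by simp), (hK2 s hm).trans (by simp), (hK3 s hm).trans (by simp)⟩

/-- Comparison of `ζ₁` near `1+it` with its value at `1+η+it`. -/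
lemma zeta1_ratio : ∀ᶠ L : ℝ in atTop, ∀ η t : ℝ, 1 / L ≤ η → η ≤ 1 → 1 ≤ |t| → |t| ≤ exp L / 2 →
  ∀ s : ℂ, 1 - L ^ (-(19 / 20) : ℝ) ≤ s.re → s.re ≤ 2 → |s.im - t| ≤ 1 →
    ‖zeta1 s‖ ≤ exp (3 * log L) * ‖zeta1 (1 + η + t * I)‖ := by
  obtain ⟨ε, hε, hε4, K, hK, hc⟩ := zeta1_compact
  filter_upwards [zeta1_bound, eventually_ge_atTop (20 * K), eventually_ge_atTop 1] with L hb hL hL1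
  intro η t hη1 hη2 ht1 ht2 s hs1 hs2 hst; have hLpos : 0 < L := by linarith
  have hη : 0 < η := lt_of_lt_of_le (by positivity) hη1
  have e3 : exp (3 * log L) = L ^ 3 := by rw [mul_comm, exp_mul, exp_log hLpos]; norm_cast
  rw [e3]
  have him : |s.im| ≤ |t| + 1 := by
    have := abs_add_le (s.im - t) t; simp at this; linarith
  have h1 := hb s hs1 hs2 (by linarith)
  have hre : |s.re| ≤ 2 := by
    rw [abs_le]; refine ⟨?_, hs2⟩
    have : L ^ (-(19 / 20) : ℝ) ≤ 1 := rpow_le_one_of_one_le_of_nonpos hL1 (by norm_num); linarith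
  have hns : ‖s‖ ≤ |t| + 3 := (Complex.norm_le_abs_re_add_abs_im s).trans (by linarith)
  have hns1 : ‖s - 1‖ ≤ |t| + 4 := (norm_sub_le _ _).trans (by rw [norm_one]; linarith)
  have h2 : ‖zeta1 s‖ ≤ |t| * (15 * L) := by
    refine h1.trans ?_; have := mul_le_mul_of_nonneg_right hns1 (by positivity : 0 ≤ 2 * L); nlinarith
  set s0 : ℂ := 1 + η + t * I with hs0; have hre0 : s0.re = 1 + η := by simp [hs0]
  have him0 : s0.im = t := by simp [hs0]
  have h3 := norm_zeta_ge s0 (by rw [hre0]; linarith)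
  have h4 : ‖zeta1 s0‖ = ‖s0 - 1‖ * ‖riemannZeta s0‖ := by rw [zeta1_eq s0 (by rw [hre0]; linarith), norm_mul]
  have h5 : ‖zeta1 (s0.re : ℂ)‖ = η * ‖riemannZeta (s0.re : ℂ)‖ := by
    rw [zeta1_eq _ (by rw [ofReal_re, hre0]; linarith), norm_mul, hre0]; congr 1; push_cast
    rw [add_sub_cancel_left, norm_real, norm_of_nonneg hη.le]
  have h6 : ‖zeta1 (s0.re : ℂ)‖ ≤ K :=
    (hc _ (by rw [ofReal_re, hre0]; linarith) (by rw [ofReal_re, hre0]; linarith) (by simp)).2.1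
  have h7 : |t| ≤ ‖s0 - 1‖ := by
    have := abs_im_le_norm (s0 - 1); simpa [him0] using this
  -- `η ≤ K ‖ζ(s₀)‖`
  have h8 : η ≤ K * ‖riemannZeta s0‖ := by
    have : η * ‖riemannZeta (s0.re : ℂ)‖ ≤ K := by rw [← h5]; exact h6
    calc η = η * 1 := by ring
      _ ≤ η * (‖riemannZeta s0‖ * ‖riemannZeta (s0.re : ℂ)‖) := by gcongr
      _ = (η * ‖riemannZeta (s0.re : ℂ)‖) * ‖riemannZeta s0‖ := by ring
      _ ≤ _ := by gcongr
  have h9 : 1 ≤ L * K * ‖riemannZeta s0‖ := by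
    rw [div_le_iff₀ hLpos] at hη1; nlinarith [norm_nonneg (riemannZeta s0)]
  calc ‖zeta1 s‖ ≤ |t| * (15 * L) := h2
    _ ≤ ‖s0 - 1‖ * (15 * L) := by gcongr
    _ ≤ ‖s0 - 1‖ * (15 * L * (L * K * ‖riemannZeta s0‖)) := by
      exact mul_le_mul_of_nonneg_left (le_mul_of_one_le_right (by positivity) h9) (norm_nonneg _)
    _ = (L ^ 2 * (15 * K)) * (‖s0 - 1‖ * ‖riemannZeta s0‖) := by ring
    _ ≤ (L ^ 2 * L) * (‖s0 - 1‖ * ‖riemannZeta s0‖) := by gcongr; linarith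
    _ = _ := by rw [h4]; ring

lemma logDeriv_affine (f : ℂ → ℂ) (s0 : ℂ) (R : ℝ) (hf : DifferentiableAt ℂ f s0) :
  logDeriv (fun z => f (s0 + R * z)) 0 = R * logDeriv f s0 := by
  have h1 : HasDerivAt (fun z : ℂ => s0 + R * z) (R : ℂ) 0 := by
    simpa using ((hasDerivAt_id (0 : ℂ)).const_mul (R : ℂ)).const_add s0
  have hf' : HasDerivAt f (deriv f s0) (s0 + R * 0) := by simpa using hf.hasDerivAt
  have h2 := hf'.comp (0 : ℂ) h1; have h3 : HasDerivAt (fun z => f (s0 + R * z)) (deriv f s0 * R) 0 := h2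
  rw [logDeriv_apply, logDeriv_apply, h3.deriv]; simp; ring

/-- The zero-free region: `ζ₁(s) ≠ 0` for `Re s ≥ 1 - L^{-0.98}`, `|Im s| ≤ e^L/8`. -/
lemma zero_free : ∀ᶠ L : ℝ in atTop, ∀ s : ℂ, 1 - L ^ (-(49 / 50) : ℝ) ≤ s.re →
  |s.im| ≤ exp L / 8 → zeta1 s ≠ 0 := by
  obtain ⟨ε, hε, hε4, K, hK, hc⟩ := zeta1_compact
  filter_upwards [zeta1_ratio, eventually_ge_atTop 8, ev_rpow (1 / ε) 0 (49 / 50) (by norm_num),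
    ev_rpow 10 (97 / 100) (49 / 50) (by norm_num),
    ev_rpow 4 (19 / 20) (97 / 100) (by norm_num),
    ev_rpow (10 * (6000 + 3 * K)) (24 / 25) (97 / 100) (by norm_num),
    (isLittleO_log_rpow_atTop (by norm_num : (0 : ℝ) < 1 / 100)).def (by norm_num : (0 : ℝ) < 1)]
    with L hratio hL8 hLε hL10 hL4 hLK hlog
  intro ρ hρ1 hρ2 hzero; have hLpos : 0 < L := by linarith
  have hL1 : 1 ≤ L := by linarith
  have hneg : ∀ a : ℝ, L ^ (-a) = 1 / L ^ a := fun a => by rw [rpow_neg hLpos.le, one_div]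
  have hpos : ∀ a : ℝ, 0 < L ^ a := fun a => rpow_pos_of_pos hLpos a
  have hone : ∀ a : ℝ, 0 ≤ a → 1 ≤ L ^ a := fun a ha => one_le_rpow hL1 ha
  have hβ1 : ρ.re < 1 := by
    by_contra h; exact zeta1_ne_zero ρ (not_lt.1 h) hzero
  have hε1 : L ^ (-(49 / 50) : ℝ) ≤ ε := by
    rw [hneg, div_le_iff₀ (hpos _)]; rw [rpow_zero, mul_one, div_le_iff₀ hε] at hLε; linarith
  set γ := ρ.im with hγ
  have hγ4 : 4 < |γ| := by
    by_contra h; exact (hc ρ (by linarith) (by linarith) (not_lt.1 h)).1 hzero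
  set η : ℝ := L ^ (-(97 / 100) : ℝ) with hη; set R : ℝ := L ^ (-(19 / 20) : ℝ) with hR
  have hηpos : 0 < η := hpos _; have hRpos : 0 < R := hpos _
  have hR14 : R ≤ 1 / 4 := by
    rw [hR, hneg, div_le_div_iff₀ (hpos _) (by norm_num)]
    have : L ^ (2/3 : ℝ) ≤ L ^ (19/20 : ℝ) := rpow_le_rpow_of_exponent_le hL1 (by norm_num)
    have h8 : (8 : ℝ) ^ (2/3 : ℝ) ≤ L ^ (2 / 3 : ℝ) := rpow_le_rpow (by norm_num) hL8 (by norm_num); linarith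
  have hηR : 4 * η ≤ R := by rw [hη, hR, hneg, hneg, mul_one_div, div_le_div_iff₀ (hpos _) (hpos _)]; linarith
  have hβη : 10 * (1 - ρ.re) ≤ η := by
    have : 10 * L ^ (-(49 / 50) : ℝ) ≤ η := by
      rw [hη, hneg, hneg, mul_one_div, div_le_div_iff₀ (hpos _) (hpos _)]; linarith
    linarith
  have hη1L : 1 / L ≤ η := by
    rw [hη, hneg, div_le_div_iff₀ hLpos (hpos _), one_mul, one_mul]
    calc L ^ (97 / 100 : ℝ) ≤ L ^ (1 : ℝ) := rpow_le_rpow_of_exponent_le hL1 (by norm_num)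
      _ = L := rpow_one L
  set M := 3 * log L
  -- the common setting for Landau's lemma around `1 + η + i t`
  have hset : ∀ t : ℝ, 1 ≤ |t| → |t| ≤ exp L / 2 → let f := fun z : ℂ => zeta1 ((1 + η + t * I) + R * z)
    DifferentiableOn ℂ f (ball 0 2) ∧ f 0 ≠ 0 ∧
    (∀ z ∈ closedBall (0 : ℂ) 1, ‖f z‖ ≤ exp M * ‖f 0‖) ∧
    (∀ z, ‖z‖ ≤ 1 / 2 → f z = 0 → z.re ≤ 0) ∧
    logDeriv f 0 = R * logDeriv zeta1 (1 + η + t * I) := by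
    intro t ht1 ht2 f
    have hre : ∀ z : ℂ, ((1 + η + t * I) + R * z : ℂ).re = 1 + η + R * z.re := by intro z; simp
    have him : ∀ z : ℂ, ((1 + η + t * I) + R * z : ℂ).im = t + R * z.im := by intro z; simp
    refine ⟨?_, ?_, ?_, ?_, ?_⟩
    · intro z hz; apply DifferentiableAt.differentiableWithinAt
      have hz' : |z.re| < 2 := (abs_re_le_norm z).trans_lt (by simpa using hz)
      have h := zeta1_diffAt ((1 + η + t * I) + R * z) (by rw [hre]; nlinarith [(abs_lt.1 hz').1])
      exact DifferentiableAt.comp (f := fun z : ℂ => (1 + η + t * I) + R * z) z h (by fun_prop)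
    · exact zeta1_ne_zero _ (by rw [hre]; simp; linarith)
    · intro z hz; have hz' : ‖z‖ ≤ 1 := by simpa using hz
      have h1 := abs_le.1 ((abs_re_le_norm z).trans hz'); have h2 := abs_le.1 ((abs_im_le_norm z).trans hz')
      have h3 := hratio η t hη1L (by linarith) ht1 ht2 ((1 + η + t * I) + R * z)
        (by rw [hre]; nlinarith) (by rw [hre]; nlinarith) (by
          rw [him, add_sub_cancel_left, abs_mul, abs_of_pos hRpos]; have := (abs_im_le_norm z).trans hz'
          nlinarith [abs_nonneg z.im])
      simpa [f] using h3
    · intro z hz hfz; by_contra hpz; push Not at hpz; exact zeta1_ne_zero _ (by rw [hre]; nlinarith) hfz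
    · exact logDeriv_affine zeta1 _ R (zeta1_diffAt _ (by simp; linarith))
  have hγe : |2 * γ| ≤ exp L / 2 := by rw [abs_mul, abs_two]; linarith
  have habs2 : |2 * γ| = 2 * |γ| := by rw [abs_mul, abs_two]
  obtain ⟨a1, a2, a3, a4, a5⟩ := hset (2 * γ) (by linarith) hγe
  obtain ⟨b1, b2, b3, b4, b5⟩ := hset γ (by linarith) (by linarith [exp_pos L])
  have hA := landau _ M a1 a2 a3 a4; set η1 := (1 + η - ρ.re) / R with hη1
  have hη1pos : 0 < η1 := div_pos (by linarith) hRpos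
  have hη1le : η1 ≤ 1 / 2 := by rw [hη1, div_le_iff₀ hRpos]; linarith
  have hB := landau_zero _ M b1 b2 b3 b4 η1 hη1pos hη1le (by
    have : (1 + η + γ * I : ℂ) + R * (-(η1 : ℂ)) = ρ := by
      have h5 : R * η1 = 1 + η - ρ.re := by rw [hη1]; field_simp
      have h6 : (R : ℂ) * η1 = 1 + η - ρ.re := mod_cast h5; rw [mul_neg, h6]; apply Complex.ext <;> simp [hγ]
    show zeta1 _ = 0; rw [this]; exact hzero)
  rw [a5, re_ofReal_mul] at hA; rw [b5, re_ofReal_mul] at hB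
  have h341 := three_four_one (1 + η) γ (by linarith)
  have hre1 : ∀ t : ℝ, (((1 + η : ℝ) : ℂ) + t * I).re = 1 + η := by intro t; simp
  rw [LSeries_vonMangoldt_eq' _ (by simpa using hηpos), LSeries_vonMangoldt_eq' _ (by rw [hre1]; linarith),
    LSeries_vonMangoldt_eq' _ (by rw [hre1]; linarith)] at h341
  -- the pole terms
  have hpole : ∀ t : ℝ, 1 ≤ |t| → (1 / (((1 + η : ℝ) : ℂ) + t * I - 1)).re ≤ 1 := by
    intro t ht; refine (Complex.re_le_norm _).trans ?_; rw [norm_div, norm_one, div_le_one]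
    · refine ht.trans ?_; have := abs_im_le_norm (((1 + η : ℝ) : ℂ) + t * I - 1); simpa using this
    · have := abs_im_le_norm (((1 + η : ℝ) : ℂ) + t * I - 1)
      have h2 : |t| ≤ ‖((1 + η : ℝ) : ℂ) + t * I - 1‖ := by simpa using this
      linarith
  have hp1 := hpole γ (by linarith); have hp2 := hpole (2 * γ) (by linarith)
  have hp0 : (1 / (((1 + η : ℝ) : ℂ) - 1)).re = 1 / η := by
    push_cast; rw [add_sub_cancel_left]; exact_mod_cast rfl
  have hreal : -(logDeriv zeta1 ((1 + η : ℝ) : ℂ)).re ≤ K := by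
    have h := (hc ((1 + η : ℝ) : ℂ) (by rw [ofReal_re]; linarith) (by rw [ofReal_re]; linarith) (by simp)).2.2.1
    have h2 := abs_re_le_norm (logDeriv zeta1 ((1 + η : ℝ) : ℂ))
    linarith [neg_abs_le (logDeriv zeta1 ((1 + η : ℝ) : ℂ)).re]
  have ecast : ((1 + η : ℝ) : ℂ) = 1 + (η : ℂ) := by push_cast; ring
  simp only [add_re, neg_re] at h341; rw [hp0] at h341; rw [ecast] at h341 hp1 hp2 hreal
  set X1 := (logDeriv zeta1 (1 + η + γ * I)).re; set X2 := (logDeriv zeta1 (1 + η + (2 * γ : ℝ) * I)).re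
  have hA' : -X2 ≤ 48 * (M + 1) / R := by rw [le_div_iff₀ hRpos]; linarith
  have hB' : -X1 ≤ (48 * (M + 1) + 1) / R - 1 / (1 + η - ρ.re) := by
    have h1 : 1 / η1 = R / (1 + η - ρ.re) := by rw [hη1, one_div_div]
    rw [h1] at hB
    have h2 : (-X1) * R ≤ ((48 * (M + 1) + 1) / R - 1 / (1 + η - ρ.re)) * R := by
      have : ((48 * (M + 1) + 1) / R - 1 / (1 + η - ρ.re)) * R = 48 * (M + 1) + 1 - R / (1 + η - ρ.re) := by field_simp
      rw [this]; linarith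
    exact le_of_mul_le_mul_right h2 hRpos
  have hD : 1 / (1 + η - ρ.re) ≥ (10 / 11) * (1 / η) := by
    rw [ge_iff_le, mul_one_div, div_le_div_iff₀ hηpos (by linarith)]; linarith
  have hMle : M ≤ 3 * L ^ (1 / 100 : ℝ) := by
    simp only [one_mul, norm_eq_abs] at hlog; rw [abs_of_nonneg (log_nonneg hL1), abs_of_pos (hpos _)] at hlog
    linarith
  have hRi : 1 / R = L ^ (19 / 20 : ℝ) := by rw [hR, hneg]; simp
  have hηi : 1 / η = L ^ (97 / 100 : ℝ) := by rw [hη, hneg]; simp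
  have hfin : (240 * (M + 1) + 4) / R ≤ 6000 * L ^ (24 / 25 : ℝ) := by
    have e : L ^ (24 / 25 : ℝ) = L ^ (1 / 100 : ℝ) * L ^ (19 / 20 : ℝ) := by rw [← rpow_add hLpos]; norm_num
    rw [div_eq_mul_one_div, hRi, e, ← mul_assoc]; refine mul_le_mul_of_nonneg_right ?_ (hpos _).le
    have := hone (1 / 100) (by norm_num); linarith
  have hsum : 4 * ((48 * (M + 1) + 1) / R) + 48 * (M + 1) / R = (240 * (M + 1) + 4) / R := by ring
  have h24 := hone (24 / 25) (by norm_num); rw [hηi] at h341 hD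
  have hKl : 3 * K ≤ 3 * K * L ^ (24 / 25 : ℝ) := le_mul_of_one_le_right (by linarith) h24; linarith

/-- The analytic function `-ζ'/ζ - ζ = ∑ (Λ(n) - 1) n^{-s}`, written without its removable
singularity at `s = 1`. -/
def GG (s : ℂ) : ℂ := -logDeriv zeta1 s - dslope zeta1 1 s

lemma GG_eq (s : ℂ) (hs : 1 < s.re) : GG s = LSeries (fun n => (Λ n : ℂ) - 1) s := by
  have hs1 : s ≠ 1 := by rintro rfl; simp at hs
  have hs1' : s - 1 ≠ 0 := sub_ne_zero.2 hs1
  have h1 := LSeries_sub (LSeriesSummable_vonMangoldt hs) (LSeriesSummable_one_iff.2 hs)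
  have h2 : LSeries (fun n => (Λ n : ℂ) - 1) s = LSeries (fun n => (Λ n : ℂ)) s - LSeries 1 s := h1
  rw [h2, LSeries_vonMangoldt_eq' s hs, LSeries_one_eq_riemannZeta hs, GG, dslope_of_ne _ hs1, slope_def_field,
    zeta1_one, zeta1_eq s hs]
  field_simp; ring

lemma GG_diffAt (s : ℂ) (hs : 1 / 2 < s.re) (h0 : zeta1 s ≠ 0) : DifferentiableAt ℂ GG s := by
  have h1 : DifferentiableOn ℂ (dslope zeta1 1) HP := (Complex.differentiableOn_dslope (c := (1 : ℂ))
    (isOpen_HP.mem_nhds (by change (1 : ℝ) / 2 < (1 : ℂ).re; norm_num))).2 differentiableOn_zeta1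
  have h2 := h1.differentiableAt (isOpen_HP.mem_nhds hs)
  have h3 : DifferentiableAt ℂ (deriv zeta1) s :=
    (differentiableOn_zeta1.deriv isOpen_HP).differentiableAt (isOpen_HP.mem_nhds hs)
  exact (h3.div (zeta1_diffAt s hs) h0).neg.sub h2

/-- `GG` is analytic and at most `2L²` for `1 - L^{-0.99} ≤ Re s ≤ 1 + 1/L`, `|Im s| ≤ e^L/16`. -/
lemma GG_bound : ∀ᶠ L : ℝ in atTop, ∀ s : ℂ, 1 - L ^ (-(99 / 100) : ℝ) ≤ s.re → s.re ≤ 1 + 1 / L →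
  |s.im| ≤ exp L / 16 → DifferentiableAt ℂ GG s ∧ ‖GG s‖ ≤ 2 * L ^ 2 := by
  obtain ⟨ε, hε, hε4, K, hK, hc⟩ := zeta1_compact
  filter_upwards [zero_free, zeta1_ratio, zeta1_bound, eventually_ge_atTop 200, eventually_ge_atTop (2 * K),
    ev_rpow (1 / ε) 0 (49 / 50) (by norm_num),
    ev_rpow 4 (19 / 20) (49 / 50) (by norm_num),
    ev_rpow 4 (49 / 50) (99 / 100) (by norm_num),
    (isLittleO_log_rpow_atTop (by norm_num : (0 : ℝ) < 1 / 100)).def (by norm_num : (0 : ℝ) < 1)]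
    with L hzf hratio hzb hL8 hLK hLε hL4 hL4' hlog
  intro s hs1 hs2 hs3; have hLpos : 0 < L := by linarith
  have hL1 : 1 ≤ L := by linarith
  have hneg : ∀ a : ℝ, L ^ (-a) = 1 / L ^ a := fun a => by rw [rpow_neg hLpos.le, one_div]
  have hpos : ∀ a : ℝ, 0 < L ^ a := fun a => rpow_pos_of_pos hLpos a; have hexpL := add_one_le_exp L
  set θ : ℝ := L ^ (-(49 / 50) : ℝ) with hθ; have hθpos : 0 < θ := hpos _
  have hε1 : θ ≤ ε := by
    rw [hθ, hneg, div_le_iff₀ (hpos _)]; rw [rpow_zero, mul_one, div_le_iff₀ hε] at hLε; linarith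
  have hθ99 : 4 * L ^ (-(99 / 100) : ℝ) ≤ θ := by
    rw [hθ, hneg, hneg, mul_one_div, div_le_div_iff₀ (hpos _) (hpos _)]; linarith
  have hθ19 : 4 * θ ≤ L ^ (-(19 / 20) : ℝ) := by
    rw [hθ, hneg, hneg, mul_one_div, div_le_div_iff₀ (hpos _) (hpos _)]; linarith
  have hLinv : 1 / L ≤ L ^ (-(99 / 100) : ℝ) := by
    rw [hneg]; refine one_div_le_one_div_of_le (hpos _) ?_
    calc L ^ (99 / 100 : ℝ) ≤ L ^ (1 : ℝ) := rpow_le_rpow_of_exponent_le hL1 (by norm_num)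
      _ = L := rpow_one L
  have hne := hzf s (by linarith) (by linarith); refine ⟨GG_diffAt s (by linarith) hne, ?_⟩; rw [GG]
  refine (norm_sub_le _ _).trans ?_; rw [norm_neg]
  rcases le_or_gt |s.im| 4 with h4 | h4
  · obtain ⟨_, _, k2, k3⟩ := hc s (by linarith) (by linarith) h4; nlinarith
  · have hd : ‖dslope zeta1 1 s‖ ≤ L ^ 2 := by
      have hsne : s ≠ 1 := by rintro rfl; simp at h4; linarith
      rw [dslope_of_ne _ hsne, slope_def_field, norm_div, zeta1_one]
      have him : |s.im| ≤ ‖s - 1‖ := by simpa using abs_im_le_norm (s - 1)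
      rw [div_le_iff₀ (by linarith)]; refine (norm_sub_le _ _).trans ?_
      have hb := hzb s (by linarith) (by linarith) (by linarith)
      have hns : ‖s‖ ≤ ‖s - 1‖ + 1 := by
        have := norm_add_le (s - 1) 1; rw [norm_one] at this; simpa using this
      rw [norm_one]; have : 4 ≤ ‖s - 1‖ := by linarith
      have : ‖s - 1‖ * (2 * L) + 2 * ‖s - 1‖ ≤ L ^ 2 * ‖s - 1‖ := by
        have : 2 * L + 2 ≤ L ^ 2 := by nlinarith
        nlinarith
      linarith
    have hl : ‖logDeriv zeta1 s‖ ≤ L ^ 2 := by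
      set t := s.im with ht
      have hre : ∀ z : ℂ, ((1 + (θ / 2 : ℝ) + t * I) + z : ℂ).re = 1 + θ / 2 + z.re := by intro z; simp
      have him : ∀ z : ℂ, ((1 + (θ / 2 : ℝ) + t * I) + z : ℂ).im = t + z.im := by intro z; simp
      have key := logDeriv_bound (fun z : ℂ => zeta1 ((1 + (θ / 2 : ℝ) + t * I) + z)) (3 / 2 * θ)
        (3 * log L) (by positivity) (by have := log_pos (by linarith : 1 < L); positivity) ?_ ?_ ?_
        (s - (1 + (θ / 2 : ℝ) + t * I)) ?_
      · have e1 : logDeriv (fun z : ℂ => zeta1 ((1 + (θ / 2 : ℝ) + t * I) + z))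
          (s - (1 + (θ / 2 : ℝ) + t * I)) = logDeriv zeta1 s := by
          rw [logDeriv_apply, logDeriv_apply, deriv_comp_const_add]; simp
        rw [e1] at key; refine key.trans ?_
        have hMle : log L ≤ L ^ (1 / 100 : ℝ) := by
          simp only [one_mul, norm_eq_abs] at hlog
          rwa [abs_of_nonneg (log_nonneg hL1), abs_of_pos (hpos _)] at hlog
        have hθi : 1 / θ = L ^ (49 / 50 : ℝ) := by rw [hθ, hneg]; simp
        have e2 : 24 * (3 * log L) / (3 / 2 * θ) = 48 * log L * (1 / θ) := by field_simp; ring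
        rw [e2, hθi]
        calc 48 * log L * L ^ (49 / 50 : ℝ) ≤ 48 * L ^ (1 / 100 : ℝ) * L ^ (49 / 50 : ℝ) := by gcongr
          _ = 48 * L ^ (99 / 100 : ℝ) := by rw [mul_assoc, ← rpow_add hLpos]; norm_num
          _ ≤ 48 * L ^ (1 : ℝ) := by
            have := rpow_le_rpow_of_exponent_le hL1 (by norm_num : (99 / 100 : ℝ) ≤ 1); linarith
          _ = 48 * L := by rw [rpow_one]
          _ ≤ L ^ 2 := by nlinarith
      · intro z hz; apply DifferentiableAt.differentiableWithinAt
        have hz' : |z.re| < 3 / 2 * θ := (abs_re_le_norm z).trans_lt (by simpa using hz)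
        have h := zeta1_diffAt ((1 + (θ / 2 : ℝ) + t * I) + z) (by rw [hre]; linarith [(abs_lt.1 hz').1])
        exact DifferentiableAt.comp (f := fun z : ℂ => (1 + (θ / 2 : ℝ) + t * I) + z) z h (by fun_prop)
      · intro z hz; have hz' : |z.re| < 3 / 2 * θ := (abs_re_le_norm z).trans_lt (by simpa using hz)
        have hz2 : |z.im| < 3 / 2 * θ := (abs_im_le_norm z).trans_lt (by simpa using hz)
        refine hzf _ (by rw [hre]; linarith [(abs_lt.1 hz').1]) ?_; rw [him]; have := abs_add_le t z.im
        linarith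
      · intro z hz; have hz' : |z.re| < 3 / 2 * θ := (abs_re_le_norm z).trans_lt (by simpa using hz)
        have hz2 : |z.im| < 3 / 2 * θ := (abs_im_le_norm z).trans_lt (by simpa using hz)
        have := hratio (θ / 2) t (by linarith) (by linarith) (by linarith) (by linarith) ((1 + (θ / 2 : ℝ) + t * I) + z)
          (by rw [hre]; linarith [(abs_lt.1 hz').1]) (by rw [hre z]; linarith [(abs_lt.1 hz').2])
          (by rw [him, add_sub_cancel_left]; linarith)
        simpa using this
      · have e3 : s - (1 + (θ / 2 : ℝ) + t * I) = ((s.re - 1 - θ / 2 : ℝ) : ℂ) := by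
          apply Complex.ext <;> simp [ht]; ring
        rw [e3, norm_real, norm_eq_abs, abs_le]; constructor <;> linarith
    linarith

/-! ### The hat kernel and Mellin inversion -/

/-- The Fejér hat function. -/
def hat (x : ℝ) : ℝ := max 0 (1 - |x|)

lemma hat_nonneg (x : ℝ) : 0 ≤ hat x := le_max_left _ _
lemma hat_le_one (x : ℝ) : hat x ≤ 1 := max_le zero_le_one (by linarith [abs_nonneg x])
lemma hat_cont : Continuous hat := by unfold hat; fun_prop
lemma hat_of_one_le {x : ℝ} (h : 1 ≤ |x|) : hat x = 0 := max_eq_left (by linarith)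
lemma hat_of_le_one {x : ℝ} (h : |x| ≤ 1) : hat x = 1 - |x| := max_eq_right (by linarith)
lemma abs_lt_of_hat_ne {x : ℝ} (h : hat x ≠ 0) : |x| < 1 := by
  by_contra hh; exact h (hat_of_one_le (not_lt.1 hh))
lemma hat_neg (x : ℝ) : hat (-x) = hat x := by unfold hat; rw [abs_neg]
lemma hat_lip (x y : ℝ) : |hat x - hat y| ≤ |x - y| := by
  unfold hat; have h1 := abs_max_sub_max_le_abs (1 - |x|) (1 - |y|) 0
  rw [max_comm (1 - |x|), max_comm (1 - |y|)] at h1; refine h1.trans ?_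
  have h2 : (1 - |x|) - (1 - |y|) = -(|x| - |y|) := by ring
  rw [h2, abs_neg]; exact abs_abs_sub_abs_le x y

/-- The two-sided Laplace transform of the hat. -/
def HH (w : ℂ) : ℂ := ∫ x : ℝ, (hat x : ℂ) * Complex.exp (x * w)

lemma hat_mul_support (f : ℝ → ℂ) : Function.support (fun x : ℝ => (hat x : ℂ) * f x) ⊆ Set.Ioc (-1) 1 := by
  intro x hx
  have : hat x ≠ 0 := by
    intro h; apply hx; simp [h]
  have := abs_lt.1 (abs_lt_of_hat_ne this); exact ⟨this.1, this.2.le⟩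

lemma hat_mul_integrable (f : ℝ → ℂ) (hf : Continuous f) : Integrable (fun x : ℝ => (hat x : ℂ) * f x) := by
  refine Continuous.integrable_of_hasCompactSupport ((continuous_ofReal.comp hat_cont).mul hf) ?_
  refine HasCompactSupport.intro (isCompact_Icc (a := (-1 : ℝ)) (b := 1)) ?_; intro x hx; by_contra h
  exact hx (Set.Ioc_subset_Icc_self (hat_mul_support f h))

lemma HH_eq_interval (w : ℂ) : HH w = ∫ x in (-1 : ℝ)..1, (hat x : ℂ) * Complex.exp (x * w) :=
  (integral_eq_integral_of_support_subset (hat_mul_support _)).symm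

lemma HH_triv (w : ℂ) : ‖HH w‖ ≤ 2 * exp |w.re| := by
  rw [HH_eq_interval]
  have := intervalIntegral.norm_integral_le_of_norm_le_const (a := (-1 : ℝ)) (b := 1) (C := exp |w.re|)
    (f := fun x : ℝ => (hat x : ℂ) * Complex.exp (x * w)) (by
      intro x hx; rw [Set.uIoc_of_le (by norm_num)] at hx
      rw [norm_mul, norm_exp, norm_real, norm_of_nonneg (hat_nonneg x)]
      have h1 : ((x : ℂ) * w).re ≤ |w.re| := by
        rw [re_ofReal_mul]; refine (le_abs_self _).trans ?_; rw [abs_mul]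
        have : |x| ≤ 1 := abs_le.2 ⟨hx.1.le, hx.2⟩; nlinarith [abs_nonneg w.re]
      calc hat x * exp _ ≤ 1 * exp |w.re| := by gcongr; exact hat_le_one x
        _ = _ := one_mul _)
  refine this.trans (le_of_eq ?_); norm_num; ring

lemma HH_formula (w : ℂ) (hw : w ≠ 0) : HH w = (Complex.exp w + Complex.exp (-w) - 2) / w ^ 2 := by
  have hc : Continuous (fun x : ℝ => (hat x : ℂ) * Complex.exp (x * w)) :=
    (continuous_ofReal.comp hat_cont).mul (by fun_prop)
  rw [HH_eq_interval, ← integral_add_adjacent_intervals (b := 0)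
    (hc.intervalIntegrable _ _) (hc.intervalIntegrable _ _)]
  have hexp : ∀ x : ℝ, HasDerivAt (fun x : ℝ => Complex.exp (x * w)) (Complex.exp (x * w) * w) x := by
    intro x
    have h1 : HasDerivAt (fun x : ℝ => (x : ℂ) * w) w x := by
      simpa using (Complex.ofRealCLM.hasDerivAt (x := x)).mul_const w
    exact h1.cexp
  have hid : ∀ x : ℝ, HasDerivAt (fun x : ℝ => (x : ℂ)) 1 x := fun x =>
    HasDerivAt.congr_deriv (Complex.ofRealCLM.hasDerivAt (x := x)) (by simp)
  have i1 : ∫ x in (0 : ℝ)..1, (hat x : ℂ) * Complex.exp (x * w) = Complex.exp w / w ^ 2 - (1 / w + 1 / w ^ 2) := by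
    have h := intervalIntegral.integral_eq_sub_of_hasDerivAt (a := (0 : ℝ)) (b := 1)
      (f := fun x : ℝ => (1 - (x : ℂ)) * (Complex.exp (x * w) / w) + Complex.exp (x * w) / w ^ 2)
      (f' := fun x : ℝ => (1 - (x : ℂ)) * Complex.exp (x * w)) (by
        intro x _; have := (((hid x).const_sub 1).mul ((hexp x).div_const w)).add ((hexp x).div_const (w ^ 2))
        refine this.congr_deriv ?_; field_simp; ring) (cii (by fun_prop))
    rw [integral_congr (g := fun x : ℝ => (1 - (x : ℂ)) * Complex.exp (x * w)), h]
    · simp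
    · intro x hx; rw [Set.uIcc_of_le (by norm_num)] at hx; simp only
      rw [hat_of_le_one (by rw [abs_of_nonneg hx.1]; exact hx.2), abs_of_nonneg hx.1]; push_cast; ring
  have i2 : ∫ x in (-1 : ℝ)..0, (hat x : ℂ) * Complex.exp (x * w) = (1 / w - 1 / w ^ 2) + Complex.exp (-w) / w ^ 2 := by
    have h := intervalIntegral.integral_eq_sub_of_hasDerivAt (a := (-1 : ℝ)) (b := 0)
      (f := fun x : ℝ => (1 + (x : ℂ)) * (Complex.exp (x * w) / w) - Complex.exp (x * w) / w ^ 2)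
      (f' := fun x : ℝ => (1 + (x : ℂ)) * Complex.exp (x * w)) (by
        intro x _; have := (((hid x).const_add 1).mul ((hexp x).div_const w)).sub ((hexp x).div_const (w ^ 2))
        refine this.congr_deriv ?_; field_simp; ring) (cii (by fun_prop))
    rw [integral_congr (g := fun x : ℝ => (1 + (x : ℂ)) * Complex.exp (x * w)), h]
    · simp
    · intro x hx; rw [Set.uIcc_of_le (by norm_num)] at hx; simp only
      rw [hat_of_le_one (by rw [abs_of_nonpos hx.2]; linarith [hx.1]), abs_of_nonpos hx.2]; push_cast; ring
  rw [i1, i2]; field_simp; ring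

lemma HH_decay (w : ℂ) (hw : w ≠ 0) : ‖HH w‖ ≤ 4 * exp |w.re| / ‖w‖ ^ 2 := by
  rw [HH_formula w hw, norm_div, norm_pow]; gcongr; refine (norm_sub_le _ _).trans ?_
  have h1 := norm_add_le (Complex.exp w) (Complex.exp (-w)); rw [norm_exp, norm_exp, neg_re] at h1
  have h2 : exp w.re ≤ exp |w.re| := exp_le_exp.2 (le_abs_self _)
  have h3 : exp (-w.re) ≤ exp |w.re| := exp_le_exp.2 (neg_le_abs _)
  have h4 : 1 ≤ exp |w.re| := one_le_exp (abs_nonneg _); have h5 : ‖(2 : ℂ)‖ = 2 := by simp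
  linarith

lemma HH_bound (w : ℂ) : ‖HH w‖ ≤ 8 * exp |w.re| / (1 + ‖w‖ ^ 2) := by
  have hp := exp_pos |w.re|
  rcases le_total ‖w‖ 1 with h | h
  · refine (HH_triv w).trans ?_; rw [le_div_iff₀ (by positivity)]
    have : ‖w‖ ^ 2 ≤ 1 := pow_le_one₀ (norm_nonneg _) h; nlinarith
  · have hw : w ≠ 0 := by rintro rfl; simp at h; linarith
    refine (HH_decay w hw).trans ?_; rw [div_le_div_iff₀ (by positivity) (by positivity)]
    have : 1 ≤ ‖w‖ ^ 2 := one_le_pow₀ h; nlinarith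

lemma integral_hat : ∫ x : ℝ, hat x = 1 := by
  have h0 : ∫ x : ℝ, hat x = ∫ x in (-1 : ℝ)..1, hat x := by
    refine (integral_eq_integral_of_support_subset ?_).symm; intro x hx
    have := abs_lt.1 (abs_lt_of_hat_ne hx); exact ⟨this.1, this.2.le⟩
  rw [h0, ← integral_add_adjacent_intervals (b := 0)
    (hat_cont.intervalIntegrable _ _) (hat_cont.intervalIntegrable _ _)]
  have i1 : ∫ x in (0 : ℝ)..1, hat x = 1 / 2 := by
    rw [integral_congr (g := fun x : ℝ => 1 - x)]
    · rw [intervalIntegral.integral_sub (by simp) (by simp)]; simp [integral_id]; norm_num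
    · intro x hx; rw [Set.uIcc_of_le (by norm_num)] at hx; simp only
      rw [hat_of_le_one (by rw [abs_of_nonneg hx.1]; exact hx.2), abs_of_nonneg hx.1]
  have i2 : ∫ x in (-1 : ℝ)..0, hat x = 1 / 2 := by
    rw [integral_congr (g := fun x : ℝ => 1 + x)]
    · rw [intervalIntegral.integral_add (by simp) (by simp)]; simp [integral_id]; norm_num
    · intro x hx; rw [Set.uIcc_of_le (by norm_num)] at hx; simp only
      rw [hat_of_le_one (by rw [abs_of_nonpos hx.2]; linarith [hx.1]), abs_of_nonpos hx.2]; ring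
  rw [i1, i2]; norm_num

/-- Fourier transform of `hat(x) e^{αx}`. -/
lemma fourier_hat_exp (α ξ : ℝ) :
  𝓕 (fun x : ℝ => (hat x : ℂ) * Complex.exp (x * (α : ℂ))) ξ = HH (α + (-2 * π * ξ : ℝ) * I) := by
  rw [fourier_real_eq_integral_exp_smul, HH]; congr 1; funext x
  rw [smul_eq_mul, mul_left_comm, ← Complex.exp_add]; congr 2; push_cast; ring

lemma hat_inversion (α x : ℝ) : (hat x : ℂ) * Complex.exp (x * (α : ℂ)) =
  ∫ ξ : ℝ, Complex.exp ((2 * π * ξ * x : ℝ) * I) * HH (α + (-2 * π * ξ : ℝ) * I) := by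
  set f : ℝ → ℂ := fun x : ℝ => (hat x : ℂ) * Complex.exp (x * (α : ℂ))
  have hc : Continuous f := (continuous_ofReal.comp hat_cont).mul (by fun_prop)
  have hi : Integrable f := hat_mul_integrable _ (by fun_prop)
  have hF : 𝓕 f = fun ξ => HH (α + (-2 * π * ξ : ℝ) * I) := funext (fourier_hat_exp α)
  have hFc : Continuous (𝓕 f) := VectorFourier.fourierIntegral_continuous continuous_fourierChar
    (by exact continuous_inner) hi
  have hFi : Integrable (𝓕 f) := by
    refine Integrable.mono' ((integrable_inv_one_add_sq).const_mul (8 * exp |α|)) hFc.aestronglyMeasurable ?_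
    refine Eventually.of_forall fun ξ => ?_; rw [hF]; refine (HH_bound _).trans ?_
    have hre : ((α : ℂ) + (-2 * π * ξ : ℝ) * I).re = α := by simp
    rw [hre, div_eq_mul_inv]
    have him : |(-2 * π * ξ)| ≤ ‖(α : ℂ) + (-2 * π * ξ : ℝ) * I‖ := by
      have := abs_im_le_norm ((α : ℂ) + (-2 * π * ξ : ℝ) * I); simpa using this
    have h2 : ξ ^ 2 ≤ ‖(α : ℂ) + (-2 * π * ξ : ℝ) * I‖ ^ 2 := by
      rw [← sq_abs ξ]; refine pow_le_pow_left₀ (abs_nonneg _) (le_trans ?_ him) 2; rw [abs_mul]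
      have : 1 ≤ |(-2 * π)| := by rw [abs_mul, abs_neg, abs_two, abs_of_pos pi_pos]; linarith [pi_gt_three]
      exact le_mul_of_one_le_left (abs_nonneg _) this
    gcongr
  have := congrFun (hc.fourierInv_fourier_eq hi hFi) x; rw [fourierInv_eq', hF] at this
  change _ = f x at this; refine Eq.trans this.symm ?_; congr 1; funext ξ; simp only [smul_eq_mul]; congr 3
  simp [mul_comm, mul_left_comm, mul_assoc]

/-- Mellin-type inversion on the line `Re z = β`. -/
lemma hat_mellin (κ β x : ℝ) (hκ : 0 < κ) : (hat (x / κ) : ℂ) =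
  (κ / (2 * π) : ℝ) * ∫ y : ℝ, HH (κ * (β + y * I)) * Complex.exp (-(x * (β + y * I))) := by
  have h := hat_inversion (κ * β) (x / κ)
  have hsub := Measure.integral_comp_mul_left
    (fun y : ℝ => HH (κ * (β + y * I)) * Complex.exp (-(x * (β + y * I)))) (-2 * π / κ)
  have hpi := pi_pos
  have hab : |(-2 * π / κ)⁻¹| = κ / (2 * π) := by
    rw [inv_div, abs_div, abs_of_pos hκ, abs_mul, abs_neg, abs_two, abs_of_pos hpi]
  rw [hab] at hsub; have hκc : (κ : ℂ) ≠ 0 := mod_cast hκ.ne'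
  have e : ∀ ξ : ℝ, HH (κ * (β + ((-2 * π / κ * ξ : ℝ) : ℂ) * I)) * Complex.exp (-(x * (β + ((-2 * π / κ * ξ : ℝ) : ℂ) * I)))
    = Complex.exp (-(x * β)) * (Complex.exp ((2 * π * ξ * (x / κ) : ℝ) * I) * HH ((κ * β : ℝ) + (-2 * π * ξ : ℝ) * I)) := by
    intro ξ; rw [← mul_assoc, ← Complex.exp_add, mul_comm]; congr 2
    · push_cast; field_simp; ring
    · push_cast; field_simp
  simp_rw [e] at hsub; rw [integral_const_mul, ← h] at hsub
  have e2 : Complex.exp (-(x * β)) * ((hat (x / κ) : ℂ) * Complex.exp ((x / κ : ℝ) * ((κ * β : ℝ) : ℂ))) = hat (x / κ) := by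
    rw [mul_left_comm, ← Complex.exp_add]
    have : -((x : ℂ) * β) + (x / κ : ℝ) * ((κ * β : ℝ) : ℂ) = 0 := by push_cast; field_simp; ring
    rw [this, Complex.exp_zero, mul_one]
  rw [e2] at hsub; rw [hsub, real_smul]

/-- The part of an integral outside `[-T, T]` when the integrand is `O(1/y²)`. -/
lemma tail_bound (f : ℝ → ℂ) (hf : Integrable f) (T C : ℝ) (hT : 0 < T)
  (hb : ∀ y, T < |y| → ‖f y‖ ≤ C / y ^ 2) : ‖(∫ y, f y) - ∫ y in (-T)..T, f y‖ ≤ 2 * C / T := by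
  have h1 : ∫ y, f y = (∫ y in Set.Iic (-T), f y) + (∫ y in (-T)..T, f y) + ∫ y in Set.Ioi T, f y := by
    rw [intervalIntegral.integral_Iic_add_Ioi (b := -T) hf.integrableOn hf.integrableOn |>.symm,
      ← intervalIntegral.integral_interval_add_Ioi (b := T) hf.integrableOn hf.integrableOn]
    ring
  have key : ∀ g : ℝ → ℂ, (∀ y, T < y → ‖g y‖ ≤ C / y ^ 2) → ‖∫ y in Set.Ioi T, g y‖ ≤ C / T := by
    intro g hg
    have hInt : IntegrableOn (fun y : ℝ => C * y ^ (-2 : ℝ)) (Set.Ioi T) :=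
      (integrableOn_Ioi_rpow_of_lt (by norm_num) hT).const_mul C
    have h2 := norm_integral_le_of_norm_le (f := g) hInt (by
      filter_upwards [ae_restrict_mem measurableSet_Ioi] with y hy; have hy0 : 0 < y := hT.trans hy
      refine (hg y hy).trans (le_of_eq ?_); rw [rpow_neg hy0.le, div_eq_mul_inv]; norm_cast)
    refine h2.trans (le_of_eq ?_); rw [integral_const_mul, integral_Ioi_rpow_of_lt (by norm_num) hT]; norm_num
    rw [rpow_neg_one]; rfl
  have h2 := key f (fun y hy => hb y (hy.trans_le (le_abs_self y)))
  have h3 := key (fun y => f (-y)) (fun y hy => by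
    have := hb (-y) (by rw [abs_neg]; exact hy.trans_le (le_abs_self y)); simpa using this)
  rw [integral_comp_neg_Ioi] at h3
  have e : (∫ y, f y) - ∫ y in (-T)..T, f y = (∫ y in Set.Iic (-T), f y) + ∫ y in Set.Ioi T, f y := by rw [h1]; ring
  rw [e]; refine (norm_add_le _ _).trans ?_; have : 2 * C / T = C / T + C / T := by ring
  linarith

lemma HH_cont : Continuous HH := by
  have : HH = fun w => ∫ x in (-1 : ℝ)..1, (hat x : ℂ) * Complex.exp (x * w) := funext HH_eq_interval
  rw [this]; apply intervalIntegral.continuous_parametric_intervalIntegral_of_continuous'; have := hat_cont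
  unfold Function.uncurry; fun_prop

lemma HH_diffAt (w : ℂ) (hw : w ≠ 0) : DifferentiableAt ℂ HH w := by
  have h : HH =ᶠ[𝓝 w] fun w => (Complex.exp w + Complex.exp (-w) - 2) / w ^ 2 := by
    filter_upwards [isOpen_ne.mem_nhds hw] with z hz using HH_formula z hz
  refine DifferentiableAt.congr_of_eventuallyEq ?_ h; have : w ^ 2 ≠ 0 := pow_ne_zero 2 hw
  fun_prop (disch := assumption)

/-- Pointwise bound on the line `Re z = β`. -/
lemma HH_line (κ β y w : ℝ) (hκ : 0 ≤ κ) : ‖HH (κ * (β + y * I)) * Complex.exp (w * (β + y * I))‖ ≤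
  8 * exp (κ * |β| + w * β) * (1 + (κ * y) ^ 2)⁻¹ := by
  rw [norm_mul, norm_exp]; have h := HH_bound (κ * (β + y * I))
  have hre : ((κ : ℂ) * (β + y * I)).re = κ * β := by simp
  have hre2 : ((w : ℂ) * (β + y * I)).re = w * β := by simp
  have him : |κ * y| ≤ ‖(κ : ℂ) * (β + y * I)‖ := by
    have := abs_im_le_norm ((κ : ℂ) * (β + y * I)); simpa using this
  rw [hre, abs_mul, abs_of_nonneg hκ] at h; rw [hre2, exp_add]
  have h2 : (κ * y) ^ 2 ≤ ‖(κ : ℂ) * (β + y * I)‖ ^ 2 := by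
    rw [← sq_abs (κ * y)]; exact pow_le_pow_left₀ (abs_nonneg _) him 2
  have h3 : ‖HH (κ * (β + y * I))‖ ≤ 8 * exp (κ * |β|) * (1 + (κ * y) ^ 2)⁻¹ := by
    refine h.trans ?_; rw [div_eq_mul_inv]; gcongr
  calc _ ≤ 8 * exp (κ * |β|) * (1 + (κ * y) ^ 2)⁻¹ * exp (w * β) := mul_le_mul_of_nonneg_right h3 (exp_pos _).le
    _ = _ := by ring

lemma integrable_inv_scaled (κ : ℝ) (hκ : 0 < κ) : Integrable (fun y : ℝ => (1 + (κ * y) ^ 2)⁻¹) :=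
  integrable_inv_one_add_sq.comp_mul_left' hκ.ne'

lemma integral_inv_scaled (κ : ℝ) (hκ : 0 < κ) : ∫ y : ℝ, (1 + (κ * y) ^ 2)⁻¹ = π / κ := by
  have := Measure.integral_comp_mul_left (fun y : ℝ => (1 + y ^ 2)⁻¹) κ
  rw [this, integral_univ_inv_one_add_sq, abs_of_pos (inv_pos.2 hκ), smul_eq_mul]; field_simp

/-! ### Smoothed sums of `Λ - 1` -/

/-- The coefficients `Λ(n) - 1` of `GG`. -/
def lam1 (n : ℕ) : ℂ := (Λ n : ℂ) - 1

lemma lam1_summable (s : ℂ) (hs : 1 < s.re) : LSeriesSummable lam1 s :=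
  LSeriesSummable.sub (LSeriesSummable_vonMangoldt hs) (LSeriesSummable_one_iff.2 hs)

lemma term_norm_line (f : ℕ → ℂ) (σ y : ℝ) (n : ℕ) :
  ‖LSeries.term f ((σ : ℂ) + y * I) n‖ = ‖LSeries.term f (σ : ℂ) n‖ := by
  rw [LSeries.norm_term_eq, LSeries.norm_term_eq]; simp

lemma tsum_norm_term (f : ℕ → ℝ) (hf : ∀ n, 0 ≤ f n) (σ : ℝ) :
  ∑' n, ‖LSeries.term (fun n => (f n : ℂ)) (σ : ℂ) n‖ = ‖LSeries (fun n => (f n : ℂ)) (σ : ℂ)‖ := by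
  have h : ∀ n, LSeries.term (fun n => (f n : ℂ)) (σ : ℂ) n = ((‖LSeries.term (fun n => (f n : ℂ)) (σ : ℂ) n‖ : ℝ) : ℂ) := by
    intro n; rw [LSeries.norm_term_eq, LSeries.term_def]; split_ifs with hn
    · simp
    · rw [Complex.norm_of_nonneg (hf n), ofReal_re]; push_cast; rw [ofReal_cpow (Nat.cast_nonneg n)]; simp
  rw [LSeries, tsum_congr h, ← Complex.ofReal_tsum, Complex.norm_of_nonneg (tsum_nonneg fun n => norm_nonneg _)]

/-- `∑ |Λ(n) - 1| n^{-1-1/L} ≤ L²` for large `L`. -/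
lemma lam1_norm_bound : ∀ᶠ L : ℝ in atTop, ∑' n, ‖LSeries.term lam1 ((1 + 1 / L : ℝ) : ℂ) n‖ ≤ L ^ 2 := by
  obtain ⟨ε, hε, hε4, K, hK, hc⟩ := zeta1_compact
  filter_upwards [eventually_ge_atTop (3 * K), eventually_ge_atTop 1] with L hL hL1
  have hLpos : 0 < L := by linarith
  have hinv : 1 / L ≤ 1 := by rw [div_le_iff₀ hLpos]; linarith
  have hinv0 : 0 < 1 / L := by positivity
  set s : ℂ := ((1 + 1 / L : ℝ) : ℂ) with hs; have hre : s.re = 1 + 1 / L := by rw [hs]; exact ofReal_re _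
  have him : s.im = 0 := by rw [hs]; exact Complex.ofReal_im _
  have h1 : 1 < s.re := by rw [hre]; linarith
  obtain ⟨_, k1, k2, _⟩ := hc s (by linarith) (by linarith) (by rw [him]; simp)
  have hsub : s - 1 = ((1 / L : ℝ) : ℂ) := by rw [hs]; push_cast; ring
  have hns : ‖s - 1‖ = 1 / L := by rw [hsub, Complex.norm_of_nonneg hinv0.le]
  have sΛ := (LSeriesSummable_vonMangoldt h1)
  have s1 : LSeriesSummable (fun _ => ((1 : ℝ) : ℂ)) s := by
    have h := LSeriesSummable_one_iff.2 h1; have e : (fun _ : ℕ => ((1 : ℝ) : ℂ)) = 1 := by funext n; simp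
    rw [e]; exact h
  have e1 := tsum_norm_term (fun n => Λ n) (fun n => vonMangoldt_nonneg) (1 + 1 / L)
  have e2 := tsum_norm_term (fun _ => 1) (fun n => zero_le_one) (1 + 1 / L); rw [← hs] at e1 e2
  have b1 : ‖LSeries (fun n => (Λ n : ℂ)) s‖ ≤ K + L := by
    rw [LSeries_vonMangoldt_eq' s h1]; refine (norm_add_le _ _).trans ?_
    rw [norm_neg, norm_div, norm_one, hns, one_div_one_div]; linarith
  have b2 : ‖LSeries (fun _ => ((1 : ℝ) : ℂ)) s‖ ≤ K * L := by
    have : LSeries (fun _ => ((1 : ℝ) : ℂ)) s = riemannZeta s := by rw [← LSeries_one_eq_riemannZeta h1]; rfl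
    rw [this]; rw [zeta1_eq s h1, norm_mul, hns, div_mul_eq_mul_div, one_mul, div_le_iff₀ hLpos] at k1
    linarith
  calc ∑' n, ‖LSeries.term lam1 s n‖ ≤ ∑' n, (‖LSeries.term (fun n => (Λ n : ℂ)) s n‖ + ‖LSeries.term (fun _ => ((1 : ℝ) : ℂ)) s n‖) := by
        refine (lam1_summable s h1).norm.tsum_le_tsum (fun n => ?_) (sΛ.norm.add s1.norm)
        have : LSeries.term lam1 s n = LSeries.term (fun n => (Λ n : ℂ)) s n - LSeries.term (fun _ => ((1 : ℝ) : ℂ)) s n := by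
          have := LSeries.term_sub_apply (fun n => (Λ n : ℂ)) (fun _ => ((1 : ℝ) : ℂ)) s n; rw [← this]; rfl
        rw [this]; exact norm_sub_le _ _
    _ = _ := sΛ.norm.tsum_add s1.norm
    _ ≤ (K + L) + K * L := by rw [e1, e2]; linarith
    _ ≤ L ^ 2 := by nlinarith

lemma GG_line_cont (β t : ℝ) (hβ : 0 < β) : Continuous (fun y : ℝ => GG (1 + t * I + (β + y * I))) := by
  rw [continuous_iff_continuousAt]; intro y; have h1 : 1 < (1 + t * I + (β + y * I) : ℂ).re := by simp [hβ]
  have h := (GG_diffAt _ (by linarith) (zeta1_ne_zero _ h1.le)).continuousAt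
  exact ContinuousAt.comp (f := fun y : ℝ => (1 + t * I + (β + y * I) : ℂ)) h (by fun_prop)

lemma GG_line_bound (β t y : ℝ) (hβ : 0 < β) : ‖GG (1 + t * I + (β + y * I))‖ ≤
  ∑' n, ‖LSeries.term lam1 ((1 + β : ℝ) : ℂ) n‖ := by
  have h1 : 1 < (1 + t * I + (β + y * I) : ℂ).re := by simp [hβ]
  have e : (1 + t * I + (β + y * I) : ℂ) = ((1 + β : ℝ) : ℂ) + ((t + y : ℝ) : ℂ) * I := by push_cast; ring
  rw [GG_eq _ h1]; have hs := (lam1_summable _ h1).norm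
  refine (norm_tsum_le_tsum_norm hs).trans (le_of_eq ?_); refine tsum_congr fun n => ?_; rw [e]
  exact term_norm_line lam1 _ _ _

/-- Smoothed sums of `Λ(n) - 1` as a contour integral of `GG`. -/
lemma mellin_sum (κ β w t : ℝ) (hκ : 0 < κ) (hβ : 0 < β) :
  LSeries (fun n => lam1 n * (hat ((log n - w) / κ) : ℂ)) (1 + t * I) =
    (κ / (2 * π) : ℝ) * ∫ y : ℝ, HH (κ * (β + y * I)) * Complex.exp (w * (β + y * I)) *
      GG (1 + t * I + (β + y * I)) := by
  have h1 : ∀ y : ℝ, 1 < (1 + t * I + (β + y * I) : ℂ).re := by intro y; simp [hβ]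
  have e : ∀ y : ℝ, (1 + t * I + (β + y * I) : ℂ) = ((1 + β : ℝ) : ℂ) + ((t + y : ℝ) : ℂ) * I := by
    intro y; push_cast; ring
  set F : ℕ → ℝ → ℂ := fun n y => HH (κ * (β + y * I)) * Complex.exp (w * (β + y * I)) *
    LSeries.term lam1 (1 + t * I + (β + y * I)) n with hF
  have hterm : ∀ n : ℕ, n ≠ 0 → ∀ y : ℝ, LSeries.term lam1 (1 + t * I + (β + y * I)) n =
    LSeries.term lam1 (1 + t * I) n * Complex.exp (-(log n * (β + y * I))) := by
    intro n hn y; have hn' : (n : ℂ) ≠ 0 := Nat.cast_ne_zero.2 hn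
    have h2 : (n : ℂ) ^ ((β : ℂ) + y * I) = Complex.exp (log n * (β + y * I)) := by
      rw [Complex.cpow_def_of_ne_zero hn', Complex.natCast_log]
    rw [LSeries.term_of_ne_zero hn, LSeries.term_of_ne_zero hn, cpow_add _ _ hn', Complex.exp_neg, h2,
      ← div_div, div_eq_mul_inv _ (Complex.exp _)]
  have hval : ∀ n, (κ / (2 * π) : ℝ) * ∫ y, F n y = LSeries.term (fun n => lam1 n * (hat ((log n - w) / κ) : ℂ)) (1 + t * I) n := by
    intro n
    rcases eq_or_ne n 0 with rfl | hn
    · simp [hF]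
    · have := hat_mellin κ β (log n - w) hκ
      have e2 : ∀ y : ℝ, F n y = LSeries.term lam1 (1 + t * I) n * (HH (κ * (β + y * I)) *
        Complex.exp (-((log n - w : ℝ) * (β + y * I)))) := by
        intro y; simp only [hF]; rw [hterm n hn y]
        have : Complex.exp (-((log n - w : ℝ) * (β + y * I))) =
          Complex.exp (w * (β + y * I)) * Complex.exp (-(log n * (β + y * I))) := by
          rw [← Complex.exp_add]; congr 1; push_cast; ring
        rw [this]; ring
      simp_rw [e2]
      rw [integral_const_mul, mul_left_comm, ← this, LSeries.term_of_ne_zero hn, LSeries.term_of_ne_zero hn]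
      ring
  have hcF : ∀ n, Continuous (F n) := by
    intro n; have := HH_cont
    rcases eq_or_ne n 0 with rfl | hn
    · simp only [hF, LSeries.term_zero, mul_zero]; exact continuous_const
    · simp only [hF]; simp_rw [hterm n hn]; fun_prop
  have hbF : ∀ n y, ‖F n y‖ ≤ ‖LSeries.term lam1 ((1 + β : ℝ) : ℂ) n‖ * (8 * exp (κ * |β| + w * β) * (1 + (κ * y) ^ 2)⁻¹) := by
    intro n y; simp only [hF]; rw [norm_mul, e y, term_norm_line, mul_comm]
    exact mul_le_mul_of_nonneg_left (HH_line κ β y w hκ.le) (norm_nonneg _)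
  have hbi : ∀ c : ℝ, Integrable (fun y : ℝ => c * (8 * exp (κ * |β| + w * β) * (1 + (κ * y) ^ 2)⁻¹)) := fun c =>
    ((integrable_inv_scaled κ hκ).const_mul _).const_mul _
  have hInt : ∀ n, Integrable (F n) := fun n =>
    (hbi _).mono' (hcF n).aestronglyMeasurable (Eventually.of_forall (hbF n))
  have hsum0 : Summable (fun n => ‖LSeries.term lam1 ((1 + β : ℝ) : ℂ) n‖) :=
    (lam1_summable _ (by rw [ofReal_re]; linarith)).norm
  have hsum : Summable (fun n => ∫ y, ‖F n y‖) := by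
    refine Summable.of_nonneg_of_le (fun n => integral_nonneg fun y => norm_nonneg _)
      (fun n => integral_mono (hInt n).norm (hbi _) (hbF n)) ?_
    simp_rw [integral_const_mul]; exact hsum0.mul_right _
  have key := (hasSum_integral_of_summable_integral_norm hInt hsum).mul_left ((κ / (2 * π) : ℝ) : ℂ)
  simp_rw [hval] at key; rw [LSeries, key.tsum_eq]; congr 2; funext y; simp only [hF]
  rw [tsum_mul_left, GG_eq _ (h1 y)]; rfl

/-- Shifting a contour inside a rectangle `[a,b] × [-T,T]`, with one exceptional point `0`. -/
lemma shift_rect (Φ : ℂ → ℂ) (a b T M : ℝ) (hab : a ≤ b) (hT : 0 ≤ T)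
  (hc : ∀ z : ℂ, a ≤ z.re → z.re ≤ b → |z.im| ≤ T → ContinuousAt Φ z)
  (hd : ∀ z : ℂ, a ≤ z.re → z.re ≤ b → |z.im| ≤ T → z ≠ 0 → DifferentiableAt ℂ Φ z)
  (hM : ∀ z : ℂ, a ≤ z.re → z.re ≤ b → |z.im| = T → ‖Φ z‖ ≤ M) :
  ‖∫ y in (-T)..T, Φ (b + y * I)‖ ≤ ‖∫ y in (-T)..T, Φ (a + y * I)‖ + 2 * (M * (b - a)) := by
  have key := Complex.integral_boundary_rect_eq_zero_of_differentiable_on_off_countable Φ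
    ⟨a, -T⟩ ⟨b, T⟩ {0} (Set.countable_singleton 0) (by
      intro z hz; rw [mem_reProdIm] at hz
      simp only [Set.uIcc_of_le hab, Set.uIcc_of_le (by linarith : -T ≤ T)] at hz
      exact (hc z hz.1.1 hz.1.2 (abs_le.2 hz.2)).continuousWithinAt) (by
      intro z hz; have hz1 := hz.1; rw [mem_reProdIm] at hz1
      simp only [min_eq_left hab, max_eq_right hab, min_eq_left (by linarith : -T ≤ T), max_eq_right (by linarith : -T ≤ T)] at hz1
      exact hd z hz1.1.1.le hz1.1.2.le (abs_le.2 ⟨hz1.2.1.le, hz1.2.2.le⟩) (by simpa using hz.2))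
  simp only at key
  have hor : ∀ s : ℝ, |s| = T → ‖∫ x in a..b, Φ (x + s * I)‖ ≤ M * (b - a) := by
    intro s hs
    have := intervalIntegral.norm_integral_le_of_norm_le_const (a := a) (b := b) (C := M)
      (f := fun x : ℝ => Φ (x + s * I)) (by
        intro x hx; rw [Set.uIoc_of_le hab] at hx; refine hM _ ?_ ?_ ?_ <;> simp [hx.1.le, hx.2, hs])
    rwa [abs_of_nonneg (by linarith)] at this
  have h1 := hor (-T) (by rw [abs_neg, abs_of_nonneg hT]); have h2 := hor T (abs_of_nonneg hT)
  set A := ∫ x in a..b, Φ (x + ((-T : ℝ) : ℂ) * I); set B := ∫ x in a..b, Φ (x + (T : ℂ) * I)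
  set R := ∫ y in (-T)..T, Φ (b + y * I); set Lf := ∫ y in (-T)..T, Φ (a + y * I)
  have hk : I * R = I * Lf + (B - A) := by
    simp only [smul_eq_mul] at key
    linear_combination key
  have := congrArg norm hk; rw [norm_mul, Complex.norm_I, one_mul] at this; rw [this]
  refine (norm_add_le _ _).trans ?_; rw [norm_mul, Complex.norm_I, one_mul]; have := norm_sub_le B A; linarith

/-- The numerical endgame of `lam1_block`. -/
lemma lam1_numeric : ∀ᶠ L : ℝ in atTop, 8 * exp 1 * L ^ 2 * exp (-(L / 100 * L ^ (-(99 / 100) : ℝ))) +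
  exp (-(L / 4)) ≤ exp (-L ^ (9 / 1000 : ℝ)) := by
  filter_upwards [ev_rpow 1000 (9 / 1000) (1 / 100) (by norm_num), eventually_ge_atTop 100,
    ev_rpow 4 (9/1000) (1) (by norm_num),
    (isLittleO_log_rpow_atTop (by norm_num : (0 : ℝ) < 9 / 1000)).def (by norm_num : (0 : ℝ) < 1)] with L h1 h2 h4 h3
  have hL : 0 < L := by linarith
  have e1 : L / 100 * L ^ (-(99 / 100) : ℝ) = L ^ (1 / 100 : ℝ) / 100 := by
    have : L ^ (1 / 100 : ℝ) = L ^ (1 : ℝ) * L ^ (-(99 / 100) : ℝ) := by rw [← rpow_add hL]; norm_num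
    rw [this, rpow_one]; ring
  rw [e1]; rw [rpow_one] at h4; have hlog0 : 0 ≤ log L := log_nonneg (by linarith)
  rw [norm_of_nonneg hlog0, norm_of_nonneg (rpow_nonneg hL.le _), one_mul] at h3; set A := L ^ (9 / 1000 : ℝ)
  set B := L ^ (1 / 100 : ℝ)
  have hA : 4 ≤ A := by
    have : 4 ≤ log L := by
      rw [le_log_iff_exp_le hL]; have := exp_one_lt_d9
      have : exp 4 = exp 1 ^ 4 := by rw [← exp_nat_mul]; norm_num
      rw [this]
      calc exp 1 ^ 4 ≤ 3 ^ 4 := by gcongr; linarith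
        _ ≤ L := by linarith
    linarith
  have hL2 : L ^ 2 ≤ exp (2 * A) := by
    rw [← exp_log (pow_pos hL 2)]; apply exp_le_exp.2; rw [log_pow]; push_cast; linarith
  have h8 : 8 * exp 1 ≤ exp 4 := by
    have : exp 4 = exp 1 * exp 1 ^ 3 := by rw [← exp_nat_mul, ← exp_add]; norm_num
    rw [this, mul_comm]; have h2 : 2 ≤ exp 1 := by linarith [add_one_le_exp 1]
    gcongr
    calc (8 : ℝ) = 2 ^ 3 := by norm_num
      _ ≤ _ := by gcongr
  have f1 : 8 * exp 1 * L ^ 2 * exp (-(B / 100)) ≤ exp (-(2 * A)) := by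
    calc _ ≤ exp 4 * exp (2 * A) * exp (-(B / 100)) := by gcongr
      _ = exp (4 + 2 * A - B / 100) := by rw [← exp_add, ← exp_add]; congr 1
      _ ≤ _ := by apply exp_le_exp.2; linarith
  have f2 : exp (-(2 * A)) + exp (-(2 * A)) ≤ exp (-A) := by
    have e : exp (-(2 * A)) = exp (-A) * exp (-A) := by rw [← exp_add]; congr 1; ring
    have : exp (-A) ≤ 1 / 2 := by
      rw [exp_neg, inv_le_comm₀ (exp_pos _) (by norm_num)]; have := add_one_le_exp A; norm_num; linarith
    rw [e]; nlinarith [exp_pos (-A)]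
  have hL2' : 2 * A ≤ L / 4 := by
    have : A * 10 ≤ B / 100 := by linarith
    have hB : B ≤ L := by
      calc B ≤ L ^ (1 : ℝ) := rpow_le_rpow_of_exponent_le (by linarith) (by norm_num)
        _ = L := rpow_one L
    linarith
  have f3 : exp (-(L / 4)) ≤ exp (-(2 * A)) := exp_le_exp.2 (by linarith); linarith

lemma tendsto_mul_exp_bound : ∀ᶠ L : ℝ in atTop, 6912 * L ^ 2 * exp (-(L / 2)) ≤ 1 := by
  have h := (tendsto_pow_mul_exp_neg_atTop_nhds_zero 2).comp (tendsto_id.atTop_mul_const (by norm_num : (0 : ℝ) < 1 / 2))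
  filter_upwards [h.eventually (gt_mem_nhds (by norm_num : (0 : ℝ) < 1 / 40000))] with L hL
  simp only [Function.comp, id] at hL; have e : exp (-(L * (1 / 2))) = exp (-(L / 2)) := by congr 1; ring
  rw [e] at hL; nlinarith

/-- The prime number theorem with oscillation: smoothed sums of `(Λ(n) - 1) n^{-1-it}` near `e^w` are tiny. -/
lemma lam1_block : ∀ᶠ L : ℝ in atTop, ∀ w t κ : ℝ, L / 100 ≤ w → w ≤ L → |t| ≤ exp L / 32 → exp (-(L / 4)) ≤ κ → κ ≤ 1 →
  ‖LSeries (fun n => lam1 n * (hat ((log n - w) / κ) : ℂ)) (1 + t * I)‖ ≤ exp (-L ^ (9 / 1000 : ℝ)) := by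
  filter_upwards [GG_bound, lam1_norm_bound, lam1_numeric, eventually_ge_atTop 100,
    ev_rpow 4 (-(99 / 100)) 0 (by norm_num), tendsto_mul_exp_bound] with L hG hR hnum hL hθ1 hbig
  intro w t κ hw1 hw2 ht hκ1 hκ2; have hLpos : 0 < L := by linarith
  have hκ : 0 < κ := (exp_pos _).trans_le hκ1; set θ : ℝ := L ^ (-(99 / 100) : ℝ)
  have hθpos : 0 < θ := rpow_pos_of_pos hLpos _; rw [rpow_zero] at hθ1; set T : ℝ := exp L / 32 with hT
  have hTpos : 0 < T := by positivity
  set β : ℝ := 1 / L with hβ; have hβpos : 0 < β := by positivity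
  have hβ1 : β ≤ 1 / 4 := by rw [hβ]; apply one_div_le_one_div_of_le <;> linarith
  have hwβ : w * β ≤ 1 := by rw [hβ, mul_one_div, div_le_one hLpos]; exact hw2
  have hw0 : 0 ≤ w := by linarith
  rw [mellin_sum κ β w t hκ hβpos]
  set Φ : ℂ → ℂ := fun z => HH (κ * z) * Complex.exp (w * z) * GG (1 + t * I + z) with hΦ
  change ‖((κ / (2 * π) : ℝ) : ℂ) * ∫ y : ℝ, Φ (β + y * I)‖ ≤ _; have hpi := pi_gt_three
  rw [norm_mul, Complex.norm_of_nonneg (by positivity)]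
  have hHH : ∀ a y : ℝ, |a| ≤ 1 / 4 → a ≤ β → ‖HH (κ * (a + y * I)) * Complex.exp (w * (a + y * I))‖ ≤
    8 * exp 1 ^ 2 * (1 + (κ * y) ^ 2)⁻¹ := by
    intro a y ha1 ha2; refine (HH_line κ a y w hκ.le).trans ?_
    have : exp (κ * |a| + w * a) ≤ exp 1 ^ 2 := by
      rw [← exp_nat_mul]; apply exp_le_exp.2; have := mul_le_mul_of_nonneg_left ha2 hw0; push_cast
      nlinarith [abs_nonneg a]
    gcongr
  -- tail
  have hline : Continuous (fun y : ℝ => Φ (β + y * I)) := by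
    have h1 := GG_line_cont β t hβpos; have h2 := HH_cont; simp only [hΦ]; refine Continuous.mul ?_ h1
    fun_prop
  have hlb : ∀ y : ℝ, ‖Φ (β + y * I)‖ ≤ 8 * exp 1 ^ 2 * L ^ 2 * (1 + (κ * y) ^ 2)⁻¹ := by
    intro y; simp only [hΦ]; rw [norm_mul]; have h1 := hHH β y (by rw [abs_of_pos hβpos]; exact hβ1) le_rfl
    have h2 := (GG_line_bound β t y hβpos).trans hR
    calc _ ≤ 8 * exp 1 ^ 2 * (1 + (κ * y) ^ 2)⁻¹ * L ^ 2 := by gcongr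
      _ = _ := by ring
  have hInt : Integrable (fun y : ℝ => Φ (β + y * I)) :=
    ((integrable_inv_scaled κ hκ).const_mul _).mono' hline.aestronglyMeasurable (Eventually.of_forall hlb)
  have htail := tail_bound _ hInt T (8 * exp 1 ^ 2 * L ^ 2 / κ ^ 2) hTpos (by
    intro y hy; refine (hlb y).trans ?_
    have hy0 : 0 < y ^ 2 := by
      have : y ≠ 0 := by rintro rfl; simp at hy; linarith
      positivity
    rw [div_div, ← div_eq_mul_inv, ← mul_pow]; gcongr
    · rw [mul_pow]; positivity
    · linarith)
  -- the shift
  have hin : ∀ z : ℂ, -θ ≤ z.re → z.re ≤ β → |z.im| ≤ T →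
    DifferentiableAt ℂ GG (1 + t * I + z) ∧ ‖GG (1 + t * I + z)‖ ≤ 2 * L ^ 2 := by
    intro z h1 h2 h3; refine hG _ ?_ ?_ ?_
    · simp; linarith
    · simp; simpa [hβ] using h2
    · have : (1 + t * I + z).im = t + z.im := by simp
      rw [this]; refine (abs_add_le _ _).trans ?_; rw [hT] at h3; linarith
  have hsh := shift_rect Φ (-θ) β T (8 * exp 1 ^ 2 * (1 + (κ * T) ^ 2)⁻¹ * (2 * L ^ 2)) (by linarith) hTpos.le
    (by
      intro z h1 h2 h3; have h4 := ((hin z h1 h2 h3).1.continuousAt)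
      have h5 := HH_cont.continuousAt (x := κ * z)
      refine ContinuousAt.mul (ContinuousAt.mul ?_ (by fun_prop)) ?_
      · exact ContinuousAt.comp (f := fun z : ℂ => (κ : ℂ) * z) h5 (by fun_prop)
      · exact ContinuousAt.comp (f := fun z : ℂ => (1 + t * I + z)) h4 (by fun_prop))
    (by
      intro z h1 h2 h3 hz; have h4 := (hin z h1 h2 h3).1
      have h5 := HH_diffAt (κ * z) (mul_ne_zero (mod_cast hκ.ne') hz)
      refine DifferentiableAt.mul (DifferentiableAt.mul ?_ (by fun_prop)) ?_
      · exact DifferentiableAt.comp (f := fun z : ℂ => (κ : ℂ) * z) z h5 (by fun_prop)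
      · exact DifferentiableAt.comp (f := fun z : ℂ => (1 + t * I + z)) z h4 (by fun_prop))
    (by
      intro z h1 h2 h3; simp only [hΦ]; rw [norm_mul]; have h4 := (hin z h1 h2 h3.le).2
      have h5 := hHH z.re z.im (abs_le.2 ⟨by linarith, by linarith⟩) h2
      rw [Complex.re_add_im, mul_pow, ← sq_abs z.im, h3, ← mul_pow] at h5
      exact mul_le_mul h5 h4 (norm_nonneg _) (by positivity))
  have hleft : ‖∫ y in (-T)..T, Φ ((-θ : ℝ) + y * I)‖ ≤ 16 * exp 1 * L ^ 2 * exp (-(L / 100 * θ)) * (π / κ) := by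
    have hb : ∀ y : ℝ, |y| ≤ T → ‖Φ ((-θ : ℝ) + y * I)‖ ≤ 16 * exp 1 * L ^ 2 * exp (-(L / 100 * θ)) * (1 + (κ * y) ^ 2)⁻¹ := by
      intro y hy; simp only [hΦ]; rw [norm_mul]
      have h4 := (hin ((-θ : ℝ) + y * I) (by simp) (by simp; linarith) (by simpa using hy)).2
      have h5 := HH_line κ (-θ) y w hκ.le
      have h6 : exp (κ * |(-θ)| + w * (-θ)) ≤ exp 1 * exp (-(L / 100 * θ)) := by
        rw [← exp_add]; apply exp_le_exp.2; rw [abs_neg, abs_of_pos hθpos]; nlinarith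
      calc _ ≤ (8 * exp (κ * |(-θ)| + w * (-θ)) * (1 + (κ * y) ^ 2)⁻¹) * (2 * L ^ 2) := by
            refine mul_le_mul h5 h4 (norm_nonneg _) (by positivity)
        _ ≤ (8 * (exp 1 * exp (-(L / 100 * θ))) * (1 + (κ * y) ^ 2)⁻¹) * (2 * L ^ 2) := by gcongr
        _ = _ := by ring
    have hbi := (integrable_inv_scaled κ hκ).const_mul (16 * exp 1 * L ^ 2 * exp (-(L / 100 * θ)))
    have := intervalIntegral.norm_integral_le_of_norm_le (a := -T) (b := T) (by linarith) (μ := volume)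
      (f := fun y : ℝ => Φ ((-θ : ℝ) + y * I)) (Eventually.of_forall (fun y hy => hb y (abs_le.2 ⟨hy.1.le, hy.2⟩)))
      hbi.intervalIntegrable
    refine this.trans ?_; rw [integral_of_le (by linarith), ← integral_inv_scaled κ hκ, ← integral_const_mul]
    exact setIntegral_le_integral hbi (Eventually.of_forall fun y => by positivity)
  set A₁ := 2 * (8 * exp 1 ^ 2 * L ^ 2 / κ ^ 2) / T with hA₁
  set A₂ := 2 * (8 * exp 1 ^ 2 * (1 + (κ * T) ^ 2)⁻¹ * (2 * L ^ 2) * (β - -θ)) with hA₂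
  set A₃ := 2 * (8 * exp 1 ^ 2 * (1 / (κ ^ 2 * T)) * (2 * L ^ 2) * 1) with hA₃
  have hfull : ‖∫ y : ℝ, Φ (β + y * I)‖ ≤ A₁ +
    (16 * exp 1 * L ^ 2 * exp (-(L / 100 * θ)) * (π / κ) + A₂) := by
    have := norm_sub_norm_le (∫ y : ℝ, Φ (β + y * I)) (∫ y in (-T)..T, Φ (β + y * I)); linarith
  refine le_trans ?_ hnum
  have hκT : (1 + (κ * T) ^ 2)⁻¹ ≤ 1 / (κ ^ 2 * T) := by
    rw [inv_eq_one_div]; apply one_div_le_one_div_of_le (by positivity)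
    have : 1 ≤ T := by rw [hT]; nlinarith [add_one_le_exp L]
    rw [mul_pow]; have : T ≤ T ^ 2 := by nlinarith
    have : κ ^ 2 * T ≤ κ ^ 2 * T ^ 2 := by gcongr
    linarith
  have hsmall : κ / (2 * π) * (A₁ + A₂) ≤ exp (-(L / 4)) := by
    have h1 : A₂ ≤ A₃ := by
      rw [hA₂, hA₃]; gcongr
      · linarith
      · linarith
    have h2 : κ / (2 * π) * (A₁ + A₃) = 24 * exp 1 ^ 2 * L ^ 2 / (π * κ * T) := by
      rw [hA₁, hA₃]; field_simp; ring
    have he : exp 1 ^ 2 ≤ 9 := by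
      have := exp_one_lt_d9; have h0 := exp_pos 1; nlinarith
    have h3 : 24 * exp 1 ^ 2 * L ^ 2 / (π * κ * T) ≤ 216 * L ^ 2 / (1 * exp (-(L / 4)) * T) := by
      gcongr
      · linarith
      · linarith
    have h4 : 216 * L ^ 2 / (1 * exp (-(L / 4)) * T) = 6912 * L ^ 2 * exp (-(3 * L / 4)) := by
      have : exp L = exp (L / 4) * exp (3 * L / 4) := by rw [← exp_add]; congr 1; ring
      rw [hT, this, exp_neg, exp_neg]; field_simp; norm_num
    have h5 : 6912 * L ^ 2 * exp (-(3 * L / 4)) ≤ exp (-(L / 4)) := by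
      have : exp (-(3 * L / 4)) = exp (-(L / 2)) * exp (-(L / 4)) := by rw [← exp_add]; congr 1; ring
      rw [this, ← mul_assoc]; exact mul_le_of_le_one_left (exp_pos _).le hbig
    calc _ ≤ κ / (2 * π) * (A₁ + A₃) := by gcongr
      _ ≤ _ := by rw [h2]; linarith
  calc κ / (2 * π) * ‖∫ y : ℝ, Φ (β + y * I)‖ ≤ κ / (2 * π) * _ := by
        exact mul_le_mul_of_nonneg_left hfull (by positivity)
    _ = κ / (2 * π) * (16 * exp 1 * L ^ 2 * exp (-(L / 100 * θ)) * (π / κ)) +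
      κ / (2 * π) * (A₁ + A₂) := by ring
    _ ≤ _ := by
      refine add_le_add (le_of_eq ?_) hsmall; field_simp; ring

lemma log_subst (g : ℝ → ℂ) (hg : Continuous g) (A B : ℝ) (hA : 0 < A) (hAB : A ≤ B) :
  ∫ x in A..B, g (log x) / x = ∫ z in log A..Real.log B, g z := by
  have hpos : ∀ x ∈ Set.uIcc A B, 0 < x := by intro x hx; rw [Set.uIcc_of_le hAB] at hx; exact hA.trans_le hx.1
  have h := intervalIntegral.integral_deriv_smul_comp (a := A) (b := B) (f := log) (f' := fun x => x⁻¹) (g := g)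
    (fun x hx => hasDerivAt_log (hpos x hx).ne') (continuousOn_inv₀.mono fun x hx => (hpos x hx).ne')
    hg
  rw [← h]; refine integral_congr fun x _ => ?_; simp only [Function.comp, real_smul]; push_cast
  rw [div_eq_mul_inv, mul_comm]

lemma g_lip (g : ℝ → ℂ) (G G' : ℝ) (hG : ∀ z, ‖g z‖ ≤ G) (hG' : ∀ z z', ‖g z - g z'‖ ≤ G' * |z - z'|)
  {N x y : ℝ} (hN : 0 < N) (hx : N ≤ x) (hy : N ≤ y) :
  ‖g (log x) / x - g (log y) / y‖ ≤ (G + G') / N ^ 2 * |x - y| := by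
  have hx0 : 0 < x := hN.trans_le hx; have hy0 : 0 < y := hN.trans_le hy
  have hG0 : 0 ≤ G := (norm_nonneg _).trans (hG 0)
  have hG0' : 0 ≤ G' := by have := (norm_nonneg _).trans (hG' 0 1); simpa using this
  have e : g (log x) / x - g (log y) / y = (g (log x) - g (log y)) / x + g (log y) * (((y - x) / (x * y) : ℝ) : ℂ) := by
    have h1 : (x : ℂ) ≠ 0 := mod_cast hx0.ne'; have h2 : (y : ℂ) ≠ 0 := mod_cast hy0.ne'; push_cast
    field_simp; ring
  rw [e]; refine (norm_add_le _ _).trans ?_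
  rw [norm_div, norm_mul, norm_real, norm_real, norm_of_nonneg hx0.le, norm_eq_abs, abs_div,
    abs_of_pos (mul_pos hx0 hy0), abs_sub_comm y x]
  have h1 : ‖g (log x) - g (log y)‖ / x ≤ G' * (|x - y| / N) / N := by
    gcongr; exact (hG' _ _).trans (mul_le_mul_of_nonneg_left (abs_log_sub_le hN hx hy) hG0')
  have h2 : ‖g (log y)‖ * (|x - y| / (x * y)) ≤ G * (|x - y| / (N * N)) := by
    gcongr; exact hG _
  calc _ ≤ G' * (|x - y| / N) / N + G * (|x - y| / (N * N)) := add_le_add h1 h2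
    _ = _ := by field_simp; ring

lemma sum_eq_of_zero (s s' : Finset ℕ) (f : ℕ → ℂ) (h1 : ∀ n ∈ s, n ∉ s' → f n = 0)
  (h2 : ∀ n ∈ s', n ∉ s → f n = 0) : ∑ n ∈ s, f n = ∑ n ∈ s', f n :=
  sum_congr_of_eq_on_inter h1 h2 (fun _ _ _ => rfl)

/-- Riemann-sum comparison on a logarithmic scale. -/
lemma sum_log_int (g : ℝ → ℂ) (G G' a h : ℝ) (ha : 1 ≤ a) (h2 : h ≤ 2) (hh : exp (-a) ≤ h) (hG : ∀ z, ‖g z‖ ≤ G)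
  (hG' : ∀ z z', ‖g z - g z'‖ ≤ G' * |z - z'|) (hs : ∀ z, z ≤ a ∨ a + h ≤ z → g z = 0)
  (M : ℕ) (hM : exp (a + h) ≤ M) :
  ‖∑ n ∈ Icc 1 M, g (log n) / n - ∫ z, g z‖ ≤ 40 * (G + G') * h * exp (-a) := by
  have hG0 : 0 ≤ G := (norm_nonneg _).trans (hG 0)
  have hG0' : 0 ≤ G' := by have := (norm_nonneg _).trans (hG' 0 1); simpa using this
  have hcont : Continuous g := by
    have : LipschitzWith (toNNReal G') g := LipschitzWith.of_dist_le_mul fun x y => by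
      rw [dist_eq_norm, dist_eq, coe_toNNReal _ hG0']; exact hG' x y
    exact this.continuous
  set N := ⌊exp a⌋₊; set N' := ⌈exp (a + h)⌉₊; have h0 : 0 < h := (exp_pos _).trans_le hh
  have hea : 2 ≤ exp a := by linarith [add_one_le_exp a]
  have hNle : (N : ℝ) ≤ exp a := Nat.floor_le (exp_pos a).le
  have hNge : exp a / 2 ≤ N := by have := Nat.lt_floor_add_one (exp a); linarith
  have hN0 : (0 : ℝ) < N := by linarith
  have hN0' : 0 < N := mod_cast hN0; have hN'ge : exp (a + h) ≤ N' := Nat.le_ceil _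
  have hN'lt : (N' : ℝ) < exp (a + h) + 1 := Nat.ceil_lt_add_one (exp_pos _).le
  have hee : exp a ≤ exp (a + h) := exp_le_exp.2 (by linarith); have hNN : (N : ℝ) ≤ N' := by linarith
  have hNN' : N ≤ N' := mod_cast hNN; have hN'M : N' ≤ M := Nat.ceil_le.2 hM
  have e1 : ∑ n ∈ Icc 1 M, g (log n) / n = ∑ n ∈ Ioc N N', g (log n) / n := by
    refine sum_eq_of_zero _ _ _ ?_ ?_
    · intro n hn hn'; rw [mem_Icc] at hn; rw [mem_Ioc, not_and_or] at hn'
      have hn0 : (0 : ℝ) < n := mod_cast hn.1; rw [hs _ ?_, zero_div]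
      rcases hn' with h | h
      · left; have : (n : ℝ) ≤ N := mod_cast not_lt.1 h; rw [log_le_iff_le_exp hn0]; linarith
      · right; have : (N' : ℝ) < n := mod_cast not_le.1 h; rw [le_log_iff_exp_le hn0]; linarith
    · intro n hn hn'; rw [mem_Ioc] at hn; rw [mem_Icc] at hn'; omega
  have e2 : ∫ z, g z = ∫ x in (N : ℝ)..N', g (log x) / x := by
    rw [log_subst g hcont N N' hN0 hNN]; refine (integral_eq_integral_of_support_subset ?_).symm; intro z hz
    by_contra hc; apply hz; apply hs; have l1 : log N ≤ a := by rwa [log_le_iff_le_exp hN0]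
    have l2 : a + h ≤ log N' := by rwa [le_log_iff_exp_le (by linarith)]
    rw [Set.mem_Ioc, not_and_or] at hc
    rcases hc with h | h
    · left; linarith [not_lt.1 h]
    · right; linarith [not_le.1 h]
  have key := sum_sub_int (fun x => g (log x) / x) N N' hNN' ((G + G') / N ^ 2) (by
    have hpos : ∀ x ∈ Set.Icc (N : ℝ) N', x ≠ 0 := fun x hx => (hN0.trans_le hx.1).ne'
    refine ContinuousOn.div ?_ continuous_ofReal.continuousOn (fun x hx => by exact_mod_cast hpos x hx)
    exact hcont.comp_continuousOn (continuousOn_log.mono fun x hx => by simpa using hpos x hx)) (by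
    intro x hx y hy hxy; refine (g_lip g G G' hG hG' hN0 hx.1 hy.1).trans ?_
    exact mul_le_of_le_one_right (by positivity) hxy)
  rw [e1, e2]; simp only [Complex.ofReal_natCast] at key; refine key.trans ?_
  have hE2 : exp (a + h) = exp a * exp h := exp_add _ _
  have h8 : exp h ≤ 8 := by
    have h := exp_one_lt_d9; have : exp 2 = exp 1 * exp 1 := by rw [← exp_add]; norm_num
    refine (exp_le_exp.2 h2).trans ?_; rw [this]; nlinarith [exp_pos 1]
  have h9 : exp h - 1 ≤ 8 * h := by
    have h7 := add_one_le_exp (-h); have h6 : exp h * exp (-h) = 1 := by rw [← exp_add]; simp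
    nlinarith [exp_pos h]
  have h10 : 1 ≤ exp a * h := by
    have h6 : exp a * exp (-a) = 1 := by rw [← exp_add]; simp
    nlinarith [exp_pos a]
  have hd : (N' : ℝ) - N ≤ 10 * h * exp a := by
    have := Nat.lt_floor_add_one (exp a); nlinarith [exp_pos a]
  have hq : (G + G') / (N : ℝ) ^ 2 ≤ (G + G') / (exp a / 2) ^ 2 := by gcongr
  calc ((N' : ℝ) - N) * ((G + G') / N ^ 2) ≤ (10 * h * exp a) * ((G + G') / (exp a / 2) ^ 2) := by gcongr
    _ = _ := by rw [exp_neg]; field_simp; ring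

lemma hat_shift_lip (w z z' : ℝ) : ‖((hat (z - w) : ℝ) : ℂ) - (hat (z' - w) : ℝ)‖ ≤ 1 * |z - z'| := by
  rw [← ofReal_sub, norm_real, norm_eq_abs, one_mul]; refine (hat_lip _ _).trans (le_of_eq ?_); congr 1; ring

lemma block_one : ∀ᶠ L : ℝ in atTop, ∀ w t : ℝ, ∀ M : ℕ, L / 100 ≤ w → |t| ≤ exp L → t ≠ 0 → exp (w + 1) ≤ M →
  ‖∑ n ∈ Icc 1 M, ((hat (log n - w) / n : ℝ) : ℂ) * ee (-t * log n)‖ ≤ 4 / t ^ 2 + exp (-L ^ (9 / 1000 : ℝ)) := by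
  filter_upwards [exp_lip, ev_rpow 200 (19 / 20) 1 (by norm_num), eventually_ge_atTop 400,
    ev_rpow 100 (9 / 1000) (1 / 2) (by norm_num), ev_rpow 5 0 (9 / 1000) (by norm_num),
    ev_rpow 1 (1/2) (19/20) (by norm_num)] with L hE h1 hL h3 h4 h5
  intro w t M hw ht ht0 hM; rw [rpow_one] at h1; rw [rpow_zero] at h4; have hLpos : 0 < L := by linarith
  set N := ⌊exp (w - 1)⌋₊; have hNle : (N : ℝ) ≤ exp (w - 1) := Nat.floor_le (exp_pos _).le
  have hwL : L ^ (19 / 20 : ℝ) + 1 ≤ w - 1 := by linarith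
  have hpow : 0 ≤ L ^ (19 / 20 : ℝ) := rpow_nonneg hLpos.le _
  have hNge' : exp (w - 1) - 1 ≤ N := by have := Nat.lt_floor_add_one (exp (w - 1)); linarith
  have hew : exp (w - 1) ≥ 2 * exp (L ^ (19 / 20 : ℝ)) := by
    calc exp (w - 1) ≥ exp (L ^ (19 / 20 : ℝ) + 1) := exp_le_exp.2 hwL
      _ = exp (L ^ (19 / 20 : ℝ)) * exp 1 := exp_add _ _
      _ ≥ exp (L ^ (19 / 20 : ℝ)) * 2 := by gcongr; linarith [add_one_le_exp 1]
      _ = _ := mul_comm _ _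
  have he1 : 1 ≤ exp (L ^ (19 / 20 : ℝ)) := one_le_exp hpow
  have hNge : exp (L ^ (19 / 20 : ℝ)) ≤ N := by linarith
  have hN0 : (0 : ℝ) < N := by linarith
  have hbig : 14 ≤ exp (w - 1) := by
    have := add_one_le_exp (w - 1)
    have : 13 ≤ w - 1 := by
      have : 20 ≤ L ^ (19/20:ℝ) := by
        calc (20 : ℝ) ≤ 100 * 1 := by norm_num
          _ ≤ 100 * L ^ (9/1000:ℝ) := by gcongr; linarith
          _ ≤ L ^ (19/20:ℝ) := by linarith
      linarith
    linarith
  have h8 : exp 2 ≤ 7.4 := by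
    have h := exp_one_lt_d9; have : exp 2 = exp 1 * exp 1 := by rw [← exp_add]; norm_num
    rw [this]; nlinarith [exp_pos 1]
  have hE2 : exp (w + 1) = exp (w - 1) * exp 2 := by rw [← exp_add]; congr 1; ring
  have h8N : exp (w + 1) ≤ (8 * N : ℕ) := by push_cast; rw [hE2]; nlinarith
  set φ : ℝ → ℂ := fun x => ((hat (log x - w) : ℝ) : ℂ) / x with hφ
  have hsum : ∑ n ∈ Icc 1 M, ((hat (log n - w) / n : ℝ) : ℂ) * ee (-t * log n) =
    ∑ n ∈ Ioc N (8 * N), φ n * ee (-t * log n) := by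
    have : ∀ n : ℕ, ((hat (log n - w) / n : ℝ) : ℂ) = φ n := by intro n; simp [hφ]
    simp_rw [this]
    have hz : ∀ n : ℕ, 0 < n → (n ≤ N ∨ exp (w + 1) ≤ n) → φ n * ee (-t * log n) = 0 := by
      intro n hn h; have hn0 : (0 : ℝ) < n := mod_cast hn; simp only [hφ]
      rw [hat_of_one_le, Complex.ofReal_zero, zero_div, zero_mul]
      rcases h with h | h
      · have : (n : ℝ) ≤ N := mod_cast h; have : log n ≤ w - 1 := by rw [log_le_iff_le_exp hn0]; linarith
        rw [abs_of_nonpos (by linarith)]; linarith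
      · have : w + 1 ≤ log n := by rwa [le_log_iff_exp_le hn0]
        rw [abs_of_nonneg (by linarith)]; linarith
    refine sum_eq_of_zero _ _ _ ?_ ?_
    · intro n hn hn'; rw [mem_Icc] at hn; rw [mem_Ioc, not_and_or] at hn'; refine hz n hn.1 ?_
      rcases hn' with h | h
      · left; omega
      · right; have : ((8 * N : ℕ) : ℝ) < n := mod_cast not_le.1 h; linarith
    · intro n hn hn'; rw [mem_Ioc] at hn; rw [mem_Icc, not_and_or] at hn'; refine hz n (by omega) ?_; right
      have : (M : ℝ) < n := mod_cast (by omega : M < n); linarith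
  rw [hsum]
  have hbd : ∀ z, ‖((hat (z - w) : ℝ) : ℂ)‖ ≤ 1 := fun z => by
    rw [Complex.norm_of_nonneg (hat_nonneg _)]; exact hat_le_one _
  -- one dyadic piece
  have hpiece : ∀ k : ℕ, N ≤ k → ‖∑ n ∈ Ioc k (2 * k), φ n * ee (-t * log n) -
    ∫ x in (k : ℝ)..(2 * k : ℕ), φ x * ee (-t * log x)‖ ≤ 5 * exp (-L ^ (1 / 2 : ℝ)) := by
    intro k hk; have hkN : (N : ℝ) ≤ k := mod_cast hk; have hk0 : (0 : ℝ) < k := hN0.trans_le hkN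
    have := hE k (2 * k) (hNge.trans hkN) (by omega) le_rfl t ht φ (2 / k ^ 2) (by positivity) (by
      intro x hx y hy
      have := g_lip (fun z => ((hat (z - w) : ℝ) : ℂ)) 1 1 hbd (hat_shift_lip w) hk0 hx.1 hy.1
      norm_num at this ⊢; exact this)
    refine this.trans ?_
    have hφb : ‖φ ((2 * k : ℕ) : ℝ)‖ ≤ 1 / k := by
      simp only [hφ]; rw [norm_div, norm_real ((2 * k : ℕ) : ℝ), norm_of_nonneg (by positivity)]; gcongr
      · exact hbd _
      · push_cast; linarith
    have hki : 1 / (k : ℝ) ≤ exp (-L ^ (1 / 2 : ℝ)) := by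
      rw [exp_neg, one_div]; apply inv_anti₀ (exp_pos _); refine le_trans (exp_le_exp.2 ?_) (hNge.trans hkN)
      linarith
    calc (‖φ ((2 * k : ℕ) : ℝ)‖ + 2 / k ^ 2 * k) * k * exp (-L ^ (1 / 2 : ℝ)) + 2 / k ^ 2 * k
        ≤ (1 / k + 2 / k ^ 2 * k) * k * exp (-L ^ (1 / 2 : ℝ)) + 2 / k ^ 2 * k := by gcongr
      _ = 3 * exp (-L ^ (1 / 2 : ℝ)) + 2 * (1 / k) := by field_simp; ring
      _ ≤ _ := by linarith
  have p1 := hpiece N le_rfl; have p2 := hpiece (2 * N) (by omega); have p3 := hpiece (2 * (2 * N)) (by omega)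
  have e8 : 2 * (2 * (2 * N)) = 8 * N := by ring
  rw [e8] at p3
  have hS : ∑ n ∈ Ioc N (8 * N), φ n * ee (-t * log n) = ∑ n ∈ Ioc N (2 * N), φ n * ee (-t * log n) +
    ∑ n ∈ Ioc (2 * N) (2 * (2 * N)), φ n * ee (-t * log n) + ∑ n ∈ Ioc (2 * (2 * N)) (8 * N), φ n * ee (-t * log n) := by
    rw [sum_Ioc_consecutive _ (by omega) (by omega), sum_Ioc_consecutive _ (by omega) (by omega)]
  have hcon : ∀ a b : ℝ, (N : ℝ) ≤ a → a ≤ b → IntervalIntegrable (fun x : ℝ => φ x * ee (-t * log x)) volume a b := by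
    intro a b ha hab; apply ContinuousOn.intervalIntegrable; rw [Set.uIcc_of_le hab]
    have hpos : ∀ x ∈ Set.Icc a b, 0 < x := fun x hx => (hN0.trans_le ha).trans_le hx.1
    refine ContinuousOn.mul (ContinuousOn.div ?_ continuous_ofReal.continuousOn
      (fun x hx => by exact_mod_cast (hpos x hx).ne')) (cont_ee_log t hpos)
    have : Continuous (fun z : ℝ => ((hat (z - w) : ℝ) : ℂ)) := by have := hat_cont; fun_prop
    exact this.comp_continuousOn (continuousOn_log.mono fun x hx => by simpa using (hpos x hx).ne')
  have c1 : (N : ℝ) ≤ (2 * N : ℕ) := by push_cast; linarith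
  have c2 : ((2 * N : ℕ) : ℝ) ≤ (2 * (2 * N) : ℕ) := by push_cast; linarith
  have c3 : ((2 * (2 * N) : ℕ) : ℝ) ≤ (8 * N : ℕ) := by push_cast; linarith
  have hI := integral_add_adjacent_intervals (hcon _ _ le_rfl c1) (hcon _ _ c1 c2)
  have hI2 := integral_add_adjacent_intervals (hcon _ _ le_rfl (c1.trans c2)) (hcon _ _ (c1.trans c2) c3)
  have hInt : ∫ x in (N : ℝ)..(8 * N : ℕ), φ x * ee (-t * log x) = ee (-t * w) * HH (-t * I) := by
    have g1 : ∀ x : ℝ, φ x * ee (-t * log x) = (fun z => ((hat (z - w) : ℝ) : ℂ) * ee (-t * z)) (log x) / x := by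
      intro x; simp only [hφ]; ring
    simp_rw [g1]
    rw [log_subst (fun z => ((hat (z - w) : ℝ) : ℂ) * ee (-t * z)) (by
      have := hat_cont; unfold ee; fun_prop) _ _ hN0 ((c1.trans c2).trans c3)]
    rw [integral_eq_integral_of_support_subset, HH, ← integral_const_mul,
      ← integral_add_right_eq_self _ w]
    · congr 1; funext x; simp only [ee, add_sub_cancel_right]; rw [mul_left_comm, ← Complex.exp_add]; congr 2
      push_cast; ring
    · intro z hz; have hz' : hat (z - w) ≠ 0 := by intro h; apply hz; simp [h]
      have := abs_lt.1 (abs_lt_of_hat_ne hz'); have l1 : log N ≤ w - 1 := by rwa [log_le_iff_le_exp hN0]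
      have l2 : w + 1 ≤ log (8 * N : ℕ) := by rwa [le_log_iff_exp_le (by push_cast; linarith)]
      exact ⟨by linarith, by linarith⟩
  have hHH : ‖ee (-t * w) * HH (-t * I)‖ ≤ 4 / t ^ 2 := by
    rw [norm_mul, norm_ee, one_mul]
    have := HH_decay (-t * I) (mul_ne_zero (by simpa using ht0) Complex.I_ne_zero); simpa using this
  rw [← hInt, ← hI2, ← hI] at hHH; rw [hS]; set A1 := ∑ n ∈ Ioc N (2 * N), φ n * ee (-t * log n)
  set A2 := ∑ n ∈ Ioc (2 * N) (2 * (2 * N)), φ n * ee (-t * log n)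
  set A3 := ∑ n ∈ Ioc (2 * (2 * N)) (8 * N), φ n * ee (-t * log n)
  set I1 := ∫ x in (N : ℝ)..(2 * N : ℕ), φ x * ee (-t * log x)
  set I2 := ∫ x in ((2 * N : ℕ) : ℝ)..(2 * (2 * N) : ℕ), φ x * ee (-t * log x)
  set I3 := ∫ x in ((2 * (2 * N) : ℕ) : ℝ)..(8 * N : ℕ), φ x * ee (-t * log x)
  have hfin : 15 * exp (-L ^ (1 / 2 : ℝ)) ≤ exp (-L ^ (9 / 1000 : ℝ)) := by
    set x := L ^ (9 / 1000 : ℝ)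
    have h15 : (15 : ℝ) ≤ exp x := by
      have : exp 5 = exp 1 ^ 5 := by rw [← exp_nat_mul]; norm_num
      have h2 : 2 ≤ exp 1 := by linarith [add_one_le_exp 1]
      calc (15 : ℝ) ≤ 2 ^ 5 := by norm_num
        _ ≤ exp 1 ^ 5 := by gcongr
        _ = exp 5 := this.symm
        _ ≤ exp x := exp_le_exp.2 (by linarith)
    calc 15 * exp (-L ^ (1 / 2 : ℝ)) ≤ exp x * exp (-L ^ (1 / 2 : ℝ)) := by gcongr
      _ = exp (x - L ^ (1 / 2 : ℝ)) := by rw [← exp_add]; rfl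
      _ ≤ exp (-x) := exp_le_exp.2 (by linarith)
  have e : A1 + A2 + A3 = (I1 + I2 + I3) + ((A1 - I1) + (A2 - I2) + (A3 - I3)) := by ring
  rw [e]; have := norm_add₃_le (a := A1 - I1) (b := A2 - I2) (c := A3 - I3); refine (norm_add_le _ _).trans ?_
  linarith

lemma lam1_sum (w t κ : ℝ) (M : ℕ) (hκ : 0 < κ) (hκ1 : κ ≤ 1) (hM : exp (w + 1) ≤ M) :
  LSeries (fun n => lam1 n * (hat ((log n - w) / κ) : ℂ)) (1 + t * I) =
    ∑ n ∈ Icc 1 M, (((Λ n - 1) * hat ((log n - w) / κ) / n : ℝ) : ℂ) * ee (-t * log n) := by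
  rw [LSeries, tsum_eq_sum (s := Icc 1 M)]
  · refine sum_congr rfl fun n hn => ?_; rw [mem_Icc] at hn; have hn0 : (0 : ℝ) < n := mod_cast hn.1
    have hn' : (n : ℂ) ≠ 0 := mod_cast hn0.ne'
    rw [LSeries.term_of_ne_zero (by omega), ee_log t n hn0, cpow_add _ _ hn', Complex.cpow_one, Complex.ofReal_natCast,
      cpow_neg, lam1]
    push_cast; field_simp
  · intro n hn
    rcases Nat.eq_zero_or_pos n with rfl | hn0
    · simp
    rw [mem_Icc, not_and_or] at hn; have : (M : ℝ) < n := mod_cast (by omega : M < n)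
    have hl : w + 1 ≤ log n := by rw [le_log_iff_exp_le (mod_cast hn0)]; linarith
    rw [LSeries.term_of_ne_zero (by omega), hat_of_one_le (by
      rw [abs_of_nonneg (div_nonneg (by linarith) hκ.le), le_div_iff₀ hκ]; linarith)]
    simp

lemma block_lam : ∀ᶠ L : ℝ in atTop, ∀ w t : ℝ, ∀ M : ℕ, L / 100 ≤ w → w ≤ L → |t| ≤ exp L / 32 → t ≠ 0 →
  exp (w + 1) ≤ M →
  ‖∑ n ∈ Icc 1 M, ((Λ n * hat (log n - w) / n : ℝ) : ℂ) * ee (-t * log n)‖ ≤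
    4 / t ^ 2 + 2 * exp (-L ^ (9 / 1000 : ℝ)) := by
  filter_upwards [block_one, lam1_block, eventually_ge_atTop 1] with L h1 h2 hL; intro w t M hw1 hw2 ht ht0 hM
  have b1 := h1 w t M hw1 (ht.trans (by linarith [exp_pos L])) ht0 hM
  have b2 := h2 w t 1 hw1 hw2 ht (by rw [exp_le_one_iff]; linarith) le_rfl
  rw [lam1_sum w t 1 M one_pos le_rfl hM] at b2; simp only [div_one] at b2
  have e3 : ∑ n ∈ Icc 1 M, ((Λ n * hat (log n - w) / n : ℝ) : ℂ) * ee (-t * log n) =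
    ∑ n ∈ Icc 1 M, (((Λ n - 1) * hat (log n - w) / n : ℝ) : ℂ) * ee (-t * log n) +
    ∑ n ∈ Icc 1 M, ((hat (log n - w) / n : ℝ) : ℂ) * ee (-t * log n) := by
    rw [← sum_add_distrib]; refine sum_congr rfl fun n _ => ?_; push_cast; ring
  rw [e3]; refine (norm_add_le _ _).trans ?_; linarith

/-! ### Mean squares of bilinear sums -/

/-- Plancherel's identity for continuous integrable functions with integrable transform. -/
lemma plancherel (f : ℝ → ℂ) (hc : Continuous f) (hi : Integrable f)
  (hF : Integrable (𝓕 f)) : ∫ u, ‖f u‖ ^ 2 = ∫ ξ, ‖𝓕 f ξ‖ ^ 2 := by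
  have h := VectorFourier.integral_sesq_fourierIntegral_eq_neg_flip (μ := volume)
    (ν := volume) (innerSL ℂ) (L := innerₗ ℝ) continuous_fourierChar continuous_inner hi hF
  have h2 : ∀ x, VectorFourier.fourierIntegral fourierChar volume (-(innerₗ ℝ).flip) (𝓕 f) x = f x := by
    intro x; rw [← congrFun (hc.fourierInv_fourier_eq hi hF) x, fourierInv_eq, VectorFourier.fourierIntegral]
    congr 1; funext y; simp
  simp only [h2] at h; change ∫ ξ, inner ℂ (𝓕 f ξ) (𝓕 f ξ) = ∫ x, inner ℂ (f x) (f x) at h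
  simp only [inner_self_eq_norm_sq_to_K] at h
  have e : ∀ g : ℝ → ℂ, ∫ x, ((‖g x‖ : ℝ) : ℂ) ^ 2 = ((∫ x, ‖g x‖ ^ 2 : ℝ) : ℂ) := by
    intro g; rw [← integral_complex_ofReal]; congr 1; funext x; push_cast; rfl
  have h3 := (e f).symm.trans (h.symm.trans (e (𝓕 f))); exact_mod_cast h3

/-- The triangular averaging kernel of width `κ` and total mass one. -/
def kk (κ x : ℝ) : ℝ := hat (x / κ) / κ

/-- The Fourier transform of the hat function, in angular frequency. -/
def QQ (z : ℝ) : ℂ := HH ((-z : ℝ) * I)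

/-- A linear combination of translates of `kk κ`. -/
def comb {ι : Type*} (s : Finset ι) (c x : ι → ℝ) (κ u : ℝ) : ℂ := ∑ i ∈ s, (c i : ℂ) * (kk κ (u - x i) : ℝ)

/-- The exponential sum attached to `comb`. -/
def Dp {ι : Type*} (s : Finset ι) (c x : ι → ℝ) (y : ℝ) : ℂ := ∑ i ∈ s, (c i : ℂ) * ee (-y * x i)

lemma kk_cont (κ : ℝ) : Continuous (kk κ) := by have := hat_cont; unfold kk; fun_prop

lemma kk_nonneg {κ : ℝ} (hκ : 0 < κ) (x : ℝ) : 0 ≤ kk κ x := div_nonneg (hat_nonneg _) hκ.le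

lemma kk_le {κ : ℝ} (hκ : 0 < κ) (x : ℝ) : kk κ x ≤ 1 / κ := by unfold kk; gcongr; exact hat_le_one _

lemma kk_zero {κ x : ℝ} (hκ : 0 < κ) (h : κ ≤ |x|) : kk κ x = 0 := by
  unfold kk; rw [hat_of_one_le, zero_div]; rwa [abs_div, abs_of_pos hκ, le_div_iff₀ hκ, one_mul]

lemma kk_integrable {κ : ℝ} (hκ : 0 < κ) : Integrable (kk κ) := by
  refine (kk_cont κ).integrable_of_hasCompactSupport (HasCompactSupport.intro (K := Set.Icc (-κ) κ) isCompact_Icc fun x hx => kk_zero hκ ?_)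
  by_contra h; exact hx (abs_le.1 (not_le.1 h).le)

lemma integral_kk {κ : ℝ} (hκ : 0 < κ) (x : ℝ) : ∫ u, kk κ (u - x) = 1 := by
  rw [integral_sub_right_eq_self (kk κ) x]; unfold kk
  rw [integral_div, Measure.integral_comp_div hat κ, integral_hat, abs_of_pos hκ]; simp [hκ.ne']

lemma fourier_kk {κ : ℝ} (hκ : 0 < κ) (x ξ : ℝ) :
  ∫ u : ℝ, Complex.exp ((-2 * π * u * ξ : ℝ) * I) * ((kk κ (u - x) : ℝ) : ℂ) =
    ee (-(2 * π * ξ) * x) * QQ (2 * π * ξ * κ) := by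
  rw [← integral_add_right_eq_self _ x]
  have h := Measure.integral_comp_div (fun z : ℝ =>
    Complex.exp ((-2 * π * (κ * z + x) * ξ : ℝ) * I) * ((hat z / κ : ℝ) : ℂ)) κ
  have e : ∀ u : ℝ, κ * (u / κ) = u := fun u => by field_simp
  simp only [e] at h; simp only [add_sub_cancel_right, kk]
  rw [h, abs_of_pos hκ, QQ, HH, ← integral_const_mul, ← integral_smul]; congr 1; funext z
  have hκ' : (κ : ℂ) ≠ 0 := mod_cast hκ.ne'
  rw [real_smul, ee, mul_left_comm (Complex.exp _), ← Complex.exp_add]; push_cast; field_simp; ring_nf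

section
variable {ι : Type*} (s : Finset ι) (c x : ι → ℝ)

lemma comb_cont (κ : ℝ) : Continuous (comb s c x κ) := by have := kk_cont κ; unfold comb; fun_prop

lemma comb_integrable {κ : ℝ} (hκ : 0 < κ) : Integrable (comb s c x κ) := by
  refine integrable_finsetSum _ fun i _ => ?_
  exact (((kk_integrable hκ).comp_sub_right (x i)).ofReal).const_mul _

lemma fourier_comb {κ : ℝ} (hκ : 0 < κ) (ξ : ℝ) : 𝓕 (comb s c x κ) ξ = Dp s c x (2 * π * ξ) * QQ (2 * π * ξ * κ) := by
  rw [fourier_real_eq_integral_exp_smul]; simp only [comb, smul_eq_mul, mul_sum]; rw [integral_finsetSum]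
  · rw [Dp, sum_mul]; refine sum_congr rfl fun i _ => ?_
    rw [mul_assoc, ← fourier_kk hκ, ← integral_const_mul]; congr 1; funext u; ring
  · intro i _; refine ((((kk_integrable hκ).comp_sub_right (x i)).ofReal).const_mul _).bdd_mul (c := 1) ?_ ?_
    · exact Continuous.aestronglyMeasurable (by fun_prop)
    · exact Eventually.of_forall fun u => (Complex.norm_exp_ofReal_mul_I _).le

lemma Dp_norm (y : ℝ) : ‖Dp s c x y‖ ≤ ∑ i ∈ s, |c i| := by
  refine (norm_sum_le _ _).trans (sum_le_sum fun i _ => ?_)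
  rw [norm_mul, norm_ee, mul_one, norm_real, norm_eq_abs]

lemma QQ_bound (z : ℝ) : ‖QQ z‖ ≤ 8 / (1 + z ^ 2) := by
  have h := HH_bound ((-z : ℝ) * I); have : (((-z : ℝ) : ℂ) * I).re = 0 := by simp
  rw [this, abs_zero, exp_zero, mul_one] at h; rw [QQ]; refine h.trans_eq ?_; simp

lemma QQ_sub_one (z : ℝ) : ‖QQ z - 1‖ ≤ |z| := by
  have h1 : (1 : ℂ) = ∫ y : ℝ, (hat y : ℂ) := by rw [integral_complex_ofReal, integral_hat]; simp
  have i1 := hat_mul_integrable (fun y => Complex.exp (y * (((-z : ℝ) : ℂ) * I))) (by fun_prop)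
  have i2 := hat_mul_integrable (fun _ => 1) (by fun_prop); simp only [mul_one] at i2
  rw [QQ, HH, h1, ← integral_sub i1 i2]
  have i3 : Integrable (fun y => hat y * |z|) := by
    refine Integrable.mul_const ?_ _; simpa using i2.re
  refine (norm_integral_le_of_norm_le i3 (Eventually.of_forall fun y => ?_)).trans_eq (by
    rw [integral_mul_const, integral_hat, one_mul])
  have : (hat y : ℂ) * Complex.exp (y * (((-z : ℝ) : ℂ) * I)) - hat y = hat y * (ee (-(y * z)) - ee 0) := by
    rw [ee_zero, ee]; push_cast; ring_nf
  rw [this, norm_mul, norm_real, norm_eq_abs, abs_of_nonneg (hat_nonneg _)]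
  by_cases hy : hat y = 0
  · simp [hy]
  · refine mul_le_mul_of_nonneg_left ((norm_ee_sub _ _).trans ?_) (hat_nonneg _)
    rw [sub_zero, abs_neg, abs_mul]; exact mul_le_of_le_one_left (abs_nonneg _) (abs_lt_of_hat_ne hy).le

lemma QQ_cont : Continuous QQ := by unfold QQ; exact HH_cont.comp (by fun_prop)

lemma Dp_cont : Continuous (Dp s c x) := by unfold Dp ee; fun_prop

lemma QQ_integrable_sq {κ : ℝ} (hκ : 0 < κ) : Integrable (fun ξ : ℝ => (8 / (1 + (2 * π * ξ * κ) ^ 2))) := by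
  have := (integrable_inv_scaled (2 * π * κ) (by positivity)).const_mul 8
  refine this.congr (Eventually.of_forall fun ξ => ?_); simp only [div_eq_mul_inv]; ring_nf

lemma fourier_comb_integrable {κ : ℝ} (hκ : 0 < κ) : Integrable (𝓕 (comb s c x κ)) := by
  rw [show 𝓕 (comb s c x κ) = _ from funext (fourier_comb s c x hκ)]
  refine Integrable.mono' ((QQ_integrable_sq hκ).const_mul (∑ i ∈ s, |c i|)) ?_ (Eventually.of_forall fun ξ => ?_)
  · have := Dp_cont s c x; have := QQ_cont; exact Continuous.aestronglyMeasurable (by fun_prop)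
  · rw [norm_mul]; exact mul_le_mul (Dp_norm _ _ _ _) (QQ_bound _) (norm_nonneg _) (sum_nonneg fun _ _ => abs_nonneg _)

lemma fourier_comb_sq_integrable {κ : ℝ} (hκ : 0 < κ) : Integrable (fun ξ => ‖𝓕 (comb s c x κ) ξ‖ ^ 2) := by
  have h := (fourier_comb_integrable s c x hκ).norm
  have hb : ∀ ξ, ‖𝓕 (comb s c x κ) ξ‖ ≤ (∑ i ∈ s, |c i|) * 8 := by
    intro ξ; rw [fourier_comb _ _ _ hκ, norm_mul]
    refine mul_le_mul (Dp_norm _ _ _ _) ((QQ_bound _).trans ?_) (norm_nonneg _) (sum_nonneg fun _ _ => abs_nonneg _)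
    exact div_le_self (by norm_num) (by nlinarith [sq_nonneg (2 * π * ξ * κ)])
  refine ((h.bdd_mul (c := (∑ i ∈ s, |c i|) * 8) h.aestronglyMeasurable (Eventually.of_forall fun ξ => ?_))).congr (Eventually.of_forall fun ξ => ?_)
  · rw [norm_norm]; exact hb ξ
  · simp only [sq]
end

lemma kk_count (A : Finset ℕ) (κ M₀ u : ℝ) (hκ : 0 < κ) (hκ1 : κ ≤ 1) (hM : 0 < M₀) (hA : ∀ m ∈ A, M₀ ≤ m) :
  ∑ m ∈ A, kk κ (u - log m) / m ≤ 15 + 1 / (κ * M₀) := by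
  set E := exp (u - κ) with hE; have hE0 : 0 < E := exp_pos _; set q := min (1 / M₀) (1 / E)
  set A' := A.filter fun m : ℕ => |u - log m| < κ with hA'
  have hbd : ∀ m ∈ A', E ≤ m ∧ (m : ℝ) ≤ exp (u + κ) ∧ M₀ ≤ m := by
    intro m hm; rw [hA', mem_filter] at hm; have h1 := hA m hm.1; have h2 := abs_lt.1 hm.2
    have hm0 : (0 : ℝ) < m := hM.trans_le h1; refine ⟨?_, ?_, h1⟩
    · rw [hE, ← le_log_iff_exp_le hm0]; linarith
    · rw [← log_le_iff_le_exp hm0]; linarith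
  have hcard : (A'.card : ℝ) ≤ E * (15 * κ) + 1 := by
    have hsub : A' ⊆ Icc ⌈E⌉₊ ⌊exp (u + κ)⌋₊ := by
      intro m hm; have := hbd m hm; rw [mem_Icc]; exact ⟨Nat.ceil_le.2 this.1, Nat.le_floor this.2.1⟩
    have h1 := card_le_card hsub; rw [Nat.card_Icc] at h1
    have h2 : (A'.card : ℝ) ≤ exp (u + κ) - E + 1 := by
      rcases Nat.eq_zero_or_pos A'.card with h0 | h0
      · rw [h0, Nat.cast_zero]; have : E ≤ exp (u + κ) := exp_le_exp.2 (by linarith); linarith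
      · have h3 : A'.card + ⌈E⌉₊ ≤ ⌊exp (u + κ)⌋₊ + 1 := by omega
        have h4 : (A'.card : ℝ) + ⌈E⌉₊ ≤ ⌊exp (u + κ)⌋₊ + 1 := mod_cast h3
        linarith [Nat.le_ceil E, Nat.floor_le (exp_pos (u + κ)).le]
    have h5 : exp (u + κ) = E * exp (2 * κ) := by rw [hE, ← exp_add]; ring_nf
    have h6 : exp (2 * κ) - 1 ≤ 15 * κ := by
      have h7 := add_one_le_exp (-(2 * κ))
      have h8 : exp (2 * κ) ≤ 7.5 := by
        refine (exp_le_exp.2 (by linarith : 2 * κ ≤ 1 + 1)).trans ?_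
        rw [exp_add]; nlinarith [exp_one_lt_d9, exp_pos 1]
      have h9 : exp (2 * κ) * exp (-(2 * κ)) = 1 := by rw [← exp_add]; simp
      nlinarith [exp_pos (2 * κ)]
    nlinarith
  have hsum : ∑ m ∈ A, kk κ (u - log m) / m = ∑ m ∈ A', kk κ (u - log m) / m := by
    symm; refine sum_subset (filter_subset _ _) fun m hm hm' => ?_; rw [hA', mem_filter, not_and] at hm'
    rw [kk_zero hκ (not_lt.1 (hm' hm)), zero_div]
  rw [hsum]
  have hterm : ∀ m ∈ A', kk κ (u - log m) / m ≤ 1 / κ * q := by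
    intro m hm; obtain ⟨h1, h2, h3⟩ := hbd m hm; rw [div_eq_mul_one_div]
    refine mul_le_mul (kk_le hκ _) (le_min ?_ ?_) (by positivity) (by positivity)
    · exact one_div_le_one_div_of_le hM h3
    · exact one_div_le_one_div_of_le hE0 h1
  refine (sum_le_card_nsmul _ _ _ hterm).trans ?_; rw [nsmul_eq_mul]; have q1 : q ≤ 1 / M₀ := min_le_left _ _
  have q2 : E * q ≤ 1 := by
    have : q ≤ 1 / E := min_le_right _ _
    calc E * q ≤ E * (1 / E) := by gcongr
      _ = 1 := by field_simp
  calc (A'.card : ℝ) * (1 / κ * q) ≤ (E * (15 * κ) + 1) * (1 / κ * q) := by gcongr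
    _ = 15 * (E * q) + 1 / κ * q := by field_simp
    _ ≤ 15 * 1 + 1 / κ * (1 / M₀) := by gcongr
    _ = _ := by field_simp

lemma comb_l2 (A : Finset ℕ) (a : ℕ → ℝ) (κ M₀ : ℝ) (hκ : 0 < κ) (hκ1 : κ ≤ 1) (hM : 0 < M₀) (hA : ∀ m ∈ A, M₀ ≤ m) :
  ∫ u, ‖comb A a (fun m => log m) κ u‖ ^ 2 ≤ (15 + 1 / (κ * M₀)) * ∑ m ∈ A, m * a m ^ 2 := by
  have hInt : Integrable (fun u => (15 + 1 / (κ * M₀)) * ∑ m ∈ A, (m * a m ^ 2) * kk κ (u - log m)) := by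
    refine (integrable_finsetSum _ fun m _ => ?_).const_mul _
    exact ((kk_integrable hκ).comp_sub_right _).const_mul _
  have hval : ∫ u, (15 + 1 / (κ * M₀)) * ∑ m ∈ A, (m * a m ^ 2) * kk κ (u - log m) = (15 + 1 / (κ * M₀)) * ∑ m ∈ A, m * a m ^ 2 := by
    rw [integral_const_mul, integral_finsetSum]
    · congr 1; refine sum_congr rfl fun m _ => ?_; rw [integral_const_mul, integral_kk hκ, mul_one]
    · exact fun m _ => ((kk_integrable hκ).comp_sub_right _).const_mul _
  rw [← hval]
  refine integral_mono_of_nonneg (Eventually.of_forall fun u => by positivity) hInt (Eventually.of_forall fun u => ?_)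
  have h0 : comb A a (fun m => log m) κ u = ((∑ m ∈ A, a m * kk κ (u - log m) : ℝ) : ℂ) := by rw [comb]; push_cast; rfl
  simp only; rw [h0, norm_real, norm_eq_abs, sq_abs, mul_comm]
  refine (sum_sq_le_sum_mul_sum_of_sq_le_mul A (f := fun m => (m * a m ^ 2) * kk κ (u - log m))
    (g := fun m => kk κ (u - log m) / m) (fun m _ => mul_nonneg (by positivity) (kk_nonneg hκ _))
    (fun m _ => div_nonneg (kk_nonneg hκ _) (by positivity)) fun m hm => ?_).trans ?_
  · have : (m : ℝ) ≠ 0 := (hM.trans_le (hA m hm)).ne'; refine le_of_eq ?_; field_simp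
  · refine mul_le_mul_of_nonneg_left (kk_count A κ M₀ u hκ hκ1 hM hA) (sum_nonneg fun m _ => mul_nonneg (by positivity) (kk_nonneg hκ _))

/-- Mean square of the difference between the averages at scales `δ` and `Δ` of a bilinear sum. -/
lemma bilinear (A B : Finset ℕ) (a b : ℕ → ℝ) (δ Δ T₀ T₁ ε M₀ : ℝ) (hδ : 0 < δ) (hδΔ : δ ≤ Δ) (hΔ : Δ ≤ 1)
  (hT0 : 1 ≤ T₀) (hT : T₀ ≤ T₁) (hM : 0 < M₀) (hA : ∀ m ∈ A, M₀ ≤ m)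
  (hB : ∀ y, T₀ ≤ |y| → |y| ≤ T₁ → ‖Dp B b (fun n => log n) y‖ ≤ ε) :
  ∫ u, ‖comb (A ×ˢ B) (fun p => a p.1 * b p.2) (fun p => log p.1 + log p.2) δ u
    - comb (A ×ˢ B) (fun p => a p.1 * b p.2) (fun p => log p.1 + log p.2) Δ u‖ ^ 2 ≤
  4 * ε ^ 2 * (15 + 1 / (δ * M₀)) * ∑ m ∈ A, m * a m ^ 2 +
    ((∑ m ∈ A, |a m|) * ∑ n ∈ B, |b n|) ^ 2 * (8 * Δ ^ 2 * T₀ ^ 4 + 512 / (T₁ ^ 2 * δ ^ 4)) := by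
  have hΔ0 : 0 < Δ := hδ.trans_le hδΔ; set s := A ×ˢ B; set c : ℕ × ℕ → ℝ := fun p => a p.1 * b p.2 with hc
  set x : ℕ × ℕ → ℝ := fun p => log p.1 + log p.2 with hx; set la : ℕ → ℝ := fun n => log n with hla
  set R := 8 * Δ ^ 2 * T₀ ^ 4 + 512 / (T₁ ^ 2 * δ ^ 4) with hR; set Z := (∑ m ∈ A, |a m|) * ∑ n ∈ B, |b n|
  have hT1 : 0 < T₁ := by linarith
  have hF : ∀ ξ, 𝓕 (fun u => comb s c x δ u - comb s c x Δ u) ξ = 𝓕 (comb s c x δ) ξ - 𝓕 (comb s c x Δ) ξ := by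
    intro ξ; simp only [fourier_real_eq_integral_exp_smul, smul_sub]
    have hi : ∀ κ : ℝ, 0 < κ → Integrable (fun u : ℝ => Complex.exp ((-2 * π * u * ξ : ℝ) * I) • comb s c x κ u) := by
      intro κ hκ
      refine (comb_integrable s c x hκ).bdd_mul (c := 1) (Continuous.aestronglyMeasurable (by fun_prop)) ?_
      exact Eventually.of_forall fun u => (Complex.norm_exp_ofReal_mul_I _).le
    exact integral_sub (hi δ hδ) (hi Δ hΔ0)
  have hD : ∀ y, Dp s c x y = Dp A a la y * Dp B b la y := by
    intro y; rw [Dp, sum_product, Dp, Dp, sum_mul_sum]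
    refine sum_congr rfl fun m _ => sum_congr rfl fun n _ => ?_; simp only [hc, hx, hla]
    rw [mul_add, ee_add]; push_cast; ring
  have hDn : ∀ y, ‖Dp s c x y‖ ≤ Z := by
    intro y; rw [hD, norm_mul]
    exact mul_le_mul (Dp_norm _ _ _ _) (Dp_norm _ _ _ _) (norm_nonneg _) (sum_nonneg fun _ _ => abs_nonneg _)
  rw [plancherel (fun u => comb s c x δ u - comb s c x Δ u) ((comb_cont s c x δ).sub (comb_cont s c x Δ)) ((comb_integrable s c x hδ).sub (comb_integrable s c x hΔ0)) (by
    rw [show 𝓕 (fun u => comb s c x δ u - comb s c x Δ u) = _ from funext hF]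
    exact (fourier_comb_integrable s c x hδ).sub (fourier_comb_integrable s c x hΔ0))]
  have i1 := (fourier_comb_sq_integrable A a la hδ).const_mul (2 * ε ^ 2)
  have i2 := (fourier_comb_sq_integrable A a la hΔ0).const_mul (2 * ε ^ 2)
  have i3 := (integrable_inv_scaled (2 * π) (by positivity)).const_mul (Z ^ 2 * R)
  have hpt : ∀ ξ, ‖𝓕 (fun u => comb s c x δ u - comb s c x Δ u) ξ‖ ^ 2 ≤
    2 * ε ^ 2 * ‖𝓕 (comb A a la δ) ξ‖ ^ 2 + 2 * ε ^ 2 * ‖𝓕 (comb A a la Δ) ξ‖ ^ 2 + Z ^ 2 * R * (1 + (2 * π * ξ) ^ 2)⁻¹ := by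
    intro ξ
    rw [hF, fourier_comb _ _ _ hδ, fourier_comb _ _ _ hΔ0, fourier_comb _ _ _ hδ, fourier_comb _ _ _ hΔ0, ← mul_sub,
      norm_mul, norm_mul, norm_mul, mul_pow, mul_pow, mul_pow]
    set y := 2 * π * ξ; have hy2 : 0 < 1 + y ^ 2 := by positivity
    -- outside the middle range everything is absorbed by the last term
    have hout : ‖QQ (y * δ) - QQ (y * Δ)‖ ^ 2 ≤ R * (1 + y ^ 2)⁻¹ →
      ‖Dp s c x y‖ ^ 2 * ‖QQ (y * δ) - QQ (y * Δ)‖ ^ 2 ≤ 2 * ε ^ 2 * (‖Dp A a la y‖ ^ 2 * ‖QQ (y * δ)‖ ^ 2)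
        + 2 * ε ^ 2 * (‖Dp A a la y‖ ^ 2 * ‖QQ (y * Δ)‖ ^ 2) + Z ^ 2 * R * (1 + y ^ 2)⁻¹ := by
      intro h
      have h1 : ‖Dp s c x y‖ ^ 2 * ‖QQ (y * δ) - QQ (y * Δ)‖ ^ 2 ≤ Z ^ 2 * (R * (1 + y ^ 2)⁻¹) := by
        have := hDn y; gcongr
      have h2 : 0 ≤ 2 * ε ^ 2 * (‖Dp A a la y‖ ^ 2 * ‖QQ (y * δ)‖ ^ 2)
        + 2 * ε ^ 2 * (‖Dp A a la y‖ ^ 2 * ‖QQ (y * Δ)‖ ^ 2) := by positivity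
      linarith
    rcases le_total |y| T₀ with h | h
    · apply hout
      have h1 : ‖QQ (y * δ) - QQ (y * Δ)‖ ≤ 2 * Δ * T₀ := by
        have := norm_sub_le (QQ (y * δ) - 1) (QQ (y * Δ) - 1); rw [sub_sub_sub_cancel_right] at this
        have b1 := QQ_sub_one (y * δ); have b2 := QQ_sub_one (y * Δ); rw [abs_mul, abs_of_pos hδ] at b1
        rw [abs_mul, abs_of_pos hΔ0] at b2; have b3 : |y| * δ ≤ T₀ * Δ := by gcongr
        have b4 : |y| * Δ ≤ T₀ * Δ := by gcongr
        linarith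
      have h2 : 1 + y ^ 2 ≤ 2 * T₀ ^ 2 := by rw [← sq_abs y]; nlinarith [abs_nonneg y]
      have h3 : (2 * Δ * T₀) ^ 2 * (1 + y ^ 2) ≤ R := by
        have : (2 * Δ * T₀) ^ 2 * (1 + y ^ 2) ≤ (2 * Δ * T₀) ^ 2 * (2 * T₀ ^ 2) := by gcongr
        have h5 : 0 ≤ 512 / (T₁ ^ 2 * δ ^ 4) := by positivity
        rw [hR]; linarith [(by ring : (2 * Δ * T₀) ^ 2 * (2 * T₀ ^ 2) = 8 * Δ ^ 2 * T₀ ^ 4)]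
      rw [← div_eq_mul_inv, le_div_iff₀ hy2]; refine le_trans ?_ h3; gcongr
    rcases le_total |y| T₁ with h' | h'
    · have b := hB y h h'
      have h1 : ‖QQ (y * δ) - QQ (y * Δ)‖ ^ 2 ≤ 2 * (‖QQ (y * δ)‖ ^ 2 + ‖QQ (y * Δ)‖ ^ 2) := by
        refine (pow_le_pow_left₀ (norm_nonneg _) (norm_sub_le _ _) 2).trans ?_
        nlinarith [sq_nonneg (‖QQ (y * δ)‖ - ‖QQ (y * Δ)‖)]
      have h2 : ‖Dp s c x y‖ ^ 2 ≤ ‖Dp A a la y‖ ^ 2 * ε ^ 2 := by rw [hD, norm_mul, mul_pow]; gcongr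
      have h3 : 0 ≤ Z ^ 2 * R * (1 + y ^ 2)⁻¹ := by positivity
      have h4 := mul_le_mul h2 h1 (by positivity) (by positivity); linarith
    · apply hout; have hy1 : 1 ≤ |y| := by linarith
      have h1 : ‖QQ (y * δ) - QQ (y * Δ)‖ ≤ 16 / (y ^ 2 * δ ^ 2) := by
        have b1 := QQ_bound (y * δ); have b2 := QQ_bound (y * Δ)
        have hy0 : 0 < y ^ 2 := by rw [← sq_abs]; positivity
        have b3 : 8 / (1 + (y * δ) ^ 2) ≤ 8 / (y ^ 2 * δ ^ 2) := by gcongr; rw [mul_pow]; linarith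
        have b4 : 8 / (1 + (y * Δ) ^ 2) ≤ 8 / (y ^ 2 * δ ^ 2) := by
          have : y ^ 2 * δ ^ 2 ≤ y ^ 2 * Δ ^ 2 := by gcongr
          gcongr; rw [mul_pow]; linarith
        have := norm_sub_le (QQ (y * δ)) (QQ (y * Δ))
        have e : 16 / (y ^ 2 * δ ^ 2) = 8 / (y ^ 2 * δ ^ 2) + 8 / (y ^ 2 * δ ^ 2) := by ring
        linarith
      have hyy : T₁ ^ 2 ≤ y ^ 2 := by rw [← sq_abs y]; gcongr
      have hy1' : 1 ≤ y ^ 2 := by rw [← sq_abs y]; nlinarith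
      refine (pow_le_pow_left₀ (norm_nonneg _) h1 2).trans ?_; rw [← div_eq_mul_inv, le_div_iff₀ hy2]
      have h5 : (16 / (y ^ 2 * δ ^ 2)) ^ 2 * (1 + y ^ 2) ≤ (16 / (y ^ 2 * δ ^ 2)) ^ 2 * (2 * y ^ 2) := by gcongr; linarith
      have h6 : (16 / (y ^ 2 * δ ^ 2)) ^ 2 * (2 * y ^ 2) = 512 / (y ^ 2 * δ ^ 4) := by
        have : y ≠ 0 := fun h => by rw [h] at hy1'; norm_num at hy1'
        field_simp; norm_num
      have h7 : 512 / (y ^ 2 * δ ^ 4) ≤ 512 / (T₁ ^ 2 * δ ^ 4) := by gcongr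
      have h8 : 0 ≤ 8 * Δ ^ 2 * T₀ ^ 4 := by positivity
      rw [hR]; linarith
  refine (integral_mono_of_nonneg (Eventually.of_forall fun ξ => by positivity) ((i1.add i2).add i3) (Eventually.of_forall hpt)).trans ?_
  have e3 := integral_add (i1.add i2) i3; have e2 := integral_add i1 i2; simp only [Pi.add_apply] at e3 e2 ⊢
  rw [e3, e2, integral_const_mul, integral_const_mul, integral_const_mul, integral_inv_scaled _ (by positivity),
    ← plancherel _ (comb_cont A a la δ) (comb_integrable A a la hδ) (fourier_comb_integrable A a la hδ),
    ← plancherel _ (comb_cont A a la Δ) (comb_integrable A a la hΔ0) (fourier_comb_integrable A a la hΔ0)]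
  have g1 := comb_l2 A a δ M₀ hδ (hδΔ.trans hΔ) hM hA; have g2 := comb_l2 A a Δ M₀ hΔ0 hΔ hM hA
  set S := ∑ m ∈ A, (m : ℝ) * a m ^ 2
  have g3 : (15 + 1 / (Δ * M₀)) * S ≤ (15 + 1 / (δ * M₀)) * S := by gcongr
  have hpi : π / (2 * π) = 1 / 2 := by field_simp
  rw [hpi]
  have k1 : 2 * ε ^ 2 * ∫ u, ‖comb A a la δ u‖ ^ 2 ≤ 2 * ε ^ 2 * ((15 + 1 / (δ * M₀)) * S) := by gcongr
  have k2 : 2 * ε ^ 2 * ∫ u, ‖comb A a la Δ u‖ ^ 2 ≤ 2 * ε ^ 2 * ((15 + 1 / (δ * M₀)) * S) := by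
    gcongr; exact g2.trans g3
  have k3 : 0 ≤ Z ^ 2 * R := by positivity
  linarith

lemma kk_lip {κ : ℝ} (hκ : 0 < κ) (x y : ℝ) : |kk κ x - kk κ y| ≤ 1 / κ ^ 2 * |x - y| := by
  unfold kk; rw [← sub_div, abs_div, abs_of_pos hκ]; have := hat_lip (x / κ) (y / κ)
  rw [← sub_div, abs_div, abs_of_pos hκ] at this
  calc |hat (x / κ) - hat (y / κ)| / κ ≤ (|x - y| / κ) / κ := by gcongr
    _ = _ := by field_simp

/-- Sums of `g (y - log n) / n` for a kernel `g` supported in `[-κ, κ]`. -/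
lemma ker_sum (g : ℝ → ℝ) (G G' κ y : ℝ) (hκ : 0 < κ) (hκ1 : κ ≤ 1) (hG : ∀ x, |g x| ≤ G)
  (hG' : ∀ x x', |g x - g x'| ≤ G' * |x - x'|) (hs : ∀ x, κ ≤ |x| → g x = 0) (hy : 2 ≤ y)
  (hy2 : exp (1 - y) ≤ 2 * κ) (M : ℕ) (hM : exp (y + 1) ≤ M) :
  |∑ n ∈ Icc 1 M, g (y - log n) / n - ∫ x, g x| ≤ 240 * (G + G') * κ * exp (-y) := by
  have hGn : 0 ≤ G + G' := by
    have h1 := (abs_nonneg _).trans (hG 0); have h2 := (abs_nonneg _).trans (hG' 0 1)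
    rw [zero_sub, abs_neg, abs_one, mul_one] at h2; linarith
  have h := sum_log_int (fun z => ((g (y - z) : ℝ) : ℂ)) G G' (y - κ) (2 * κ) (by linarith) (by linarith)
    ((exp_le_exp.2 (by linarith)).trans hy2) (fun z => by rw [norm_real]; exact hG _)
    (fun z z' => by
      rw [← ofReal_sub, norm_real]; refine (hG' _ _).trans_eq ?_; rw [sub_sub_sub_cancel_left, abs_sub_comm])
    (fun z hz => by
      rw [hs, Complex.ofReal_zero]
      rcases hz with h | h
      · exact (by linarith : κ ≤ y - z).trans (le_abs_self _)
      · exact (by linarith : κ ≤ -(y - z)).trans (neg_le_abs _)) M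
    ((exp_le_exp.2 (by linarith)).trans hM)
  have e1 : ∫ z, ((g (y - z) : ℝ) : ℂ) = ((∫ x, g x : ℝ) : ℂ) := by
    rw [integral_complex_ofReal, integral_sub_left_eq_self g volume y]
  rw [e1] at h
  have e2 : ∑ n ∈ Icc 1 M, ((g (y - log n) : ℝ) : ℂ) / n - ((∫ x, g x : ℝ) : ℂ) =
    ((∑ n ∈ Icc 1 M, g (y - log n) / n - ∫ x, g x : ℝ) : ℂ) := by push_cast; rfl
  rw [e2, norm_real, norm_eq_abs] at h; refine h.trans ?_
  have h3 : exp (-(y - κ)) ≤ 3 * exp (-y) := by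
    rw [show -(y - κ) = κ + -y by ring, exp_add]
    have : exp κ ≤ 3 := (exp_le_exp.2 hκ1).trans (by linarith [exp_one_lt_d9]); gcongr
  calc 40 * (G + G') * (2 * κ) * exp (-(y - κ)) ≤ 40 * (G + G') * (2 * κ) * (3 * exp (-y)) := by gcongr
    _ = _ := by ring

lemma kk_sum_one {κ y : ℝ} (hκ : 0 < κ) (hκ1 : κ ≤ 1) (hy : 2 ≤ y)
  (hy2 : exp (1 - y) ≤ 2 * κ) (M : ℕ) (hM : exp (y + 1) ≤ M) :
  |∑ n ∈ Icc 1 M, kk κ (y - log n) / n - 1| ≤ 480 * exp (-y) / κ := by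
  have h := ker_sum (kk κ) (1 / κ) (1 / κ ^ 2) κ y hκ hκ1 (fun x => by
    rw [abs_of_nonneg (kk_nonneg hκ x)]; exact kk_le hκ x) (kk_lip hκ) (fun x hx => kk_zero hκ hx) hy hy2 M hM
  have e : ∫ x, kk κ x = 1 := by simpa using integral_kk hκ 0
  rw [e] at h; refine h.trans ?_
  have : (1 / κ + 1 / κ ^ 2) * κ ≤ 2 / κ := by
    have e1 : (1 / κ + 1 / κ ^ 2) * κ = 1 + 1 / κ := by field_simp
    have : 1 ≤ 1 / κ := by rw [le_div_iff₀ hκ]; linarith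
    rw [e1]; linarith [(by ring : 2 / κ = 1 / κ + 1 / κ)]
  calc 240 * (1 / κ + 1 / κ ^ 2) * κ * exp (-y) = 240 * ((1 / κ + 1 / κ ^ 2) * κ) * exp (-y) := by ring
    _ ≤ 240 * (2 / κ) * exp (-y) := by gcongr
    _ = _ := by ring

lemma kk_sum_odd {κ y : ℝ} (hκ : 0 < κ) (hκ1 : κ ≤ 1) (hy : 2 ≤ y)
  (hy2 : exp (1 - y) ≤ 2 * κ) (M : ℕ) (hM : exp (y + 1) ≤ M) :
  |∑ n ∈ Icc 1 M, (y - log n) * kk κ (y - log n) / n| ≤ 720 * exp (-y) / κ := by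
  have hsm : ∀ x, κ ≤ |x| → x * kk κ x = 0 := fun x hx => by rw [kk_zero hκ hx, mul_zero]
  have hl : ∀ x x', |x| ≤ κ → |x * kk κ x - x' * kk κ x'| ≤ 2 / κ * |x - x'| := by
    intro x x' hx; rw [show x * kk κ x - x' * kk κ x' = x * (kk κ x - kk κ x') + (x - x') * kk κ x' by ring]
    refine (abs_add_le _ _).trans ?_; rw [abs_mul, abs_mul, abs_of_nonneg (kk_nonneg hκ x')]
    have h1 := kk_lip hκ x x'; have h2 := kk_le hκ x'
    calc |x| * |kk κ x - kk κ x'| + |x - x'| * kk κ x' ≤ κ * (1 / κ ^ 2 * |x - x'|) + |x - x'| * (1 / κ) := by gcongr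
      _ = _ := by field_simp; ring
  have h := ker_sum (fun x => x * kk κ x) 1 (2 / κ) κ y hκ hκ1 (fun x => by
    rcases le_total κ |x| with h | h
    · rw [hsm x h]; simp
    · rw [abs_mul, abs_of_nonneg (kk_nonneg hκ x)]
      calc |x| * kk κ x ≤ κ * (1 / κ) := mul_le_mul h (kk_le hκ x) (kk_nonneg hκ x) hκ.le
        _ = 1 := by field_simp)
    (fun x x' => by
      rcases le_total |x| κ with h | h
      · exact hl x x' h
      rcases le_total |x'| κ with h' | h'
      · rw [abs_sub_comm, abs_sub_comm x]; exact hl x' x h'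
      · simp only [hsm x h, hsm x' h']; rw [sub_zero, abs_zero]; positivity) hsm hy hy2 M hM
  have e : ∫ x, x * kk κ x = 0 := by
    have h1 := integral_neg_eq_self (fun x => x * kk κ x) volume
    have h2 : ∀ x, kk κ (-x) = kk κ x := fun x => by unfold kk; rw [neg_div, hat_neg]
    simp only [h2, neg_mul] at h1; rw [integral_neg] at h1; linarith
  rw [e, sub_zero] at h; refine h.trans ?_
  have : (1 + 2 / κ) * κ ≤ 3 / κ := by
    have : 1 ≤ 1 / κ := by rw [le_div_iff₀ hκ]; linarith
    rw [show (1 + 2 / κ) * κ = κ + 2 by field_simp]; linarith [(by ring : 3 / κ = 3 * (1 / κ))]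
  calc 240 * (1 + 2 / κ) * κ * exp (-y) = 240 * ((1 + 2 / κ) * κ) * exp (-y) := by ring
    _ ≤ 240 * (3 / κ) * exp (-y) := by gcongr
    _ = _ := by ring

/-! ### Vaughan's identity -/

/-- The average of `f` near `e^u` on the logarithmic scale, at width `κ`. -/
def avg (M : ℕ) (f : ℕ → ℝ) (κ u : ℝ) : ℝ := ∑ n ∈ Icc 1 M, f n / n * kk κ (u - log n)

/-- Bilinear form of `avg`. -/
def Bl (M : ℕ) (α β : ℕ → ℝ) (κ u : ℝ) : ℝ :=
  ∑ m ∈ Icc 1 M, ∑ n ∈ Icc 1 M, α m / m * (β n / n) * kk κ (u - log m - log n)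

lemma sum_pairs (M : ℕ) (h : ℕ → ℕ → ℝ) (hz : ∀ m n, 1 ≤ m → 1 ≤ n → M < m * n → h m n = 0) :
  ∑ m ∈ Icc 1 M, ∑ n ∈ Icc 1 M, h m n = ∑ k ∈ Icc 1 M, ∑ p ∈ k.divisorsAntidiagonal, h p.1 p.2 := by
  rw [← sum_product']
  have h1 : ∑ p ∈ Icc 1 M ×ˢ Icc 1 M, h p.1 p.2 = ∑ p ∈ (Icc 1 M ×ˢ Icc 1 M).filter (fun p => p.1 * p.2 ≤ M), h p.1 p.2 := by
    refine (sum_subset (filter_subset _ _) fun p hp hp' => ?_).symm; rw [mem_filter, not_and] at hp'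
    rw [mem_product, mem_Icc, mem_Icc] at hp
    exact hz _ _ hp.1.1 hp.2.1 (not_le.1 (hp' (by simp only [mem_product, mem_Icc]; exact hp)))
  rw [h1, ← sum_fiberwise_of_maps_to (t := Icc 1 M) (g := fun p : ℕ × ℕ => p.1 * p.2)]
  · refine sum_congr rfl fun k hk => sum_congr ?_ fun _ _ => rfl; rw [mem_Icc] at hk; ext p
    simp only [mem_filter, mem_product, mem_Icc, Nat.mem_divisorsAntidiagonal]; constructor
    · rintro ⟨⟨-, -⟩, h⟩; exact ⟨h, by omega⟩
    · rintro ⟨h, -⟩; have p1 : 1 ≤ p.1 := Nat.one_le_iff_ne_zero.2 fun h0 => by rw [h0, zero_mul] at h; omega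
      have p2 : 1 ≤ p.2 := Nat.one_le_iff_ne_zero.2 fun h0 => by rw [h0, mul_zero] at h; omega
      have := Nat.le_mul_of_pos_right p.1 p2; have := Nat.le_mul_of_pos_left p.2 p1; omega
  · intro p hp; simp only [mem_filter, mem_product, mem_Icc] at hp ⊢
    exact ⟨Nat.mul_pos hp.1.1.1 hp.1.2.1, hp.2⟩

lemma avg_conv (M : ℕ) (α β : ArithmeticFunction ℝ) {κ u : ℝ} (hκ : 0 < κ) (hM : exp (u + κ) ≤ M) :
  avg M (⇑(α * β)) κ u = Bl M α β κ u := by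
  rw [Bl, sum_pairs]
  · refine sum_congr rfl fun k hk => ?_; rw [mem_Icc] at hk
    rw [ArithmeticFunction.mul_apply, sum_div, sum_mul]; refine sum_congr rfl fun p hp => ?_
    rw [Nat.mem_divisorsAntidiagonal] at hp; have h0 : p.1 * p.2 ≠ 0 := by rw [hp.1]; exact hp.2
    have h1 : (p.1 : ℝ) ≠ 0 := mod_cast left_ne_zero_of_mul h0
    have h2 : (p.2 : ℝ) ≠ 0 := mod_cast right_ne_zero_of_mul h0; rw [← hp.1]; push_cast
    rw [log_mul h1 h2, sub_sub]; field_simp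
  · intro m n hm hn hmn; have h1 : (0 : ℝ) < m := mod_cast hm; have h2 : (0 : ℝ) < n := mod_cast hn
    have h3 : (M : ℝ) < m * n := mod_cast hmn; rw [kk_zero hκ, mul_zero]
    rw [sub_sub, ← log_mul h1.ne' h2.ne', abs_sub_comm]; refine le_trans ?_ (le_abs_self _)
    have : u + κ ≤ log (m * n) := by rw [le_log_iff_exp_le (by positivity)]; linarith
    linarith

/-- Sums `∑ f(k)/k` are submultiplicative under convolution. -/
lemma harm_conv (M : ℕ) (f g h : ℕ → ℝ) (hf : ∀ n, 0 ≤ f n) (hg : ∀ n, 0 ≤ g n)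
  (hh : ∀ k, h k ≤ ∑ p ∈ k.divisorsAntidiagonal, f p.1 * g p.2) :
  ∑ k ∈ Icc 1 M, h k / k ≤ (∑ k ∈ Icc 1 M, f k / k) * ∑ k ∈ Icc 1 M, g k / k := by
  classical
  have key : ∑ k ∈ Icc 1 M, h k / k ≤ ∑ m ∈ Icc 1 M, ∑ n ∈ Icc 1 M, if m * n ≤ M then f m / m * (g n / n) else 0 := by
    rw [sum_pairs M _ (fun m n _ _ h => if_neg (by omega))]; refine sum_le_sum fun k hk => ?_
    rw [mem_Icc] at hk; refine (div_le_div_of_nonneg_right (hh k) (by positivity)).trans (le_of_eq ?_)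
    rw [sum_div]; refine sum_congr rfl fun p hp => ?_; rw [Nat.mem_divisorsAntidiagonal] at hp
    rw [if_pos (by omega), ← hp.1]; push_cast; rw [div_mul_div_comm]
  refine key.trans ?_; rw [sum_mul_sum]; refine sum_le_sum fun m _ => sum_le_sum fun n _ => ?_
  have := mul_nonneg (div_nonneg (hf m) m.cast_nonneg) (div_nonneg (hg n) n.cast_nonneg); split_ifs
  · exact le_rfl
  · exact this

lemma tau_sums (M : ℕ) (H : ℝ) (hH : ∑ k ∈ Icc 1 M, (1 : ℝ) / k ≤ H) :
  ∑ k ∈ Icc 1 M, (k.divisors.card : ℝ) / k ≤ H ^ 2 ∧ ∑ k ∈ Icc 1 M, (k.divisors.card : ℝ) ^ 2 / k ≤ H ^ 4 := by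
  have h0 : 0 ≤ ∑ k ∈ Icc 1 M, (1 : ℝ) / k := sum_nonneg fun k _ => by positivity
  have h1 : ∑ k ∈ Icc 1 M, (k.divisors.card : ℝ) / k ≤ H ^ 2 := by
    refine (harm_conv M (fun _ => 1) (fun _ => 1) _ (fun _ => zero_le_one) (fun _ => zero_le_one) fun k => ?_).trans ?_
    · have : k.divisorsAntidiagonal.card = k.divisors.card := by rw [← Nat.map_div_right_divisors, card_map]
      simp [this]
    · rw [sq]; exact mul_le_mul hH hH h0 (h0.trans hH)
  refine ⟨h1, ?_⟩
  refine (harm_conv M (fun k => (k.divisors.card : ℝ)) (fun k => (k.divisors.card : ℝ)) _ (fun _ => Nat.cast_nonneg _) (fun _ => Nat.cast_nonneg _) fun k => ?_).trans ?_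
  · have : k.divisorsAntidiagonal.card = k.divisors.card := by rw [← Nat.map_div_right_divisors, card_map]
    have h2 : ∑ _p ∈ k.divisorsAntidiagonal, (k.divisors.card : ℝ) ≤ ∑ p ∈ k.divisorsAntidiagonal, (p.1.divisors.card : ℝ) * p.2.divisors.card := by
      refine sum_le_sum fun p hp => ?_; rw [Nat.mem_divisorsAntidiagonal] at hp; rw [← hp.1, Nat.divisors_mul]
      exact_mod_cast card_mul_le
    rw [sum_const, this, nsmul_eq_mul, ← sq] at h2; exact h2
  · rw [show H ^ 4 = H ^ 2 * H ^ 2 by ring]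
    have : 0 ≤ ∑ k ∈ Icc 1 M, (k.divisors.card : ℝ) / k := sum_nonneg fun k _ => by positivity
    gcongr

/-- The unit ramp. -/
def rr (x : ℝ) : ℝ := max 0 (min 1 x)

lemma rr_of_nonpos {x : ℝ} (h : x ≤ 0) : rr x = 0 := max_eq_left ((min_le_right _ _).trans h)
lemma rr_of_one_le {x : ℝ} (h : 1 ≤ x) : rr x = 1 := by rw [rr, min_eq_left h]; norm_num
lemma rr_nonneg (x : ℝ) : 0 ≤ rr x := le_max_left _ _
lemma rr_le_one (x : ℝ) : rr x ≤ 1 := max_le zero_le_one (min_le_left _ _)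

lemma hat_eq_rr (x : ℝ) : hat x = rr (x + 1) - rr x := by
  unfold hat rr
  rcases le_total 0 x with h | h
  · rw [abs_of_nonneg h, min_eq_left (by linarith : 1 ≤ x + 1)]
    rcases le_total 1 x with h1 | h1
    · rw [min_eq_left h1, max_eq_left (by linarith)]; norm_num
    · rw [min_eq_right h1, max_eq_right (by linarith), max_eq_right h]; norm_num
  · rw [abs_of_nonpos h, min_eq_right (by linarith : x + 1 ≤ 1), min_eq_right (by linarith : x ≤ 1), max_eq_left h]
    ring_nf

/-- A partition of unity on `[w + 1, w + K]`. -/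
def Psi (w : ℝ) (K : ℕ) (z : ℝ) : ℝ := ∑ i ∈ range K, hat (z - (w + 1 + i))

lemma Psi_eq (w : ℝ) (K : ℕ) (z : ℝ) : Psi w K z = rr (z - w) - rr (z - w - K) := by
  induction K with
  | zero => simp [Psi]
  | succ K ih => rw [Psi, sum_range_succ, ← Psi, ih, hat_eq_rr]; push_cast; ring_nf

lemma Psi_le {w z : ℝ} {K : ℕ} (h : z ≤ w + K) : Psi w K z = rr (z - w) := by
  rw [Psi_eq, rr_of_nonpos (by linarith : z - w - K ≤ 0), sub_zero]

lemma Psi_nonneg (w : ℝ) (K : ℕ) (z : ℝ) : 0 ≤ Psi w K z := sum_nonneg fun _ _ => hat_nonneg _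
lemma Psi_le_one (w : ℝ) (K : ℕ) (z : ℝ) : Psi w K z ≤ 1 := by
  rw [Psi_eq]; linarith [rr_nonneg (z - w - K), rr_le_one (z - w)]

/-- The Möbius function restricted to `[1, U]`. -/
def m1 (U : ℝ) : ArithmeticFunction ℝ := ⟨fun n => if (n : ℝ) ≤ U then ((moebius n : ℤ) : ℝ) else 0, by simp⟩

/-- The von Mangoldt function smoothly cut off to `log n ≤ w + 1`. -/
def FF (w : ℝ) : ArithmeticFunction ℝ := ⟨fun n => Λ n * (1 - rr (log n - w)), by simp⟩

/-- The divisor sums `∑_{a ∣ n, a > U} μ(a)`. -/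
def m2 (U : ℝ) : ArithmeticFunction ℝ := ((moebius : ArithmeticFunction ℝ) - m1 U) * (zeta : ArithmeticFunction ℝ)

lemma vaughan (U w : ℝ) : Λ = FF w + m1 U * ArithmeticFunction.log - m1 U * FF w * (zeta : ArithmeticFunction ℝ) + m2 U * (Λ - FF w) := by
  have h1 : (moebius : ArithmeticFunction ℝ) * (zeta : ArithmeticFunction ℝ) = 1 := ArithmeticFunction.coe_moebius_mul_coe_zeta
  rw [← ArithmeticFunction.vonMangoldt_mul_zeta, m2]
  linear_combination (FF w - Λ) * h1

lemma m1_abs (U : ℝ) (n : ℕ) : |m1 U n| ≤ 1 := by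
  change |if (n : ℝ) ≤ U then ((moebius n : ℤ) : ℝ) else 0| ≤ 1; split_ifs
  · exact_mod_cast abs_moebius_le_one
  · simp

lemma m1_zero {U : ℝ} {n : ℕ} (h : U < n) : m1 U n = 0 := if_neg (not_le.2 h)

lemma FF_abs (w : ℝ) (n : ℕ) : |FF w n| ≤ Λ n := by
  change |Λ n * (1 - rr (log n - w))| ≤ _; have h1 := rr_nonneg (log n - w); have h2 := rr_le_one (log n - w)
  have h3 := vonMangoldt_nonneg (n := n); rw [abs_of_nonneg (mul_nonneg h3 (by linarith))]
  exact mul_le_of_le_one_right h3 (by linarith)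

lemma FF_zero {w : ℝ} {n : ℕ} (h : w + 1 ≤ log n) : FF w n = 0 := by
  change Λ n * (1 - rr (log n - w)) = 0; rw [rr_of_one_le (by linarith)]; simp

lemma m1FF_abs (U w : ℝ) (n : ℕ) : |(m1 U * FF w) n| ≤ log n := by
  rw [ArithmeticFunction.mul_apply, ← ArithmeticFunction.vonMangoldt_sum, ← Nat.sum_divisorsAntidiagonal' (fun _ j => Λ j)]
  refine (abs_sum_le_sum_abs _ _).trans (sum_le_sum fun p _ => ?_); rw [abs_mul]
  exact (mul_le_mul (m1_abs _ _) (FF_abs _ _) (abs_nonneg _) zero_le_one).trans_eq (one_mul _)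

lemma af_sub_apply (f g : ArithmeticFunction ℝ) (n : ℕ) : (f - g) n = f n - g n := rfl

lemma m1FF_zero {U w : ℝ} {n : ℕ} (h : log U + w + 1 ≤ log n) : (m1 U * FF w) n = 0 := by
  rw [ArithmeticFunction.mul_apply]; refine sum_eq_zero fun p hp => ?_
  rw [Nat.mem_divisorsAntidiagonal] at hp
  by_cases h1 : U < p.1
  · rw [m1_zero h1, zero_mul]
  rw [FF_zero, mul_zero]; have h0 : p.1 * p.2 ≠ 0 := by rw [hp.1]; exact hp.2
  have h2 : (0 : ℝ) < p.1 := mod_cast Nat.pos_of_ne_zero (left_ne_zero_of_mul h0)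
  have h3 : (0 : ℝ) < p.2 := mod_cast Nat.pos_of_ne_zero (right_ne_zero_of_mul h0)
  have h4 : log p.1 ≤ log U := log_le_log h2 (not_lt.1 h1); rw [← hp.1] at h; push_cast at h
  rw [log_mul h2.ne' h3.ne'] at h; linarith

lemma m2_abs (U : ℝ) (n : ℕ) : |m2 U n| ≤ n.divisors.card := by
  rw [m2, ArithmeticFunction.coe_mul_zeta_apply]
  refine (abs_sum_le_sum_abs _ _).trans ((sum_le_card_nsmul _ _ 1 fun d _ => ?_).trans (by simp))
  change |((moebius d : ℤ) : ℝ) - (if (d : ℝ) ≤ U then ((moebius d : ℤ) : ℝ) else 0)| ≤ 1; split_ifs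
  · simp
  · rw [sub_zero]; exact_mod_cast abs_moebius_le_one

lemma m2_zero {U : ℝ} {n : ℕ} (h : n ≤ U) : m2 U n = 0 := by
  rw [m2, ArithmeticFunction.coe_mul_zeta_apply]; refine sum_eq_zero fun d hd => ?_
  change ((moebius d : ℤ) : ℝ) - (if (d : ℝ) ≤ U then ((moebius d : ℤ) : ℝ) else 0) = 0; rw [if_pos, sub_self]
  have : (d : ℝ) ≤ n := mod_cast Nat.divisor_le hd; linarith

/-- The part of `Bl` with first variable exceeding `U`. -/
def Cb (M : ℕ) (U : ℝ) (α β : ℕ → ℝ) (κ u : ℝ) : ℝ :=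
  ∑ m ∈ (Icc 1 M).filter (fun m : ℕ => U < m), ∑ n ∈ Icc 1 M, α m / m * (β n / n) * kk κ (u - log m - log n)

lemma Cb_comb (M : ℕ) (U : ℝ) (α β : ℕ → ℝ) (κ u : ℝ) : comb ((Icc 1 M).filter (fun m : ℕ => U < m) ×ˢ Icc 1 M)
  (fun p => (fun m : ℕ => α m / m) p.1 * (fun n : ℕ => β n / n) p.2) (fun p => log p.1 + log p.2) κ u = (Cb M U α β κ u : ℂ) := by
  rw [comb, sum_product, Cb]; push_cast; refine sum_congr rfl fun m _ => sum_congr rfl fun n _ => ?_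
  rw [sub_sub]

lemma Cb_congr {M : ℕ} {U κ u : ℝ} {α β α' β' : ℕ → ℝ}
  (h : ∀ m n : ℕ, 1 ≤ m → 1 ≤ n → U < m → |u - log m - log n| < κ → α m * β n = α' m * β' n) (hκ : 0 < κ) :
  Cb M U α β κ u = Cb M U α' β' κ u := by
  refine sum_congr rfl fun m hm => sum_congr rfl fun n hn => ?_; rw [mem_filter, mem_Icc] at hm
  rw [mem_Icc] at hn
  by_cases hk : |u - log m - log n| < κ
  · rw [div_mul_div_comm, div_mul_div_comm, h m n hm.1.1 hn.1 hm.2 hk]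
  · rw [kk_zero hκ (not_lt.1 hk), mul_zero, mul_zero]

lemma Bl_split (M : ℕ) (U : ℝ) (α β : ℕ → ℝ) (κ u : ℝ) : Bl M α β κ u =
  ∑ m ∈ Icc 1 M, (if (m : ℝ) ≤ U then α m else 0) / m * (∑ n ∈ Icc 1 M, β n / n * kk κ (u - log m - log n)) + Cb M U α β κ u := by
  rw [Bl, Cb, sum_filter, ← sum_add_distrib]; refine sum_congr rfl fun m _ => ?_
  by_cases h : (m : ℝ) ≤ U
  · rw [if_pos h, if_neg (not_lt.2 h), add_zero, mul_sum]; simp only [mul_assoc]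
  · rw [if_neg h, if_pos (not_le.1 h)]; simp

lemma det_sum (M : ℕ) (U H C : ℝ) (hU : 0 ≤ U) (hH : 0 ≤ H) (hC : 0 ≤ C) (α q : ℕ → ℝ) (hα : ∀ d : ℕ, 1 ≤ d → (d : ℝ) ≤ U → |α d| ≤ H)
  (hq : ∀ d : ℕ, 1 ≤ d → (d : ℝ) ≤ U → |q d| ≤ C * d) :
  |∑ d ∈ Icc 1 M, (if (d : ℝ) ≤ U then α d else 0) / d * q d| ≤ H * C * U := by
  have h1 : ∑ d ∈ Icc 1 M, (if (d : ℝ) ≤ U then α d else 0) / d * q d = ∑ d ∈ (Icc 1 M).filter (fun d : ℕ => (d : ℝ) ≤ U), α d / d * q d := by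
    rw [sum_filter]; refine sum_congr rfl fun d _ => ?_; split_ifs <;> simp
  rw [h1]
  have h2 : ((Icc 1 M).filter (fun d : ℕ => (d : ℝ) ≤ U)).card ≤ ⌊U⌋₊ := by
    have : (Icc 1 M).filter (fun d : ℕ => (d : ℝ) ≤ U) ⊆ Icc 1 ⌊U⌋₊ := by
      intro d hd; rw [mem_filter, mem_Icc] at hd; rw [mem_Icc]; exact ⟨hd.1.1, Nat.le_floor hd.2⟩
    simpa using card_le_card this
  refine (abs_sum_le_sum_abs _ _).trans ((sum_le_card_nsmul _ _ (H * C) fun d hd => ?_).trans ?_)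
  · rw [mem_filter, mem_Icc] at hd; have hd0 : (0 : ℝ) < d := mod_cast hd.1.1
    rw [abs_mul, abs_div, abs_of_pos hd0]
    calc |α d| / d * |q d| ≤ H / d * (C * d) := by
          gcongr
          · exact hα d hd.1.1 hd.2
          · exact hq d hd.1.1 hd.2
      _ = H * C := by field_simp
  · rw [nsmul_eq_mul, mul_comm]
    have : (((Icc 1 M).filter (fun d : ℕ => (d : ℝ) ≤ U)).card : ℝ) ≤ U := le_trans (mod_cast h2) (Nat.floor_le hU)
    gcongr

/-- Up to a small error, the average of `Λ` at width `κ` is a quantity not depending on `κ`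
plus two bilinear sums. -/
lemma vaughan_avg (U w u : ℝ) (K M : ℕ) (hU : 1 ≤ U) (hw : 0 ≤ w) (hw2 : 2 * w + 3 ≤ u - log U)
  (hK : u + 1 - log U ≤ w + K) (hM : exp (u + 1) ≤ M) :
  ∃ D : ℝ, ∀ κ, 0 < κ → κ ≤ 1 → exp (1 - (u - log U)) ≤ 2 * κ →
  |avg M Λ κ u - (D - Cb M U ⇑(m1 U * FF w) (fun n => Psi w K (log n)) κ u +
    Cb M U (m2 U) (fun n => Λ n * Psi w K (log n)) κ u)| ≤ 1700 * u * U * exp (-u) / κ := by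
  set g : ArithmeticFunction ℝ := m1 U * FF w with hg; have hU0 : 0 < U := by linarith
  have hlU : 0 ≤ log U := log_nonneg hU
  refine ⟨∑ d ∈ Icc 1 M, (if (d : ℝ) ≤ U then m1 U d else 0) / d * (u - log d) - ∑ d ∈ Icc 1 M, (if (d : ℝ) ≤ U then g d else 0) / d * 1, fun κ hκ hκ1 hy => ?_⟩
  have hM' : exp (u + κ) ≤ M := (exp_le_exp.2 (by linarith)).trans hM
  have e0 : avg M Λ κ u = avg M (FF w) κ u + Bl M (m1 U) ArithmeticFunction.log κ u
    - Bl M g (zeta : ArithmeticFunction ℝ) κ u + Bl M (m2 U) (Λ - FF w : ArithmeticFunction ℝ) κ u := by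
    rw [← avg_conv M _ _ hκ hM', ← avg_conv M _ _ hκ hM', ← avg_conv M _ _ hκ hM']
    conv_lhs => rw [vaughan U w]
    simp only [avg]; rw [← sum_add_distrib, ← sum_sub_distrib, ← sum_add_distrib]
    refine sum_congr rfl fun n _ => ?_; simp only [ArithmeticFunction.add_apply, af_sub_apply, hg]; ring
  have e1 : avg M (FF w) κ u = 0 := by
    refine sum_eq_zero fun n _ => ?_
    by_cases h : |u - log n| < κ
    · rw [FF_zero (by linarith [(abs_lt.1 h).2]), zero_div, zero_mul]
    · rw [kk_zero hκ (not_lt.1 h), mul_zero]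
  have e2 : Cb M U (m1 U) ArithmeticFunction.log κ u = 0 := by
    refine sum_eq_zero fun m hm => sum_eq_zero fun n _ => ?_; rw [mem_filter] at hm; rw [m1_zero hm.2]; simp
  have e3 : Cb M U g (zeta : ArithmeticFunction ℝ) κ u = Cb M U g (fun n => Psi w K (log n)) κ u := by
    refine Cb_congr (fun m n hm hn hmU hk => ?_) hκ; have hn0 : n ≠ 0 := by omega
    by_cases hl : log U + w + 1 ≤ log m
    · rw [hg, m1FF_zero hl]; simp
    · have hlm : log U ≤ log m := log_le_log hU0 hmU.le; have h1 := abs_lt.1 hk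
      rw [Psi_le (by linarith), rr_of_one_le (by linarith)]; simp [natCoe_apply, hn0]
  have e4 : Bl M (m2 U) (Λ - FF w : ArithmeticFunction ℝ) κ u = Cb M U (m2 U) (fun n => Λ n * Psi w K (log n)) κ u := by
    rw [Bl_split M U, sum_eq_zero, zero_add]
    · refine Cb_congr (fun m n hm hn hmU hk => ?_) hκ; have hlm : log U ≤ log m := log_le_log hU0 hmU.le
      have h1 := abs_lt.1 hk; rw [Psi_le (by linarith), af_sub_apply]
      change _ * (_ - Λ n * (1 - rr (log n - w))) = _; ring
    · intro m _; split_ifs with h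
      · rw [m2_zero h]; simp
      · simp
  have hy1 : ∀ d : ℕ, 1 ≤ d → (d : ℝ) ≤ U → u - log U ≤ u - log d ∧ u - log d ≤ u ∧ exp (-(u - log d)) = d * exp (-u) := by
    intro d hd hdU; have hd0 : (0 : ℝ) < d := mod_cast hd; have h1 := log_le_log hd0 hdU
    have h2 : 0 ≤ log d := log_natCast_nonneg d; refine ⟨by linarith, by linarith, ?_⟩
    rw [show -(u - log d) = log d + -u by ring, exp_add, exp_log hd0]
  have hone : ∀ d : ℕ, 1 ≤ d → (d : ℝ) ≤ U → |∑ n ∈ Icc 1 M, kk κ (u - log d - log n) / n - 1| ≤ 480 * exp (-u) / κ * d := by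
    intro d hd hdU; obtain ⟨h1, h2, h3⟩ := hy1 d hd hdU
    have := kk_sum_one (y := u - log d) hκ hκ1 (by linarith) ((exp_le_exp.2 (by linarith)).trans hy) M
      ((exp_le_exp.2 (by linarith)).trans hM)
    rw [h3] at this; refine this.trans_eq (by ring)
  have hlog : ∀ d : ℕ, 1 ≤ d → (d : ℝ) ≤ U → |∑ n ∈ Icc 1 M, ArithmeticFunction.log n / n * kk κ (u - log d - log n) - (u - log d)| ≤ 1200 * u * exp (-u) / κ * d := by
    intro d hd hdU; obtain ⟨h1, h2, h3⟩ := hy1 d hd hdU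
    have ho := kk_sum_odd (y := u - log d) hκ hκ1 (by linarith) ((exp_le_exp.2 (by linarith)).trans hy) M
      ((exp_le_exp.2 (by linarith)).trans hM)
    rw [h3] at ho; have hd1 := hone d hd hdU; set y := u - log d
    have e : ∑ n ∈ Icc 1 M, ArithmeticFunction.log n / n * kk κ (y - log n) - y =
      y * (∑ n ∈ Icc 1 M, kk κ (y - log n) / n - 1) - ∑ n ∈ Icc 1 M, (y - log n) * kk κ (y - log n) / n := by
      rw [mul_sub, mul_sum, sub_right_comm, ← sum_sub_distrib, mul_one]; congr 1
      refine sum_congr rfl fun n _ => ?_; rw [ArithmeticFunction.log_apply]; ring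
    rw [e]; refine (abs_sub _ _).trans ?_; rw [abs_mul, abs_of_nonneg (by linarith : 0 ≤ y)]
    calc y * _ + _ ≤ u * (480 * exp (-u) / κ * d) + 720 * (d * exp (-u)) / κ := by
          gcongr; linarith
      _ ≤ u * (480 * exp (-u) / κ * d) + u * (720 * (d * exp (-u)) / κ) := by
        gcongr; exact le_mul_of_one_le_left (by positivity) (by linarith)
      _ = _ := by ring
  have hu0 : 0 < u := by linarith
  have b1 := det_sum M U 1 (1200 * u * exp (-u) / κ) hU0.le zero_le_one (by positivity) (m1 U) _ (fun d _ _ => m1_abs U d) hlog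
  have b2 := det_sum M U u (480 * exp (-u) / κ) hU0.le hu0.le (by positivity) g _ (fun d hd hdU => by
    refine (m1FF_abs U w d).trans ?_; obtain ⟨h1, h2, h3⟩ := hy1 d hd hdU; linarith) hone
  rw [e0, e1, e4, Bl_split M U (m1 U), e2, Bl_split M U g, e3]
  have hz : ∀ d : ℕ, ∑ n ∈ Icc 1 M, (zeta : ArithmeticFunction ℝ) n / n * kk κ (u - log d - log n)
    = ∑ n ∈ Icc 1 M, kk κ (u - log d - log n) / n := by
    intro d; refine sum_congr rfl fun n hn => ?_; rw [mem_Icc] at hn; have : n ≠ 0 := by omega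
    simp [natCoe_apply, this]; ring
  simp only [hz]; simp only [mul_sub, sum_sub_distrib] at b1 b2 ⊢
  have b3 : 1 * (1200 * u * exp (-u) / κ) * U + u * (480 * exp (-u) / κ) * U ≤ 1700 * u * U * exp (-u) / κ := by
    have : 0 ≤ u * U * exp (-u) / κ := by positivity
    linarith [(by ring : 1 * (1200 * u * exp (-u) / κ) * U + u * (480 * exp (-u) / κ) * U = 1680 * (u * U * exp (-u) / κ)),
      (by ring : 1700 * u * U * exp (-u) / κ = 1700 * (u * U * exp (-u) / κ))]
  refine le_trans ?_ ((add_le_add b1 b2).trans b3); refine le_trans (le_of_eq ?_) (abs_sub _ _); congr 1; ring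

lemma ev_small (C a b : ℝ) (k : ℕ) (ha : 0 < a) (hab : a < b) :
  ∀ᶠ L : ℝ in atTop, C * L ^ k * exp (-L ^ b) ≤ exp (-L ^ a) := by
  have hb : 0 < b := ha.trans hab; obtain ⟨n, hn⟩ := exists_nat_ge (k / b)
  have hx : Tendsto (fun L : ℝ => L ^ b / 2) atTop atTop := (tendsto_rpow_atTop hb).atTop_div_const two_pos
  have h0 := ((tendsto_pow_mul_exp_neg_atTop_nhds_zero n).comp hx).eventually_le_const
    (show (0 : ℝ) < 1 / (|C| * 2 ^ n + 1) by positivity)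
  filter_upwards [h0, eventually_ge_atTop 1, ev_rpow 2 a b hab] with L h hL h2
  have hk : L ^ k ≤ (L ^ b) ^ n := by
    rw [← rpow_natCast L k, ← rpow_mul_natCast (by linarith)]
    exact rpow_le_rpow_of_exponent_le hL (by rw [div_le_iff₀ hb] at hn; linarith)
  simp only [Function.comp_apply] at h; set x := L ^ b / 2 with hxd
  have hLb : L ^ b = 2 * x := by rw [hxd]; ring
  rw [hLb] at hk h2 ⊢; rw [le_div_iff₀ (by positivity)] at h
  calc C * L ^ k * exp (-(2 * x)) ≤ |C| * (2 * x) ^ n * (exp (-x) * exp (-x)) := by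
        rw [← exp_add, show -x + -x = -(2 * x) by ring]; gcongr; exact le_abs_self C
    _ = x ^ n * exp (-x) * (|C| * 2 ^ n) * exp (-x) := by rw [mul_pow]; ring
    _ ≤ 1 * exp (-x) := by
      gcongr; have : 0 ≤ x ^ n * exp (-x) := by positivity
      linarith
    _ ≤ _ := by rw [one_mul]; exact exp_le_exp.2 (by linarith)

/-! ### Primes in almost all short intervals -/

/-- The narrow width, a tenth of `e^{-v/2}` for `v = L / 2`. -/
def del (L : ℝ) : ℝ := exp (-(L / 4)) / 10
/-- The wide width. -/
def Del (L : ℝ) : ℝ := exp (-L ^ (7 / 1000 : ℝ))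
/-- The length of all sums. -/
def MM (L : ℝ) : ℕ := ⌈exp L⌉₊
/-- The cut in Vaughan's identity. -/
def UU (L : ℝ) : ℝ := exp (L / 4 - L ^ (3 / 1000 : ℝ))

lemma del_pos (L : ℝ) : 0 < del L := by unfold del; positivity

lemma MM_log {L : ℝ} (hL : 3 ≤ L) {n : ℕ} (hn : n ∈ Icc 1 (MM L)) : log n ≤ L + 1 := by
  rw [mem_Icc] at hn; have h0 : (0 : ℝ) < n := mod_cast hn.1; rw [log_le_iff_le_exp h0]
  have h1 : (n : ℝ) ≤ MM L := mod_cast hn.2; have h2 := (Nat.ceil_lt_add_one (exp_pos L).le).le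
  have h3 := add_one_le_exp L; have h4 := add_one_le_exp (1 : ℝ); rw [exp_add]
  change (n : ℝ) ≤ (⌈exp L⌉₊ : ℝ) at h1; nlinarith

lemma MM_harm {L : ℝ} (hL : 3 ≤ L) : ∑ k ∈ Icc 1 (MM L), (1 : ℝ) / k ≤ 2 * L := by
  have h := harmonic_le_one_add_log (MM L); rw [harmonic_eq_sum_Icc] at h; push_cast at h
  have hm : 1 ≤ MM L := Nat.ceil_pos.2 (exp_pos _); have := MM_log hL (mem_Icc.2 ⟨hm, le_rfl⟩)
  simp only [one_div]; linarith

lemma comb_sq_int {ι : Type*} (s : Finset ι) (c x : ι → ℝ) {δ Δ : ℝ} (hδ : 0 < δ) (hΔ : 0 < Δ) :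
  Integrable (fun u => ‖comb s c x δ u - comb s c x Δ u‖ ^ 2) := by
  have hb : ∀ κ, 0 < κ → ∀ u, ‖comb s c x κ u‖ ≤ ∑ i ∈ s, |c i| * (1 / κ) := by
    intro κ hκ u; refine (norm_sum_le _ _).trans (sum_le_sum fun i _ => ?_)
    rw [norm_mul, norm_real, norm_real, norm_eq_abs, norm_eq_abs, abs_of_nonneg (kk_nonneg hκ _)]; gcongr
    exact kk_le hκ _
  refine Integrable.mono' (((comb_integrable s c x hδ).sub (comb_integrable s c x hΔ)).norm.const_mul
    (∑ i ∈ s, |c i| * (1 / δ) + ∑ i ∈ s, |c i| * (1 / Δ))) ?_ (Eventually.of_forall fun u => ?_)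
  · have := comb_cont s c x δ; have := comb_cont s c x Δ; exact Continuous.aestronglyMeasurable (by fun_prop)
  · rw [norm_pow, norm_norm, sq]
    exact mul_le_mul_of_nonneg_right ((norm_sub_le _ _).trans (add_le_add (hb δ hδ u) (hb Δ hΔ u))) (norm_nonneg _)

lemma Cb_cont (M : ℕ) (U : ℝ) (α β : ℕ → ℝ) (κ : ℝ) : Continuous (Cb M U α β κ) := by
  have := kk_cont κ; unfold Cb; fun_prop

/-- Under a pointwise bound for the exponential sum of `β`, the bilinear sums at the two widths are
close in mean. -/
lemma cb_l1 : ∀ᶠ L : ℝ in atTop, ∀ (α β : ℕ → ℝ) (a : ℝ), (∀ m ∈ Icc 1 (MM L), |α m| ≤ 2 * L * m.divisors.card) →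
  (∀ n ∈ Icc 1 (MM L), |β n| ≤ 2 * L) →
  (∀ y, exp (L ^ (5 / 1000 : ℝ)) ≤ |y| → |y| ≤ exp L / 32 →
    ‖Dp (Icc 1 (MM L)) (fun n => β n / n) (fun n => log n) y‖ ≤ 6 * L * exp (-(2 * L ^ (5 / 1000 : ℝ)))) →
  ∫ u in a..a + 2, |Cb (MM L) (UU L) α β (del L) u - Cb (MM L) (UU L) α β (Del L) u| ≤ exp (-L ^ (2 / 1000 : ℝ)) := by
  filter_upwards [eventually_ge_atTop 10, ev_small 6000000000000 (4 / 1000) (5 / 1000) 10 (by norm_num) (by norm_num),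
    ev_small 2 (2 / 1000) (3 / 1000) 0 (by norm_num) (by norm_num), ev_rpow 2 (3 / 1000) (4 / 1000) (by norm_num),
    ev_rpow 4 (5 / 1000) (7 / 1000) (by norm_num), ev_rpow 8 (7 / 1000) 1 (by norm_num),
    ev_rpow 1 (3 / 1000) (5 / 1000) (by norm_num)] with L hL h1 h2 h3 h4 h5 h6
  intro α β a hα hβ hD; rw [rpow_one] at h5; simp only [Del, UU]; set x3 := L ^ (3 / 1000 : ℝ)
  set x4 := L ^ (4 / 1000 : ℝ); set x5 := L ^ (5 / 1000 : ℝ); set x7 := L ^ (7 / 1000 : ℝ)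
  have hx3 : 0 ≤ x3 := rpow_nonneg (by linarith) _; have hx5 : 0 ≤ x5 := rpow_nonneg (by linarith) _
  set M := MM L; set A := (Icc 1 M).filter (fun m : ℕ => exp (L / 4 - x3) < m) with hA
  have hAs : A ⊆ Icc 1 M := filter_subset _ _; obtain ⟨t1, t2⟩ := tau_sums M _ (MM_harm (by linarith : 3 ≤ L))
  have e32 : (32 : ℝ) ≤ exp 4 := by
    have : exp 4 = exp 1 ^ 4 := by rw [← exp_nat_mul]; norm_num
    rw [this]; have : (2.7 : ℝ) ≤ exp 1 := by linarith [exp_one_gt_d9]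
    calc (32 : ℝ) ≤ 2.7 ^ 4 := by norm_num
      _ ≤ _ := by gcongr
  have hδΔ : del L ≤ exp (-x7) := by
    unfold del; exact (div_le_self (exp_pos _).le (by norm_num)).trans (exp_le_exp.2 (by linarith))
  have hbil := bilinear A (Icc 1 M) (fun m => α m / m) (fun n => β n / n) (del L) (exp (-x7)) (exp x5) (exp L / 32)
    _ (exp (L / 4 - x3)) (del_pos L) hδΔ (by rw [exp_le_one_iff]; linarith) (one_le_exp hx5) (by
      rw [le_div_iff₀ (by norm_num)]
      calc _ ≤ exp x5 * exp 4 := by gcongr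
        _ = exp (x5 + 4) := (exp_add _ _).symm
        _ ≤ _ := exp_le_exp.2 (by linarith)) (exp_pos _)
    (fun m hm => (mem_filter.1 hm).2.le) hD
  have hInt := comb_sq_int (A ×ˢ Icc 1 M) (fun p => (fun m : ℕ => α m / m) p.1 * (fun n : ℕ => β n / n) p.2)
    (fun p => log p.1 + log p.2) (del_pos L) (exp_pos (-x7))
  simp only [hA, Cb_comb, ← ofReal_sub, norm_real, norm_eq_abs, sq_abs] at hbil hInt
  set f : ℝ → ℝ := fun u => Cb M (exp (L / 4 - x3)) α β (del L) u - Cb M (exp (L / 4 - x3)) α β (exp (-x7)) u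
  rw [← hA] at hbil
  have s2 : ∑ m ∈ A, m * (α m / m) ^ 2 ≤ 64 * L ^ 6 := by
    calc ∑ m ∈ A, (m : ℝ) * (α m / m) ^ 2 ≤ ∑ m ∈ A, (2 * L) ^ 2 * ((m.divisors.card : ℝ) ^ 2 / m) := by
          refine sum_le_sum fun m hm => ?_; have hm1 : (0 : ℝ) < m := mod_cast (mem_Icc.1 (hAs hm)).1
          have := sq_le_sq.2 ((hα m (hAs hm)).trans (le_abs_self _))
          rw [show (m : ℝ) * (α m / m) ^ 2 = α m ^ 2 / m by field_simp, ← mul_div_assoc, ← mul_pow]; gcongr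
      _ ≤ ∑ m ∈ Icc 1 M, (2 * L) ^ 2 * ((m.divisors.card : ℝ) ^ 2 / m) :=
        sum_le_sum_of_subset_of_nonneg hAs fun _ _ _ => by positivity
      _ ≤ (2 * L) ^ 2 * (2 * L) ^ 4 := by rw [← mul_sum]; gcongr
      _ = _ := by ring
  have a0 : ∑ m ∈ A, |α m / m| ≤ 8 * L ^ 3 := by
    calc ∑ m ∈ A, |α m / m| ≤ ∑ m ∈ A, (2 * L) * ((m.divisors.card : ℝ) / m) := by
          refine sum_le_sum fun m hm => ?_; rw [abs_div, Nat.abs_cast, ← mul_div_assoc]; gcongr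
          exact hα m (hAs hm)
      _ ≤ ∑ m ∈ Icc 1 M, (2 * L) * ((m.divisors.card : ℝ) / m) :=
        sum_le_sum_of_subset_of_nonneg hAs fun _ _ _ => by positivity
      _ ≤ (2 * L) * (2 * L) ^ 2 := by rw [← mul_sum]; gcongr
      _ = _ := by ring
  have b0 : ∑ n ∈ Icc 1 M, |β n / n| ≤ 4 * L ^ 2 := by
    calc ∑ n ∈ Icc 1 M, |β n / n| ≤ ∑ n ∈ Icc 1 M, (2 * L) * (1 / (n : ℝ)) := by
          refine sum_le_sum fun n hn => ?_; rw [abs_div, Nat.abs_cast, mul_one_div]; gcongr; exact hβ n hn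
      _ ≤ (2 * L) * (2 * L) := by rw [← mul_sum]; gcongr; exact MM_harm (by linarith)
      _ = _ := by ring
  have hX : ∫ u, f u ^ 2 ≤ exp (-x4) := by
    refine hbil.trans (le_trans ?_ h1)
    have r1 : 4 * (6 * L * exp (-(2 * x5))) ^ 2 * (15 + 1 / (del L * exp (L / 4 - x3))) ≤ 3600 * L ^ 2 * exp (-x5) := by
      have : 1 / (del L * exp (L / 4 - x3)) = 10 * exp x3 := by
        rw [del, div_mul_eq_mul_div, ← exp_add, show -(L / 4) + (L / 4 - x3) = -x3 by ring, exp_neg]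
        field_simp
      rw [this]; have hx31 := one_le_exp hx3
      calc _ ≤ 4 * (6 * L * exp (-(2 * x5))) ^ 2 * (25 * exp x3) := by gcongr; linarith
        _ = 3600 * L ^ 2 * exp (-(2 * x5) + -(2 * x5) + x3) := by rw [exp_add, exp_add]; ring
        _ ≤ _ := by gcongr; linarith
    have r2 : 8 * exp (-x7) ^ 2 * exp x5 ^ 4 + 512 / ((exp L / 32) ^ 2 * del L ^ 4) ≤ 5242880008 * exp (-x5) := by
      have e1 : exp (-x7) ^ 2 * exp x5 ^ 4 ≤ exp (-x5) := by
        rw [← exp_nat_mul, ← exp_nat_mul, ← exp_add]; refine exp_le_exp.2 ?_; push_cast; linarith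
      have e2 : 512 / ((exp L / 32) ^ 2 * del L ^ 4) = 5242880000 * exp (-L) := by
        rw [del, div_pow, div_pow, ← exp_nat_mul, ← exp_nat_mul, div_mul_div_comm, ← exp_add,
          show ((2 : ℕ) : ℝ) * L + ((4 : ℕ) : ℝ) * -(L / 4) = L by push_cast; ring, exp_neg]
        field_simp; norm_num
      have e3 : exp (-L) ≤ exp (-x5) := exp_le_exp.2 (by linarith); linarith
    calc _ ≤ 3600 * L ^ 2 * exp (-x5) * (64 * L ^ 6) + (8 * L ^ 3 * (4 * L ^ 2)) ^ 2 * (5242880008 * exp (-x5)) := by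
          have : 0 ≤ ∑ m ∈ A, |α m / m| := sum_nonneg fun _ _ => abs_nonneg _
          have : 0 ≤ ∑ n ∈ Icc 1 M, |β n / n| := sum_nonneg fun _ _ => abs_nonneg _
          have : 0 ≤ ∑ m ∈ A, (m : ℝ) * (α m / m) ^ 2 := sum_nonneg fun _ _ => by positivity
          gcongr
      _ = (230400 * L ^ 8 + 5368709128192 * L ^ 10) * exp (-x5) := by ring
      _ ≤ _ := by
        gcongr; have : L ^ 8 ≤ L ^ 10 := pow_le_pow_right₀ (by linarith) (by norm_num)
        linarith [pow_nonneg (by linarith : 0 ≤ L) 10]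
  have hfc : Continuous f := (Cb_cont _ _ _ _ _).sub (Cb_cont _ _ _ _ _); set η := exp (-x3) with hη
  calc ∫ u in a..a + 2, |f u| ≤ ∫ u in a..a + 2, (η / 2 + f u ^ 2 / (2 * η)) := by
        refine integral_mono_on (by linarith) (cii (by fun_prop))
          (cii (by fun_prop)) fun u _ => ?_
        rw [div_add_div _ _ two_ne_zero (by positivity), le_div_iff₀ (by positivity)]
        nlinarith [sq_nonneg (|f u| - η), sq_abs (f u)]
    _ = η + (∫ u in a..a + 2, f u ^ 2) / (2 * η) := by
      rw [intervalIntegral.integral_add (cii (by fun_prop)) (cii (by fun_prop)),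
        intervalIntegral.integral_const, intervalIntegral.integral_div, smul_eq_mul]
      ring
    _ ≤ η + exp (-x4) / (2 * η) := by
      gcongr; rw [integral_of_le (by linarith)]
      exact (setIntegral_le_integral hInt (Eventually.of_forall fun u => sq_nonneg _)).trans hX
    _ ≤ η + η := by
      gcongr; rw [div_le_iff₀ (by positivity)]
      have : exp (-x4) ≤ η * η := by rw [hη, ← exp_add]; exact exp_le_exp.2 (by linarith)
      nlinarith
    _ ≤ _ := by rw [pow_zero, mul_one] at h2; linarith

lemma Dp_psi (M K : ℕ) (w y B : ℝ) (l : ℕ → ℝ)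
  (h : ∀ i < K, ‖∑ n ∈ Icc 1 M, ((l n * hat (log n - (w + 1 + i)) / n : ℝ) : ℂ) * ee (-y * log n)‖ ≤ B) :
  ‖Dp (Icc 1 M) (fun n => l n * Psi w K (log n) / n) (fun n => log n) y‖ ≤ K * B := by
  have e : Dp (Icc 1 M) (fun n => l n * Psi w K (log n) / n) (fun n => log n) y =
    ∑ i ∈ range K, ∑ n ∈ Icc 1 M, ((l n * hat (log n - (w + 1 + i)) / n : ℝ) : ℂ) * ee (-y * log n) := by
    rw [sum_comm, Dp]; refine sum_congr rfl fun n _ => ?_; rw [← sum_mul, Psi, mul_sum, sum_div]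
    push_cast; rfl
  rw [e]
  refine (norm_sum_le _ _).trans ((sum_le_card_nsmul _ _ B fun i hi => h i (mem_range.1 hi)).trans_eq (by simp))

/-- At the wide width the prime number theorem with its classical error term suffices. -/
lemma avg_wide : ∀ᶠ L : ℝ in atTop, ∀ u, L / 2 ≤ u → u ≤ L - 1 →
  |avg (MM L) Λ (Del L) u - 1| ≤ 481 * exp (-L ^ (3 / 1000 : ℝ)) := by
  filter_upwards [lam1_block, eventually_ge_atTop 10, ev_rpow 2 (7 / 1000) (9 / 1000) (by norm_num),
    ev_rpow 8 (7 / 1000) 1 (by norm_num), ev_rpow 1 (3 / 1000) (7 / 1000) (by norm_num)] with L hl hL h1 h2 h3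
  intro u hu1 hu2; rw [rpow_one] at h2; have hD0 : 0 < Del L := exp_pos _
  have hx0 : 0 ≤ L ^ (7 / 1000 : ℝ) := rpow_nonneg (by linarith) _
  have hD1 : Del L ≤ 1 := by rw [Del, exp_le_one_iff]; linarith
  have hDi : 1 / Del L = exp (L ^ (7 / 1000 : ℝ)) := by rw [Del, exp_neg]; simp
  have hM : exp (u + 1) ≤ MM L := (exp_le_exp.2 (by linarith)).trans (Nat.le_ceil _)
  have b := hl u 0 (Del L) (by linarith) (by linarith) (by simp; positivity) (exp_le_exp.2 (by linarith)) hD1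
  rw [lam1_sum u 0 _ _ hD0 hD1 hM] at b
  have b2 := kk_sum_one hD0 hD1 (by linarith) (le_trans (exp_le_exp.2 (by linarith))
    (le_mul_of_one_le_left hD0.le one_le_two)) _ hM
  have e : (∑ n ∈ Icc 1 (MM L), (((Λ n - 1) * hat ((log n - u) / Del L) / n : ℝ) : ℂ) * ee (-0 * log n)) =
    ((Del L * (avg (MM L) Λ (Del L) u - ∑ n ∈ Icc 1 (MM L), kk (Del L) (u - log n) / n) : ℝ) : ℂ) := by
    rw [avg, ← sum_sub_distrib, mul_sum]; push_cast; refine sum_congr rfl fun n _ => ?_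
    rw [kk, ← hat_neg ((u - log n) / Del L), ← neg_div, neg_sub, neg_zero, zero_mul, ee_zero]
    have : ((Del L : ℝ) : ℂ) ≠ 0 := mod_cast hD0.ne'; push_cast; field_simp
  rw [e, norm_real, norm_eq_abs, abs_mul, abs_of_pos hD0, mul_comm, ← le_div_iff₀ hD0, div_eq_mul_one_div, hDi,
    ← exp_add] at b
  rw [mul_div_assoc, div_eq_mul_one_div, hDi, ← exp_add] at b2
  have b3 := exp_le_exp.2 (by linarith : -L ^ (9 / 1000 : ℝ) + L ^ (7 / 1000 : ℝ) ≤ -L ^ (3 / 1000 : ℝ))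
  have b4 := exp_le_exp.2 (by linarith : -u + L ^ (7 / 1000 : ℝ) ≤ -L ^ (3 / 1000 : ℝ))
  refine (abs_sub_le _ (∑ n ∈ Icc 1 (MM L), kk (Del L) (u - log n) / n) _).trans ?_; linarith

/-- The von Mangoldt function has density `1` in almost all intervals of relative length `del L`. -/
lemma lam_l1 : ∀ᶠ L : ℝ in atTop,
  ∫ u in L / 2..L / 2 + 2, |avg (MM L) Λ (del L) u - 1| ≤ 4 * exp (-L ^ (2 / 1000 : ℝ)) := by
  filter_upwards [avg_wide, cb_l1, block_one, block_lam, eventually_ge_atTop 20, ev_rpow 20 (3 / 1000) 1 (by norm_num),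
    ev_rpow 3 0 (3 / 1000) (by norm_num), ev_rpow 2 (5 / 1000) (9 / 1000) (by norm_num), ev_rpow 8 (7 / 1000) 1 (by norm_num),
    ev_small 36000 (2 / 1000) (3 / 1000) 1 (by norm_num) (by norm_num)]
    with L haw hcb hb1 hb2 hL h1 h2 h3 h4 h5
  rw [rpow_one] at h1 h4; rw [rpow_zero] at h2; rw [pow_one] at h5
  have hx7 : 0 ≤ L ^ (7 / 1000 : ℝ) := rpow_nonneg (by linarith) _; set w := L / 20 with hw; set K := ⌈L / 2⌉₊
  have hK1 : L / 2 ≤ K := Nat.le_ceil _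
  have hK2 : (K : ℝ) ≤ L / 2 + 1 := (Nat.ceil_lt_add_one (by linarith)).le; have hU0 : 0 < UU L := exp_pos _
  have hlU : log (UU L) = L / 4 - L ^ (3 / 1000 : ℝ) := log_exp _
  have hMi : ∀ i < K, exp (w + 1 + i + 1) ≤ MM L := by
    intro i hi; have : (i : ℝ) ≤ K := mod_cast hi.le; exact (exp_le_exp.2 (by linarith)).trans (Nat.le_ceil _)
  have hε : (K : ℝ) * (4 / exp (L ^ (5 / 1000 : ℝ)) ^ 2 + 2 * exp (-L ^ (9 / 1000 : ℝ))) ≤ 6 * L * exp (-(2 * L ^ (5 / 1000 : ℝ))) := by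
    have e1 : 4 / exp (L ^ (5 / 1000 : ℝ)) ^ 2 = 4 * exp (-(2 * L ^ (5 / 1000 : ℝ))) := by
      rw [← exp_nat_mul, exp_neg]; push_cast; rfl
    have e2 := exp_le_exp.2 (by linarith : -L ^ (9 / 1000 : ℝ) ≤ -(2 * L ^ (5 / 1000 : ℝ))); rw [e1]
    calc _ ≤ L * (4 * exp (-(2 * L ^ (5 / 1000 : ℝ))) + 2 * exp (-(2 * L ^ (5 / 1000 : ℝ)))) := by gcongr; linarith
      _ = _ := by ring
  have hy : ∀ y : ℝ, exp (L ^ (5 / 1000 : ℝ)) ≤ |y| → y ≠ 0 ∧ 4 / y ^ 2 ≤ 4 / exp (L ^ (5 / 1000 : ℝ)) ^ 2 := by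
    intro y hy; have h0 := exp_pos (L ^ (5 / 1000 : ℝ)); refine ⟨fun h => ?_, ?_⟩
    · rw [h, abs_zero] at hy; linarith
    · rw [← sq_abs y]; gcongr
  have hPs := fun n : ℕ => Psi_nonneg w K (log n); have hPs1 := fun n : ℕ => Psi_le_one w K (log n)
  have P := hcb ⇑(m1 (UU L) * FF w) (fun n => Psi w K (log n)) (L / 2) (fun m hm => by
    refine (m1FF_abs _ _ _).trans ((MM_log (by linarith) hm).trans ?_)
    have : (1 : ℝ) ≤ m.divisors.card := by
      exact_mod_cast card_pos.2 ⟨1, Nat.one_mem_divisors.2 (by rw [mem_Icc] at hm; omega)⟩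
    nlinarith) (fun n _ => by rw [abs_of_nonneg (hPs n)]; linarith [hPs1 n]) (fun y hy1 hy2 => by
    obtain ⟨hy0, hy3⟩ := hy y hy1
    have := Dp_psi (MM L) K w y (4 / exp (L ^ (5 / 1000 : ℝ)) ^ 2 + 2 * exp (-L ^ (9 / 1000 : ℝ))) (fun _ => 1) (fun i hi => by
      simp only [one_mul]
      have := hb1 (w + 1 + i) y (MM L) (by linarith [(Nat.cast_nonneg i : (0 : ℝ) ≤ i)]) (hy2.trans (by linarith [exp_pos L])) hy0 (hMi i hi)
      linarith [exp_pos (-L ^ (9 / 1000 : ℝ))])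
    simp only [one_mul] at this; exact this.trans hε)
  have Q := hcb (m2 (UU L)) (fun n => Λ n * Psi w K (log n)) (L / 2) (fun m hm =>
    (m2_abs _ _).trans (le_mul_of_one_le_left (Nat.cast_nonneg _) (by linarith))) (fun n hn => by
    have h0 := vonMangoldt_nonneg (n := n); rw [abs_of_nonneg (mul_nonneg h0 (hPs n))]
    refine (mul_le_of_le_one_right h0 (hPs1 n)).trans (ArithmeticFunction.vonMangoldt_le_log.trans ((MM_log (by linarith) hn).trans (by linarith))))
    (fun y hy1 hy2 => by
    obtain ⟨hy0, hy3⟩ := hy y hy1; refine (Dp_psi (MM L) K w y _ _ (fun i hi => ?_)).trans hε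
    have hiK : (i : ℝ) ≤ K := mod_cast hi.le
    have := hb2 (w + 1 + i) y (MM L) (by linarith [(Nat.cast_nonneg i : (0 : ℝ) ≤ i)]) (by linarith) hy2 hy0 (hMi i hi)
    linarith)
  have hE : ∀ κ u, del L ≤ κ → L / 2 ≤ u → u ≤ L / 2 + 2 → 1700 * u * UU L * exp (-u) / κ ≤ 17000 * L * exp (-L ^ (3 / 1000 : ℝ)) := by
    intro κ u hκ hu1 hu2
    calc 1700 * u * UU L * exp (-u) / κ ≤ 1700 * L * UU L * exp (-(L / 2)) / del L := by
          have := del_pos L; gcongr; linarith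
      _ = 17000 * L * exp (L / 4 - L ^ (3 / 1000 : ℝ) + -(L / 2) - -(L / 4)) := by
        rw [exp_sub _ (-(L / 4)), exp_add, UU, del]; field_simp; norm_num
      _ = _ := by congr 2; ring
  have hδΔ : del L ≤ Del L := by
    unfold del Del; exact (div_le_self (exp_pos _).le (by norm_num)).trans (exp_le_exp.2 (by linarith))
  have hD1 : Del L ≤ 1 := by rw [Del, exp_le_one_iff]; linarith
  have hδ5 : ∀ κ u, del L ≤ κ → L / 2 ≤ u → exp (1 - (u - log (UU L))) ≤ 2 * κ := by
    intro κ u hκ hu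
    have : exp (1 - (u - log (UU L))) ≤ 2 * del L := by
      calc _ ≤ exp (-2 + -(L / 4)) := by rw [hlU]; exact exp_le_exp.2 (by linarith)
        _ ≤ 2 * del L := by
          rw [exp_add, del]
          have h2 : exp (-2) ≤ 1 / 5 := by
            rw [exp_neg, ← one_div]; refine one_div_le_one_div_of_le (by norm_num) ?_
            have : exp 2 = exp 1 ^ 2 := by rw [← exp_nat_mul]; norm_num
            nlinarith [exp_one_gt_d9]
          nlinarith [exp_pos (-(L / 4))]
    linarith
  set G1 := Cb (MM L) (UU L) ⇑(m1 (UU L) * FF w) (fun n => Psi w K (log n))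
  set G2 := Cb (MM L) (UU L) (m2 (UU L)) (fun n => Λ n * Psi w K (log n))
  set f1 : ℝ → ℝ := fun u => |G1 (del L) u - G1 (Del L) u|
  set f2 : ℝ → ℝ := fun u => |G2 (del L) u - G2 (Del L) u|
  have hf1c : Continuous f1 := ((Cb_cont _ _ _ _ _).sub (Cb_cont _ _ _ _ _)).abs
  have hf2c : Continuous f2 := ((Cb_cont _ _ _ _ _).sub (Cb_cont _ _ _ _ _)).abs
  have hac : Continuous (avg (MM L) Λ (del L)) := by have := kk_cont (del L); unfold avg; fun_prop
  have hpt : ∀ u ∈ Set.Icc (L / 2) (L / 2 + 2), |avg (MM L) Λ (del L) u - 1| ≤ exp (-L ^ (2 / 1000 : ℝ)) + (f1 u + f2 u) := by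
    rintro u ⟨hu1, hu2⟩
    obtain ⟨D, hD⟩ : ∃ D : ℝ, ∀ κ, 0 < κ → κ ≤ 1 → exp (1 - (u - log (UU L))) ≤ 2 * κ →
      |avg (MM L) Λ κ u - (D - G1 κ u + G2 κ u)| ≤ 1700 * u * UU L * exp (-u) / κ :=
      vaughan_avg (UU L) w u K (MM L) (one_le_exp (by linarith)) (by linarith) (by rw [hlU]; linarith)
      (by rw [hlU]; linarith) ((exp_le_exp.2 (by linarith)).trans (Nat.le_ceil _))
    have d1 := abs_le.1 ((hD _ (del_pos L) (hδΔ.trans hD1) (hδ5 _ u le_rfl hu1)).trans (hE _ u le_rfl hu1 hu2))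
    have d2 := abs_le.1 ((hD (Del L) (exp_pos _) hD1 (hδ5 _ u hδΔ hu1)).trans (hE _ u hδΔ hu1 hu2))
    have d3 := abs_le.1 (haw u hu1 (by linarith)); have d4 : |G1 (del L) u - G1 (Del L) u| ≤ f1 u := le_rfl
    have d5 : |G2 (del L) u - G2 (Del L) u| ≤ f2 u := le_rfl; rw [abs_le] at d4 d5
    have d6 : 481 * exp (-L ^ (3 / 1000 : ℝ)) ≤ 2000 * L * exp (-L ^ (3 / 1000 : ℝ)) := by gcongr; linarith
    rw [abs_le]; constructor <;> linarith [d1.1, d1.2, d2.1, d2.2, d3.1, d3.2, d4.1, d4.2, d5.1, d5.2]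
  calc _ ≤ ∫ u in L / 2..L / 2 + 2, (exp (-L ^ (2 / 1000 : ℝ)) + (f1 u + f2 u)) :=
        integral_mono_on (by linarith) (cii (by fun_prop))
          (cii (by fun_prop)) hpt
    _ ≤ _ := by
      rw [intervalIntegral.integral_add (cii (by fun_prop)) (cii (by fun_prop)),
        intervalIntegral.integral_add (cii (by fun_prop)) (cii (by fun_prop)),
        intervalIntegral.integral_const, smul_eq_mul]
      linarith

/-- The weighted density of primes at `e^u`, at width `e^{-v/2} / 10`. -/
def SS (v u : ℝ) : ℝ := ∑ p ∈ (Icc 1 (MM (2 * v))).filter Nat.Prime, log p / p * kk (del (2 * v)) (u - log p)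

lemma SS_cont (v : ℝ) : Continuous (SS v) := by have := kk_cont (del (2 * v)); unfold SS; fun_prop

/-- Primes in almost all intervals of square-root length, in mean. -/
lemma primes_l1 : ∀ᶠ v : ℝ in atTop, ∫ u in v..v + 2, |SS v u - 1| ≤ exp (-v ^ (1 / 1000 : ℝ)) := by
  have h2v : Tendsto (fun v : ℝ => 2 * v) atTop atTop := tendsto_id.const_mul_atTop two_pos
  filter_upwards [h2v.eventually lam_l1, h2v.eventually (ev_small 4 (3 / 2000) (2 / 1000) 0 (by norm_num) (by norm_num)),
    eventually_ge_atTop 10, ev_small 84 (3 / 2000) (1 / 2) 1 (by norm_num) (by norm_num),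
    ev_small 2 (1 / 1000) (3 / 2000) 0 (by norm_num) (by norm_num), ev_rpow 2 (1 / 2) 1 (by norm_num)] with v h1 h2 hv h3 h4 h5
  rw [rpow_one] at h5; rw [pow_one] at h3; rw [pow_zero, mul_one] at h2 h4
  rw [show 2 * v / 2 = v by ring] at h1; set M := MM (2 * v); set δ := del (2 * v) with hδd
  have hδ : 0 < δ := del_pos _
  have hδ1 : δ ≤ 1 := by
    rw [hδd, del]; exact (div_le_self (exp_pos _).le (by norm_num)).trans (by rw [exp_le_one_iff]; linarith)
  set x := exp (v + 3) with hx; set T := (Ioc 0 ⌊x⌋₊).filter (fun n => ¬ n.Prime) with hT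
  set R : ℝ → ℝ := fun u => ∑ n ∈ T, exp (1 - v) * (Λ n * kk δ (u - log n)) with hR; have hkc := kk_cont δ
  have hRc : Continuous R := by rw [hR]; fun_prop
  have hsc := SS_cont v; have hac : Continuous (avg M Λ δ) := by unfold avg; fun_prop
  have hΛ := fun n : ℕ => vonMangoldt_nonneg (n := n)
  have hpt : ∀ u ∈ Set.Icc v (v + 2), |SS v u - 1| ≤ |avg M Λ δ u - 1| + R u := by
    rintro u ⟨hu1, hu2⟩
    have e1 : avg M Λ δ u = SS v u + ∑ n ∈ (Icc 1 M).filter (fun n => ¬ n.Prime), Λ n / n * kk δ (u - log n) := by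
      rw [avg, ← sum_filter_add_sum_filter_not (Icc 1 M) Nat.Prime]; congr 1
      exact sum_congr rfl fun p hp => by rw [ArithmeticFunction.vonMangoldt_apply_prime (mem_filter.1 hp).2]
    have e0 : 0 ≤ ∑ n ∈ (Icc 1 M).filter (fun n => ¬ n.Prime), Λ n / n * kk δ (u - log n) :=
      sum_nonneg fun n _ => mul_nonneg (div_nonneg (hΛ n) (Nat.cast_nonneg n)) (kk_nonneg hδ _)
    have e2 : ∑ n ∈ (Icc 1 M).filter (fun n => ¬ n.Prime), Λ n / n * kk δ (u - log n) ≤ R u := by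
      have hR' : R u = ∑ n ∈ (Icc 1 M).filter (fun n => ¬ n.Prime), exp (1 - v) * (Λ n * kk δ (u - log n)) := by
        refine sum_subset (filter_subset_filter _ fun n hn => ?_) fun n hn hn2 => ?_
        · rw [mem_Ioc] at hn
          refine mem_Icc.2 ⟨hn.1, hn.2.trans ((Nat.floor_mono (exp_le_exp.2 (by linarith))).trans (Nat.floor_le_ceil _))⟩
        · rw [mem_filter, mem_Icc] at hn; rw [hT, mem_filter, mem_Ioc] at hn2
          have hxn : x < n := by
            by_contra h; exact hn2 ⟨⟨hn.1.1, Nat.le_floor (not_lt.1 h)⟩, hn.2⟩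
          have := (lt_log_iff_exp_lt (mod_cast hn.1.1)).2 hxn
          rw [kk_zero hδ (by rw [abs_of_neg (by linarith)]; linarith), mul_zero, mul_zero]
      rw [hR']; refine sum_le_sum fun n hn => ?_
      by_cases hk : |u - log n| < δ
      · have hn0 : (0 : ℝ) < n := mod_cast (mem_Icc.1 (mem_filter.1 hn).1).1
        have : exp (v - 1) ≤ n := (le_log_iff_exp_le hn0).1 (by linarith [(abs_lt.1 hk).2])
        have hi : 1 / (n : ℝ) ≤ exp (1 - v) := by
          rw [← neg_sub, exp_neg, ← one_div]; exact one_div_le_one_div_of_le (exp_pos _) this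
        rw [div_eq_mul_one_div, mul_comm _ (1 / (n : ℝ)), mul_assoc]
        exact mul_le_mul_of_nonneg_right hi (mul_nonneg (hΛ n) (kk_nonneg hδ _))
      · rw [kk_zero hδ (not_lt.1 hk)]; simp
    have := abs_le.1 (le_refl |avg M Λ δ u - 1|); rw [abs_le]; constructor <;> linarith [this.1, this.2]
  have hRint : ∫ u in v..v + 2, R u ≤ exp (-v ^ (3 / 2000 : ℝ)) := by
    have hki : ∀ n : ℕ, Integrable (fun u => exp (1 - v) * (Λ n * kk δ (u - log n))) :=
      fun n => (((kk_integrable hδ).comp_sub_right _).const_mul _).const_mul _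
    rw [integral_of_le (by linarith)]
    refine (setIntegral_le_integral (integrable_finsetSum _ fun n _ => hki n)
      (Eventually.of_forall fun u => sum_nonneg fun n _ => mul_nonneg (exp_pos _).le (mul_nonneg (hΛ n) (kk_nonneg hδ _)))).trans ?_
    rw [integral_finsetSum _ fun n _ => hki n]; simp only [integral_const_mul, integral_kk hδ, mul_one]
    rw [← mul_sum, hT, ← Chebyshev.psi_sub_theta_eq_sum_not_prime]
    have hc := Chebyshev.psi_sub_theta_le (x := x) (one_le_exp (by linarith))
    rw [hx, log_exp, ← exp_half] at hc
    have e3 : exp 3 ≤ 21 := by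
      have : exp 3 = exp 1 ^ 3 := by rw [← exp_nat_mul]; norm_num
      rw [this]
      calc exp 1 ^ 3 ≤ 2.72 ^ 3 := by gcongr; linarith [exp_one_lt_d9]
        _ ≤ 21 := by norm_num
    calc _ ≤ exp (1 - v) * (2 * exp ((v + 3) / 2) * (v + 3)) := by gcongr
      _ = 2 * (v + 3) * exp (5 / 2 + -(v / 2)) := by
        rw [show 5 / 2 + -(v / 2) = (1 - v) + (v + 3) / 2 by ring, exp_add (1 - v)]; ring
      _ ≤ 2 * (2 * v) * exp (3 + -v ^ (1 / 2 : ℝ)) := by gcongr <;> linarith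
      _ ≤ 2 * (2 * v) * (21 * exp (-v ^ (1 / 2 : ℝ))) := by rw [exp_add]; gcongr
      _ = 84 * v * exp (-v ^ (1 / 2 : ℝ)) := by ring
      _ ≤ _ := h3
  have h6 : exp (-(2 * v) ^ (3 / 2000 : ℝ)) ≤ exp (-v ^ (3 / 2000 : ℝ)) := by
    refine exp_le_exp.2 (neg_le_neg (rpow_le_rpow (by linarith) (by linarith) (by norm_num)))
  calc _ ≤ ∫ u in v..v + 2, (|avg M Λ δ u - 1| + R u) :=
        integral_mono_on (by linarith) (cii (by fun_prop))
          (cii (by fun_prop)) hpt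
    _ ≤ _ := by
      rw [intervalIntegral.integral_add (cii (by fun_prop)) (cii (by fun_prop))]; linarith

/-- The primes `q` with `[log q, log (q + 1)] ⊆ [x, y)`. -/
def Chd (x y : ℝ) : Finset ℕ := (range ⌈exp y⌉₊).filter fun q : ℕ => q.Prime ∧ x ≤ log q ∧ log (q + 1) < y

lemma mem_Chd {x y : ℝ} {q : ℕ} : q ∈ Chd x y ↔ q.Prime ∧ x ≤ log q ∧ log (q + 1) < y := by
  unfold Chd; rw [mem_filter, and_iff_right_iff_imp]; rintro ⟨-, -, h⟩
  rw [log_lt_iff_lt_exp (by positivity)] at h; rw [mem_range, Nat.lt_ceil]; linarith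

/-- The logarithmic mass of the primes in `Chd x y`. -/
def Sm (x y : ℝ) : ℝ := ∑ q ∈ Chd x y, log q / q

lemma log_succ_le {q : ℕ} (hq : 0 < q) : log (q + 1) ≤ log q + 1 / q := by
  have h0 : (0 : ℝ) < q := mod_cast hq; have := log_le_sub_one_of_pos (x := (q + 1) / q) (by positivity)
  rw [log_div (by positivity) h0.ne'] at this; have h2 : ((q : ℝ) + 1) / q - 1 = 1 / q := by field_simp; ring
  linarith

lemma log_succ_ge {q : ℕ} (hq : 0 < q) : 1 / (q + 1) ≤ log (q + 1) - log q := by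
  have h0 : (0 : ℝ) < q := mod_cast hq; have := one_sub_inv_le_log_of_pos (x := (q + 1) / q) (by positivity)
  rw [log_div (by positivity) h0.ne'] at this
  have h2 : 1 - (((q : ℝ) + 1) / q)⁻¹ = 1 / (q + 1) := by field_simp; ring
  linarith

/-- An interval with too few primes contributes to the `L¹` norm of `SS v - 1`. -/
lemma bad_interval {x y v : ℝ} (hg : del (2 * v) + exp (-x) < (y - x) / 8) (hS : Sm x y < (y - x) / 4) :
  (y - x) / 4 ≤ ∫ u in x..y, |SS v u - 1| := by
  have hc := SS_cont v; have hδ := del_pos (2 * v); have hex := exp_pos (-x); set x' := x + (y - x) / 8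
  set y' := y - (y - x) / 8; have hxy' : x' ≤ y' := by simp only [x', y']; linarith
  have hs : ∫ u in x'..y', SS v u ≤ Sm x y := by
    have hkc := kk_cont (del (2 * v)); unfold SS
    rw [intervalIntegral.integral_finsetSum fun i _ => cii (by fun_prop)]
    have h0 : ∀ p : ℕ, 0 ≤ log p / p := fun p => div_nonneg (log_natCast_nonneg _) p.cast_nonneg
    calc _ ≤ ∑ p ∈ (Icc 1 (MM (2 * v))).filter Nat.Prime, if p ∈ Chd x y then log p / p else 0 := by
          refine sum_le_sum fun p hp => ?_; rw [intervalIntegral.integral_const_mul]; split_ifs with h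
          · refine mul_le_of_le_one_right (h0 p) ?_; rw [integral_of_le hxy', ← integral_kk hδ (log p)]
            exact setIntegral_le_integral ((kk_integrable hδ).comp_sub_right _) (Eventually.of_forall fun u => kk_nonneg hδ _)
          · rw [integral_congr (g := fun _ => 0), intervalIntegral.integral_zero, mul_zero]; intro u hu
            rw [Set.uIcc_of_le hxy'] at hu; refine kk_zero hδ ?_; by_contra hk; rw [not_le, abs_lt] at hk
            obtain ⟨hu1, hu2⟩ := hu; have hp' := (mem_filter.1 hp).2
            have hp0 : (0 : ℝ) < p := mod_cast hp'.pos
            have hx1 : x ≤ log p := by simp only [x'] at hu1; linarith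
            refine h (mem_Chd.2 ⟨hp', hx1, ?_⟩); have h1 := log_succ_le hp'.pos
            have h2 : 1 / (p : ℝ) ≤ exp (-x) := by
              rw [exp_neg, ← one_div]
              exact one_div_le_one_div_of_le (exp_pos _) ((le_log_iff_exp_le hp0).1 hx1)
            simp only [y'] at hu2; linarith
      _ ≤ _ := by
        rw [← sum_filter]
        exact sum_le_sum_of_subset_of_nonneg (fun p hp => (mem_filter.1 hp).2) fun p _ _ => h0 p
  have hi : ∀ a b, IntervalIntegrable (fun u => |SS v u - 1|) volume a b := fun a b =>
    cii (by fun_prop)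
  have h1 : ∫ u in x'..y', (1 - SS v u) ≤ ∫ u in x'..y', |SS v u - 1| :=
    integral_mono_on hxy' (cii (by fun_prop)) (hi _ _) fun u _ => by
      rw [abs_sub_comm]; exact le_abs_self _
  rw [intervalIntegral.integral_sub (by simp) (cii (by fun_prop)), intervalIntegral.integral_const, smul_eq_mul] at h1
  have h2 : ∫ u in x'..y', |SS v u - 1| ≤ ∫ u in x..y, |SS v u - 1| :=
    intervalIntegral.integral_mono_interval (by simp only [x']; linarith) hxy' (by simp only [y']; linarith)
      (Eventually.of_forall fun u => abs_nonneg _) (hi _ _)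
  have h3 : y' - x' = 3 * (y - x) / 4 := by simp only [x', y']; ring
  linarith

/-! ### Mass distribution -/

/-- A mass distribution principle along a nested sequence of compact sets: `Mass m U` bounds the mass
that the level-`m` approximation puts on `U`. -/
lemma frostman (K : ℕ → Set ℝ) (hK : ∀ m, IsCompact (K m)) (hanti : Antitone K) (Mass : ℕ → Set ℝ → ℝ) {A s : ℝ}
  (hs0 : 0 < s) (hs1 : s < 1) (hA : 0 < A)
  (hsub : ∀ m (F : Finset ℕ) (U : ℕ → Set ℝ), K m ⊆ ⋃ n ∈ F, U n → 1 / 2 ≤ ∑ n ∈ F, Mass m (U n))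
  (hball : ∀ x ρ, 0 < ρ → ∃ k, ∀ m ≥ k, Mass m (ball x ρ) ≤ A * ρ ^ s) :
  Measure.hausdorffMeasure s (⋂ m, K m) ≠ 0 := by
  intro h0; rw [Measure.hausdorffMeasure_apply, ENNReal.iSup_eq_zero] at h0; have h1 := h0 1
  rw [iSup_pos one_pos] at h1; set ε : ℝ := 1 / (16 * A); have hε : 0 < ε := by positivity
  have h2 : (⨅ (t : ℕ → Set ℝ) (_ : (⋂ m, K m) ⊆ ⋃ n, t n) (_ : ∀ n, ediam (t n) ≤ 1),
    ∑' n, ⨆ _ : (t n).Nonempty, ediam (t n) ^ s) < ENNReal.ofReal ε := by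
    rw [h1]; exact ENNReal.ofReal_pos.2 hε
  simp only [iInf_lt_iff] at h2; obtain ⟨t, hcov, hd, hsum⟩ := h2
  have hfin : ∀ n, ediam (t n) ≠ ⊤ := fun n => ((hd n).trans_lt ENNReal.one_lt_top).ne
  -- fatten each piece by `η n`, where `(η n) ^ s = ε / 2 ^ n`
  set η : ℕ → ℝ := fun n => (ε / 2 ^ n) ^ (1 / s)
  have hη : ∀ n, 0 < η n := fun n => by simp only [η]; positivity
  have hηs : ∀ n, η n ^ s = ε / 2 ^ n := fun n => by
    simp only [η]; rw [← rpow_mul (by positivity), one_div_mul_cancel hs0.ne', rpow_one]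
  have hx : ∀ n, ∃ x : ℝ, (t n).Nonempty → x ∈ t n := fun n => by
    by_cases h : (t n).Nonempty
    · exact ⟨h.some, fun _ => h.some_mem⟩
    · exact ⟨0, fun h' => absurd h' h⟩
  choose x hx using hx
  set d : ℕ → ℝ := fun n => (ediam (t n)).toReal; have hd0 : ∀ n, 0 ≤ d n := fun n => ENNReal.toReal_nonneg
  set U : ℕ → Set ℝ := fun n => ball (x n) (d n + η n)
  have htU : ∀ n, t n ⊆ U n := fun n y hy => by
    have h3 : edist y (x n) ≤ ediam (t n) := edist_le_ediam_of_mem hy (hx n ⟨y, hy⟩); simp only [U, mem_ball]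
    have : dist y (x n) ≤ d n := by rw [dist_edist]; exact ENNReal.toReal_mono (hfin n) h3
    linarith [hη n]
  have hcE : IsCompact (⋂ m, K m) := (hK 0).of_isClosed_subset (isClosed_iInter fun m => (hK m).isClosed) (Set.iInter_subset _ 0)
  obtain ⟨F, hF⟩ := hcE.elim_finite_subcover U (fun n => isOpen_ball) (hcov.trans (Set.iUnion_mono htU))
  obtain ⟨m₀, hm₀⟩ := exists_subset_nhds_of_isCompact (directed_of_isDirected_le fun i j h => hanti h) hK
    (U := ⋃ n ∈ F, U n) fun z hz => (isOpen_biUnion fun n _ => isOpen_ball).mem_nhds (hF hz)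
  choose k hk using fun n => hball (x n) (d n + η n) (by linarith [hd0 n, hη n])
  set m := max m₀ (F.sup k); have h4 := hsub m F U ((hanti (le_max_left _ _)).trans hm₀)
  have h5 : ∀ n ∈ F, Mass m (U n) ≤ A * (d n ^ s + ε / 2 ^ n) := fun n hn => by
    refine (hk n m ((le_sup hn).trans (le_max_right _ _))).trans ?_; rw [← hηs]; gcongr
    exact rpow_add_le_add_rpow (hd0 n) (hη n).le hs0.le hs1.le
  have h6 : ∑ n ∈ F, d n ^ s ≤ ε := by
    have h7 : ∑ n ∈ F, (⨆ _ : (t n).Nonempty, ediam (t n) ^ s) ≤ ENNReal.ofReal ε := (ENNReal.sum_le_tsum F).trans hsum.le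
    have h8 : ∀ n, ENNReal.ofReal (d n ^ s) = ⨆ _ : (t n).Nonempty, ediam (t n) ^ s := fun n => by
      rw [← ENNReal.ofReal_rpow_of_nonneg (hd0 n) hs0.le, ENNReal.ofReal_toReal (hfin n)]
      by_cases h : (t n).Nonempty
      · rw [iSup_pos h]
      · rw [iSup_neg h, Set.not_nonempty_iff_eq_empty.1 h, ediam_empty, ENNReal.zero_rpow_of_pos hs0]; rfl
    simp only [← h8] at h7; rw [← ENNReal.ofReal_sum_of_nonneg fun n _ => rpow_nonneg (hd0 n) _] at h7
    exact (ENNReal.ofReal_le_ofReal_iff hε.le).1 h7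
  have h9 : ∑ n ∈ F, ε / 2 ^ n ≤ 2 * ε := by
    have := (summable_geometric_two.mul_left ε).sum_le_tsum F fun n _ => by positivity
    rw [tsum_mul_left, tsum_geometric_two] at this
    refine (sum_le_sum fun n _ => ?_).trans (this.trans (by linarith)); rw [one_div, inv_pow, div_eq_mul_inv]
  have h10 := h4.trans (sum_le_sum h5); rw [← mul_sum, sum_add_distrib] at h10
  have h11 : A * ε = 1 / 16 := by simp only [ε]; field_simp
  nlinarith

/-- Bound for the density of the level-`m` mass with respect to Lebesgue measure. -/
def Dn (T R : ℝ) (m : ℕ) : ℝ := (8 * (T + 1) * R ^ m) ^ (m + 1)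

lemma Dn_small {R : ℝ} (hR : 1 ≤ R) : ∀ᶠ T in atTop, ∀ m : ℕ,
  32 * 2 ^ m * Dn T R m ≤ exp ((2 ^ m * T) ^ (1 / 1000 : ℝ)) := by
  obtain ⟨r, hr⟩ := pow_unbounded_of_one_lt R one_lt_two
  have h1 : ∀ᶠ X : ℝ in atTop, (2 * (r + 3) : ℝ) * log X ^ (2 : ℝ) ≤ X ^ (1 / 1000 : ℝ) := by
    have := (isLittleO_log_rpow_rpow_atTop 2 (by norm_num : (0 : ℝ) < 1 / 1000)).def (c := 1 / (2 * (r + 3))) (by positivity)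
    filter_upwards [this, eventually_ge_atTop 1] with X h hX
    rw [norm_of_nonneg (rpow_nonneg (log_nonneg hX) _), norm_of_nonneg (by positivity), one_div_mul_eq_div,
      le_div_iff₀ (by positivity)] at h
    linarith
  obtain ⟨X₀, hX₀⟩ := eventually_atTop.1 h1
  filter_upwards [eventually_ge_atTop X₀, eventually_ge_atTop 32] with T hT hT2 m
  have hp : (1 : ℝ) ≤ 2 ^ m := one_le_pow₀ one_le_two; set X := 2 ^ m * T
  have hTX : T ≤ X := le_mul_of_one_le_left (by linarith) hp; have hX0 : 0 < X := by linarith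
  have hl1 : 1 ≤ log X := by rw [le_log_iff_exp_le hX0]; linarith [exp_one_lt_d9]
  have hm : (m : ℝ) + 1 ≤ 2 * log X := by
    have h3 : log (2 ^ (m + 1)) ≤ log X := log_le_log (by positivity) (by simp only [X, pow_succ]; nlinarith)
    rw [log_pow] at h3; push_cast at h3; nlinarith [log_two_gt_d9]
  have hb : 8 * (T + 1) * R ^ m ≤ X ^ (r + 2) :=
    calc 8 * (T + 1) * R ^ m ≤ 16 * T * (2 ^ r) ^ m := by gcongr ?_ * ?_ ^ m <;> linarith
      _ = 16 * T * (2 ^ m) ^ r := by rw [← pow_mul, ← pow_mul, mul_comm r]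
      _ ≤ X * X * X ^ r := by
        have : (2 : ℝ) ^ m ≤ X := le_mul_of_one_le_right (by linarith) (by linarith); gcongr; linarith
      _ = _ := by ring
  have hD : Dn T R m ≤ exp (2 * (r + 2) * log X ^ 2) := by
    have : X = exp (log X) := (exp_log hX0).symm
    calc Dn T R m ≤ (X ^ (r + 2)) ^ (m + 1) := by unfold Dn; gcongr
      _ = exp (((r + 2) * (m + 1) : ℕ) * log X) := by rw [exp_nat_mul, ← this, pow_mul]
      _ ≤ _ := by
        refine exp_le_exp.2 ?_; push_cast
        calc ((r : ℝ) + 2) * (m + 1) * log X ≤ (r + 2) * (2 * log X) * log X := by gcongr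
          _ = _ := by ring
  have hX2 : 32 * 2 ^ m ≤ exp (2 * log X ^ 2) :=
    calc 32 * 2 ^ m ≤ X := by simp only [X]; nlinarith
      _ = exp (log X) := (exp_log hX0).symm
      _ ≤ _ := by gcongr; nlinarith
  calc _ ≤ exp (2 * log X ^ 2) * exp (2 * (r + 2) * log X ^ 2) := by
        gcongr; unfold Dn; positivity
    _ ≤ _ := by
      rw [← exp_add]; gcongr; have := hX₀ X (hT.trans hTX); rw [rpow_two] at this; linarith

lemma mono_log {κ : ℝ} (hκ : 0 ≤ κ) : Monotone fun p : ℕ => κ * log p := fun p q h => by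
  dsimp only
  refine mul_le_mul_of_nonneg_left ?_ hκ
  rcases Nat.eq_zero_or_pos p with rfl | hp
  · simpa using log_natCast_nonneg q
  · exact log_le_log (mod_cast hp) (mod_cast h)

lemma sum_int {a : ℕ → ℝ} (ha : Monotone a) {f : ℝ → ℝ} (hf : Continuous f) (hf0 : ∀ x, 0 ≤ f x) (F : Finset ℕ) {l r : ℝ}
  (hlr : l ≤ r) (h : ∀ p ∈ F, l ≤ a p ∧ a (p + 1) ≤ r) : ∑ p ∈ F, ∫ u in a p..a (p + 1), f u ≤ ∫ u in l..r, f u := by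
  have hi : IntegrableOn f (Set.Ioc l r) := hf.integrableOn_Ioc
  simp only [fun p => integral_of_le (μ := volume) (f := f) (ha (Nat.le_add_right p 1)), integral_of_le hlr]
  rw [← integral_biUnion_finset (s := fun p => Set.Ioc (a p) (a (p + 1))) F (fun p _ => measurableSet_Ioc) (fun p _ q _ hpq => ha.pairwise_disjoint_on_Ioc_succ hpq)
    fun p _ => hf.integrableOn_Ioc]
  exact setIntegral_mono_set hi (Eventually.of_forall hf0)
    (Set.iUnion₂_subset fun p hp => Set.Ioc_subset_Ioc (h p hp).1 (h p hp).2).eventuallyLE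

/-! ### The tree of primes -/

/-- The partial products `C_m = c_1 ⋯ c_m`, with `C_0 = 1`. -/
def Cp (c : ℕ → ℝ) (m : ℕ) : ℝ := ∏ i ∈ Icc 1 m, c i

/-- Standing assumptions for the construction on the interval `[T, T + 1]`: `T` is so large that primes
are well distributed in mean beyond `exp T`, at a scale that beats the densities `Dn T R m`. -/
structure Hyp (c : ℕ → ℝ) (T R : ℝ) : Prop where
  two_le : ∀ k ≥ 1, 2 ≤ c k
  le_R : ∀ k ≥ 1, c k ≤ R
  T100 : 100 ≤ T
  R_le : R ≤ T
  l1 : ∀ v ≥ T, ∫ u in v..v + 2, |SS v u - 1| ≤ exp (-v ^ (1 / 1000 : ℝ))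
  dn : ∀ m : ℕ, 32 * 2 ^ m * Dn T R m ≤ exp ((2 ^ m * T) ^ (1 / 1000 : ℝ))

/-- The prime `p` has enough children at the next level. -/
def Good (c : ℕ → ℝ) (m p : ℕ) : Prop :=
  c (m + 1) * (log (p + 1) - log p) / 4 ≤ Sm (c (m + 1) * log p) (c (m + 1) * log (p + 1))

/-- The children of `p`: primes `q` whose level-`m + 1` interval lies in the level-`m` interval of `p`. -/
def Ch (c : ℕ → ℝ) (m p : ℕ) : Finset ℕ := Chd (c (m + 1) * log p) (c (m + 1) * log (p + 1))

open Classical in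
/-- The primes of level `m`; those without enough children are discarded in passing to level `m + 1`. -/
def NN (c : ℕ → ℝ) (T : ℝ) : ℕ → Finset ℕ
  | 0 => Chd T (T + 1)
  | m + 1 => ((NN c T m).filter (Good c m)).biUnion (Ch c m)

/-- The parent `⌊q ^ (1 / c_{m+1})⌋` of `q`. -/
def par (c : ℕ → ℝ) (m q : ℕ) : ℕ := ⌊exp (log q / c (m + 1))⌋₊

/-- The mass of the node `q`: each node distributes its mass among its children proportionally to
`log q / q`. -/
def ww (c : ℕ → ℝ) (T : ℝ) : ℕ → ℕ → ℝ
  | 0, q => log q / q / Sm T (T + 1)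
  | m + 1, q => ww c T m (par c m q) * (log q / q / Sm (c (m + 1) * log (par c m q)) (c (m + 1) * log (par c m q + 1)))

variable {c : ℕ → ℝ} {T R : ℝ}

lemma Cp_succ (m : ℕ) : Cp c (m + 1) = Cp c m * c (m + 1) := prod_Icc_succ_top (by omega) _

lemma Cp_ge (h : Hyp c T R) (m : ℕ) : 2 ^ m ≤ Cp c m := by
  induction m with
  | zero => simp [Cp]
  | succ m ih =>
    rw [Cp_succ, pow_succ]
    exact mul_le_mul ih (h.two_le _ (by omega)) (by norm_num) (le_trans (by positivity) ih)

lemma Cp_pos (h : Hyp c T R) (m : ℕ) : 0 < Cp c m := lt_of_lt_of_le (by positivity) (Cp_ge h m)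

lemma two_le_R (h : Hyp c T R) : 2 ≤ R := (h.two_le 1 le_rfl).trans (h.le_R 1 le_rfl)

lemma Cp_le (h : Hyp c T R) (m : ℕ) : Cp c m ≤ R ^ m := by
  have := two_le_R h
  induction m with
  | zero => simp [Cp]
  | succ m ih =>
    rw [Cp_succ, pow_succ]
    exact mul_le_mul ih (h.le_R _ (by omega)) (by linarith [h.two_le (m + 1) (by omega)]) (by positivity)

lemma NN_bd (h : Hyp c T R) (m p : ℕ) (hp : p ∈ NN c T m) :
  p.Prime ∧ Cp c m * T ≤ log p ∧ log (p + 1) ≤ Cp c m * (T + 1) := by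
  induction m generalizing p with
  | zero =>
    obtain ⟨h1, h2, h3⟩ := mem_Chd.1 hp; simpa [Cp] using ⟨h1, h2, h3.le⟩
  | succ m ih =>
    simp only [NN, mem_biUnion, mem_filter] at hp; obtain ⟨q, ⟨hq, -⟩, hpq⟩ := hp
    obtain ⟨h1, h2, h3⟩ := mem_Chd.1 hpq; obtain ⟨-, h5, h6⟩ := ih q hq; have := h.two_le (m + 1) (by omega)
    rw [Cp_succ]; refine ⟨h1, le_trans ?_ h2, h3.le.trans ?_⟩ <;> nlinarith

lemma NN_large (h : Hyp c T R) {m p : ℕ} (hp : p ∈ NN c T m) : 100 ≤ (p : ℝ) ∧ R ≤ p ∧ exp (2 ^ m * T) ≤ p := by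
  obtain ⟨h1, h2, -⟩ := NN_bd h m p hp; have hp0 : (0 : ℝ) < p := mod_cast h1.pos
  have h3 := (le_log_iff_exp_le hp0).1 (le_trans (mul_le_mul_of_nonneg_right (Cp_ge h m) (by linarith [h.T100])) h2)
  have h4 : T ≤ 2 ^ m * T := le_mul_of_one_le_left (by linarith [h.T100]) (one_le_pow₀ one_le_two)
  have h5 := add_one_le_exp (2 ^ m * T); have := h.T100; have := h.R_le; exact ⟨by linarith, by linarith, h3⟩

lemma par_eq (h : Hyp c T R) {m p q : ℕ} (hp : 0 < p) (hq : q ∈ Ch c m p) : par c m q = p := by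
  obtain ⟨h1, h2, h3⟩ := mem_Chd.1 hq; have hc := h.two_le (m + 1) (by omega)
  have hq0 : (0 : ℝ) < q := mod_cast h1.pos; have hp0 : (0 : ℝ) < p := mod_cast hp
  have h4 : log q < c (m + 1) * log (p + 1) := (log_le_log hq0 (by linarith)).trans_lt h3
  rw [par, Nat.floor_eq_iff (exp_pos _).le, ← log_le_iff_le_exp hp0, le_div_iff₀ (by linarith),
    ← lt_log_iff_exp_lt (by positivity), div_lt_iff₀ (by linarith)]
  constructor <;> linarith

open Classical in
lemma sum_NN (h : Hyp c T R) (m : ℕ) (f : ℕ → ℝ) :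
  ∑ q ∈ NN c T (m + 1), f q = ∑ p ∈ (NN c T m).filter (Good c m), ∑ q ∈ Ch c m p, f q := by
  have hpos : ∀ p ∈ (NN c T m).filter (Good c m), 0 < p := fun p hp => (NN_bd h m p (mem_filter.1 hp).1).1.pos
  rw [NN, sum_biUnion]; intro p hp p' hp' hne; rw [Function.onFun, disjoint_left]
  exact fun q hq hq' => hne ((par_eq h (hpos p hp) hq).symm.trans (par_eq h (hpos p' hp') hq'))

lemma term_nonneg (q : ℕ) : 0 ≤ log q / q := div_nonneg (log_natCast_nonneg _) q.cast_nonneg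

lemma Sm_nonneg (x y : ℝ) : 0 ≤ Sm x y := sum_nonneg fun q _ => term_nonneg q

lemma ww_nonneg (m q : ℕ) : 0 ≤ ww c T m q := by
  induction m generalizing q with
  | zero => exact div_nonneg (term_nonneg q) (Sm_nonneg _ _)
  | succ m ih => exact mul_nonneg (ih _) (div_nonneg (term_nonneg q) (Sm_nonneg _ _))

lemma Sm_root (h : Hyp c T R) : 1 / 4 ≤ Sm T (T + 1) := by
  by_contra hS; have hT := h.T100
  have he : ∀ x : ℝ, 10 ≤ x → exp (-x) ≤ 1 / 11 := fun x hx => by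
    rw [exp_neg, ← one_div]; exact one_div_le_one_div_of_le (by norm_num) (by linarith [add_one_le_exp x])
  have h1 := bad_interval (x := T) (y := T + 1) (v := T) (by
    have h2 := he (2 * T / 4) (by linarith)
    have h3 : exp (-T) ≤ 1 / 101 := by
      rw [exp_neg, ← one_div]; exact one_div_le_one_div_of_le (by norm_num) (by linarith [add_one_le_exp T])
    unfold del; linarith) (by linarith)
  have h4 := h.l1 T le_rfl; have hc := SS_cont T
  have h5 : ∫ u in T..T + 1, |SS T u - 1| ≤ ∫ u in T..T + 2, |SS T u - 1| :=
    intervalIntegral.integral_mono_interval le_rfl (by linarith) (by linarith)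
      (Eventually.of_forall fun u => abs_nonneg _) (cii (by fun_prop))
  have h6 := h.dn 0; simp only [Dn, pow_zero, mul_one, zero_add, pow_one, one_mul] at h6
  have h7 : exp (-T ^ (1 / 1000 : ℝ)) ≤ 1 / 100 := by
    rw [exp_neg, ← one_div]; exact one_div_le_one_div_of_le (by norm_num) (by linarith)
  linarith

lemma ww_children (h : Hyp c T R) {m p : ℕ} (hp : p ∈ NN c T m) (hg : Good c m p) :
  ∑ q ∈ Ch c m p, ww c T (m + 1) q = ww c T m p := by
  have hp0 := (NN_bd h m p hp).1.pos
  have hS : 0 < Sm (c (m + 1) * log p) (c (m + 1) * log (p + 1)) := by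
    refine lt_of_lt_of_le ?_ hg; have := log_succ_ge hp0; have h2 := h.two_le (m + 1) (by omega)
    have : (0 : ℝ) < 1 / (p + 1) := by positivity
    have : 0 < log (p + 1) - log p := by linarith
    positivity
  rw [sum_congr rfl fun q hq => by rw [ww, par_eq h hp0 hq], ← mul_sum, ← sum_div]
  exact (congrArg _ (div_self hS.ne')).trans (mul_one _)

lemma ww_dens (h : Hyp c T R) (m p : ℕ) (hp : p ∈ NN c T m) :
  ww c T m p ≤ Dn T R m * ((log (p + 1) - log p) / Cp c m) := by
  have hT := h.T100; have hR := two_le_R h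
  induction m generalizing p with
  | zero =>
    obtain ⟨h1, h2, h3⟩ := NN_bd h 0 p hp; have hp1 : (1 : ℝ) ≤ p := mod_cast h1.pos
    have h4 := log_succ_ge h1.pos
    have h5 : log p ≤ T + 1 := by
      refine (log_le_log (by linarith) (by linarith)).trans (h3.trans ?_); simp [Cp]
    simp only [ww, Dn, Cp, pow_zero, mul_one, zero_add, pow_one]
    simp only [show Icc 1 0 = ∅ from rfl, prod_empty, div_one]
    calc log p / p / Sm T (T + 1) ≤ (T + 1) / p / (1 / 4) := by
          have := Sm_root h; gcongr
      _ = 8 * (T + 1) * (1 / (p + p)) := by field_simp; norm_num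
      _ ≤ 8 * (T + 1) * (1 / (p + 1)) := by gcongr
      _ ≤ _ := by gcongr
  | succ m ih =>
    obtain ⟨h1, h2, h3⟩ := NN_bd h (m + 1) p hp; simp only [NN, mem_biUnion, mem_filter] at hp
    obtain ⟨q, ⟨hq, hg⟩, hpq⟩ := hp; have hq0 := (NN_bd h m q hq).1.pos
    have hp1 : (1 : ℝ) ≤ p := mod_cast h1.pos; have h4 := log_succ_ge h1.pos
    have h5 : log p ≤ R ^ (m + 1) * (T + 1) := by
      refine (log_le_log (by linarith) (by linarith)).trans (h3.trans ?_); gcongr; exact Cp_le h _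
    have hC := Cp_pos h m; have hc := h.two_le (m + 1) (by omega)
    have hl : 0 < log (q + 1) - log q := by
      have := log_succ_ge hq0; have : (0 : ℝ) < 1 / (q + 1) := by positivity
      linarith
    have hD : 0 ≤ Dn T R m := by unfold Dn; positivity
    rw [ww, par_eq h hq0 hpq]
    calc _ ≤ Dn T R m * ((log (q + 1) - log q) / Cp c m) *
          (R ^ (m + 1) * (T + 1) / p / (c (m + 1) * (log (q + 1) - log q) / 4)) := by
            have := ih q hq; have := ww_nonneg (c := c) (T := T) m q; have hg' := hg; unfold Good at hg'
            have := term_nonneg p; gcongr; exact div_nonneg this (Sm_nonneg _ _)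
      _ = Dn T R m * (8 * (T + 1) * R ^ (m + 1)) * (1 / (p + p) / Cp c (m + 1)) := by rw [Cp_succ]; field_simp; ring
      _ ≤ Dn T R (m + 1) * (1 / (p + 1) / Cp c (m + 1)) := by
        have := Cp_pos h (m + 1); have hD : 0 ≤ Dn T R (m + 1) := by unfold Dn; positivity
        have : Dn T R m * (8 * (T + 1) * R ^ (m + 1)) ≤ Dn T R (m + 1) := by
          unfold Dn; rw [pow_succ _ (m + 1)]; gcongr
          · linarith
          · omega
        gcongr
      _ ≤ _ := by
        have := Cp_pos h (m + 1); have hD : 0 ≤ Dn T R (m + 1) := by unfold Dn; positivity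
        gcongr


lemma Dn_nonneg (h : Hyp c T R) (m : ℕ) : 0 ≤ Dn T R m := by
  have := h.T100; have := two_le_R h; unfold Dn; positivity

/-- A bad prime is witnessed by the `L¹` norm of `SS v - 1` over its interval. -/
lemma bad_node (h : Hyp c T R) {m p : ℕ} (hp : p ∈ NN c T m) (hb : ¬ Good c m p) :
  c (m + 1) * log (p + 1) ≤ ⌊c (m + 1) * log p⌋₊ + 2 ∧
  c (m + 1) * (log (p + 1) - log p) / 4 ≤
    ∫ u in c (m + 1) * log p..c (m + 1) * log (p + 1), |SS ⌊c (m + 1) * log p⌋₊ u - 1| := by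
  obtain ⟨h100, hRp, -⟩ := NN_large h hp; have hp0 : (0 : ℝ) < p := by linarith
  have hp1 : 0 < p := mod_cast hp0; have hc := h.two_le (m + 1) (by omega)
  have hcR := h.le_R (m + 1) (by omega); have hl : 0 ≤ log p := log_natCast_nonneg _
  have h1 := log_succ_le hp1; have h2 := log_succ_ge hp1; set x := c (m + 1) * log p
  have hx2 : 2 * log p ≤ x := mul_le_mul_of_nonneg_right hc hl
  have hv1 : x < ⌊x⌋₊ + 1 := Nat.lt_floor_add_one x; constructor
  · have : c (m + 1) * log (p + 1) ≤ x + c (m + 1) * (1 / p) := by simp only [x]; rw [← mul_add]; gcongr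
    have : c (m + 1) * (1 / p) ≤ 1 := by rw [mul_one_div, div_le_one hp0]; linarith
    linarith
  · have hyx : c (m + 1) * (log (p + 1) - log p) = c (m + 1) * log (p + 1) - x := mul_sub _ _ _
    unfold Good at hb; rw [hyx] at hb ⊢; refine bad_interval ?_ (not_le.1 hb)
    have e1 : exp (-x) ≤ 1 / 100 * (1 / p) := by
      calc exp (-x) ≤ exp (-(log p + log p)) := by gcongr; linarith
        _ = 1 / p * (1 / p) := by rw [exp_neg, exp_add, exp_log hp0]; field_simp
        _ ≤ _ := by gcongr
    have e2 : exp (-(2 * ⌊x⌋₊ / 4)) ≤ 2 * (1 / p) := by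
      calc exp (-(2 * ⌊x⌋₊ / 4)) ≤ exp (1 / 2 + -log p) := by gcongr; linarith
        _ = exp (1 / 2) * (1 / p) := by rw [exp_add, exp_neg, exp_log hp0, one_div (p : ℝ)]
        _ ≤ _ := by
          gcongr; have : exp (1 / 2) ^ 2 = exp 1 := by rw [← exp_nat_mul]; norm_num
          nlinarith [exp_one_lt_d9, exp_pos (1 / 2)]
    have e3 : 2 * (99 / 100 * (1 / p)) ≤ c (m + 1) * (log (p + 1) - log p) := by
      have : 99 / 100 * (1 / (p : ℝ)) ≤ 1 / (p + 1) := by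
        rw [div_mul_div_comm, div_le_div_iff₀ (by positivity) (by positivity)]; linarith
      have h0 : 0 < 1 / (p : ℝ) := by positivity
      nlinarith
    have h0 : 0 < 1 / (p : ℝ) := by positivity
    unfold del; linarith

open Classical in
/-- The mass discarded at level `m`. -/
lemma killed (h : Hyp c T R) (m : ℕ) :
  ∑ p ∈ (NN c T m).filter (fun p => ¬ Good c m p), ww c T m p ≤ 1 / 4 * (1 / 2) ^ m := by
  set F := (NN c T m).filter (fun p => ¬ Good c m p); set d := c (m + 1)
  have hF : ∀ p ∈ F, p ∈ NN c T m ∧ ¬ Good c m p := fun p hp => mem_filter.1 hp; have hC := Cp_pos h m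
  have hC1 := Cp_pos h (m + 1); have hCge := Cp_ge h (m + 1); have hT := h.T100; have hD := Dn_nonneg h m
  have hd : 2 ≤ d := h.two_le (m + 1) (by omega); have h2m : (1 : ℝ) ≤ 2 ^ m := one_le_pow₀ one_le_two
  have hCs : Cp c (m + 1) = Cp c m * d := Cp_succ m; set e := exp (-(2 ^ m * T) ^ (1 / 1000 : ℝ))
  have he : 0 < e := exp_pos _; set V := Icc ⌊Cp c (m + 1) * T⌋₊ ⌊Cp c (m + 1) * (T + 1)⌋₊
  have hmaps : ∀ p ∈ F, ⌊d * log p⌋₊ ∈ V := fun p hp => by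
    obtain ⟨h1, h2, h3⟩ := NN_bd h m p (hF p hp).1; have hp0 : (0 : ℝ) < p := mod_cast h1.pos
    have h4 := log_le_log hp0 (by linarith : (p : ℝ) ≤ p + 1); rw [mem_Icc, hCs]
    constructor <;> refine Nat.floor_le_floor ?_ <;> nlinarith
  have hv : ∀ v ∈ V, ∑ p ∈ F.filter (fun p : ℕ => ⌊d * log p⌋₊ = v), d * (log (p + 1) - log p) / 4 ≤ e := fun v hv => by
    have hvT : 2 ^ m * T ≤ v := by
      have h1 : (⌊Cp c (m + 1) * T⌋₊ : ℝ) ≤ v := mod_cast (mem_Icc.1 hv).1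
      have h2 := Nat.lt_floor_add_one (Cp c (m + 1) * T)
      have h3 : 2 ^ (m + 1) * T ≤ Cp c (m + 1) * T := by gcongr
      rw [pow_succ] at h3; nlinarith
    have hvT' : T ≤ v := le_trans (le_mul_of_one_le_left (by linarith) h2m) hvT; have hc := SS_cont v
    calc _ ≤ ∑ p ∈ F.filter (fun p : ℕ => ⌊d * log p⌋₊ = v), ∫ u in d * log p..d * log (p + 1 : ℕ), |SS v u - 1| := by
          refine sum_le_sum fun p hp => ?_; obtain ⟨hpF, rfl⟩ := mem_filter.1 hp; rw [Nat.cast_succ]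
          exact (bad_node h (hF p hpF).1 (hF p hpF).2).2
      _ ≤ ∫ u in (v : ℝ)..v + 2, |SS v u - 1| := by
        refine sum_int (mono_log (by linarith)) (f := fun u => |SS v u - 1|) (by fun_prop) (fun u => abs_nonneg _) _ (by linarith) fun p hp => ?_
        obtain ⟨hpF, rfl⟩ := mem_filter.1 hp; rw [Nat.cast_succ]
        exact ⟨Nat.floor_le (mul_nonneg (by linarith) (log_natCast_nonneg _)), (bad_node h (hF p hpF).1 (hF p hpF).2).1⟩
      _ ≤ _ := h.l1 v hvT'
      _ ≤ _ := exp_le_exp.2 (neg_le_neg (rpow_le_rpow (by positivity) hvT (by norm_num)))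
  have hcard : (V.card : ℝ) ≤ 2 * Cp c (m + 1) := by
    have h1 := Nat.lt_floor_add_one (Cp c (m + 1) * T)
    have h2 := Nat.floor_le (by positivity : 0 ≤ Cp c (m + 1) * (T + 1))
    have h3 : ⌊Cp c (m + 1) * T⌋₊ ≤ ⌊Cp c (m + 1) * (T + 1)⌋₊ + 1 :=
      (Nat.floor_le_floor (by nlinarith)).trans (Nat.le_succ _)
    rw [Nat.card_Icc, Nat.cast_sub h3]; push_cast; rw [pow_succ] at hCge; nlinarith
  have htot : ∑ p ∈ F, d * (log (p + 1) - log p) / 4 ≤ 2 * Cp c (m + 1) * e := by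
    rw [← sum_fiberwise_of_maps_to hmaps]; refine (sum_le_card_nsmul _ _ e hv).trans ?_; rw [nsmul_eq_mul]
    gcongr
  calc _ ≤ ∑ p ∈ F, 4 * Dn T R m / Cp c (m + 1) * (d * (log (p + 1) - log p) / 4) := by
        refine sum_le_sum fun p hp => (ww_dens h m p (hF p hp).1).trans_eq ?_; rw [hCs]; field_simp
    _ ≤ 4 * Dn T R m / Cp c (m + 1) * (2 * Cp c (m + 1) * e) := by rw [← mul_sum]; gcongr
    _ = 8 * Dn T R m * e := by field_simp; ring
    _ ≤ _ := by
      have h1 := h.dn m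
      have h2 : exp ((2 ^ m * T) ^ (1 / 1000 : ℝ)) * e = 1 := by rw [← exp_add, add_neg_cancel, exp_zero]
      have h3 := mul_le_mul_of_nonneg_right h1 he.le; rw [h2] at h3
      rw [one_div_pow, mul_one_div, le_div_iff₀ (by positivity)]; linarith

lemma total (h : Hyp c T R) (m : ℕ) : 1 / 2 + 1 / 2 * (1 / 2) ^ m ≤ ∑ p ∈ NN c T m, ww c T m p := by
  classical
  induction m with
  | zero =>
    have := Sm_root h; simp only [NN, ww]; rw [← sum_div]
    exact le_of_eq_of_le (by norm_num) (div_self (a := Sm T (T + 1)) (by linarith)).ge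
  | succ m ih =>
    rw [sum_NN h, sum_congr rfl fun p hp => ww_children h (mem_filter.1 hp).1 (mem_filter.1 hp).2]
    have h1 := killed h m; have h2 := sum_filter_add_sum_filter_not (NN c T m) (Good c m) (ww c T m)
    rw [pow_succ]; linarith

/-- The level-`m` interval of the prime `p`, in the coordinate `t = log A`. -/
def II (c : ℕ → ℝ) (m p : ℕ) : Set ℝ := Set.Icc (log p / Cp c m) (log (p + 1) / Cp c m)

open Classical in
/-- The mass of the level-`m` intervals that meet `U`. -/
def mass (c : ℕ → ℝ) (T : ℝ) (m : ℕ) (U : Set ℝ) : ℝ :=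
  ∑ p ∈ (NN c T m).filter (fun p => (II c m p ∩ U).Nonempty), ww c T m p

lemma II_sub (h : Hyp c T R) {m p q : ℕ} (hq : q ∈ Ch c m p) : II c (m + 1) q ⊆ Set.Ico (log p / Cp c m) (log (p + 1) / Cp c m) := by
  obtain ⟨h1, h2, h3⟩ := mem_Chd.1 hq; have hC := Cp_pos h m; have hc := h.two_le (m + 1) (by omega)
  refine fun t ht => ⟨le_trans ?_ ht.1, ht.2.trans_lt ?_⟩
  · rw [Cp_succ, div_le_div_iff₀ hC (by positivity)]; nlinarith
  · rw [Cp_succ, div_lt_div_iff₀ (by positivity) hC]; nlinarith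

lemma mass_succ (h : Hyp c T R) (m : ℕ) (U : Set ℝ) : mass c T (m + 1) U ≤ mass c T m U := by
  classical
  unfold mass; rw [sum_filter, sum_filter, sum_NN h]
  calc _ ≤ ∑ p ∈ (NN c T m).filter (Good c m), if (II c m p ∩ U).Nonempty then ww c T m p else 0 := by
        refine sum_le_sum fun p hp => ?_; split_ifs with hU
        · rw [← ww_children h (mem_filter.1 hp).1 (mem_filter.1 hp).2]; refine sum_le_sum fun q _ => ?_
          split_ifs; exacts [le_rfl, ww_nonneg _ _]
        · refine (sum_eq_zero fun q hq => if_neg fun h' => hU ?_).le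
          exact h'.mono (Set.inter_subset_inter_left _ ((II_sub h hq).trans Set.Ico_subset_Icc_self))
    _ ≤ _ := by
      refine sum_le_sum_of_subset_of_nonneg (filter_subset _ _) fun p _ _ => ?_; split_ifs
      exacts [ww_nonneg _ _, le_rfl]

lemma mass_anti (h : Hyp c T R) (U : Set ℝ) : Antitone fun m => mass c T m U := antitone_nat_of_succ_le fun m => mass_succ h m U

lemma mass_le_one (h : Hyp c T R) (m : ℕ) (U : Set ℝ) : mass c T m U ≤ 1 := by
  classical
  refine (mass_anti h U (Nat.zero_le m)).trans ?_
  refine (sum_le_sum_of_subset_of_nonneg (filter_subset _ _) fun p _ _ => ww_nonneg _ _).trans ?_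
  simp only [NN, ww]; rw [← sum_div]; exact div_self_le_one _

lemma mass_ball (h : Hyp c T R) (k : ℕ) (x : ℝ) {ρ : ℝ} (hρ : exp (-(2 ^ k * T)) ≤ ρ) :
  mass c T k (ball x ρ) ≤ 4 * Dn T R k * ρ := by
  classical
  have hC := Cp_pos h k; have hρ0 : 0 < ρ := (exp_pos _).trans_le hρ; have hD := Dn_nonneg h k; unfold mass
  set F := (NN c T k).filter (fun p => (II c k p ∩ ball x ρ).Nonempty)
  have hs := sum_int (mono_log (inv_pos.2 hC).le) (f := fun _ => 1) continuous_const (fun _ => zero_le_one) F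
    (l := x - 2 * ρ) (r := x + 2 * ρ) (by linarith) fun p hp => by
      obtain ⟨hp, t, ⟨ht1, ht2⟩, ht3⟩ := mem_filter.1 hp; rw [mem_ball, dist_eq, abs_lt] at ht3
      have hp1 := (NN_bd h k p hp).1.pos; have h1 := log_succ_le hp1
      have h2 : 1 / (p : ℝ) ≤ ρ := by
        refine le_trans ?_ hρ; rw [exp_neg, ← one_div]
        exact one_div_le_one_div_of_le (exp_pos _) (NN_large h hp).2.2
      have h3 : (log (p + 1) - log p) / Cp c k ≤ ρ := by
        have : 1 ≤ Cp c k := le_trans (one_le_pow₀ one_le_two) (Cp_ge h k); rw [div_le_iff₀ hC]; nlinarith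
      rw [sub_div] at h3; rw [Nat.cast_succ, inv_mul_eq_div, inv_mul_eq_div]; constructor <;> linarith
  simp only [intervalIntegral.integral_const, smul_eq_mul, mul_one, Nat.cast_succ] at hs
  calc _ ≤ ∑ p ∈ F, Dn T R k * ((Cp c k)⁻¹ * log (p + 1) - (Cp c k)⁻¹ * log p) := by
        refine sum_le_sum fun p hp => (ww_dens h k p (mem_filter.1 hp).1).trans_eq ?_
        rw [sub_div, inv_mul_eq_div, inv_mul_eq_div]
    _ ≤ Dn T R k * (x + 2 * ρ - (x - 2 * ρ)) := by rw [← mul_sum]; gcongr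
    _ = _ := by ring

lemma mass_holder (h : Hyp c T R) {s : ℝ} (hs0 : 0 < s) (hs1 : s < 1) : ∃ A : ℝ, 0 < A ∧
  ∀ x ρ, 0 < ρ → ∃ k, ∀ m ≥ k, mass c T m (ball x ρ) ≤ A * ρ ^ s := by
  have hT := h.T100; obtain ⟨Y, hY⟩ := eventually_atTop.1 (ev_rpow (2 / (1 - s)) (1 / 1000) 1 (by norm_num))
  have hY' : ∀ y ≥ 1, y ^ (1 / 1000 : ℝ) ≤ (1 - s) / 2 * y + max Y 1 := fun y hy => by
    have h0 : 0 ≤ (1 - s) / 2 * y := mul_nonneg (by linarith) (by linarith)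
    rcases le_total Y y with h1 | h1
    · have := hY y h1; rw [rpow_one, div_mul_eq_mul_div, div_le_iff₀ (by linarith)] at this
      linarith [le_max_right Y 1]
    · have : y ^ (1 / 1000 : ℝ) ≤ y ^ (1 : ℝ) := rpow_le_rpow_of_exponent_le hy (by norm_num)
      rw [rpow_one] at this; linarith [le_max_left Y 1]
  set B := exp (max Y 1); have hB : 0 < B := exp_pos _; have hA0 : 0 < exp T + 4 * B := by positivity
  refine ⟨exp T + 4 * B, hA0, fun x ρ hρ => ?_⟩
  have hex : ∃ k : ℕ, exp (-(2 ^ k * T)) ≤ ρ := by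
    obtain ⟨k, hk⟩ := pow_unbounded_of_one_lt (-log ρ) one_lt_two; refine ⟨k, (le_log_iff_exp_le hρ).1 ?_⟩
    have : (2 : ℝ) ^ k ≤ 2 ^ k * T := le_mul_of_one_le_right (by positivity) (by linarith); linarith
  classical
  have hk := Nat.find_spec hex; have hmin := fun j => Nat.find_min hex (m := j); set k := Nat.find hex
  refine ⟨k, fun m hm => ?_⟩
  rcases Nat.eq_zero_or_pos k with h0 | h0
  · refine (mass_le_one h m _).trans ?_; rw [h0, pow_zero, one_mul] at hk
    have h1 : exp (-T) ≤ ρ ^ s :=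
      calc exp (-T) ≤ exp (-T * s) := by gcongr; nlinarith
        _ = exp (-T) ^ s := exp_mul _ _
        _ ≤ _ := by gcongr
    calc (1 : ℝ) = exp T * exp (-T) := by rw [← exp_add, add_neg_cancel, exp_zero]
      _ ≤ _ := by gcongr; linarith
  · obtain ⟨j, hj⟩ := Nat.exists_eq_succ_of_ne_zero h0.ne'; have hj1 := not_le.1 (hmin j (by omega))
    refine (mass_anti h _ hm).trans ((mass_ball h k x hk).trans ?_); set X := 2 ^ j * T
    have hX : 1 ≤ 2 * X := by
      have : (1 : ℝ) ≤ 2 ^ j := one_le_pow₀ one_le_two; simp only [X]; nlinarith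
    have hD : Dn T R k ≤ exp ((1 - s) * X) * B := by
      have h1 := h.dn k; have h2 := Dn_nonneg h k
      have h3 : (2 : ℝ) ^ k * T = 2 * X := by rw [hj, pow_succ]; simp only [X]; ring
      have h4 : (1 : ℝ) ≤ 2 ^ k := one_le_pow₀ one_le_two; rw [h3] at h1
      calc Dn T R k ≤ 32 * 2 ^ k * Dn T R k := le_mul_of_one_le_left h2 (by linarith)
        _ ≤ _ := h1
        _ ≤ exp ((1 - s) * X + max Y 1) := by
          gcongr; linarith [hY' (2 * X) hX]
        _ = _ := exp_add _ _
    have hr : ρ ^ (1 - s) ≤ exp (-((1 - s) * X)) :=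
      calc ρ ^ (1 - s) ≤ exp (-X) ^ (1 - s) := rpow_le_rpow hρ.le hj1.le (by linarith)
        _ = _ := by rw [← exp_mul]; ring_nf
    calc 4 * Dn T R k * ρ = 4 * Dn T R k * ρ ^ (1 - s) * ρ ^ s := by
          rw [mul_assoc _ (ρ ^ (1 - s)), ← rpow_add hρ, sub_add_cancel, rpow_one]
      _ ≤ 4 * (exp ((1 - s) * X) * B) * exp (-((1 - s) * X)) * ρ ^ s := by
        have := Dn_nonneg h k; gcongr
      _ = 4 * B * ρ ^ s := by rw [exp_neg]; field_simp
      _ ≤ _ := by gcongr; linarith [exp_pos T]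

/-- The set of exponents built by the construction has dimension at least `s` for every `s < 1`. -/
lemma tree_dim (h : Hyp c T R) {s : NNReal} (hs0 : 0 < s) (hs1 : s < 1) :
  s ≤ dimH {t : ℝ | T ≤ t ∧ ∀ m, Nat.Prime ⌊exp (Cp c m * t)⌋₊} := by
  set K : ℕ → Set ℝ := fun m => ⋃ p ∈ NN c T m, II c m p
  have hnext : ∀ m, ∀ t ∈ K (m + 1), ∃ p ∈ NN c T m, t ∈ Set.Ico (log p / Cp c m) (log (p + 1) / Cp c m) := fun m t ht => by
    simp only [K, Set.mem_iUnion, NN, mem_biUnion, mem_filter] at ht; obtain ⟨q, ⟨p, ⟨hp, -⟩, hq⟩, ht⟩ := ht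
    exact ⟨p, hp, II_sub h hq ht⟩
  have hsub : (⋂ m, K m) ⊆ {t : ℝ | T ≤ t ∧ ∀ m, Nat.Prime ⌊exp (Cp c m * t)⌋₊} := fun t ht => by
    have ht' := Set.mem_iInter.1 ht; constructor
    · obtain ⟨p, hp, ht1⟩ := hnext 0 t (ht' 1); have h1 := (NN_bd h 0 p hp).2.1; have h2 := ht1.1
      simp only [Cp, show Icc 1 0 = ∅ from rfl, prod_empty, div_one, one_mul] at h1 h2; linarith
    · intro m; obtain ⟨p, hp, h1, h2⟩ := hnext m t (ht' (m + 1)); have hC := Cp_pos h m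
      have hpp := (NN_bd h m p hp).1; have hp0 : (0 : ℝ) < p := mod_cast hpp.pos; rw [div_le_iff₀ hC] at h1
      rw [lt_div_iff₀ hC] at h2
      have : ⌊exp (Cp c m * t)⌋₊ = p := by
        rw [Nat.floor_eq_iff (exp_pos _).le, ← log_le_iff_le_exp hp0, ← lt_log_iff_exp_lt (by positivity)]
        constructor <;> linarith
      rwa [this]
  refine le_trans (le_dimH_of_hausdorffMeasure_ne_zero ?_) (dimH_mono hsub)
  obtain ⟨A, hA, hball⟩ := mass_holder h (s := s) (mod_cast hs0) (mod_cast hs1)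
  refine frostman K (fun m => (NN c T m).isCompact_biUnion fun p _ => isCompact_Icc) (antitone_nat_of_succ_le fun m t ht => ?_) (mass c T)
    (mod_cast hs0) (mod_cast hs1) hA (fun m F U hU => ?_) hball
  · obtain ⟨p, hp, htp⟩ := hnext m t ht; exact Set.mem_biUnion hp (Set.Ico_subset_Icc_self htp)
  · classical
    have htot := total h m; have h0 : (0 : ℝ) ≤ 1 / 2 * (1 / 2) ^ m := by positivity
    refine le_trans (by linarith) (htot.trans ?_); simp only [mass, sum_filter]; rw [sum_comm]
    refine sum_le_sum fun p hp => ?_; have hC := Cp_pos h m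
    have hp0 : (0 : ℝ) < p := mod_cast (NN_bd h m p hp).1.pos
    have hl : log p / Cp c m ∈ II c m p := ⟨le_rfl, div_le_div_of_nonneg_right (log_le_log hp0 (by linarith)) hC.le⟩
    have h1 := hU (Set.mem_biUnion hp hl); simp only [Set.mem_iUnion] at h1; obtain ⟨n, hn, hn'⟩ := h1
    refine le_trans ?_ (single_le_sum (fun i _ => ?_) hn)
    · rw [if_pos ⟨_, hl, hn'⟩]
    · split_ifs; exacts [ww_nonneg _ _, le_rfl]

end

end PrimeRep

open Real Set
theorem hausdorff_dimension_of_prime_representing_set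
  (c : ℕ → ℝ) (hbdd : ∃ R : ℝ, ∀ k ≥ 1, c k ≤ R) (h2 : ∀ k ≥ 1, 2 ≤ c k)
  (C : ℕ → ℝ) (hC : ∀ k ≥ 1, C k = ∏ i ∈ Finset.Icc 1 k, c i) :
  dimH {A : ℝ | 1 < A ∧ ∀ k ≥ 1, Nat.Prime ⌊A ^ C k⌋₊} = 1 := by
  refine le_antisymm ((dimH_mono (subset_univ _)).trans_eq Real.dimH_univ) ?_; obtain ⟨R, hR⟩ := hbdd
  have hR2 : 2 ≤ R := (h2 1 le_rfl).trans (hR 1 le_rfl)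
  obtain ⟨v₀, hv₀⟩ := Filter.eventually_atTop.mp PrimeRep.primes_l1
  obtain ⟨T, hT1, hT2, hT3, hT4⟩ := ((PrimeRep.Dn_small (R := R) (by linarith)).and ((Filter.eventually_ge_atTop v₀).and
    ((Filter.eventually_ge_atTop 100).and (Filter.eventually_ge_atTop R)))).exists
  have hyp : PrimeRep.Hyp c T R := ⟨h2, hR, hT3, hT4, fun v hv => hv₀ v (hT2.trans hv), hT1⟩
  set W := {A : ℝ | 1 < A ∧ ∀ k ≥ 1, Nat.Prime ⌊A ^ C k⌋₊}
  have hlip : LipschitzOnWith 1 Real.log W := by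
    refine LipschitzOnWith.of_dist_le_mul fun x hx y hy => ?_
    have key : ∀ a b : ℝ, 1 < a → 1 < b → Real.log a - Real.log b ≤ |a - b| := fun a b ha hb => by
      have h := Real.log_le_sub_one_of_pos (x := a / b) (by positivity)
      rw [Real.log_div (by positivity) (by positivity)] at h; refine h.trans ?_
      rw [div_sub_one (by positivity), div_le_iff₀ (by positivity)]
      nlinarith [le_abs_self (a - b), abs_nonneg (a - b)]
    rw [NNReal.coe_one, one_mul, Real.dist_eq, Real.dist_eq, abs_le]; have h1 := key x y hx.1 hy.1
    have h2 := key y x hy.1 hx.1; rw [abs_sub_comm] at h2; constructor <;> linarith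
  refine le_trans ?_ hlip.dimH_image_le
  have hsub : {t : ℝ | T ≤ t ∧ ∀ m, Nat.Prime ⌊Real.exp (PrimeRep.Cp c m * t)⌋₊} ⊆ Real.log '' W := by
    rintro t ⟨ht, hp⟩
    refine ⟨Real.exp t, ⟨Real.one_lt_exp_iff.mpr (by linarith), fun k hk => ?_⟩, Real.log_exp t⟩
    rw [hC k hk, ← Real.exp_mul, mul_comm]; exact hp k
  refine le_trans (ENNReal.le_of_forall_nnreal_lt fun s hs => ?_) (dimH_mono hsub)
  have hs1 : s < 1 := by exact_mod_cast hs
  rcases eq_zero_or_pos s with rfl | hs0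
  · simp
  · exact PrimeRep.tree_dim hyp hs0 hs1
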